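/- Let r, d, s, π, p be integers with r ≥ 4, r−1 ≤ s ≤ 2r−4, 0 ≤ π ≤ π₀ := s−r+1, −binom(π₀−π+1, 2) ≤ p ≤ 0, and d > d₀(r). Let C ⊂ P^r be an irreducible, reduced, nondegenerate projective curve of degree d, not contained in any surface of degree < s, and not contained in any surface of degree s with sectional genus > π and arithmetic genus < p. Then p_a(C) ≤ G*(r,d,s,π,p). -/

import Mathlib

/-!
The proof replaces general linear sections and projections by generic ones and works entirely in
function fields. Let `F` be the function field of the curve `C`, with affine coordinates
`x 0 = 1, …, x r`. Adjoin the `3 (r + 1)` coefficients `u` of three generic linear forms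
`y 0, y 1, y 2` in the coordinates; this gives `k = ℂ(u)` and `L = F(u)` (`IsGen`). The polynomials
of degree at most `n` in the coordinates form a `k`-subspace `polyLE k (gx L x) n` of `L` whose
dimension is the Hilbert function of `C` at `n`, and `[L : k(y 0)] = d` (`IsGen.curve_finrank`).
Extending scalars from `k` to `k(y 0)` plays the role of a general hyperplane section: it computes
first differences of Hilbert functions (`finrank_span_add_le`, `finrank_succ_eq`).

The substitute for monodromy and uniform position is primitivity (`IsGen.primitive`): there is no
field strictly between `k(y 0)` and `L`, nor between `k(y 0, y 1)` and the analogous field of a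
surface. Two distinct points of the variety with the same generic projection are, by a
transcendence degree count, independent generic points, so that all conjugates of a point behave
alike. Primitivity gives a linear Cauchy–Davenport inequality
`dim (A B) ≥ min(dim L, dim A + dim B - 1)` (`cauchy_davenport`), and it shows that each further
generic form generates `L`, hence a Bezout inequality (`plane_bezout`).

Let `e` be the degree of a plane equation `Φ` of least degree satisfied by `(y 1, y 2)` over
`k(y 0)`.

If `e ≥ s + 1`, the spaces of polynomials in `y 1, y 2` have full dimension below degree `e`, grow
at least as on a plane curve of degree `e` afterwards, and satisfy Cauchy–Davenport. Summing
`d - dim` over all degrees bounds the genus by `G*(r, d, s, 0, 0)` up to its nonnegative last term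
(`genus_sum_le`, `IsGen.genus_le_of_large`); the lower bound on `d` enters in the comparison of the
bounds for `e` and `s`.

If `e ≤ s`, then `C` lies on a surface of degree at most `e` (`IsGen.lift`). Indeed, differentiating
`Φ = 0` with respect to the generic coefficients expresses each coordinate as
`x i = - Φ_{u_{1i}} / Φ_{y_1}`. The same formulas define elements of the function field of the plane
curve `Φ = 0` over `k(y 0)`, and the polynomial identities needed for them have degree at most `3e`
in `y 1, y 2`; they hold on `C`, hence by Bezout they are divisible by `Φ`. So these elements are
coordinates of a surface, with the same `y 0, y 1, y 2`. By hypothesis its degree is `s`, its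
sectional genus is at most `π` and its arithmetic genus is at least `p`. The filtered ideal of `C`
in the coordinate ring of the surface is then cut by two successive generic hyperplanes (`dfam`).
Its ranks over `k(y 0, y 1)` are at most `s` and obey Cauchy–Davenport growth under multiplication
by linear forms, which forces its dimensions to be small (`curve_on_surface`,
`num_curve_on_surface`); comparing with the Hilbert polynomial of `C` yields the bound `G*`.
-/

open scoped BigOperators

noncomputable section

/-- The homogeneous coordinate ring of `ℙ^{n-1}` over `ℂ`: polynomials in `n` variables. -/
abbrev MPoly (n : ℕ) : Type := MvPolynomial (Fin n) ℂ

/-- An ideal is homogeneous if it contains all homogeneous components of its members. -/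
def IsHomogIdeal {n : ℕ} (I : Ideal (MPoly n)) : Prop :=
  ∀ f ∈ I, ∀ k : ℕ, MvPolynomial.homogeneousComponent k f ∈ I

/-- The degree-`k` graded piece of the homogeneous coordinate ring of the subscheme `V(I)`. -/
def degQ {n : ℕ} (I : Ideal (MPoly n)) (k : ℕ) : Submodule ℂ (MPoly n ⧸ I) :=
  (MvPolynomial.homogeneousSubmodule (Fin n) ℂ k).map (Ideal.Quotient.mkₐ ℂ I).toLinearMap

/-- The graded pieces, indexed by `ℤ` (zero in negative degrees). -/
def degQZ {n : ℕ} (I : Ideal (MPoly n)) (t : ℤ) : Submodule ℂ (MPoly n ⧸ I) :=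
  if 0 ≤ t then degQ I t.toNat else ⊥

/-- The Hilbert function of the closed subscheme `V(I) ⊆ ℙ^{n-1}`. -/
def hilbNat {n : ℕ} (I : Ideal (MPoly n)) (t : ℤ) : ℕ :=
  Module.finrank ℂ (degQZ I t)

/-- The Hilbert function, as an integer-valued function. -/
def hilbZ {n : ℕ} (I : Ideal (MPoly n)) (t : ℤ) : ℤ := (hilbNat I t : ℤ)

/-- The irrelevant maximal ideal `(x_0, …, x_{n-1})`. -/
def mId (n : ℕ) : Ideal (MPoly n) := Ideal.span (Set.range MvPolynomial.X)

/-- The space of degree-`t` graded module homomorphisms `m^k → R/I`. -/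
def gradedHomSub {n : ℕ} (I : Ideal (MPoly n)) (k : ℕ) (t : ℤ) :
    Submodule ℂ ((mId n ^ k : Ideal (MPoly n)) →ₗ[MPoly n] (MPoly n ⧸ I)) where
  carrier := {φ | ∀ (j : ℕ) (f : MPoly n) (hf : f ∈ mId n ^ k),
    f ∈ MvPolynomial.homogeneousSubmodule (Fin n) ℂ j → φ ⟨f, hf⟩ ∈ degQZ I ((j : ℤ) + t)}
  add_mem' := by
    intro a b ha hb j f hf hj
    simpa using Submodule.add_mem _ (ha j f hf hj) (hb j f hf hj)
  zero_mem' := by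
    intro j f hf hj
    simpa using Submodule.zero_mem _
  smul_mem' := by
    intro c φ hφ j f hf hj
    simpa using Submodule.smul_mem _ c (hφ j f hf hj)

/-- `h⁰(X, 𝒪_X(t))` for `X = V(I)`: the stable value of the dimensions of the graded Hom
modules `Hom(m^k, R/I)_t` (the Deligne formula for twisted global sections). -/
def h0Nat {n : ℕ} (I : Ideal (MPoly n)) (t : ℤ) : ℕ :=
  ⨆ k : ℕ, Module.finrank ℂ (gradedHomSub I k t)

/-- `h¹(ℙ^{n-1}, 𝓘_X(t)) = h⁰(X, 𝒪_X(t)) − h_X(t)` (valid for the saturated ideal of `X`). -/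
def h1INat {n : ℕ} (I : Ideal (MPoly n)) (t : ℤ) : ℕ := h0Nat I t - hilbNat I t

/-- The dimension over `ℂ` of the Hartshorne–Rao module `M(X) = ⊕_t H¹(ℙ, 𝓘_X(t))`. -/
def raoDim {n : ℕ} (I : Ideal (MPoly n)) : ℕ := ∑ᶠ t : ℤ, h1INat I t

/-- Arithmetically Cohen–Macaulay (for an integral curve): the Hartshorne–Rao module vanishes. -/
def IsACM {n : ℕ} (I : Ideal (MPoly n)) : Prop := ∀ t : ℤ, h0Nat I t = hilbNat I t

/-- Saturation of an ideal with respect to the irrelevant maximal ideal. -/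
def satIdeal {n : ℕ} (I : Ideal (MPoly n)) : Ideal (MPoly n) where
  carrier := {f | ∃ k : ℕ, ∀ j : Fin n, MvPolynomial.X j ^ k * f ∈ I}
  zero_mem' := ⟨0, fun j => by simpa using I.zero_mem⟩
  add_mem' := by
    rintro f g ⟨k, hk⟩ ⟨l, hl⟩
    refine ⟨k + l, fun j => ?_⟩
    have h1 : MvPolynomial.X (R := ℂ) j ^ (k + l) * (f + g)
        = MvPolynomial.X j ^ l * (MvPolynomial.X j ^ k * f)
          + MvPolynomial.X j ^ k * (MvPolynomial.X j ^ l * g) := by ring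
    rw [h1]
    exact I.add_mem (I.mul_mem_left _ (hk j)) (I.mul_mem_left _ (hl j))
  smul_mem' := by
    rintro c f ⟨k, hk⟩
    refine ⟨k, fun j => ?_⟩
    have h1 : MvPolynomial.X (R := ℂ) j ^ k * (c • f) = c * (MvPolynomial.X j ^ k * f) := by
      rw [smul_eq_mul]; ring
    rw [h1]
    exact I.mul_mem_left _ (hk j)

/-- The hyperplane section of `V(I)` by the hyperplane `{ℓ = 0}`, as a closed subscheme
(its saturated homogeneous ideal). -/
def sect {n : ℕ} (I : Ideal (MPoly n)) (ℓ : MPoly n) : Ideal (MPoly n) :=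
  satIdeal (I ⊔ Ideal.span {ℓ})

/-- A property `P` holds for a *general* `k`-tuple of linear forms (hyperplanes): it holds on a
nonempty Zariski-open subset of the space of coefficients. -/
def GenericForms (n k : ℕ) (P : (Fin k → MPoly n) → Prop) : Prop :=
  ∃ Q : MvPolynomial (Fin k × Fin n) ℂ, Q ≠ 0 ∧
    ∀ c : Fin k → Fin n → ℂ, MvPolynomial.eval (fun p => c p.1 p.2) Q ≠ 0 →
      P fun t => ∑ j : Fin n, MvPolynomial.C (c t j) * MvPolynomial.X j

/-- `V(I) ⊆ ℙ^{n-1}` is nondegenerate: contained in no hyperplane. -/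
def Nondeg {n : ℕ} (I : Ideal (MPoly n)) : Prop :=
  ∀ f ∈ MvPolynomial.homogeneousSubmodule (Fin n) ℂ 1, f ∈ I → f = 0

/-- `V(I)` is an integral curve: `I` homogeneous prime, with cone of Krull dimension 2. -/
def IsCurve {n : ℕ} (I : Ideal (MPoly n)) : Prop :=
  IsHomogIdeal I ∧ I.IsPrime ∧ ringKrullDim (MPoly n ⧸ I) = 2

/-- `V(I)` is an integral surface: `I` homogeneous prime, with cone of Krull dimension 3. -/
def IsSurface {n : ℕ} (I : Ideal (MPoly n)) : Prop :=
  IsHomogIdeal I ∧ I.IsPrime ∧ ringKrullDim (MPoly n ⧸ I) = 3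

/-- The curve `V(I)` has degree `d` and arithmetic genus `g`: its Hilbert polynomial is
`d·t + 1 − g`. -/
def CurveInv {n : ℕ} (I : Ideal (MPoly n)) (d g : ℤ) : Prop :=
  ∃ N : ℤ, ∀ t : ℤ, N ≤ t → hilbZ I t = d * t + 1 - g

/-- The surface `V(I)` has degree `s`, sectional genus `π` and arithmetic genus `pa`:
its Hilbert polynomial is `s·choose(t+1, 2) + (1 − π)·t + 1 + pa`. -/
def SurfInv {n : ℕ} (I : Ideal (MPoly n)) (s π pa : ℤ) : Prop :=
  ∃ N : ℤ, ∀ t : ℤ, N ≤ t → hilbZ I t = s * (t * (t + 1) / 2) + (1 - π) * t + 1 + pa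

/-- `V(IC)` is not contained in any integral surface of degree `< s`. -/
def NotInSurfDegLT {n : ℕ} (IC : Ideal (MPoly n)) (s : ℤ) : Prop :=
  ∀ (T : Ideal (MPoly n)) (s' π' pa' : ℤ), IsSurface T → SurfInv T s' π' pa' → s' < s →
    ¬ T ≤ IC

/-- `V(IC)` is not contained in any integral surface of degree `s` with sectional genus `> π`. -/
def NotInSurfSecGT {n : ℕ} (IC : Ideal (MPoly n)) (s π : ℤ) : Prop :=
  ∀ (T : Ideal (MPoly n)) (π' pa' : ℤ), IsSurface T → SurfInv T s π' pa' → π < π' →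
    ¬ T ≤ IC

/-- `V(IC)` is not contained in any integral surface of degree `s` with arithmetic genus `< p`. -/
def NotInSurfGenLT {n : ℕ} (IC : Ideal (MPoly n)) (s p : ℤ) : Prop :=
  ∀ (T : Ideal (MPoly n)) (π' pa' : ℤ), IsSurface T → SurfInv T s π' pa' → pa' < p →
    ¬ T ≤ IC

/-- `binom2 z = z.choose 2` for integers. -/
def binom2 (z : ℤ) : ℤ := z * (z - 1) / 2

/-- The bound `G*(r,d,s,π,p)` of Di Gennaro–Franco, with `m = (d-1)/s`, `ε = (d-1) % s`. -/
def Gstar (r d s π p : ℤ) : ℤ :=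
  binom2 ((d - 1) / s) * s + ((d - 1) / s) * ((d - 1) % s + π) - p
    + max 0 ((2 * π - (s - 1 - (d - 1) % s)) / 2)

/-- The numerical function `h_{r,d,s,π}`. -/
def hF (r d s π : ℤ) (i : ℤ) : ℤ :=
  if 1 ≤ i ∧ i ≤ (d - 1) / s then
    1 - π + i * s - max 0 ((s - r + 1) - π - i + 1)
  else if i = (d - 1) / s + 1 then
    d - max 0 ((2 * π - (s - 1 - (d - 1) % s)) / 2)
  else if (d - 1) / s + 2 ≤ i then d
  else 0

/-- The threshold `d₀(r)`. -/
def d0 (r : ℤ) : ℤ :=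
  if r ≤ 6 then 16 * (r - 2) * (2 * r - 3)
  else if r ≤ 11 then 8 * (r - 2) ^ 3
  else 2 ^ (r.toNat + 1)

end
noncomputable section

/-- The affine cone of `V(I)`: common zeroes of the elements of `I`. -/
def zeroCone {n : ℕ} (I : Ideal (MPoly n)) : Set (Fin n → ℂ) :=
  {a | ∀ f ∈ I, MvPolynomial.eval a f = 0}

/-- Jacobian-criterion smoothness: at every nonzero point of the affine cone (of dimension `c`)
the gradients of the equations span a subspace of dimension `n - c`. -/
def IsSmooth {n : ℕ} (I : Ideal (MPoly n)) (c : ℕ) : Prop :=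
  ∀ a ∈ zeroCone I, a ≠ 0 →
    Module.finrank ℂ (Submodule.span ℂ
      {g : Fin n → ℂ | ∃ f ∈ I, g = fun j => MvPolynomial.eval a (MvPolynomial.pderiv j f)})
      = n - c

/-- Castelnuovo's bound for the genus of a nondegenerate integral curve of degree `d`
in `ℙ^R`. -/
def castelG (R d : ℤ) : ℤ :=
  binom2 ((d - 1) / (R - 1)) * (R - 1) + ((d - 1) / (R - 1)) * ((d - 1) % (R - 1))

/-- The ideal of the projective cone (from `ℙ^{n-1}` to `ℙ^n`) over `V(I)`. -/
def coneIdeal {n : ℕ} (I : Ideal (MPoly n)) : Ideal (MPoly (n + 1)) :=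
  Ideal.map (MvPolynomial.rename (Fin.castSucc : Fin n → Fin (n + 1))) I

/-- `J` is the (saturated homogeneous) ideal of a line in `ℙ^{n-1}`: it is generated by
`n - 2` linearly independent linear forms. -/
def IsLineIdeal {n : ℕ} (J : Ideal (MPoly n)) : Prop :=
  ∃ V : Submodule ℂ (MPoly n), V ≤ MvPolynomial.homogeneousSubmodule (Fin n) ℂ 1 ∧
    Module.finrank ℂ V = n - 2 ∧ J = Ideal.span (V : Set (MPoly n))

/-- `V(T) ⊆ ℙ^{n-1}` is a smooth rational normal scroll surface: a smooth nondegenerate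
integral surface of minimal degree `n - 2` (with sectional and arithmetic genus `0`)
containing a line (which rules out the Veronese surface). -/
def IsSmoothRNScroll {n : ℕ} (T : Ideal (MPoly n)) : Prop :=
  IsSurface T ∧ Nondeg T ∧ IsSmooth T 3 ∧ SurfInv T ((n : ℤ) - 2) 0 0 ∧
    ∃ J : Ideal (MPoly n), IsLineIdeal J ∧ T ≤ J

/-- The linear projection on points determined by the matrix `L`. -/
def projPt {nb ns : ℕ} (L : Fin ns → Fin nb → ℂ) (a : Fin nb → ℂ) : Fin ns → ℂ :=
  fun t => ∑ j, L t j * a j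

/-- The substitution algebra homomorphism determined by the matrix `L` (pullback of the
linear projection `ℙ^{nb-1} ⇢ ℙ^{ns-1}`). -/
def substHom {nb ns : ℕ} (L : Fin ns → Fin nb → ℂ) : MPoly ns →ₐ[ℂ] MPoly nb :=
  MvPolynomial.aeval fun t => ∑ j, MvPolynomial.C (L t j) * MvPolynomial.X j

/-- The linear projection given by `L` maps `V(I')` isomorphically onto `V(I)`: the center of
projection misses `V(I')`, `V(I)` is the image, and the projection is (projectively) bijective
from `V(I')` onto `V(I)`. -/
def IsIsoProjection {nb ns : ℕ} (L : Fin ns → Fin nb → ℂ)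
    (I' : Ideal (MPoly nb)) (I : Ideal (MPoly ns)) : Prop :=
  I = I'.comap (substHom L) ∧
  (∀ a ∈ zeroCone I', a ≠ 0 → projPt L a ≠ 0) ∧
  (∀ a ∈ zeroCone I', ∀ b ∈ zeroCone I', a ≠ 0 → b ≠ 0 →
    (∃ c : ℂ, c ≠ 0 ∧ projPt L a = c • projPt L b) → ∃ c : ℂ, c ≠ 0 ∧ a = c • b) ∧
  (∀ y ∈ zeroCone I, y ≠ 0 → ∃ a ∈ zeroCone I', a ≠ 0 ∧ ∃ c : ℂ, c ≠ 0 ∧ y = c • projPt L a)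

/-- `t` bounds the Castelnuovo–Mumford regularity of the surface `V(I) ⊆ ℙ^{n-1}`:
for every `t' ≥ t`, `H^i(ℙ, 𝓘(t'-i)) = 0` for all `i ≥ 1`, expressed through the standard
inductive characterization by successive general hyperplane sections. -/
def IsRegBound {n : ℕ} (I : Ideal (MPoly n)) (t : ℤ) : Prop :=
  GenericForms n 2 fun L => ∀ t' : ℤ, t ≤ t' →
    h1INat I (t' - 1) = 0 ∧ h1INat (sect I (L 0)) (t' - 1) = 0 ∧
      h1INat (sect (sect I (L 0)) (L 1)) (t' - 1) = 0

end

/-! ### A linear Cauchy–Davenport inequality -/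

section
section CauchyDavenport

variable {K L : Type*} [Field K] [Field L] [Algebra K L]

/-- Multiplication by `g` does not change the dimension of a subspace. -/
theorem finrank_map_mulLeft (g : L) (hg : g ≠ 0) (B : Submodule K L) :
    Module.finrank K (B.map (LinearMap.mulLeft K g)) = Module.finrank K B :=
  (Submodule.equivMapOfInjective (LinearMap.mulLeft K g)
    (fun a b h => mul_left_cancel₀ hg (by simpa using h)) B).finrank_eq.symm

/-- The subalgebra of multipliers preserving a subspace. -/
def stabSubalg (A : Submodule K L) : Subalgebra K L where
  carrier := {z | ∀ a ∈ A, z * a ∈ A}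
  mul_mem' := by
    intro a b ha hb c hc
    rw [mul_assoc]
    exact ha _ (hb _ hc)
  add_mem' := by
    intro a b ha hb c hc
    rw [add_mul]
    exact A.add_mem (ha _ hc) (hb _ hc)
  algebraMap_mem' := by
    intro r c hc
    rw [← Algebra.smul_def]
    exact A.smul_mem r hc

/-- If `L/K` has no proper intermediate field, then products of subspaces of `L` satisfy the
Cauchy–Davenport inequality. The proof replaces `(A, B)` by
`(A + gB, B ∩ g⁻¹A)`, until `A` is stable under the field generated by a multiple of `B`. -/
theorem cauchy_davenport [FiniteDimensional K L]
    (hprim : ∀ M : IntermediateField K L, M = ⊥ ∨ M = ⊤) (A B : Submodule K L)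
    (hA : A ≠ ⊥) (hB : B ≠ ⊥) :
    min (Module.finrank K L) (Module.finrank K A + Module.finrank K B - 1)
      ≤ Module.finrank K (A * B : Submodule K L) := by
  induction hn : Module.finrank K B using Nat.strong_induction_on generalizing A B with
  | _ n ih =>
  subst hn
  obtain ⟨b, hbB, hb0⟩ := Submodule.exists_mem_ne_zero_of_ne_bot hB
  obtain ⟨a, haA, ha0⟩ := Submodule.exists_mem_ne_zero_of_ne_bot hA
  by_cases hst : ∀ a ∈ A, ∀ c ∈ B, (c / b) * a ∈ A
  · let S := stabSubalg A
    have hS : ∀ z ∈ S, z⁻¹ ∈ S := fun z hz =>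
      S.inv_mem_of_algebraic (x := ⟨z, hz⟩) (Algebra.IsAlgebraic.isAlgebraic z)
    let M : IntermediateField K L := S.toIntermediateField hS
    have hM : ∀ c ∈ B, c / b ∈ M := fun c hc a ha => hst a ha c hc
    rcases hprim M with h | h
    · have hle : B ≤ K ∙ b := by
        intro c hc
        have := hM c hc
        rw [h, IntermediateField.mem_bot] at this
        obtain ⟨q, hq⟩ := this
        rw [Submodule.mem_span_singleton]
        refine ⟨q, ?_⟩
        rw [Algebra.smul_def, hq, div_mul_cancel₀ _ hb0]
      have h1 : Module.finrank K B ≤ 1 :=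
        (Submodule.finrank_mono hle).trans (by rw [finrank_span_singleton hb0])
      have h2 : Module.finrank K A ≤ Module.finrank K (A * B : Submodule K L) := by
        rw [← finrank_map_mulLeft b hb0 A]
        apply Submodule.finrank_mono
        rintro _ ⟨z, hz, rfl⟩
        simp only [LinearMap.mulLeft_apply]
        rw [mul_comm b z]
        exact Submodule.mul_mem_mul hz hbB
      omega
    · have hAt : A = ⊤ := by
        rw [eq_top_iff]
        intro z _
        have : z / a ∈ M := by rw [h]; trivial
        have := this a haA
        rwa [div_mul_cancel₀ _ ha0] at this
      have : (A * B : Submodule K L) = ⊤ := by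
        rw [eq_top_iff]
        intro z _
        have : z = (z / b) * b := by rw [div_mul_cancel₀ _ hb0]
        rw [this]
        exact Submodule.mul_mem_mul (hAt ▸ Submodule.mem_top) hbB
      rw [this, finrank_top]
      exact min_le_left _ _
  · push Not at hst
    obtain ⟨a', ha', c, hc, hn⟩ := hst
    have ha'0 : a' ≠ 0 := by rintro rfl; simp at hn
    set g := a' / b with hg
    have hg0 : g ≠ 0 := div_ne_zero ha'0 hb0
    let B1 : Submodule K L := B ⊓ A.comap (LinearMap.mulLeft K g)
    let gB : Submodule K L := B.map (LinearMap.mulLeft K g)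
    let A1 : Submodule K L := A ⊔ gB
    have hbB1 : b ∈ B1 := ⟨hbB, by simp [hg, div_mul_cancel₀ _ hb0, ha']⟩
    have hlt : Module.finrank K B1 < Module.finrank K B := by
      apply Submodule.finrank_lt_finrank_of_lt
      refine lt_of_le_of_ne inf_le_left ?_
      intro h
      have : c ∈ B1 := h ▸ hc
      apply hn
      have h2 : g * c ∈ A := this.2
      have h3 : c / b * a' = g * c := by rw [hg]; ring
      rwa [h3]
    have hinf : A ⊓ gB = B1.map (LinearMap.mulLeft K g) := by
      ext z
      constructor
      · rintro ⟨h1, w, hw, rfl⟩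
        exact ⟨w, ⟨hw, h1⟩, rfl⟩
      · rintro ⟨w, ⟨hw, h1⟩, rfl⟩
        exact ⟨h1, w, hw, rfl⟩
    have hdim := Submodule.finrank_sup_add_finrank_inf_eq A gB
    rw [hinf, finrank_map_mulLeft g hg0, finrank_map_mulLeft g hg0] at hdim
    have hA1 : A1 ≠ ⊥ := fun h => hA (eq_bot_iff.2 (le_sup_left.trans h.le))
    have hB1 : B1 ≠ ⊥ := fun h => hb0 (by simpa [h] using hbB1)
    have := ih _ hlt A1 B1 hA1 hB1 rfl
    have hmul : A1 * B1 ≤ A * B := by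
      rw [Submodule.sup_mul]
      refine sup_le (mul_le_mul' le_rfl inf_le_left) ?_
      rw [Submodule.mul_le]
      rintro _ ⟨w, hw, rfl⟩ z ⟨_, hz⟩
      have hz' : g * z ∈ A := hz
      have : g * w * z = (g * z) * w := by ring
      rw [LinearMap.mulLeft_apply, this]
      exact Submodule.mul_mem_mul hz' hw
    have := this.trans (Submodule.finrank_mono hmul)
    rw [← hdim]
    exact this

end CauchyDavenport

end

/-! ### Numerical estimates for large plane degree -/

section
section Num

/-- The inequality behind `num_compare`, with `x = d - 1` and `a = e - 1`, after clearing
denominators and rounding. -/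
theorem num_core {x s a : ℤ} (hs : 2 ≤ s) (hx1 : s ^ 3 ≤ x) (hx2 : 8 * s * (s + 1) ≤ x)
    (ha : s ≤ a) (hax : a ^ 2 ≤ x) :
    s * (3 * x * (a * (a - 1)) + 2 * a ^ 4) ≤ 3 * x ^ 2 * (a + 1 - s) := by
  have hx0 : 0 < x := by nlinarith
  rcases eq_or_lt_of_le ha with rfl | ha'
  · have h1 : 0 ≤ x - s ^ 3 := by linarith
    have h2 : 0 ≤ (x - s ^ 3) * x := mul_nonneg h1 hx0.le
    have h3 : 0 ≤ (x - s ^ 3) * s ^ 2 := mul_nonneg h1 (by positivity)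
    have h4 : 0 ≤ x * s ^ 2 := by positivity
    nlinarith [h2, h3, h4, pow_pos (by linarith : 0 < s) 5]
  have key : s * (5 * a ^ 2 - 3 * a) ≤ 3 * x * (a + 1 - s) := by
    by_cases hb : 8 * s ≤ 3 * a + 3
    · have h1 : 0 ≤ (x - a ^ 2) * (a + 1 - s) := mul_nonneg (by linarith) (by linarith)
      have h2 : 0 ≤ (3 * a + 3 - 8 * s) * a ^ 2 := mul_nonneg (by linarith) (by positivity)
      nlinarith [mul_pos (by linarith : 0 < s) (by linarith : 0 < a)]
    · push Not at hb
      -- the difference is concave in `a`; compare with the chord through the two end points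
      have c2 : 0 ≤ 6 * x - s * (5 * (s + 1) ^ 2 - 3 * (s + 1)) := by
        by_cases h8 : 8 ≤ s
        · nlinarith [mul_nonneg (by linarith : 0 ≤ s - 8) (by positivity : 0 ≤ s ^ 2), mul_nonneg (by linarith : 0 ≤ s - 8) (by linarith : 0 ≤ s)]
        · push Not at h8
          have : 0 ≤ s * ((9 - s) * (s + 1)) := by
            apply mul_nonneg (by linarith); apply mul_nonneg <;> linarith
          nlinarith
      have c1 : 0 ≤ 9 * (5 * x) - (5 * (8 * s - 3) ^ 2 - 9 * (8 * s - 3)) := by nlinarith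
      have h1 : 0 ≤ s * ((a - s - 1) * (8 * s - 3 - 3 * a)) := by
        apply mul_nonneg (by linarith)
        apply mul_nonneg <;> linarith
      have h2 : 0 ≤ (8 * s - 3 - 3 * a) * (6 * x - s * (5 * (s + 1) ^ 2 - 3 * (s + 1))) :=
        mul_nonneg (by linarith) c2
      have h3 : 0 ≤ (a - s - 1) * s * (9 * (5 * x) - (5 * (8 * s - 3) ^ 2 - 9 * (8 * s - 3))) := by
        apply mul_nonneg _ c1
        apply mul_nonneg <;> linarith
      have h4 : 0 < 5 * s - 6 := by linarith
      have h5 : 0 ≤ (5 * s - 6) * (3 * x * (a + 1 - s) - s * (5 * a ^ 2 - 3 * a)) := by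
        have e : 3 * ((5 * s - 6) * (3 * x * (a + 1 - s) - s * (5 * a ^ 2 - 3 * a))) =
            3 * ((8 * s - 3 - 3 * a) * (6 * x - s * (5 * (s + 1) ^ 2 - 3 * (s + 1)))) +
            ((a - s - 1) * s * (9 * (5 * x) - (5 * (8 * s - 3) ^ 2 - 9 * (8 * s - 3)))) +
            5 * (5 * s - 6) * (s * ((a - s - 1) * (8 * s - 3 - 3 * a))) := by ring
        have : 0 ≤ (5 * s - 6) * (s * ((a - s - 1) * (8 * s - 3 - 3 * a))) :=
          mul_nonneg h4.le h1
        linarith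
      have := nonneg_of_mul_nonneg_right h5 h4
      linarith
  have h1 : 0 ≤ (x - a ^ 2) * (s * a ^ 2) := by
    apply mul_nonneg (by linarith); positivity
  have h2 : 0 ≤ (3 * x * (a + 1 - s) - s * (5 * a ^ 2 - 3 * a)) * x :=
    mul_nonneg (by linarith) hx0.le
  nlinarith

/-- The genus bound obtained from plane degree `e > s` does not exceed the one for `s`; here
`x = d - 1`, and `q₁`, `m` are the quotients of `x` by `e` and by `s`. -/
theorem num_compare {x s e q₁ ρ m ε : ℤ} (hs : 2 ≤ s) (hx1 : s ^ 3 ≤ x) (hx2 : 8 * s * (s + 1) ≤ x)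
    (he : s + 1 ≤ e) (hex : (e - 1) ^ 2 ≤ x) (hq : x = e * q₁ + ρ) (hρ : 0 ≤ ρ) (hρe : ρ < e)
    (hm : x = s * m + ε) (hε : 0 ≤ ε) (hεs : ε < s) :
    3 * (2 * q₁ * x - e * q₁ * (q₁ + 1) + q₁ * ((e - 1) * (e - 2))) +
      (e * (e - 1) * (2 * e - 7) + 6 * (e - 1)) ≤ 3 * (2 * m * x - s * m * (m + 1)) := by
  have core := num_core hs hx1 hx2 (a := e - 1) (by linarith) hex
  have h1 : 4 * (e * (2 * q₁ * x - e * q₁ * (q₁ + 1) + q₁ * ((e - 1) * (e - 2)))) ≤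
      4 * x ^ 2 - 4 * e * x + 4 * x * ((e - 1) * (e - 2)) + e ^ 2 := by
    have : e * q₁ = x - ρ := by linarith
    have e1 : e * (2 * q₁ * x - e * q₁ * (q₁ + 1) + q₁ * ((e - 1) * (e - 2))) =
        2 * (e * q₁) * x - (e * q₁) ^ 2 - e * (e * q₁) + (e * q₁) * ((e - 1) * (e - 2)) := by ring
    rw [e1, this]
    have h2 : 0 ≤ ρ * ((e - 1) * (e - 2)) := by
      apply mul_nonneg hρ; apply mul_nonneg <;> linarith
    nlinarith [sq_nonneg (e - 2 * ρ)]
  have h2 : x ^ 2 - s * x ≤ s * (2 * m * x - s * m * (m + 1)) := by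
    have : s * m = x - ε := by linarith
    have e1 : s * (2 * m * x - s * m * (m + 1)) = 2 * (s * m) * x - (s * m) ^ 2 - s * (s * m) := by
      ring
    rw [e1, this]
    nlinarith [mul_nonneg hε (by linarith : 0 ≤ s - ε)]
  have he0 : 0 < e := by linarith
  have hs0 : 0 < s := by linarith
  have h3 : s * (3 * e ^ 2 + 4 * e ^ 2 * (e - 1) * (2 * e - 7) + 24 * e * (e - 1)) ≤
      s * (8 * (e - 1) ^ 4) := by
    apply mul_le_mul_of_nonneg_left _ hs0.le
    obtain ⟨c, rfl⟩ : ∃ c, e = c + 3 := ⟨e - 3, by ring⟩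
    have : 0 ≤ c := by linarith
    nlinarith [pow_nonneg this 3, pow_nonneg this 2]
  have h4 := mul_le_mul_of_nonneg_left h1 (by linarith : 0 ≤ 3 * s)
  have h5 := mul_le_mul_of_nonneg_left h2 (by linarith : 0 ≤ 12 * e)
  have h6 : 0 ≤ (4 * e * s) * (3 * (2 * m * x - s * m * (m + 1)) -
      (3 * (2 * q₁ * x - e * q₁ * (q₁ + 1) + q₁ * ((e - 1) * (e - 2))) +
      (e * (e - 1) * (2 * e - 7) + 6 * (e - 1)))) := by
    nlinarith
  have := nonneg_of_mul_nonneg_right h6 (by positivity)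
  linarith

theorem sum_lin (x e c : ℤ) (n : ℕ) : ∑ i ∈ Finset.range n, (2 * x - 2 * e * ((i : ℤ) + 1) + c) =
    2 * n * x - e * n * (n + 1) + n * c := by
  induction n with
  | zero => simp
  | succ n ih => rw [Finset.sum_range_succ, ih]; push_cast; ring

theorem sum_quad (c : ℤ) (n : ℕ) : 3 * ∑ i ∈ Finset.range n, (c - ((i : ℤ) + 2) * ((i : ℤ) + 3)) =
    3 * n * c - ((n + 1) * (n + 2) * (n + 3) - 6) := by
  induction n with
  | zero => simp
  | succ n ih => rw [Finset.sum_range_succ, mul_add, ih]; push_cast; ring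

/-- The bound on the sum of `d - τ i` for a function `τ` with the properties of the ranks of a
curve whose generic plane projection has degree `e ≥ s + 1`: full rank below `e` (`hA`), the plane
curve bound (`hB`) and Cauchy–Davenport (`hC`). -/
theorem genus_sum_le {τ : ℕ → ℤ} {d e s : ℕ} (hs : 2 ≤ s) (hx1 : s ^ 3 + 1 ≤ d)
    (hx2 : 8 * s * (s + 1) + 1 ≤ d) (he : s + 1 ≤ e)
    (hA : ∀ i, i < e → 2 * τ i = ((i : ℤ) + 1) * (i + 2))
    (hB : ∀ i, e * i < d → 2 * (e : ℤ) * i + 2 - (e - 1) * (e - 2) ≤ 2 * τ i)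
    (hC : ∀ i j, min (d : ℤ) (τ i + τ j - 1) ≤ τ (i + j)) (h1 : ∀ i, 1 ≤ τ i) (N : ℕ) :
    ∃ n ≥ N, 2 * ∑ i ∈ Finset.range n, ((d : ℤ) - τ (i + 1)) ≤
      2 * ((d - 1) / s : ℕ) * ((d : ℤ) - 1) - s * ((d - 1) / s : ℕ) * (((d - 1) / s : ℕ) + 1) := by
  -- reduce to `(e - 1)² < d`
  obtain ⟨E, hE1, hE2, hE3, hE4⟩ : ∃ E : ℕ, s + 1 ≤ E ∧ E ≤ e ∧ (E - 1) ^ 2 ≤ d - 1 ∧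
      ∀ i, E * i < d → 2 * (E : ℤ) * i + 2 - (E - 1) * (E - 2) ≤ 2 * τ i := by
    by_cases hle : (e - 1) ^ 2 ≤ d - 1
    · exact ⟨e, he, le_rfl, hle, hB⟩
    · refine ⟨Nat.sqrt (d - 1) + 1, ?_, ?_, ?_, ?_⟩
      · have : s ≤ Nat.sqrt (d - 1) := by
          rw [Nat.le_sqrt']
          have : s ^ 2 ≤ s ^ 3 := Nat.pow_le_pow_right (by omega) (by norm_num)
          omega
        omega
      · have : Nat.sqrt (d - 1) < e - 1 := by
          rw [Nat.sqrt_lt']; omega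
        omega
      · rw [Nat.add_sub_cancel]
        exact Nat.sqrt_le' _
      · intro i hi
        have hq : d ≤ (Nat.sqrt (d - 1) + 1) ^ 2 := by
          have := Nat.lt_succ_sqrt' (d - 1)
          rw [Nat.succ_eq_add_one] at this
          omega
        have hi' : i < Nat.sqrt (d - 1) + 1 := by
          by_contra hcon
          push Not at hcon
          have := Nat.mul_le_mul (le_refl (Nat.sqrt (d - 1) + 1)) hcon
          nlinarith
        have : Nat.sqrt (d - 1) < e - 1 := by
          rw [Nat.sqrt_lt']; omega
        rw [hA i (by omega)]
        push_cast
        obtain ⟨c, hc⟩ : ∃ c, Nat.sqrt (d - 1) = i + c := ⟨Nat.sqrt (d - 1) - i, by omega⟩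
        rw [hc]
        push_cast
        rcases Nat.eq_zero_or_pos c with rfl | hc
        · push_cast; nlinarith
        · have : (1 : ℤ) ≤ c := by exact_mod_cast hc
          nlinarith
  obtain ⟨x, rfl⟩ : ∃ x, d = x + 1 := ⟨d - 1, by omega⟩
  simp only [Nat.add_sub_cancel] at *
  obtain ⟨q, hq⟩ : ∃ q, q = x / E := ⟨_, rfl⟩
  have hdiv := Nat.div_add_mod x E
  have hdivs := Nat.div_add_mod x s
  have hmod := Nat.mod_lt x (show 0 < E by omega)
  have hmods := Nat.mod_lt x (show 0 < s by omega)
  rw [← hq] at hdiv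
  obtain ⟨f, hf⟩ : ∃ f, E = f + 2 := ⟨E - 2, by omega⟩
  refine ⟨q + (f + N), by omega, ?_⟩
  have hτq := hE4 q (by omega)
  -- up to degree `q = (d - 1) / E` the plane curve bound applies
  have p1 : ∑ i ∈ Finset.range q, 2 * (((x + 1 : ℕ) : ℤ) - τ (i + 1)) ≤
      ∑ i ∈ Finset.range q, (2 * (x : ℤ) - 2 * E * ((i : ℤ) + 1) + (E - 1) * (E - 2)) := by
    refine Finset.sum_le_sum fun i hi => ?_
    have hi' := Finset.mem_range.1 hi
    have := hE4 (i + 1) (by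
      have := Nat.mul_le_mul (le_refl E) (show i + 1 ≤ q by omega)
      omega)
    push_cast at this ⊢
    linarith
  have hzq : (E : ℤ) * q + ((x % E : ℕ) : ℤ) = x := by exact_mod_cast hdiv
  have hmodz : ((x % E : ℕ) : ℤ) < E := by exact_mod_cast hmod
  have p2 : ∀ i, i < E → 2 * (((x + 1 : ℕ) : ℤ) - τ (q + i)) ≤
      max 0 ((E : ℤ) * (E - 1) + 2 - ((i : ℤ) + 1) * (i + 2)) := by
    intro i hi
    have h2 := hA i (by omega)
    have h3 := hC q i
    rcases min_le_iff.1 h3 with h4 | h4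
    · exact le_max_of_le_left (by linarith)
    · refine le_max_of_le_right ?_
      push_cast
      nlinarith
  have p3 : ∑ i ∈ Finset.range f, 2 * (((x + 1 : ℕ) : ℤ) - τ (q + i + 1)) ≤
      ∑ i ∈ Finset.range f, (((E : ℤ) * (E - 1) + 2) - ((i : ℤ) + 2) * ((i : ℤ) + 3)) := by
    refine Finset.sum_le_sum fun i hi => ?_
    have hi' := Finset.mem_range.1 hi
    have := p2 (i + 1) (by omega)
    rw [← add_assoc] at this
    push_cast at this ⊢
    have hfi : (i : ℤ) + 1 ≤ f := by exact_mod_cast hi'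
    have hE' : (E : ℤ) = f + 2 := by exact_mod_cast hf
    rw [max_eq_right] at this
    · linarith
    · rw [hE']; nlinarith
  have p4 : ∀ i, ((x + 1 : ℕ) : ℤ) - τ (q + (f + i) + 1) ≤ 0 := by
    intro i
    have h2 := p2 (f + 1) (by omega)
    have hE' : (E : ℤ) = f + 2 := by exact_mod_cast hf
    rw [max_eq_left (by rw [hE']; push_cast; nlinarith)] at h2
    have h3 := hC (q + (f + 1)) i
    have h4 := h1 i
    rw [show q + (f + i) + 1 = q + (f + 1) + i by ring]
    rcases min_le_iff.1 h3 with h5 | h5 <;> linarith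
  have p5 : ∑ i ∈ Finset.range N, 2 * (((x + 1 : ℕ) : ℤ) - τ (q + (f + i) + 1)) ≤ 0 :=
    Finset.sum_nonpos fun i _ => by linarith [p4 i]
  rw [sum_lin] at p1
  have p6 := sum_quad ((E : ℤ) * (E - 1) + 2) f
  have hE' : (E : ℤ) = f + 2 := by exact_mod_cast hf
  have hcmp := num_compare (x := x) (s := s) (e := E) (q₁ := q) (ρ := (x % E : ℕ))
    (m := (x / s : ℕ)) (ε := (x % s : ℕ)) (by exact_mod_cast hs) (by exact_mod_cast (by omega : s ^ 3 ≤ x))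
    (by exact_mod_cast (by omega : 8 * s * (s + 1) ≤ x)) (by exact_mod_cast hE1)
    (by
      have h7 : ((E : ℤ) - 1) = ((E - 1 : ℕ) : ℤ) := by push_cast [show 1 ≤ E by omega]; ring
      rw [h7]
      exact_mod_cast hE3) hzq.symm (by positivity) hmodz
    (by exact_mod_cast hdivs.symm) (by positivity) (by exact_mod_cast hmods)
  rw [Finset.mul_sum, Finset.sum_range_add, Finset.sum_range_add]
  have p7 : ((f : ℤ) + 1) * (f + 2) * (f + 3) = (E - 1) * E * (E + 1) := by rw [hE']; ring
  rw [p7] at p6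
  have p8 : (f : ℤ) = E - 2 := by linarith
  rw [p8] at p6
  push_cast at *
  simp only [← add_assoc] at *
  nlinarith

end Num

end

/-! ### Krull dimension and transcendence degree -/

section
theorem ringKrullDim_of_integral (R S : Type*) [CommRing R] [CommRing S] [IsDomain S] [Algebra R S]
    [Algebra.IsIntegral R S] (hinj : Function.Injective (algebraMap R S)) :
    ringKrullDim S = ringKrullDim R := by
  haveI : IsDomain R := hinj.isDomain
  refine le_antisymm ?_ ?_
  · refine Order.krullDim_le_of_strictMono (PrimeSpectrum.comap (algebraMap R S)) ?_
    intro P Q hPQ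
    exact Ideal.IsIntegral.comap_lt_comap (R := R) hPQ
  · refine iSup_le fun l => ?_
    obtain ⟨P, hP1, hP2⟩ : ∃ P : Ideal S, P.IsPrime ∧ P.comap (algebraMap R S) = l.head.asIdeal := by
      obtain ⟨P, -, hP1, hP2⟩ := Ideal.exists_ideal_over_prime_of_isIntegral l.head.asIdeal (⊥ : Ideal S)
        (by
          intro a ha
          have : algebraMap R S a = 0 := ha
          rw [(injective_iff_map_eq_zero _).1 hinj a this]
          exact zero_mem _)
      exact ⟨P, hP1, hP2⟩
    haveI : P.LiesOver l.head.asIdeal := ⟨hP2.symm⟩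
    obtain ⟨l', hl', -, -⟩ := Ideal.exists_ltSeries_of_hasGoingUp l P
    rw [← hl']
    exact le_iSup (fun l : LTSeries (PrimeSpectrum S) => ((l.length : ℕ∞) : WithBot ℕ∞)) l'

/-- For an affine domain over `ℂ` the Krull dimension is the transcendence degree. -/
theorem ringKrullDim_of_trdeg {n : ℕ} (I : Ideal (MvPolynomial (Fin n) ℂ)) [I.IsPrime] {m : ℕ}
    (htr : Algebra.trdeg ℂ (MvPolynomial (Fin n) ℂ ⧸ I) = (m : Cardinal)) :
    ringKrullDim (MvPolynomial (Fin n) ℂ ⧸ I) = m := by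
  obtain ⟨s, -, g, hg, hInt⟩ := exists_integral_inj_algHom_of_quotient I (Ideal.IsPrime.ne_top ‹_›)
  letI : Algebra (MvPolynomial (Fin s) ℂ) (MvPolynomial (Fin n) ℂ ⧸ I) := g.toRingHom.toAlgebra
  haveI : IsScalarTower ℂ (MvPolynomial (Fin s) ℂ) (MvPolynomial (Fin n) ℂ ⧸ I) :=
    IsScalarTower.of_algebraMap_eq fun z => (g.commutes z).symm
  haveI : Algebra.IsIntegral (MvPolynomial (Fin s) ℂ) (MvPolynomial (Fin n) ℂ ⧸ I) := ⟨hInt⟩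
  haveI : FaithfulSMul (MvPolynomial (Fin s) ℂ) (MvPolynomial (Fin n) ℂ ⧸ I) :=
    (faithfulSMul_iff_algebraMap_injective _ _).2 hg
  haveI : FaithfulSMul ℂ (MvPolynomial (Fin n) ℂ ⧸ I) := inferInstance
  have h1 := trdeg_add_eq ℂ (MvPolynomial (Fin s) ℂ) (A := MvPolynomial (Fin n) ℂ ⧸ I)
  rw [htr, trdeg_eq_zero (R := MvPolynomial (Fin s) ℂ), add_zero, MvPolynomial.trdeg_of_isDomain] at h1
  simp only [Cardinal.mk_fin, Cardinal.lift_natCast, Nat.cast_inj] at h1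
  rw [ringKrullDim_of_integral (MvPolynomial (Fin s) ℂ) _ hg,
    MvPolynomial.ringKrullDim_of_isNoetherianRing, ringKrullDim_eq_zero_of_field, h1]
  simp

open MvPolynomial in
/-- The ideal of all polynomials whose homogeneous components vanish at `x`. -/
noncomputable def vanIdeal {F : Type} [Field F] [Algebra ℂ F] {r : ℕ} (x : Fin (r + 1) → F) :
    Ideal (MvPolynomial (Fin (r + 1)) ℂ) :=
  RingHom.ker (aeval (R := ℂ) fun i => Polynomial.C (x i) * Polynomial.X :
    MvPolynomial (Fin (r + 1)) ℂ →ₐ[ℂ] Polynomial F)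

section Cone
open MvPolynomial
variable {F : Type} [Field F] [Algebra ℂ F] {r : ℕ} (x : Fin (r + 1) → F)

instance vanIdeal_isPrime : (vanIdeal x).IsPrime := RingHom.ker_isPrime _

theorem aeval_cone_homog {n : ℕ} {f : MvPolynomial (Fin (r + 1)) ℂ} (hf : f.IsHomogeneous n) :
    aeval (R := ℂ) (fun i => Polynomial.C (x i) * Polynomial.X) f =
      Polynomial.C (aeval x f) * Polynomial.X ^ n := by
  rw [aeval_def, aeval_def, eval₂_eq', eval₂_eq', map_sum, Finset.sum_mul]
  refine Finset.sum_congr rfl fun α hα => ?_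
  have hdeg : ∑ i, α i = n := by
    have := hf (mem_support_iff.1 hα)
    rw [← this, ← Finsupp.degree_eq_sum, Finsupp.degree_eq_weight_one]
    rfl
  simp only [mul_pow, Finset.prod_mul_distrib, Finset.prod_pow_eq_pow_sum, hdeg, map_mul,
    map_prod, map_pow]
  rw [IsScalarTower.algebraMap_apply ℂ F (Polynomial F), Polynomial.algebraMap_eq, mul_assoc]

theorem aeval_cone_coeff (f : MvPolynomial (Fin (r + 1)) ℂ) (n : ℕ) :
    (aeval (R := ℂ) (fun i => Polynomial.C (x i) * Polynomial.X) f).coeff n =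
      aeval x (homogeneousComponent n f) := by
  conv_lhs => rw [← sum_homogeneousComponent f]
  rw [map_sum, Polynomial.finsetSum_coeff]
  simp only [aeval_cone_homog x (homogeneousComponent_isHomogeneous _ f),
    Polynomial.coeff_C_mul_X_pow]
  rw [Finset.sum_ite_eq]
  split_ifs with h
  · rfl
  · rw [homogeneousComponent_eq_zero _ _ (by simpa using h), map_zero]

theorem mem_vanIdeal {f : MvPolynomial (Fin (r + 1)) ℂ} :
    f ∈ vanIdeal x ↔ ∀ n, aeval x (homogeneousComponent n f) = 0 := by
  unfold vanIdeal
  rw [RingHom.mem_ker, Polynomial.ext_iff]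
  refine forall_congr' fun n => ?_
  rw [Polynomial.coeff_zero]
  exact (aeval_cone_coeff x f n) ▸ Iff.rfl

theorem mem_vanIdeal_homog {n : ℕ} {f : MvPolynomial (Fin (r + 1)) ℂ} (hf : f.IsHomogeneous n) :
    f ∈ vanIdeal x ↔ aeval x f = 0 := by
  rw [mem_vanIdeal]
  constructor
  · intro h
    have := h n
    rwa [homogeneousComponent_of_mem hf, if_pos rfl] at this
  · intro h m
    rw [homogeneousComponent_of_mem hf]
    split_ifs
    · exact h
    · exact map_zero _

theorem vanIdeal_homog {f : MvPolynomial (Fin (r + 1)) ℂ} (hf : f ∈ vanIdeal x) (m : ℕ) :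
    homogeneousComponent m f ∈ vanIdeal x :=
  (mem_vanIdeal_homog x (homogeneousComponent_isHomogeneous m f)).2 ((mem_vanIdeal x).1 hf m)

/-- The affine cone over a variety has one dimension more than the variety. -/
theorem vanIdeal_trdeg (x0 : x 0 = 1) (adjF : IntermediateField.adjoin ℂ (Set.range x) = ⊤)
    {m : ℕ} (hF : Algebra.trdeg ℂ F = (m : Cardinal)) :
    Algebra.trdeg ℂ (MvPolynomial (Fin (r + 1)) ℂ ⧸ vanIdeal x) = ((m + 1 : ℕ) : Cardinal) := by
  let ev : MvPolynomial (Fin (r + 1)) ℂ →ₐ[ℂ] Polynomial F :=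
    aeval (R := ℂ) fun i => Polynomial.C (x i) * Polynomial.X
  let ι : (MvPolynomial (Fin (r + 1)) ℂ ⧸ vanIdeal x) →ₐ[ℂ] Polynomial F :=
    Ideal.kerLiftAlg ev
  have hι : Function.Injective ι := Ideal.kerLiftAlg_injective ev
  let B := FractionRing (Polynomial F)
  let j : (MvPolynomial (Fin (r + 1)) ℂ ⧸ vanIdeal x) →ₐ[ℂ] B :=
    (IsScalarTower.toAlgHom ℂ (Polynomial F) B).comp ι
  have hj : Function.Injective j := (IsFractionRing.injective (Polynomial F) B).comp hι
  letI : Algebra (MvPolynomial (Fin (r + 1)) ℂ ⧸ vanIdeal x) B := j.toRingHom.toAlgebra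
  haveI : IsScalarTower ℂ (MvPolynomial (Fin (r + 1)) ℂ ⧸ vanIdeal x) B :=
    IsScalarTower.of_algebraMap_eq fun z => (j.commutes z).symm
  haveI : FaithfulSMul (MvPolynomial (Fin (r + 1)) ℂ ⧸ vanIdeal x) B :=
    (faithfulSMul_iff_algebraMap_injective _ _).2 hj
  have hX : ∀ i, j (Ideal.Quotient.mk _ (X i)) =
      algebraMap F B (x i) * algebraMap (Polynomial F) B Polynomial.X := by
    intro i
    have e : ι (Ideal.Quotient.mk _ (X i)) = ev (X i) := Ideal.kerLiftAlg_mk ev _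
    change algebraMap (Polynomial F) B (ι (Ideal.Quotient.mk _ (X i))) = _
    rw [e]
    simp only [ev, aeval_X, map_mul]
    rfl
  have hA : ∀ a, IsAlgebraic (MvPolynomial (Fin (r + 1)) ℂ ⧸ vanIdeal x) (j a) :=
    fun a => isAlgebraic_algebraMap a
  have hT : IsAlgebraic (MvPolynomial (Fin (r + 1)) ℂ ⧸ vanIdeal x)
      (algebraMap (Polynomial F) B Polynomial.X) := by
    have := hX 0
    rw [x0, map_one, one_mul] at this
    rw [← this]
    exact hA _
  have hT0 : algebraMap (Polynomial F) B Polynomial.X ≠ 0 := by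
    rw [Ne, FaithfulSMul.algebraMap_eq_zero_iff]
    exact Polynomial.X_ne_zero
  have hx : ∀ i, IsAlgebraic (MvPolynomial (Fin (r + 1)) ℂ ⧸ vanIdeal x)
      (algebraMap F B (x i)) := by
    intro i
    have : algebraMap F B (x i) = j (Ideal.Quotient.mk _ (X i)) *
        (algebraMap (Polynomial F) B Polynomial.X)⁻¹ := by
      rw [hX, mul_assoc, mul_inv_cancel₀ hT0, mul_one]
    rw [this]
    exact (hA _).mul hT.inv
  have hF' : ∀ z : F, IsAlgebraic (MvPolynomial (Fin (r + 1)) ℂ ⧸ vanIdeal x)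
      (algebraMap F B z) := by
    intro z
    have hz : z ∈ IntermediateField.adjoin ℂ (Set.range x) := by rw [adjF]; trivial
    induction hz using IntermediateField.adjoin_induction with
    | mem z hz => obtain ⟨i, rfl⟩ := hz; exact hx i
    | algebraMap c =>
      have : algebraMap F B (algebraMap ℂ F c) = j (algebraMap ℂ _ c) := by
        rw [AlgHom.commutes, ← IsScalarTower.algebraMap_apply]
      rw [this]; exact hA _
    | add a b _ _ ha hb => rw [map_add]; exact ha.add hb
    | inv a _ ha => rw [map_inv₀]; exact ha.inv
    | mul a b _ _ ha hb => rw [map_mul]; exact ha.mul hb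
  have hP : ∀ p : Polynomial F, IsAlgebraic (MvPolynomial (Fin (r + 1)) ℂ ⧸ vanIdeal x)
      (algebraMap (Polynomial F) B p) := by
    intro p
    induction p using Polynomial.induction_on' with
    | add p q hp hq => rw [map_add]; exact hp.add hq
    | monomial n a =>
      rw [← Polynomial.C_mul_X_pow_eq_monomial, map_mul, map_pow]
      exact (hF' a).mul (hT.pow n)
  haveI : Algebra.IsAlgebraic (MvPolynomial (Fin (r + 1)) ℂ ⧸ vanIdeal x) B := by
    refine ⟨fun b => ?_⟩
    obtain ⟨p, q, -, rfl⟩ := IsFractionRing.div_surjective (A := Polynomial F) b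
    rw [div_eq_mul_inv]
    exact (hP p).mul (hP q).inv
  have h1 := trdeg_add_eq ℂ (MvPolynomial (Fin (r + 1)) ℂ ⧸ vanIdeal x) (A := B)
  have h2 := trdeg_add_eq ℂ (Polynomial F) (A := B)
  have h3 := trdeg_add_eq ℂ F (A := Polynomial F)
  haveI : Algebra.IsAlgebraic (Polynomial F) B := by
    refine ⟨fun b => ?_⟩
    obtain ⟨p, q, -, rfl⟩ := IsFractionRing.div_surjective (A := Polynomial F) b
    rw [div_eq_mul_inv]
    exact (isAlgebraic_algebraMap p).mul (isAlgebraic_algebraMap q).inv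
  rw [trdeg_eq_zero (R := MvPolynomial (Fin (r + 1)) ℂ ⧸ vanIdeal x), add_zero] at h1
  rw [trdeg_eq_zero (R := Polynomial F), add_zero] at h2
  rw [h1, ← h2, ← h3, hF, Polynomial.trdeg_of_isDomain]
  push_cast
  rfl

end Cone

end

/-! ### Filtered families of subspaces and their saturations -/

section
open Polynomial IntermediateField

section Families

variable {κ L : Type*} [Field κ] [Field L] [Algebra κ L]

/-- A finite-dimensional subspace `P` of a `κ(t)`-vector space with `P ⊆ tP` is zero when `t` is
transcendental: the characteristic polynomial of `t` on `P` is an invertible scalar killing `P`. -/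
theorem eq_bot_of_le_smul {W : Type*} [AddCommGroup W] [Module κ W] {K : Type*} [Field K]
    [Algebra κ K] [Module K W] [IsScalarTower κ K W] (t : K) (ht : Transcendental κ t)
    (P : Submodule κ W) [FiniteDimensional κ P]
    (h : ∀ z ∈ P, ∃ w ∈ P, z = t • w) : P = ⊥ := by
  have ht0 : t ≠ 0 := fun h0 => ht (h0 ▸ isAlgebraic_zero)
  let T : W →ₗ[κ] W := (LinearMap.lsmul K W t).restrictScalars κ
  have hTinj : Function.Injective T := fun a b hab => smul_right_injective W ht0 hab
  have hle : P ≤ P.map T := by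
    intro z hz
    obtain ⟨w, hw, rfl⟩ := h z hz
    exact ⟨w, hw, rfl⟩
  have hfin : Module.finrank κ (P.map T) = Module.finrank κ P :=
    (Submodule.equivMapOfInjective T hTinj P).finrank_eq.symm
  have heq : P = P.map T := Submodule.eq_of_le_of_finrank_eq hle hfin.symm
  have hT : ∀ z ∈ P, T z ∈ P := fun z hz => by
    rw [heq]; exact ⟨z, hz, rfl⟩
  let f : Module.End κ P := T.restrict hT
  have hpow : ∀ (p : κ[X]) (z : P), ((aeval f p z : P) : W) = (aeval t p) • (z : W) := by
    intro p
    induction p using Polynomial.induction_on' with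
    | add p q hp hq => intro z; simp [hp, hq, add_smul]
    | monomial m a =>
      have : ∀ z : P, (((f ^ m) z : P) : W) = t ^ m • (z : W) := by
        induction m with
        | zero => simp
        | succ m ih =>
          intro z
          rw [pow_succ, Module.End.mul_apply, ih, pow_succ, mul_smul]
          rfl
      intro z
      rw [aeval_monomial, aeval_monomial, Module.End.mul_apply, Module.algebraMap_end_apply,
        Submodule.coe_smul, this, mul_smul, algebraMap_smul]
  rw [eq_bot_iff]
  intro z hz
  have h1 := hpow f.charpoly ⟨z, hz⟩
  rw [f.aeval_self_charpoly] at h1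
  have h2 : aeval t f.charpoly ≠ 0 := fun h0 =>
    ht ⟨f.charpoly, f.charpoly_monic.ne_zero, h0⟩
  have h3 : aeval t f.charpoly • z = 0 := h1.symm
  simpa [h2] using h3

/-- Extending scalars does not increase the dimension of a finite-dimensional subspace. -/
theorem span_finite_le {κ L : Type*} [Field κ] [AddCommGroup L] [Module κ L]
    {K : Type*} [Field K] [Algebra κ K] [Module K L] [IsScalarTower κ K L]
    (E : Submodule κ L) [FiniteDimensional κ E] :
    Module.finrank K (Submodule.span K (E : Set L)) ≤ Module.finrank κ E ∧
      FiniteDimensional K (Submodule.span K (E : Set L)) := by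
  let b := Module.finBasis κ E
  have hE : E = Submodule.span κ (Set.range fun i => (b i : L)) := by
    have h1 := congrArg (Submodule.map E.subtype) b.span_eq
    rw [Submodule.map_span, Submodule.map_top, Submodule.range_subtype, ← Set.range_comp] at h1
    exact h1.symm
  have hV : Submodule.span K (E : Set L) = Submodule.span K (Set.range fun i => (b i : L)) := by
    conv_lhs => rw [hE]
    exact Submodule.span_span_of_tower κ K _
  rw [hV]
  refine ⟨?_, FiniteDimensional.span_of_finite _ (Set.finite_range _)⟩
  refine (finrank_range_le_card (R := K) (fun i => (b i : L))).trans ?_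
  simp

/-- Extending scalars to `κ(t)` gives at most the first difference of dimensions: the analogue of
the inequality between the Hilbert function of a hyperplane section and the first difference. -/
theorem finrank_span_add_le (t : L) (ht : Transcendental κ t) (N₀ N₁ : Submodule κ L)
    [FiniteDimensional κ N₁] (h0 : N₀ ≤ N₁) (h1 : ∀ f ∈ N₀, t * f ∈ N₁) :
    Module.finrank κ⟮t⟯ (Submodule.span κ⟮t⟯ (N₁ : Set L)) + Module.finrank κ N₀
      ≤ Module.finrank κ N₁ := by
  have ht0 : t ≠ 0 := fun h0 => ht (h0 ▸ isAlgebraic_zero)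
  have : FiniteDimensional κ N₀ := Submodule.finiteDimensional_of_le h0
  let T : Submodule κ L := N₀.map (LinearMap.mulLeft κ t)
  have hTle : T ≤ N₁ := by rintro _ ⟨f, hf, rfl⟩; exact h1 f hf
  have hTfin : Module.finrank κ T = Module.finrank κ N₀ :=
    (Submodule.equivMapOfInjective (LinearMap.mulLeft κ t)
      (fun a b h => mul_left_cancel₀ ht0 (by simpa using h)) N₀).finrank_eq.symm
  obtain ⟨E', hE'⟩ := Submodule.exists_isCompl T
  -- `E` is a complement of `T` inside `N₁`, by the modular law
  let E : Submodule κ L := E' ⊓ N₁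
  have hsup : T ⊔ E = N₁ := by
    rw [← sup_inf_assoc_of_le _ hTle, hE'.sup_eq_top, top_inf_eq]
  have hinf : T ⊓ E = ⊥ := by
    rw [eq_bot_iff, ← hE'.inf_eq_bot]; exact inf_le_inf le_rfl inf_le_left
  have : FiniteDimensional κ E := Submodule.finiteDimensional_of_le (inf_le_right)
  have : FiniteDimensional κ T := Submodule.finiteDimensional_of_le hTle
  have hdim := Submodule.finrank_sup_add_finrank_inf_eq T E
  rw [hsup, hinf, finrank_bot, hTfin] at hdim
  let V : Submodule κ⟮t⟯ L := Submodule.span κ⟮t⟯ (E : Set L)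
  let V' : Submodule κ L := V.restrictScalars κ
  have hEV : E ≤ V' := fun z hz => Submodule.subset_span hz
  let t' : κ⟮t⟯ := AdjoinSimple.gen κ t
  have htt : Transcendental κ t' := by
    intro h
    apply ht
    have := h.algebraMap (S := κ⟮t⟯) (A := L)
    simpa [t'] using this
  let π : L →ₗ[κ] (L ⧸ V) := V.mkQ.restrictScalars κ
  have hP : N₀.map π = ⊥ := by
    apply eq_bot_of_le_smul t' htt
    rintro _ ⟨z, hz, rfl⟩
    have hz1 : z ∈ T ⊔ E := hsup ▸ h0 hz
    obtain ⟨_, ⟨w, hw, rfl⟩, e, he, rfl⟩ := Submodule.mem_sup.1 hz1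
    refine ⟨π w, ⟨w, hw, rfl⟩, ?_⟩
    have hpe : π e = 0 := (Submodule.Quotient.mk_eq_zero V).2 (hEV he)
    rw [map_add, hpe, add_zero]
    change V.mkQ (t * w) = t' • V.mkQ w
    rw [← map_smul]
    rfl
  have hN0 : ∀ z ∈ N₀, z ∈ V := fun z hz => by
    have : π z ∈ N₀.map π := ⟨z, hz, rfl⟩
    rw [hP] at this
    exact (Submodule.Quotient.mk_eq_zero V).1 this
  have hspan : Submodule.span κ⟮t⟯ (N₁ : Set L) ≤ V := by
    rw [Submodule.span_le]
    intro z hz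
    have hz1 : z ∈ T ⊔ E := hsup ▸ hz
    obtain ⟨_, ⟨w, hw, rfl⟩, e, he, rfl⟩ := Submodule.mem_sup.1 hz1
    refine V.add_mem ?_ (Submodule.subset_span he)
    exact V.smul_mem t' (hN0 w hw)
  have hVb := span_finite_le (K := κ⟮t⟯) E
  have hV1 : Module.finrank κ⟮t⟯ V ≤ Module.finrank κ E := hVb.1
  have hV2 : FiniteDimensional κ⟮t⟯ V := hVb.2
  have hV3 := Submodule.finrank_mono hspan
  omega

/-- A family of subspaces increasing in `n` and compatible with multiplication by `t`. -/
structure Fam (t : L) (N : ℕ → Submodule κ L) : Prop where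
  mono : ∀ n, N n ≤ N (n + 1)
  mul : ∀ n, ∀ f ∈ N n, t * f ∈ N (n + 1)

/-- Saturation of a family with respect to the pair `(1, t)`. -/
def sat (t : L) (N : ℕ → Submodule κ L) (n : ℕ) : Submodule κ L :=
  ⨆ a : ℕ, N (n + a) ⊓ (N (n + a)).comap (LinearMap.mulLeft κ (t ^ a))

/-- A family equal to its saturation. -/
def Saturated (t : L) (N : ℕ → Submodule κ L) : Prop :=
  ∀ n a f, f ∈ N (n + a) → t ^ a * f ∈ N (n + a) → f ∈ N n

variable {t : L} {N : ℕ → Submodule κ L}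

theorem Fam.mono' (h : Fam t N) {m n : ℕ} (hmn : m ≤ n) : N m ≤ N n :=
  monotone_nat_of_le_succ h.mono hmn

theorem Fam.pow_mul (h : Fam t N) (n a : ℕ) (f : L) (hf : f ∈ N n) : t ^ a * f ∈ N (n + a) := by
  induction a with
  | zero => simpa using hf
  | succ a ih =>
    rw [pow_succ', mul_assoc]
    exact h.mul _ _ ih

theorem mem_sat (h : Fam t N) {n : ℕ} {f : L} :
    f ∈ sat t N n ↔ ∃ a, f ∈ N (n + a) ∧ t ^ a * f ∈ N (n + a) := by
  unfold sat
  rw [Submodule.mem_iSup_of_directed]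
  · rfl
  · apply Monotone.directed_le
    apply monotone_nat_of_le_succ
    rintro a f ⟨h1, h2⟩
    refine ⟨h.mono _ h1, ?_⟩
    have h2' : t ^ a * f ∈ N (n + a) := h2
    change t ^ (a + 1) * f ∈ N (n + (a + 1))
    rw [pow_succ', mul_assoc]
    exact h.mul _ _ h2'

theorem sat_mem_ge (h : Fam t N) {n : ℕ} {f : L} {a b : ℕ} (hab : a ≤ b)
    (h1 : f ∈ N (n + a)) (h2 : t ^ a * f ∈ N (n + a)) :
    f ∈ N (n + b) ∧ t ^ b * f ∈ N (n + b) := by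
  obtain ⟨c, rfl⟩ := Nat.exists_eq_add_of_le hab
  refine ⟨h.mono' (by omega) h1, ?_⟩
  have := h.pow_mul _ c _ h2
  rw [← mul_assoc, ← pow_add, add_comm c a] at this
  rwa [← add_assoc]

theorem le_sat (h : Fam t N) (n : ℕ) : N n ≤ sat t N n := fun f hf =>
  (mem_sat h).2 ⟨0, by simpa using hf, by simpa using hf⟩

theorem Fam.sat (h : Fam t N) : Fam t (sat t N) where
  mono n f hf := by
    obtain ⟨a, h1, h2⟩ := (mem_sat h).1 hf
    exact (mem_sat h).2 ⟨a, h.mono' (by omega) h1, h.mono' (by omega) h2⟩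
  mul n f hf := by
    obtain ⟨a, h1, h2⟩ := (mem_sat h).1 hf
    refine (mem_sat h).2 ⟨a, ?_, ?_⟩
    · have := h.mul _ _ h1
      rwa [show n + 1 + a = n + a + 1 by ring]
    · have := h.mul _ _ h2
      rw [show n + 1 + a = n + a + 1 by ring]
      convert this using 1
      ring

theorem sat_saturated (h : Fam t N) : Saturated t (sat t N) := by
  intro n a f h1 h2
  obtain ⟨b, hb1, hb2⟩ := (mem_sat h).1 h1
  obtain ⟨c, hc1, hc2⟩ := (mem_sat h).1 h2
  refine (mem_sat h).2 ⟨a + (b + c), ?_, ?_⟩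
  · exact h.mono' (by omega) hb1
  · have := (sat_mem_ge h (show c ≤ b + c by omega) hc1 hc2).2
    rw [← mul_assoc, ← pow_add, add_comm (b + c) a] at this
    rwa [← add_assoc]

/-- For saturated families the reverse of `finrank_span_add_le` holds. -/
theorem finrank_le_span_add (ht0 : t ≠ 0) (h : Fam t N)
    (hs : Saturated t N) (i : ℕ) [FiniteDimensional κ (N (i + 1))] :
    Module.finrank κ (N (i + 1)) ≤
      Module.finrank κ⟮t⟯ (Submodule.span κ⟮t⟯ (N (i + 1) : Set L)) + Module.finrank κ (N i) := by
  have : FiniteDimensional κ (N i) := Submodule.finiteDimensional_of_le (h.mono i)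
  let T : Submodule κ L := (N i).map (LinearMap.mulLeft κ t)
  have hTle : T ≤ N (i + 1) := by rintro _ ⟨f, hf, rfl⟩; exact h.mul _ f hf
  have hTfin : Module.finrank κ T = Module.finrank κ (N i) :=
    (Submodule.equivMapOfInjective (LinearMap.mulLeft κ t)
      (fun a b h => mul_left_cancel₀ ht0 (by simpa using h)) (N i)).finrank_eq.symm
  obtain ⟨E', hE'⟩ := Submodule.exists_isCompl T
  let E : Submodule κ L := E' ⊓ N (i + 1)
  have hsup : T ⊔ E = N (i + 1) := by
    rw [← sup_inf_assoc_of_le _ hTle, hE'.sup_eq_top, top_inf_eq]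
  have hinf : T ⊓ E = ⊥ := by
    rw [eq_bot_iff, ← hE'.inf_eq_bot]; exact inf_le_inf le_rfl inf_le_left
  have : FiniteDimensional κ E := Submodule.finiteDimensional_of_le (inf_le_right)
  have : FiniteDimensional κ T := Submodule.finiteDimensional_of_le hTle
  have hdim := Submodule.finrank_sup_add_finrank_inf_eq T E
  rw [hsup, hinf, finrank_bot, hTfin] at hdim
  -- polynomial relations `∑ tʲ Fⱼ = 0` with `Fⱼ ∈ E` are trivial
  have key : ∀ (M : ℕ) (c : ℕ → L), (∀ j, c j ∈ E) → ∑ j ∈ Finset.range M, t ^ j * c j = 0 →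
      ∀ j < M, c j = 0 := by
    intro M
    induction M with
    | zero => intro c _ _ j hj; omega
    | succ M ih =>
      intro c hc hsum
      rw [Finset.sum_range_succ'] at hsum
      simp only [pow_zero, one_mul] at hsum
      have hg : c 0 / t = - ∑ j ∈ Finset.range M, t ^ j * c (j + 1) := by
        rw [div_eq_iff ht0, eq_comm, neg_mul, neg_eq_iff_add_eq_zero, ← hsum, Finset.sum_mul]
        congr 1
        exact Finset.sum_congr rfl fun j _ => by ring
      have hc0 : c 0 / t ∈ N i := by
        apply hs i (M + 1)
        · rw [hg]
          refine Submodule.neg_mem _ (Submodule.sum_mem _ fun j hj => ?_)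
          have := h.pow_mul _ j _ (hc (j + 1)).2
          exact h.mono' (by have := Finset.mem_range.1 hj; omega) this
        · have := h.pow_mul _ M _ (hc 0).2
          rw [show t ^ (M + 1) * (c 0 / t) = t ^ M * c 0 by rw [pow_succ, mul_assoc, mul_div_cancel₀ _ ht0]]
          rwa [show i + (M + 1) = i + 1 + M by ring]
      have h00 : c 0 = 0 := by
        have : c 0 ∈ T ⊓ E := ⟨⟨c 0 / t, hc0, by
          simp only [LinearMap.mulLeft_apply]; field_simp⟩, hc 0⟩
        rw [hinf] at this
        simpa using this
      have hsum' : ∑ j ∈ Finset.range M, t ^ j * c (j + 1) = 0 := by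
        rw [h00, zero_div] at hg
        exact neg_eq_zero.1 hg.symm
      intro j hj
      rcases j with _ | j
      · exact h00
      · exact ih (fun j => c (j + 1)) (fun j => hc _) hsum' j (by omega)
  let b := Module.finBasis κ E
  have hpoly : ∀ p : Fin (Module.finrank κ E) → κ[X],
      ∑ l, aeval t (p l) * (b l : L) = 0 → ∀ l, p l = 0 := by
    intro p hp
    obtain ⟨M, hM⟩ : ∃ M : ℕ, ∀ l, (p l).natDegree < M :=
      ⟨(Finset.univ.sup fun l => (p l).natDegree) + 1, fun l =>
        Nat.lt_succ_of_le (Finset.le_sup (f := fun l => (p l).natDegree) (Finset.mem_univ l))⟩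
    have h1 := key M (fun j => ∑ l, (p l).coeff j • (b l : L))
      (fun j => Submodule.sum_mem _ fun l _ => E.smul_mem _ (b l).2) (by
        rw [← hp]
        simp_rw [Finset.mul_sum]
        rw [Finset.sum_comm]
        refine Finset.sum_congr rfl fun l _ => ?_
        rw [aeval_eq_sum_range' (hM l), Finset.sum_mul]
        refine Finset.sum_congr rfl fun j _ => ?_
        rw [Algebra.smul_def, Algebra.smul_def]; ring)
    intro l
    ext j
    rw [coeff_zero]
    by_cases hj : j < M
    · have h2 := h1 j hj
      have h3 : ∑ l, (p l).coeff j • b l = 0 := by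
        apply Subtype.ext
        simpa using h2
      exact Fintype.linearIndependent_iff.1 b.linearIndependent (fun l => (p l).coeff j) h3 l
    · exact coeff_eq_zero_of_natDegree_lt (by have := hM l; omega)
  have hli : LinearIndependent κ⟮t⟯ (fun l => (b l : L)) := by
    rw [Fintype.linearIndependent_iff]
    intro g hg
    have hex : ∀ l, ∃ r s : κ[X], aeval t s ≠ 0 ∧ (g l : L) * aeval t s = aeval t r := by
      intro l
      obtain ⟨r, s, hrs⟩ := (mem_adjoin_simple_iff κ (g l : L)).1 (g l).2
      by_cases h0 : aeval t s = 0
      · refine ⟨0, 1, by simp, ?_⟩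
        rw [hrs, h0]; simp
      · exact ⟨r, s, h0, by rw [hrs, div_mul_cancel₀ _ h0]⟩
    choose r s hs0 hrs using hex
    have h1 := hpoly (fun l => r l * ∏ m ∈ Finset.univ.erase l, s m) (by
      have : (∏ m, aeval t (s m)) * ∑ l, g l • (b l : L) = 0 := by rw [hg, mul_zero]
      rw [← this, Finset.mul_sum]
      refine Finset.sum_congr rfl fun l _ => ?_
      rw [map_mul, ← hrs, map_prod, ← Finset.mul_prod_erase _ _ (Finset.mem_univ l)]
      rw [Algebra.smul_def]
      change _ = _ * ((g l : L) * _)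
      ring)
    intro l
    have h2 := congrArg (aeval t) (h1 l)
    rw [map_mul, map_zero, ← hrs, map_prod] at h2
    have h3 : ∏ m ∈ Finset.univ.erase l, aeval t (s m) ≠ 0 :=
      Finset.prod_ne_zero_iff.2 fun m _ => hs0 m
    rcases mul_eq_zero.1 h2 with h4 | h4
    · rcases mul_eq_zero.1 h4 with h5 | h5
      · exact Subtype.ext h5
      · exact absurd h5 (hs0 l)
    · exact absurd h4 h3
  have hfd := (span_finite_le (K := κ⟮t⟯) (N (i + 1))).2
  have hli' : LinearIndependent κ⟮t⟯ (fun l => (⟨b l, Submodule.subset_span (b l).2.2⟩ :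
      Submodule.span κ⟮t⟯ (N (i + 1) : Set L))) :=
    LinearIndependent.of_comp (Submodule.subtype _) hli
  have := hli'.fintype_card_le_finrank
  simp only [Fintype.card_fin] at this
  omega

end Families

end

section
open Polynomial IntermediateField

section Families2

variable {κ L : Type*} [Field κ] [Field L] [Algebra κ L]

/-- A finite-dimensional subspace covered by an increasing chain lies in one of its members. -/
theorem exists_uniform (E : Submodule κ L) [FiniteDimensional κ E] (S : ℕ → Submodule κ L)
    (hS : Monotone S) (h : ∀ f ∈ E, ∃ a, f ∈ S a) : ∃ a, E ≤ S a := by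
  let b := Module.finBasis κ E
  choose a ha using fun i => h (b i) (b i).2
  refine ⟨Finset.univ.sup a, fun z hz => ?_⟩
  have h2 : z = ∑ l, b.repr ⟨z, hz⟩ l • (b l : L) := by
    have := congrArg (E.subtype) (b.sum_repr ⟨z, hz⟩)
    rw [map_sum] at this
    exact this.symm
  rw [h2]
  exact Submodule.sum_mem _ fun i _ => Submodule.smul_mem _ _
    (hS (Finset.le_sup (Finset.mem_univ i)) (ha i))

variable {t : L} {N : ℕ → Submodule κ L}

/-- The uniform exponent of saturation of a finite-dimensional `sat t N n`. -/
theorem sat_uniform (h : Fam t N) (n : ℕ) [FiniteDimensional κ (sat t N n)] :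
    ∃ a, ∀ f ∈ sat t N n, f ∈ N (n + a) ∧ t ^ a * f ∈ N (n + a) := by
  obtain ⟨a, ha⟩ := exists_uniform (sat t N n)
    (fun a => N (n + a) ⊓ (N (n + a)).comap (LinearMap.mulLeft κ (t ^ a))) (by
      intro a b hab f hf
      exact sat_mem_ge h hab hf.1 hf.2) (fun f hf => (mem_sat h).1 hf)
  exact ⟨a, fun f hf => ⟨(ha hf).1, (ha hf).2⟩⟩

/-- The subspace `N + tN`. -/
def step (t : L) (N : Submodule κ L) : Submodule κ L := N ⊔ N.map (LinearMap.mulLeft κ t)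

theorem step_le (h : Fam t N) (n : ℕ) : step t (N n) ≤ N (n + 1) :=
  sup_le (h.mono n) (by rintro _ ⟨f, hf, rfl⟩; exact h.mul _ _ hf)

theorem finrank_mulLeft_map (ht0 : t ≠ 0) (E : Submodule κ L) :
    Module.finrank κ (E.map (LinearMap.mulLeft κ t)) = Module.finrank κ E :=
  (Submodule.equivMapOfInjective (LinearMap.mulLeft κ t)
      (fun a b h => mul_left_cancel₀ ht0 (by simpa using h)) E).finrank_eq.symm

theorem ne_zero_of_transc (ht : Transcendental κ t) : t ≠ 0 := by
  rintro rfl; exact ht isAlgebraic_zero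

/-- For saturated families the dimension over `κ(t)` is exactly the first difference. -/
theorem finrank_succ_eq (ht : Transcendental κ t) (h : Fam t N) (hs : Saturated t N)
    (hfd : ∀ n, FiniteDimensional κ (N n)) (i : ℕ) :
    Module.finrank κ (N (i + 1)) =
      Module.finrank κ⟮t⟯ (Submodule.span κ⟮t⟯ (N (i + 1) : Set L)) + Module.finrank κ (N i) :=
  le_antisymm (finrank_le_span_add (ne_zero_of_transc ht) h hs i)
    (finrank_span_add_le t ht _ _ (h.mono i) (h.mul i))

theorem finrank_step (ht : Transcendental κ t) (h : Fam t N) (hs : Saturated t N)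
    (hfd : ∀ n, FiniteDimensional κ (N n)) (i : ℕ) :
    Module.finrank κ (step t (N (i + 1))) + Module.finrank κ (N i)
      = 2 * Module.finrank κ (N (i + 1)) := by
  have ht0 := ne_zero_of_transc ht
  have hinf : N (i + 1) ⊓ (N (i + 1)).map (LinearMap.mulLeft κ t)
      = (N i).map (LinearMap.mulLeft κ t) := by
    apply le_antisymm
    · rintro _ ⟨h1, g, hg, rfl⟩
      refine ⟨g, hs i 1 g hg ?_, rfl⟩
      rw [pow_one]
      exact h1
    · rintro _ ⟨g, hg, rfl⟩
      exact ⟨h.mul _ _ hg, g, h.mono _ hg, rfl⟩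
  have h1 := Submodule.finrank_sup_add_finrank_inf_eq (N (i + 1))
    ((N (i + 1)).map (LinearMap.mulLeft κ t))
  rw [hinf, finrank_mulLeft_map ht0, finrank_mulLeft_map ht0] at h1
  unfold step
  omega

/-- When `L` is finite over `κ(t)`, a saturated family is eventually generated by `1` and `t`, and
the spans over `κ(t)` stabilise. -/
theorem exists_step_eq (ht : Transcendental κ t) (h : Fam t N) (hs : Saturated t N)
    (hfd : ∀ n, FiniteDimensional κ (N n)) [FiniteDimensional κ⟮t⟯ L] :
    ∃ n₀, ∀ n ≥ n₀, N (n + 1) = step t (N n) ∧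
      Submodule.span κ⟮t⟯ (N n : Set L) = Submodule.span κ⟮t⟯ (N n₀ : Set L) := by
  let S : ℕ →o Submodule κ⟮t⟯ L := ⟨fun n => Submodule.span κ⟮t⟯ (N n : Set L),
    fun a b hab => Submodule.span_mono (h.mono' hab)⟩
  obtain ⟨n₀, hn₀⟩ := monotone_stabilizes_iff_noetherian.2
    (inferInstance : IsNoetherian κ⟮t⟯ L) S
  have hS : ∀ n ≥ n₀, Submodule.span κ⟮t⟯ (N n : Set L) = Submodule.span κ⟮t⟯ (N n₀ : Set L) :=
    fun n hn => (hn₀ n hn).symm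
  refine ⟨n₀ + 1, fun n hn => ⟨?_, ?_⟩⟩
  · obtain ⟨i, rfl⟩ : ∃ i, n = i + 1 := ⟨n - 1, by omega⟩
    symm
    apply Submodule.eq_of_le_of_finrank_eq (step_le h _)
    have h1 := finrank_step ht h hs hfd i
    have h2 := finrank_succ_eq ht h hs hfd i
    have h3 := finrank_succ_eq ht h hs hfd (i + 1)
    rw [hS _ (by omega)] at h2 h3
    omega
  · rw [hS n (by omega), hS (n₀ + 1) (by omega)]

/-- When `L` is finite over `κ(t)`, a family agrees with its saturation eventually. -/
theorem exists_sat_eq (ht : Transcendental κ t) (h : Fam t N)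
    (hfd : ∀ n, FiniteDimensional κ (sat t N n)) [FiniteDimensional κ⟮t⟯ L] :
    ∃ n₀, ∀ n ≥ n₀, sat t N n = N n := by
  obtain ⟨n₀, hn₀⟩ := exists_step_eq ht h.sat (sat_saturated h) hfd
  obtain ⟨a, ha⟩ := sat_uniform h n₀
  have hgen : ∀ q, sat t N (n₀ + q) ≤
      ⨆ j : Fin (q + 1), (sat t N n₀).map (LinearMap.mulLeft κ (t ^ (j : ℕ))) := by
    intro q
    induction q with
    | zero =>
      intro f hf
      refine Submodule.mem_iSup_of_mem 0 ⟨f, hf, by simp⟩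
    | succ q ih =>
      rw [← add_assoc, (hn₀ (n₀ + q) (by omega)).1]
      apply sup_le
      · refine ih.trans (iSup_le fun j => ?_)
        exact le_iSup_of_le j.castSucc le_rfl
      · rw [Submodule.map_le_iff_le_comap]
        refine ih.trans (iSup_le fun j => ?_)
        rw [← Submodule.map_le_iff_le_comap]
        refine le_iSup_of_le j.succ ?_
        rintro _ ⟨_, ⟨f, hf, rfl⟩, rfl⟩
        refine ⟨f, hf, ?_⟩
        simp only [LinearMap.mulLeft_apply, Fin.val_succ]
        ring
  refine ⟨n₀ + 2 * a, fun n hn => le_antisymm ?_ (le_sat h n)⟩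
  obtain ⟨q, rfl⟩ := Nat.exists_eq_add_of_le hn
  rw [add_assoc]
  refine (hgen _).trans (iSup_le fun j => ?_)
  rintro _ ⟨f, hf, rfl⟩
  simp only [LinearMap.mulLeft_apply]
  obtain ⟨h1, h2⟩ := ha f hf
  have hj := j.2
  by_cases hja : a ≤ (j : ℕ)
  · obtain ⟨c, hc⟩ := Nat.exists_eq_add_of_le hja
    have := h.pow_mul _ c _ h2
    rw [hc, pow_add, mul_comm (t ^ a), mul_assoc]
    exact h.mono' (by omega) this
  · exact h.mono' (by omega) (h.pow_mul _ j _ h1)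

/-- Multiplication by another element `v` passes to saturations. -/
theorem sat_mul {v : L} (h : Fam t N) (h' : Fam v N) : Fam v (sat t N) where
  mono := h.sat.mono
  mul n f hf := by
    obtain ⟨a, h1, h2⟩ := (mem_sat h).1 hf
    refine (mem_sat h).2 ⟨a, ?_, ?_⟩
    · have := h'.mul _ _ h1
      rwa [show n + 1 + a = n + a + 1 by ring]
    · have := h'.mul _ _ h2
      rw [show n + 1 + a = n + a + 1 by ring]
      convert this using 1
      ring

/-- The family of spans over `κ(t)`. -/
def spanFam (t : L) (N : ℕ → Submodule κ L) (n : ℕ) : Submodule κ⟮t⟯ L :=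
  Submodule.span κ⟮t⟯ (N n : Set L)

theorem spanFam_fam {v : L} (h' : Fam v N) : Fam v (spanFam t N) where
  mono n := Submodule.span_mono (h'.mono n)
  mul n f hf := by
    have : Submodule.span κ⟮t⟯ (N n : Set L) ≤
        (spanFam t N (n + 1)).comap (LinearMap.mulLeft κ⟮t⟯ v) := by
      rw [Submodule.span_le]
      intro z hz
      exact Submodule.subset_span (h'.mul _ _ hz)
    exact this hf

/-- Surface case: the difference of dimensions between `sat y₀ N` and `N` is eventually constant
when the successive saturations are finite-dimensional and `L` is finite over `κ(y₀)(y₁)`. -/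
theorem exists_sat_sub_const {y₀ y₁ : L} (ht : Transcendental κ y₀)
    (ht₁ : Transcendental κ⟮y₀⟯ y₁) (h : Fam y₀ N) (h' : Fam y₁ N)
    (hfd : ∀ n, FiniteDimensional κ (sat y₀ N n))
    (hfd' : ∀ n, FiniteDimensional κ⟮y₀⟯ (sat y₁ (spanFam y₀ (sat y₀ N)) n))
    [FiniteDimensional κ⟮y₀⟯⟮y₁⟯ L] :
    ∃ n₀ C : ℕ, ∀ n ≥ n₀,
      Module.finrank κ (sat y₀ N n) = Module.finrank κ (N n) + C := by
  set A := sat y₀ N with hA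
  have hA0 : Fam y₀ A := h.sat
  have hA1 : Fam y₁ A := sat_mul h h'
  have hG : Fam y₁ (spanFam y₀ A) := spanFam_fam hA1
  obtain ⟨n₁, hn₁⟩ := exists_sat_eq ht₁ hG hfd'
  obtain ⟨n₂, hn₂⟩ := exists_step_eq ht₁ hG.sat (sat_saturated hG) hfd'
  set n₀ := max n₁ n₂ with hn₀
  -- `A` is eventually generated by `1, y₀, y₁`
  have hEG : ∀ n ≥ n₀, A (n + 1) = step y₀ (A n) ⊔ (A n).map (LinearMap.mulLeft κ y₁) := by
    intro n hn
    have hle : step y₀ (A n) ⊔ (A n).map (LinearMap.mulLeft κ y₁) ≤ A (n + 1) :=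
      sup_le (step_le hA0 n) (by rintro _ ⟨f, hf, rfl⟩; exact hA1.mul _ _ hf)
    symm
    apply Submodule.eq_of_le_of_finrank_le hle
    have : FiniteDimensional κ
        ((step y₀ (A n) ⊔ (A n).map (LinearMap.mulLeft κ y₁) : Submodule κ L)) :=
      Submodule.finiteDimensional_of_le hle
    have e1 := finrank_span_add_le y₀ ht (A n)
      (step y₀ (A n) ⊔ (A n).map (LinearMap.mulLeft κ y₁))
      (le_sup_left.trans le_sup_left) (fun f hf => Submodule.mem_sup_left
        (Submodule.mem_sup_right ⟨f, hf, rfl⟩))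
    have e2 := finrank_succ_eq ht hA0 (sat_saturated h) hfd n
    have e3 : Submodule.span κ⟮y₀⟯ (A (n + 1) : Set L) ≤ Submodule.span κ⟮y₀⟯
        ((step y₀ (A n) ⊔ (A n).map (LinearMap.mulLeft κ y₁) : Submodule κ L) : Set L) := by
      have e4 := (hn₂ n (by omega)).1
      rw [hn₁ _ (by omega), hn₁ _ (by omega)] at e4
      change spanFam y₀ A (n + 1) ≤ _
      rw [e4]
      apply sup_le
      · have e6 : A n ≤ step y₀ (A n) ⊔ (A n).map (LinearMap.mulLeft κ y₁) :=
          le_sup_left.trans le_sup_left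
        exact Submodule.span_mono (SetLike.coe_subset_coe.2 e6)
      · rw [Submodule.map_le_iff_le_comap]
        unfold spanFam
        rw [Submodule.span_le]
        intro f hf
        exact Submodule.subset_span (Submodule.mem_sup_right ⟨f, hf, rfl⟩)
    have := (span_finite_le (K := κ⟮y₀⟯)
      ((step y₀ (A n) ⊔ (A n).map (LinearMap.mulLeft κ y₁) : Submodule κ L))).2
    have e5 := Submodule.finrank_mono e3
    omega
  obtain ⟨a, ha⟩ := sat_uniform h n₀
  have hgen : ∀ q, A (n₀ + q) ≤
      ⨆ j : {p : ℕ × ℕ // p.1 + p.2 ≤ q},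
        (A n₀).map (LinearMap.mulLeft κ (y₀ ^ j.1.1 * y₁ ^ j.1.2)) := by
    intro q
    induction q with
    | zero =>
      intro f hf
      refine Submodule.mem_iSup_of_mem ⟨(0, 0), by simp⟩ ⟨f, hf, by simp⟩
    | succ q ih =>
      rw [← add_assoc, hEG (n₀ + q) (by omega)]
      refine sup_le (sup_le ?_ ?_) ?_
      · refine ih.trans (iSup_le fun j => ?_)
        exact le_iSup_of_le ⟨j.1, by have := j.2; omega⟩ le_rfl
      · rw [Submodule.map_le_iff_le_comap]
        refine ih.trans (iSup_le fun j => ?_)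
        rw [← Submodule.map_le_iff_le_comap]
        refine le_iSup_of_le ⟨(j.1.1 + 1, j.1.2), by have := j.2; simp only; omega⟩ ?_
        rintro _ ⟨_, ⟨f, hf, rfl⟩, rfl⟩
        refine ⟨f, hf, ?_⟩
        simp only [LinearMap.mulLeft_apply]
        ring
      · rw [Submodule.map_le_iff_le_comap]
        refine ih.trans (iSup_le fun j => ?_)
        rw [← Submodule.map_le_iff_le_comap]
        refine le_iSup_of_le ⟨(j.1.1, j.1.2 + 1), by have := j.2; simp only; omega⟩ ?_
        rintro _ ⟨_, ⟨f, hf, rfl⟩, rfl⟩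
        refine ⟨f, hf, ?_⟩
        simp only [LinearMap.mulLeft_apply]
        ring
  have hAN : ∀ n, N n ≤ A n := le_sat h
  -- beyond `n₀ + 2a` every new element comes from `N` or is divisible by `y₁`
  have hsurj : ∀ n ≥ n₀ + 2 * a, A (n + 1) ≤ N (n + 1) ⊔ (A n).map (LinearMap.mulLeft κ y₁) := by
    intro n hn
    obtain ⟨q, rfl⟩ := Nat.exists_eq_add_of_le hn
    rw [show n₀ + 2 * a + q + 1 = n₀ + (2 * a + q + 1) by ring]
    refine (hgen _).trans (iSup_le ?_)
    rintro ⟨⟨i, j⟩, hij⟩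
    rintro _ ⟨f, hf, rfl⟩
    obtain ⟨h1, h2⟩ := ha f hf
    simp only [LinearMap.mulLeft_apply] at hij ⊢
    by_cases hia : a ≤ i
    · apply Submodule.mem_sup_left
      obtain ⟨c, rfl⟩ := Nat.exists_eq_add_of_le hia
      have := h'.pow_mul _ j _ (h.pow_mul _ c _ h2)
      rw [show y₀ ^ (a + c) * y₁ ^ j * f = y₁ ^ j * (y₀ ^ c * (y₀ ^ a * f)) by ring]
      exact h.mono' (by omega) this
    by_cases hja : i + j + a ≤ 2 * a + q + 1
    · apply Submodule.mem_sup_left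
      have := h'.pow_mul _ j _ (h.pow_mul _ i _ h1)
      rw [show y₀ ^ i * y₁ ^ j * f = y₁ ^ j * (y₀ ^ i * f) by ring]
      exact h.mono' (by omega) this
    · apply Submodule.mem_sup_right
      obtain ⟨j', rfl⟩ : ∃ j', j = j' + 1 := ⟨j - 1, by omega⟩
      refine ⟨y₁ ^ j' * (y₀ ^ i * f), ?_, ?_⟩
      · have := hA1.pow_mul _ j' _ (hA0.pow_mul _ i _ hf)
        exact hA0.mono' (by omega) this
      · simp only [LinearMap.mulLeft_apply]; ring
  have hfN : ∀ n, FiniteDimensional κ (N n) := fun n =>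
    Submodule.finiteDimensional_of_le (hAN n)
  have hmono : ∀ n, Module.finrank κ (N n) ≤ Module.finrank κ (A n) := fun n =>
    Submodule.finrank_mono (hAN n)
  have ht1 : y₁ ≠ 0 := ne_zero_of_transc ht₁
  have hdec : ∀ n ≥ n₀ + 2 * a, Module.finrank κ (A (n + 1)) - Module.finrank κ (N (n + 1)) ≤
      Module.finrank κ (A n) - Module.finrank κ (N n) := by
    intro n hn
    have e1 := Submodule.finrank_mono (hsurj n hn)
    have e2 := Submodule.finrank_sup_add_finrank_inf_eq (N (n + 1))
      ((A n).map (LinearMap.mulLeft κ y₁))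
    have e3 : (N n).map (LinearMap.mulLeft κ y₁) ≤
        N (n + 1) ⊓ (A n).map (LinearMap.mulLeft κ y₁) :=
      le_inf (by rintro _ ⟨f, hf, rfl⟩; exact h'.mul _ _ hf) (Submodule.map_mono (hAN n))
    have e4 := Submodule.finrank_mono e3
    rw [finrank_mulLeft_map ht1] at e2 e4
    have := hmono n
    have := hmono (n + 1)
    omega
  obtain ⟨n₃, hn₃⟩ : ∃ n₃, ∀ n ≥ n₃, Module.finrank κ (A (n + (n₀ + 2 * a)))
      - Module.finrank κ (N (n + (n₀ + 2 * a))) =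
      Module.finrank κ (A (n₃ + (n₀ + 2 * a))) - Module.finrank κ (N (n₃ + (n₀ + 2 * a))) := by
    let S : ℕ →o ℕᵒᵈ := ⟨fun n => OrderDual.toDual (Module.finrank κ (A (n + (n₀ + 2 * a)))
      - Module.finrank κ (N (n + (n₀ + 2 * a)))), by
        apply monotone_nat_of_le_succ
        intro n
        change _ ≤ (_ : ℕ)
        have := hdec (n + (n₀ + 2 * a)) (by omega)
        rw [show n + (n₀ + 2 * a) + 1 = n + 1 + (n₀ + 2 * a) by ring] at this
        exact this⟩
    obtain ⟨m, hm⟩ := WellFoundedGT.monotone_chain_condition S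
    exact ⟨m, fun n hn => (hm n hn).symm⟩
  refine ⟨n₃ + (n₀ + 2 * a), Module.finrank κ (A (n₃ + (n₀ + 2 * a)))
    - Module.finrank κ (N (n₃ + (n₀ + 2 * a))), fun n hn => ?_⟩
  have e1 := hn₃ (n - (n₀ + 2 * a)) (by omega)
  rw [Nat.sub_add_cancel (by omega)] at e1
  have := hmono n
  omega

end Families2

end

/-! ### Families of bounded degree -/

section
open IntermediateField

section Bounded

variable {κ L : Type*} [Field κ] [Field L] [Algebra κ L]

/-- Polynomials of total degree at most `m` in the elements `y`. -/
noncomputable def polyLE (κ : Type*) {L σ : Type*} [Field κ] [Field L] [Algebra κ L] (y : σ → L) (m : ℕ) :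
    Submodule κ L :=
  (MvPolynomial.restrictTotalDegree σ κ m).map (MvPolynomial.aeval y).toLinearMap

variable {σ : Type*} [Finite σ] {y : σ → L}

theorem mem_polyLE {m : ℕ} {z : L} : z ∈ polyLE κ y m ↔
    ∃ p : MvPolynomial σ κ, p.totalDegree ≤ m ∧ MvPolynomial.aeval y p = z := by
  constructor
  · rintro ⟨p, hp, rfl⟩
    exact ⟨p, (MvPolynomial.mem_restrictTotalDegree σ m p).1 hp, rfl⟩
  · rintro ⟨p, hp, rfl⟩
    exact ⟨p, (MvPolynomial.mem_restrictTotalDegree σ m p).2 hp, rfl⟩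

instance polyLE_finite (m : ℕ) : FiniteDimensional κ (polyLE κ y m) := by
  unfold polyLE; infer_instance

theorem polyLE_mul {a b : ℕ} {z w : L} (hz : z ∈ polyLE κ y a) (hw : w ∈ polyLE κ y b) :
    z * w ∈ polyLE κ y (a + b) := by
  obtain ⟨p, hp, rfl⟩ := mem_polyLE.1 hz
  obtain ⟨q, hq, rfl⟩ := mem_polyLE.1 hw
  exact mem_polyLE.2 ⟨p * q, (MvPolynomial.totalDegree_mul p q).trans (by omega), map_mul _ _ _⟩

theorem polyLE_mono {a b : ℕ} (hab : a ≤ b) : polyLE κ y a ≤ polyLE κ y b := by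
  intro z hz
  obtain ⟨p, hp, rfl⟩ := mem_polyLE.1 hz
  exact mem_polyLE.2 ⟨p, hp.trans hab, rfl⟩

theorem one_mem_polyLE (a : ℕ) : (1 : L) ∈ polyLE κ y a :=
  mem_polyLE.2 ⟨1, by simp, by simp⟩

theorem var_mem_polyLE (i : σ) : y i ∈ polyLE κ y 1 :=
  mem_polyLE.2 ⟨MvPolynomial.X i, by simp, by simp⟩

theorem polyLE_saturated (hy : AlgebraicIndependent κ y) (i : σ) :
    Saturated (y i) (polyLE κ y) := by
  intro n a f h1 h2
  obtain ⟨p, hp, rfl⟩ := mem_polyLE.1 h1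
  obtain ⟨q, hq, hpq⟩ := mem_polyLE.1 h2
  have h3 : MvPolynomial.X i ^ a * p = q := by
    apply hy
    rw [hpq]; simp
  by_cases hp0 : p = 0
  · subst hp0; simp
  refine mem_polyLE.2 ⟨p, ?_, rfl⟩
  have h4 : (MvPolynomial.X i ^ a * p).totalDegree = a + p.totalDegree := by
    rw [MvPolynomial.totalDegree_mul_of_isDomain (pow_ne_zero _ (MvPolynomial.X_ne_zero i)) hp0,
      MvPolynomial.totalDegree_X_pow]
  rw [h3] at h4
  omega

/-- The family `N` embeds, `K`-linearly and with degrees shifted by a constant, into `[L : K]`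
copies of the family `Q`. -/
def Bdd (K : Type*) [Field K] [Algebra K L] (Q N : ℕ → Submodule κ L) : Prop :=
  ∃ (c : ℕ) (Θ : L →ₗ[K] (Fin (Module.finrank K L) → L)), Function.Injective Θ ∧
    ∀ n, ∀ f ∈ N n, ∀ j, Θ f j ∈ Q (n + c)

variable {K : Type*} [Field K] [Algebra K L] {Q N : ℕ → Submodule κ L}

theorem Bdd.sat (hB : Bdd K Q N) {t : L} (t' : K) (ht : algebraMap K L t' = t)
    (h : Fam t N) (hQ : Saturated t Q) : Bdd K Q (sat t N) := by
  obtain ⟨c, Θ, hΘ, hm⟩ := hB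
  refine ⟨c, Θ, hΘ, fun n f hf j => ?_⟩
  obtain ⟨a, h1, h2⟩ := (mem_sat h).1 hf
  apply hQ (n + c) a
  · have := hm _ _ h1 j
    rwa [show n + c + a = n + a + c by ring]
  · have h3 := hm _ _ h2 j
    have h4 : t ^ a * f = t' ^ a • f := by rw [Algebra.smul_def, map_pow, ht]
    rw [h4, map_smul, Pi.smul_apply, Algebra.smul_def, map_pow, ht] at h3
    rwa [show n + c + a = n + a + c by ring]

theorem Bdd.finite [Algebra κ K] [IsScalarTower κ K L] (hB : Bdd K Q N)
    (hQ : ∀ n, FiniteDimensional κ (Q n)) :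
    (∀ n, FiniteDimensional κ (N n)) ∧
    ∃ c, ∀ n, Module.finrank κ (N n) ≤ Module.finrank K L * Module.finrank κ (Q (n + c)) := by
  obtain ⟨c, Θ, hΘ, hm⟩ := hB
  have key : ∀ n, ∃ Ψ : N n →ₗ[κ] (Fin (Module.finrank K L) → Q (n + c)),
      Function.Injective Ψ := by
    intro n
    refine ⟨LinearMap.pi fun j => LinearMap.codRestrict (Q (n + c))
      ((LinearMap.proj j ∘ₗ Θ.restrictScalars κ) ∘ₗ (N n).subtype) fun f => hm n f f.2 j, ?_⟩
    intro f g hfg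
    apply Subtype.ext
    apply hΘ
    funext j
    have := congrArg Subtype.val (congrFun hfg j)
    exact this
  refine ⟨fun n => ?_, c, fun n => ?_⟩
  · obtain ⟨Ψ, hΨ⟩ := key n
    exact FiniteDimensional.of_injective Ψ hΨ
  · obtain ⟨Ψ, hΨ⟩ := key n
    have := LinearMap.finrank_le_finrank_of_injective hΨ
    simpa [Module.finrank_pi_fintype] using this

/-- A family generated by a finite-dimensional subspace over the polynomials in `y` is bounded. -/
theorem bdd_of_generated [FiniteDimensional K L] [Algebra κ K] [IsScalarTower κ K L]
    (hK : ∀ z : K, ∃ p q : L, (∃ m, p ∈ polyLE κ y m) ∧ (∃ m, q ∈ polyLE κ y m) ∧ q ≠ 0 ∧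
      algebraMap K L z * q = p)
    (hyK : ∀ i, ∃ z : K, algebraMap K L z = y i)
    (E : Submodule κ L) [FiniteDimensional κ E]
    (hN : ∀ n, N n ≤ polyLE κ y n * E) : Bdd K (polyLE κ y) N := by
  let b := Module.finBasis K L
  let a := Module.finBasis κ E
  have hpolyK : ∀ z : L, (∃ m, z ∈ polyLE κ y m) → ∃ z' : K, algebraMap K L z' = z := by
    rintro z ⟨m, hz⟩
    obtain ⟨p, _, rfl⟩ := mem_polyLE.1 hz
    choose y' hy' using hyK
    refine ⟨MvPolynomial.aeval y' p, ?_⟩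
    rw [← MvPolynomial.aeval_algebraMap_apply]
    congr 2
    funext i; exact hy' i
  choose p q hp hq hq0 hpq using fun x : Fin (Module.finrank κ E) × Fin (Module.finrank K L) =>
    hK (b.repr (a x.1 : L) x.2)
  have hprod : ∀ s : Finset (Fin (Module.finrank κ E) × Fin (Module.finrank K L)),
      ∃ m, ∏ x ∈ s, q x ∈ polyLE κ y m := by
    intro s
    induction s using Finset.cons_induction with
    | empty => exact ⟨0, by simpa using one_mem_polyLE 0⟩
    | cons x s hx ih =>
      obtain ⟨m, hm⟩ := ih
      obtain ⟨m', hm'⟩ := hq x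
      exact ⟨m' + m, by rw [Finset.prod_cons]; exact polyLE_mul hm' hm⟩
  let D : L := ∏ x, q x
  have hD0 : D ≠ 0 := Finset.prod_ne_zero_iff.2 fun x _ => hq0 x
  obtain ⟨D', hD'⟩ := hpolyK D (hprod _)
  have hcoord : ∀ x : Fin (Module.finrank κ E) × Fin (Module.finrank K L),
      ∃ m, D * algebraMap K L (b.repr (a x.1 : L) x.2) ∈ polyLE κ y m := by
    intro x
    obtain ⟨m, hm⟩ := hprod (Finset.univ.erase x)
    obtain ⟨m', hm'⟩ := hp x
    refine ⟨m' + m, ?_⟩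
    have : D * algebraMap K L (b.repr (a x.1 : L) x.2) = p x * ∏ z ∈ Finset.univ.erase x, q z := by
      rw [← hpq x]
      change (∏ x, q x) * _ = _
      rw [← Finset.mul_prod_erase _ _ (Finset.mem_univ x)]
      ring
    rw [this]
    exact polyLE_mul hm' hm
  choose m hm using hcoord
  let c := Finset.univ.sup m
  let Θ : L →ₗ[K] (Fin (Module.finrank K L) → L) :=
    LinearMap.pi fun j => (D' • (Algebra.linearMap K L)) ∘ₗ (b.coord j)
  have hΘ : ∀ f j, Θ f j = D * algebraMap K L (b.repr f j) := by
    intro f j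
    change D' • algebraMap K L (b.repr f j) = _
    rw [Algebra.smul_def, hD']
  refine ⟨c, Θ, ?_, ?_⟩
  · rw [injective_iff_map_eq_zero]
    intro f hf
    apply b.repr.injective
    rw [map_zero]
    ext j
    have h1 := congrFun hf j
    rw [hΘ] at h1
    have h2 := (mul_eq_zero.1 h1).resolve_left hD0
    simpa using h2
  · have hE : ∀ f ∈ E, ∀ j, Θ f j ∈ polyLE κ y c := by
      intro f hf j
      have h2 : f = ∑ l, a.repr ⟨f, hf⟩ l • (a l : L) := by
        have := congrArg (E.subtype) (a.sum_repr ⟨f, hf⟩)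
        rw [map_sum] at this
        exact this.symm
      have h3 : Θ f j = ∑ l, a.repr ⟨f, hf⟩ l • Θ (a l) j := by
        conv_lhs => rw [h2]
        rw [map_sum, Finset.sum_apply]
        refine Finset.sum_congr rfl fun l _ => ?_
        rw [← algebraMap_smul K, map_smul, Pi.smul_apply, algebraMap_smul]
      rw [h3]
      refine Submodule.sum_mem _ fun l _ => Submodule.smul_mem _ _ ?_
      rw [hΘ]
      exact polyLE_mono (Finset.le_sup (Finset.mem_univ (l, j))) (hm (l, j))
    intro n f hf j
    suffices h : ∀ g ∈ polyLE κ y n * E, Θ g j ∈ polyLE κ y (n + c) from h f (hN n hf)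
    intro g hg
    induction hg using Submodule.mul_induction_on' with
    | mem_mul_mem z hz w hw =>
      obtain ⟨z', hz'⟩ := hpolyK z ⟨n, hz⟩
      have h4 : Θ (z * w) j = z * Θ w j := by
        rw [← hz', ← Algebra.smul_def, map_smul, Pi.smul_apply, Algebra.smul_def]
      rw [h4]
      exact polyLE_mul hz (hE w hw j)
    | add z _ w _ h1 h2 =>
      rw [map_add, Pi.add_apply]
      exact Submodule.add_mem _ h1 h2

/-- Passing from the ground field `κ` to `κ(y₀)` turns two-variable boundedness into one-variable
boundedness. -/
theorem Bdd.spanFam {y₀ y₁ : L} {N : ℕ → Submodule κ L}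
    (hB : Bdd κ⟮y₀⟯⟮y₁⟯ (polyLE κ ![y₀, y₁]) N) :
    Bdd κ⟮y₀⟯⟮y₁⟯ (polyLE κ⟮y₀⟯ ![y₁]) (spanFam y₀ N) := by
  obtain ⟨c, Θ, hΘ, hm⟩ := hB
  refine ⟨c, Θ, hΘ, fun n f hf j => ?_⟩
  have hle : ∀ m, ∀ z ∈ polyLE κ ![y₀, y₁] m, z ∈ polyLE κ⟮y₀⟯ ![y₁] m := by
    intro m z hz
    obtain ⟨p, hp, rfl⟩ := mem_polyLE.1 hz
    rw [MvPolynomial.aeval_def, MvPolynomial.eval₂_eq']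
    refine Submodule.sum_mem _ fun α hα => ?_
    have hα' : α 0 + α 1 ≤ m := by
      refine le_trans ?_ ((MvPolynomial.le_totalDegree hα).trans hp)
      rw [Finsupp.sum_fintype _ _ (fun _ => rfl), Fin.sum_univ_two]
    refine mem_polyLE.2 ⟨MvPolynomial.C (algebraMap κ κ⟮y₀⟯ (p.coeff α)
      * AdjoinSimple.gen κ y₀ ^ α 0) * MvPolynomial.X 0 ^ α 1, ?_, ?_⟩
    · refine (MvPolynomial.totalDegree_mul _ _).trans ?_
      rw [MvPolynomial.totalDegree_C, MvPolynomial.totalDegree_X_pow]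
      omega
    · simp only [map_mul, MvPolynomial.aeval_C, map_pow, MvPolynomial.aeval_X,
        Fin.prod_univ_two, Matrix.cons_val_zero, Matrix.cons_val_one,
        AdjoinSimple.algebraMap_gen]
      rw [← IsScalarTower.algebraMap_apply κ κ⟮y₀⟯ L]
      ring
  have hsp : Submodule.span κ⟮y₀⟯ (N n : Set L) ≤ (polyLE κ⟮y₀⟯ ![y₁] (n + c)).comap
      (LinearMap.proj j ∘ₗ Θ.restrictScalars κ⟮y₀⟯) := by
    rw [Submodule.span_le]
    intro z hz
    exact hle _ _ (hm n z hz j)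
  exact hsp hf

theorem finrank_polyLE_one (t : L) (m : ℕ) : Module.finrank κ (polyLE κ ![t] m) ≤ m + 1 := by
  have hle : polyLE κ ![t] m ≤ Submodule.span κ (Set.range fun i : Fin (m + 1) => t ^ (i : ℕ)) := by
    intro z hz
    obtain ⟨p, hp, rfl⟩ := mem_polyLE.1 hz
    rw [MvPolynomial.aeval_def, MvPolynomial.eval₂_eq']
    refine Submodule.sum_mem _ fun α hα => ?_
    have hα' : α 0 ≤ m := by
      refine le_trans ?_ ((MvPolynomial.le_totalDegree hα).trans hp)
      rw [Finsupp.sum_fintype _ _ (fun _ => rfl), Fin.sum_univ_one]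
    rw [← Algebra.smul_def]
    refine Submodule.smul_mem _ _ (Submodule.subset_span ⟨⟨α 0, by omega⟩, ?_⟩)
    simp
  have : FiniteDimensional κ (Submodule.span κ (Set.range fun i : Fin (m + 1) => t ^ (i : ℕ))) :=
    FiniteDimensional.span_of_finite _ (Set.finite_range _)
  refine (Submodule.finrank_mono hle).trans ((finrank_range_le_card _).trans ?_)
  simp

end Bounded

end

/-! ### Generic linear sections -/

section
open IntermediateField MvPolynomial

/-- Three generic linear forms on a projective variety: `F` is the function field of the variety
with affine coordinates `x`, normalised by `x 0 = 1`; the entries of `U` are the coefficients of the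
forms, algebraically independent over `F`; and `k = ℂ(U)`, `L = F(U)`. -/
structure IsGen (k F L : Type) [Field k] [Field F] [Field L] [Algebra ℂ k] [Algebra ℂ F]
    [Algebra ℂ L] [Algebra k L] [Algebra F L] [IsScalarTower ℂ k L] [IsScalarTower ℂ F L]
    {r : ℕ} (x : Fin (r + 1) → F) (U : Fin 3 × Fin (r + 1) → k) : Prop where
  x0 : x 0 = 1
  adjF : IntermediateField.adjoin ℂ (Set.range x) = ⊤
  adjk : IntermediateField.adjoin ℂ (Set.range U) = ⊤
  indep : AlgebraicIndependent F (fun p => algebraMap k L (U p))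
  adjL : IntermediateField.adjoin F (Set.range fun p => algebraMap k L (U p)) = ⊤

/-- The generic linear form `y_j = ∑ i, u_{ji} x_i`. -/
noncomputable def gy {k F : Type} (L : Type) [Field k] [Field F] [Field L]
    [Algebra k L] [Algebra F L] {r : ℕ} (x : Fin (r + 1) → F) (U : Fin 3 × Fin (r + 1) → k)
    (j : Fin 3) : L :=
  ∑ i, algebraMap k L (U (j, i)) * algebraMap F L (x i)

/-- The coordinates viewed in the big field. -/
noncomputable def gx {F : Type} (L : Type) [Field F] [Field L] [Algebra F L] {r : ℕ}
    (x : Fin (r + 1) → F) (i : Fin (r + 1)) : L := algebraMap F L (x i)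

namespace IsGen

variable {k F L : Type} [Field k] [Field F] [Field L] [Algebra ℂ k] [Algebra ℂ F]
    [Algebra ℂ L] [Algebra k L] [Algebra F L] [IsScalarTower ℂ k L] [IsScalarTower ℂ F L]
    {r : ℕ} {x : Fin (r + 1) → F} {U : Fin 3 × Fin (r + 1) → k}

/-- An invertible polynomial substitution of the generic coefficients extends to compatible
endomorphisms of `k` and of `L` over `F`. -/
theorem endo (h : IsGen k F L x U)
    (V V' : Fin 3 × Fin (r + 1) → MvPolynomial (Fin 3 × Fin (r + 1)) ℂ)
    (hV : ∀ p, bind₁ V' (V p) = X p) :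
    ∃ (σ : k →ₐ[ℂ] k) (τ : L →ₐ[F] L),
      (∀ c, τ (algebraMap k L c) = algebraMap k L (σ c)) ∧ ∀ p, σ (U p) = aeval U (V p) := by
  set u : Fin 3 × Fin (r + 1) → L := fun p => algebraMap k L (U p) with hu
  set v : Fin 3 × Fin (r + 1) → L := fun p => algebraMap k L (aeval U (V p)) with hv
  let VF := fun p => map (algebraMap ℂ F) (V p)
  let VF' := fun p => map (algebraMap ℂ F) (V' p)
  have hcomp : (aeval v : MvPolynomial _ F →ₐ[F] L) = (aeval u).comp (bind₁ VF) := by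
    refine MvPolynomial.algHom_ext fun p => ?_
    simp only [aeval_X, AlgHom.comp_apply, bind₁_X_right, hv, VF, aeval_map_algebraMap]
    rw [hu]
    exact ((aeval_algebraMap_apply (B := L) U (V p))).symm
  have hinv : ∀ P : MvPolynomial _ F, bind₁ VF' (bind₁ VF P) = P := by
    intro P
    have : (bind₁ VF').comp (bind₁ VF) = AlgHom.id F _ := by
      refine MvPolynomial.algHom_ext fun p => ?_
      simp only [AlgHom.comp_apply, bind₁_X_right, VF, VF', AlgHom.id_apply]
      rw [← MvPolynomial.map_bind₁, hV, map_X]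
    exact DFunLike.congr_fun this P
  have hvi : AlgebraicIndependent F v := by
    unfold AlgebraicIndependent
    have : ⇑(aeval v : MvPolynomial _ F →ₐ[F] L) = ⇑((aeval u).comp (bind₁ VF)) := by rw [hcomp]
    rw [this]
    have hui : Function.Injective (aeval u : MvPolynomial _ F →ₐ[F] L) := h.indep
    exact hui.comp (Function.LeftInverse.injective hinv)
  have e1 := h.indep.aevalEquivField
  let τ0 : IntermediateField.adjoin F (Set.range u) →ₐ[F] L :=
    ((IntermediateField.adjoin F (Set.range v)).val.comp hvi.aevalEquivField.toAlgHom).comp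
      h.indep.aevalEquivField.symm.toAlgHom
  have hL : IntermediateField.adjoin F (Set.range u) = ⊤ := h.adjL
  let τ : L →ₐ[F] L := (τ0.comp (IntermediateField.equivOfEq hL).symm.toAlgHom).comp
    (IntermediateField.topEquiv (F := F) (E := L)).symm.toAlgHom
  have hτ : ∀ p, τ (u p) = v p := by
    intro p
    have : (IntermediateField.equivOfEq hL).symm ((IntermediateField.topEquiv (F := F) (E := L)).symm (u p)) =
      h.indep.aevalEquivField (algebraMap (MvPolynomial _ F) _ (X p)) := by
      apply Subtype.ext
      simp [u]
    show τ0 ((IntermediateField.equivOfEq hL).symm ((IntermediateField.topEquiv (F := F) (E := L)).symm (u p))) = _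
    rw [this]
    show ((hvi.aevalEquivField (h.indep.aevalEquivField.symm _) : IntermediateField.adjoin F (Set.range v)) : L) = _
    rw [AlgEquiv.symm_apply_apply]
    simp
  have hmem : ∀ c : k, τ (algebraMap k L c) ∈
      ((IsScalarTower.toAlgHom ℂ k L).fieldRange : IntermediateField ℂ L) := by
    have hle : (⊤ : IntermediateField ℂ k) ≤
      ((IsScalarTower.toAlgHom ℂ k L).fieldRange).comap
        ((τ.restrictScalars ℂ).comp (IsScalarTower.toAlgHom ℂ k L)) := by
      rw [← h.adjk, IntermediateField.adjoin_le_iff]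
      rintro _ ⟨p, rfl⟩
      show τ (u p) ∈ ((IsScalarTower.toAlgHom ℂ k L).fieldRange : IntermediateField ℂ L)
      rw [hτ]
      exact ⟨aeval U (V p), rfl⟩
    intro c
    exact hle (show c ∈ (⊤ : IntermediateField ℂ k) from trivial)
  choose s hs using hmem
  have hs' : ∀ c, algebraMap k L (s c) = τ (algebraMap k L c) := hs
  have hinj := (algebraMap k L).injective
  let σ : k →ₐ[ℂ] k :=
    { toFun := s
      map_one' := by apply hinj; rw [hs']; simp
      map_mul' := fun a b => by
        apply hinj; rw [hs', map_mul, map_mul, map_mul, hs', hs']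
      map_zero' := by apply hinj; rw [hs']; simp
      map_add' := fun a b => by
        apply hinj; rw [hs', map_add, map_add, map_add, hs', hs']
      commutes' := fun c => by
        apply hinj
        rw [hs', ← IsScalarTower.algebraMap_apply ℂ k L]
        exact (τ.restrictScalars ℂ).commutes c }
  refine ⟨σ, τ, fun c => (hs' c).symm, fun p => ?_⟩
  apply hinj
  show algebraMap k L (s (U p)) = _
  rw [hs']
  exact hτ p

/-- `L` is generated by the coordinates over any field containing `k`. -/
theorem adjoin_gx (h : IsGen k F L x U) :
    IntermediateField.adjoin k (Set.range (gx L x)) = ⊤ := by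
  set M := IntermediateField.adjoin k (Set.range (gx L x)) with hM
  have hF : ∀ f : F, algebraMap F L f ∈ M := by
    have hle : (⊤ : IntermediateField ℂ F) ≤
        (M.restrictScalars ℂ).comap (IsScalarTower.toAlgHom ℂ F L) := by
      rw [← h.adjF, IntermediateField.adjoin_le_iff]
      rintro _ ⟨i, rfl⟩
      exact IntermediateField.subset_adjoin k _ ⟨i, rfl⟩
    intro f
    exact hle (show f ∈ (⊤ : IntermediateField ℂ F) from trivial)
  let M' : IntermediateField F L := M.toSubfield.toIntermediateField hF
  have hle : (⊤ : IntermediateField F L) ≤ M' := by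
    rw [← h.adjL, IntermediateField.adjoin_le_iff]
    rintro _ ⟨p, rfl⟩
    exact M.algebraMap_mem (U p)
  rw [eq_top_iff]
  intro z _
  exact hle (show z ∈ (⊤ : IntermediateField F L) from trivial)

end IsGen

end

section
open IntermediateField MvPolynomial

namespace IsGen

variable {k F L : Type} [Field k] [Field F] [Field L] [Algebra ℂ k] [Algebra ℂ F]
    [Algebra ℂ L] [Algebra k L] [Algebra F L] [IsScalarTower ℂ k L] [IsScalarTower ℂ F L]
    {r : ℕ} {x : Fin (r + 1) → F} {U : Fin 3 × Fin (r + 1) → k}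

theorem indepU (h : IsGen k F L x U) :
    Function.Injective (aeval U : MvPolynomial _ ℂ →ₐ[ℂ] k) := by
  have h1 : AlgebraicIndependent ℂ (fun p => algebraMap k L (U p)) :=
    h.indep.restrictScalars (algebraMap ℂ F).injective
  intro P Q hPQ
  apply h1
  have := congrArg (algebraMap k L) hPQ
  rwa [← aeval_algebraMap_apply, ← aeval_algebraMap_apply] at this

/-- Finitely many elements of `k` have a common denominator in `ℂ[U]`. -/
theorem common_denom (h : IsGen k F L x U) {ι : Type*} (s : Finset ι) (c : ι → k) :
    ∃ (D : MvPolynomial (Fin 3 × Fin (r + 1)) ℂ) (P : ι → MvPolynomial (Fin 3 × Fin (r + 1)) ℂ),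
      aeval U D ≠ 0 ∧ ∀ i ∈ s, aeval U D * c i = aeval U (P i) := by
  classical
  have hc : ∀ i, ∃ p q : MvPolynomial (Fin 3 × Fin (r + 1)) ℂ, aeval U q ≠ 0 ∧
      aeval U q * c i = aeval U p := by
    intro i
    have hi : c i ∈ IntermediateField.adjoin ℂ (Set.range U) := by rw [h.adjk]; trivial
    obtain ⟨p, q, hpq⟩ := (IntermediateField.mem_adjoin_range_iff ℂ U (c i)).1 hi
    by_cases hq : aeval U q = 0
    · refine ⟨0, 1, by simp, ?_⟩
      rw [hpq, hq]; simp
    · exact ⟨p, q, hq, by rw [hpq]; field_simp⟩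
  choose p q hq hpq using hc
  refine ⟨∏ i ∈ s, q i, fun i => p i * ∏ j ∈ s.erase i, q j, ?_, ?_⟩
  · rw [map_prod]; exact Finset.prod_ne_zero_iff.2 fun i _ => hq i
  · intro i hi
    rw [← Finset.mul_prod_erase s q hi, map_mul, map_mul, ← hpq]
    ring

/-- `k` and `F` are linearly disjoint over `ℂ` inside `L`. -/
theorem linInd (h : IsGen k F L x U) {ι : Type*} (f : ι → F) (hf : LinearIndependent ℂ f) :
    LinearIndependent k (fun i => algebraMap F L (f i)) := by
  classical
  rw [linearIndependent_iff']
  intro s c hs i hi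
  obtain ⟨D, P, hD, hP⟩ := h.common_denom s c
  have hz : aeval (fun p => algebraMap k L (U p))
      (∑ i ∈ s, C (f i) * map (algebraMap ℂ F) (P i)) = 0 := by
    have h1 : algebraMap k L (aeval U D) * ∑ i ∈ s, c i • algebraMap F L (f i) = 0 := by
      rw [hs, mul_zero]
    rw [← h1, map_sum, Finset.mul_sum]
    refine Finset.sum_congr rfl fun j hj => ?_
    rw [map_mul, aeval_C, aeval_map_algebraMap, Algebra.smul_def, ← mul_assoc, ← map_mul, hP j hj,
      ← aeval_algebraMap_apply, mul_comm]
    rfl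
  have hz' := h.indep.eq_zero_of_aeval_eq_zero _ hz
  have hPi : P i = 0 := by
    ext m
    have h2 := congrArg (coeff m) hz'
    simp only [coeff_sum, coeff_C_mul, coeff_map, coeff_zero] at h2
    have h3 := (linearIndependent_iff'.1 hf) s (fun j => coeff m (P j)) (by
      rw [← h2]
      refine Finset.sum_congr rfl fun j _ => ?_
      rw [Algebra.smul_def, mul_comm]) i hi
    simpa using h3
  have h4 := hP i hi
  rw [hPi, map_zero] at h4
  exact (mul_eq_zero.1 h4).resolve_left hD

theorem span_polyLE (n : ℕ) :
    Submodule.span k ((algebraMap F L) '' (polyLE ℂ x n : Set F)) = polyLE k (gx L x) n := by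
  apply le_antisymm
  · rw [Submodule.span_le]
    rintro _ ⟨z, hz, rfl⟩
    obtain ⟨p, hp, rfl⟩ := mem_polyLE.1 hz
    refine mem_polyLE.2 ⟨map (algebraMap ℂ k) p, (Finset.sup_mono (support_map_subset _ _)).trans hp, ?_⟩
    rw [aeval_map_algebraMap]
    exact aeval_algebraMap_apply _ _ _
  · intro z hz
    obtain ⟨p, hp, rfl⟩ := mem_polyLE.1 hz
    rw [aeval_def, eval₂_eq']
    refine Submodule.sum_mem _ fun α hα => ?_
    rw [← Algebra.smul_def]
    refine Submodule.smul_mem _ _ (Submodule.subset_span ⟨∏ i, x i ^ α i, ?_, ?_⟩)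
    · refine mem_polyLE.2 ⟨monomial α 1, ?_, ?_⟩
      · refine (totalDegree_monomial_le _ _).trans ?_
        exact (le_totalDegree hα).trans hp
      · rw [aeval_monomial, map_one, one_mul, Finsupp.prod_fintype _ _ (by simp)]
    · simp [gx]

theorem finrank_span_k (h : IsGen k F L x U) (V : Submodule ℂ F) [FiniteDimensional ℂ V] :
    Module.finrank k (Submodule.span k ((algebraMap F L) '' (V : Set F))) = Module.finrank ℂ V := by
  let b := Module.finBasis ℂ V
  have hb : LinearIndependent ℂ (fun i => (b i : F)) :=
    b.linearIndependent.map' V.subtype (Submodule.ker_subtype V)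
  have hk := h.linInd _ hb
  have hs : Submodule.span k ((algebraMap F L) '' (V : Set F)) =
      Submodule.span k (Set.range fun i => algebraMap F L (b i : F)) := by
    apply le_antisymm
    · rw [Submodule.span_le]
      rintro _ ⟨z, hz, rfl⟩
      have hz' := b.sum_repr ⟨z, hz⟩
      have hz2 : z = ∑ i, (b.repr ⟨z, hz⟩ i) • (b i : F) := by
        have := congrArg V.subtype hz'
        rw [map_sum] at this
        exact this.symm
      rw [hz2, map_sum]
      refine Submodule.sum_mem _ fun i _ => ?_
      have : algebraMap F L ((b.repr ⟨z, hz⟩ i) • (b i : F)) =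
        (algebraMap ℂ k (b.repr ⟨z, hz⟩ i)) • algebraMap F L (b i : F) := by
        rw [algebraMap_smul, Algebra.smul_def, Algebra.smul_def, map_mul,
          ← IsScalarTower.algebraMap_apply]
      rw [this]
      exact Submodule.smul_mem _ _ (Submodule.subset_span ⟨i, rfl⟩)
    · rw [Submodule.span_le]
      rintro _ ⟨i, rfl⟩
      exact Submodule.subset_span ⟨_, (b i).2, rfl⟩
  rw [hs, finrank_span_eq_card hk]
  simp

/-- The Hilbert function is unchanged by passing from `ℂ` to `k`. -/
theorem finrank_polyLE (h : IsGen k F L x U) (n : ℕ) :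
    Module.finrank k (polyLE k (gx L x) n) = Module.finrank ℂ (polyLE ℂ x n) := by
  have := polyLE_finite (κ := ℂ) (y := x) n
  rw [← span_polyLE, h.finrank_span_k]

end IsGen

end

/-! ### Noether normalisation by generic linear forms -/

section
open IntermediateField MvPolynomial

section
variable {κ L : Type*} [Field κ] [Field L] [Algebra κ L] {σ ρ : Type*}

theorem polyLE_mul_le [Finite σ] {y : σ → L} (a b : ℕ) :
    polyLE κ y a * polyLE κ y b ≤ polyLE κ y (a + b) :=
  Submodule.mul_le.2 fun _ hz _ hw => polyLE_mul hz hw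

theorem polyLE_le_of_forall [Finite σ] {y : σ → L} {w : ρ → L} {a n : ℕ} {P : Submodule κ L}
    (hP : ∀ α : ρ →₀ ℕ, α.degree ≤ n → (α.prod fun i e => w i ^ e) ∈ P) :
    polyLE κ w n ≤ P := by
  rintro z ⟨p, hp, rfl⟩
  have hp' : p.totalDegree ≤ n := (mem_restrictTotalDegree _ _ _).1 hp
  show aeval w p ∈ P
  rw [aeval_def, eval₂_eq]
  refine Submodule.sum_mem _ fun α hα => ?_
  rw [← Algebra.smul_def]
  refine P.smul_mem _ (hP α ?_)
  exact (le_totalDegree hα).trans hp'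

theorem pow_mem_polyLE [Finite σ] {y : σ → L} {z : L} {a : ℕ} (hz : z ∈ polyLE κ y a) (n : ℕ) :
    z ^ n ∈ polyLE κ y (n * a) := by
  induction n with
  | zero => simpa using one_mem_polyLE 0
  | succ n ih => rw [pow_succ, Nat.succ_mul]; exact polyLE_mul ih hz

theorem prod_mem_polyLE [Finite σ] {y : σ → L} {w : ρ → L} (hw : ∀ i, w i ∈ polyLE κ y 1)
    (α : ρ →₀ ℕ) : (α.prod fun i e => w i ^ e) ∈ polyLE κ y α.degree := by
  classical
  induction α using Finsupp.induction with
  | zero => simpa using one_mem_polyLE 0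
  | single_add i e α hi he ih =>
    rw [Finsupp.prod_add_index' (by simp) (fun _ _ _ => pow_add _ _ _),
      Finsupp.prod_single_index (by simp), map_add]
    refine polyLE_mul ?_ ih
    have := pow_mem_polyLE (hw i) e
    simpa using this

theorem polyLE_le_polyLE [Finite σ] {y : σ → L} {w : ρ → L} (hw : ∀ i, w i ∈ polyLE κ y 1)
    (n : ℕ) : polyLE κ w n ≤ polyLE κ y n :=
  polyLE_le_of_forall (σ := σ) (y := y) (a := 0) fun α hα => polyLE_mono hα (prod_mem_polyLE hw α)

/-- Leading term of a product of `m + 1` affine-linear factors. -/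
theorem prod_sub_lead_mem {Y : Submodule κ L} {A : ℕ → Submodule κ L}
    (hA0 : (1 : L) ∈ A 0) (hA : ∀ m, ∀ f ∈ A 1, ∀ g ∈ A m, f * g ∈ A (m + 1)) (a : ρ → L) (l : ρ → κ) (W : L)
    (ha : ∀ j, a j ∈ Y) (haA : ∀ j, a j ∈ A 1) (hW : W ∈ A 1) (m : ℕ) :
    ∀ α : ρ →₀ ℕ, α.degree = m + 1 →
      (α.prod fun j e => (a j + l j • W) ^ e) - (α.prod fun j e => l j ^ e) • W ^ (m + 1)
        ∈ Y * A m := by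
  classical
  have hWm : ∀ m, W ^ m ∈ A m := by
    intro m
    induction m with
    | zero => simpa using hA0
    | succ m ih => rw [pow_succ']; exact hA m W hW _ ih
  induction m with
  | zero =>
    intro α hα
    obtain ⟨j, rfl⟩ : ∃ j, α = Finsupp.single j 1 := by
      obtain ⟨j, hj⟩ : ∃ j, α j ≠ 0 := by
        by_contra hcon
        push Not at hcon
        have : α = 0 := Finsupp.ext hcon
        subst this; simp at hα
      have hle : Finsupp.single j 1 ≤ α := by
        rw [Finsupp.single_le_iff]; omega
      obtain ⟨β, rfl⟩ : ∃ β, α = Finsupp.single j 1 + β :=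
        ⟨α - Finsupp.single j 1, (add_tsub_cancel_of_le hle).symm⟩
      have hβ : β.degree = 0 := by
        rw [map_add] at hα
        simp at hα; simpa using hα
      exact ⟨j, by rw [(Finsupp.degree_eq_zero_iff β).1 hβ, add_zero]⟩
    simp only [pow_zero, zero_add, pow_one, Finsupp.prod_single_index, add_sub_cancel_right]
    simpa using Submodule.mul_mem_mul (ha j) hA0
  | succ m ih =>
    intro α hα
    obtain ⟨j, hj⟩ : ∃ j, α j ≠ 0 := by
      by_contra hcon
      push Not at hcon
      have : α = 0 := Finsupp.ext hcon
      subst this; simp at hα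
    have hle : Finsupp.single j 1 ≤ α := by
      rw [Finsupp.single_le_iff]; omega
    obtain ⟨β, rfl⟩ : ∃ β, α = Finsupp.single j 1 + β := ⟨α - Finsupp.single j 1, (add_tsub_cancel_of_le hle).symm⟩
    have hβ : β.degree = m + 1 := by
      rw [map_add] at hα
      simp at hα; omega
    rw [Finsupp.prod_add_index' (by simp) (fun _ _ _ => pow_add _ _ _),
      Finsupp.prod_add_index' (by simp) (fun _ _ _ => pow_add _ _ _),
      Finsupp.prod_single_index (by simp), Finsupp.prod_single_index (by simp)]
    have h1 := ih β hβ
    set P := β.prod fun j e => (a j + l j • W) ^ e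
    set c := β.prod fun j e => l j ^ e
    have : (a j + l j • W) ^ 1 * P - (l j ^ 1 * c) • W ^ (m + 1 + 1) =
      (a j + l j • W) * (P - c • W ^ (m + 1)) + a j * (c • W ^ (m + 1)) := by
      simp only [Algebra.smul_def, map_mul, map_pow]; ring
    rw [this]
    refine Submodule.add_mem _ ?_ (Submodule.mul_mem_mul (ha j) (Submodule.smul_mem _ _ (hWm _)))
    have hz : (a j + l j • W) ∈ A 1 := Submodule.add_mem _ (haA j) (Submodule.smul_mem _ _ hW)
    refine Submodule.mul_induction_on h1 (fun p hp q hq => ?_) (fun p q hp hq => ?_)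
    · rw [mul_left_comm]
      exact Submodule.mul_mem_mul hp (hA m _ hz _ hq)
    · rw [mul_add]; exact Submodule.add_mem _ hp hq
end

namespace IsGen

variable {k F L : Type} [Field k] [Field F] [Field L] [Algebra ℂ k] [Algebra ℂ F]
    [Algebra ℂ L] [Algebra k L] [Algebra F L] [IsScalarTower ℂ k L] [IsScalarTower ℂ F L]
    {r : ℕ} {x : Fin (r + 1) → F} {U : Fin 3 × Fin (r + 1) → k}

theorem gx_zero (h : IsGen k F L x U) : gx L x 0 = 1 := by simp [gx, h.x0]

theorem gy_mem (j : Fin 3) : gy L x U j ∈ polyLE k (gx L x) 1 := by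
  unfold gy
  refine Submodule.sum_mem _ fun i _ => ?_
  rw [← Algebra.smul_def]
  exact Submodule.smul_mem _ _ (var_mem_polyLE i)

/-- The endomorphism of `L` over `F` induced by `u_j ↦ [j ≠ δ] u_j + λ_j (u_δ + c)`. -/
theorem endo_shift (h : IsGen k F L x U) (δ : Fin 3) (l : Fin 3 → ℂ) (hl : l δ ≠ 0)
    (c : Fin (r + 1) → ℂ) :
    ∃ (σ : k →ₐ[ℂ] k) (τ : L →ₐ[F] L),
      (∀ c, τ (algebraMap k L c) = algebraMap k L (σ c)) ∧
      ∀ j, τ (gy L x U j) = (if j = δ then 0 else gy L x U j) +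
        l j • (gy L x U δ + ∑ i, c i • gx L x i) := by
  obtain ⟨σ, τ, h1, h2⟩ := h.endo
    (fun p => (if p.1 = δ then 0 else X p) + C (l p.1) * (X (δ, p.2) + C (c p.2)))
    (fun p => (if p.1 = δ then - C (c p.2) else X p) +
      C ((if p.1 = δ then 1 else - l p.1) * (l δ)⁻¹) * X (δ, p.2)) (by
        rintro ⟨j, i⟩
        by_cases hj : j = δ
        · subst hj
          simp only [if_true, zero_add, map_mul, map_add, algHom_C, bind₁_X_right, algebraMap_eq,
            one_mul, C_1]
          have : (C (l j) : MvPolynomial (Fin 3 × Fin (r + 1)) ℂ) * C (l j)⁻¹ = 1 := by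
            rw [← C_mul, mul_inv_cancel₀ hl, C_1]
          linear_combination X (j, i) * this
        · simp only [hj, if_true, if_false, map_mul, map_add, algHom_C, bind₁_X_right,
            algebraMap_eq, one_mul, C_neg, C_1]
          ring)
  refine ⟨σ, τ, h1, fun j => ?_⟩
  have h3 : ∀ i, τ (algebraMap k L (U (j, i))) = (if j = δ then 0 else algebraMap k L (U (j, i)))
      + algebraMap ℂ L (l j) * (algebraMap k L (U (δ, i)) + algebraMap ℂ L (c i)) := by
    intro i
    rw [h1, h2]
    simp only [map_add, map_mul, aeval_X, aeval_C, ← IsScalarTower.algebraMap_apply ℂ k L]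
    split_ifs <;> simp
  unfold gy
  rw [map_sum]
  simp only [map_mul, h3, AlgHom.commutes]
  rw [← Finset.sum_add_distrib, Algebra.smul_def, Finset.mul_sum]
  have h4 : (if j = δ then (0 : L) else ∑ i, algebraMap k L (U (j, i)) * algebraMap F L (x i)) =
    ∑ i, (if j = δ then (0 : L) else algebraMap k L (U (j, i))) * algebraMap F L (x i) := by
    split_ifs <;> simp
  rw [h4, ← Finset.sum_add_distrib]
  refine Finset.sum_congr rfl fun i _ => ?_
  simp only [gx, Algebra.smul_def]
  ring

/-- A generic relation among `y_0, …, y_δ` is monic in a generic form. -/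
theorem integral_rel (h : IsGen k F L x U) (δ : ℕ) (hδ : δ < 3)
    (hdep : ¬ AlgebraicIndependent k (fun j : Fin (δ + 1) => gy L x U (Fin.castLE hδ j))) :
    ∃ M : ℕ, 1 ≤ M ∧ ∀ c : Fin (r + 1) → ℂ,
      (gy L x U ⟨δ, hδ⟩ + ∑ i, c i • gx L x i) ^ M ∈
        polyLE k (fun j : Fin δ => gy L x U (Fin.castLE hδ.le j)) 1 *
          polyLE k (gx L x) (M - 1) := by
  classical
  set y : Fin (δ + 1) → L := fun j => gy L x U (Fin.castLE hδ j) with hy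
  obtain ⟨Ψ, hΨ, hΨ0⟩ : ∃ Ψ : MvPolynomial (Fin (δ + 1)) k, aeval y Ψ = 0 ∧ Ψ ≠ 0 := by
    rw [algebraicIndependent_iff] at hdep
    push Not at hdep
    exact hdep
  set M := Ψ.totalDegree with hM
  have hM1 : 1 ≤ M := by
    by_contra hcon
    have h0 : Ψ.totalDegree = 0 := by omega
    rw [totalDegree_eq_zero_iff_eq_C] at h0
    rw [h0, aeval_C] at hΨ
    rw [FaithfulSMul.algebraMap_eq_zero_iff] at hΨ
    rw [hΨ, C_0] at h0
    exact hΨ0 h0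
  -- a complex point where the leading form does not vanish, with nonzero last coordinate
  set ΨM := homogeneousComponent M Ψ with hΨM
  have hΨM0 : ΨM ≠ 0 := by
    obtain ⟨α, hα, hαM⟩ := Finset.exists_mem_eq_sup Ψ.support (support_nonempty.2 hΨ0)
      (fun s => s.sum fun _ e => e)
    intro h0
    have h1 := congrArg (coeff α) h0
    rw [hΨM, coeff_homogeneousComponent, coeff_zero, if_pos] at h1
    · exact (mem_support_iff.1 hα) h1
    · exact hαM.symm
  obtain ⟨l, hl⟩ : ∃ l : Fin (δ + 1) → ℂ,
      eval (fun j => algebraMap ℂ k (l j)) (ΨM * X (Fin.last δ)) ≠ 0 := by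
    by_contra hcon
    push Not at hcon
    have hinf : (Set.range (algebraMap ℂ k)).Infinite :=
      Set.infinite_range_of_injective (algebraMap ℂ k).injective
    have : ΨM * X (Fin.last δ) = 0 := by
      refine MvPolynomial.funext_set (fun _ => Set.range (algebraMap ℂ k)) (fun _ => hinf) ?_
      intro z hz
      have hz' : ∀ j, ∃ w, algebraMap ℂ k w = z j := fun j => hz j trivial
      choose l hl using hz'
      have := hcon l
      rw [show z = fun j => algebraMap ℂ k (l j) from funext fun j => (hl j).symm, this, map_zero]
    exact mul_ne_zero hΨM0 (X_ne_zero _) this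
  rw [map_mul, eval_X] at hl
  obtain ⟨hl1, hl2⟩ := mul_ne_zero_iff.1 hl
  have hlδ : l (Fin.last δ) ≠ 0 := fun h0 => hl2 (by rw [h0, map_zero])
  refine ⟨M, hM1, fun c => ?_⟩
  set Y := polyLE k (fun j : Fin δ => gy L x U (Fin.castLE hδ.le j)) 1 with hY
  set W := gy L x U ⟨δ, hδ⟩ + ∑ i, c i • gx L x i with hW
  let l3 : Fin 3 → ℂ := fun j => if hj : (j : ℕ) < δ + 1 then l ⟨j, hj⟩ else 0
  obtain ⟨σ, τ, hστ, hτ⟩ := h.endo_shift ⟨δ, hδ⟩ l3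
    (by simpa [l3, Fin.last] using hlδ) c
  have hl3 : ∀ j : Fin (δ + 1), l3 (Fin.castLE hδ j) = l j := by
    intro j
    have : ((Fin.castLE hδ j : Fin 3) : ℕ) < δ + 1 := j.2
    simp only [l3, this, dif_pos]; rfl
  let a : Fin (δ + 1) → L := fun j => if j = Fin.last δ then 0 else y j
  have hτy : ∀ j, τ (y j) = a j + (algebraMap ℂ k (l j)) • W := by
    intro j
    have := hτ (Fin.castLE hδ j)
    rw [hl3] at this
    rw [hy]
    show τ (gy L x U (Fin.castLE hδ j)) = _
    rw [this, algebraMap_smul]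
    have hiff : Fin.castLE hδ j = ⟨δ, hδ⟩ ↔ j = Fin.last δ := by
      simp [Fin.ext_iff]
    simp only [a, hiff, hy, hW]
  have hrel : ∑ α ∈ Ψ.support, σ (Ψ.coeff α) • (α.prod fun j e =>
      (a j + (algebraMap ℂ k (l j)) • W) ^ e) = 0 := by
    have h1 := congrArg τ hΨ
    rw [map_zero, aeval_def, eval₂_eq, map_sum] at h1
    rw [← h1]
    refine Finset.sum_congr rfl fun α _ => ?_
    rw [map_mul, hστ, map_prod, ← Algebra.smul_def]
    congr 1
    refine Finset.prod_congr rfl fun j _ => ?_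
    rw [map_pow, hτy]
  have haY : ∀ j, a j ∈ Y := by
    intro j
    by_cases hj : j = Fin.last δ
    · simp [a, hj]
    · have hj' : (j : ℕ) < δ := by
        have := j.2
        have : (j : ℕ) ≠ δ := fun h0 => hj (Fin.ext h0)
        omega
      simp only [a, hj, if_false, hy]
      exact var_mem_polyLE (κ := k) (y := fun j : Fin δ => gy L x U (Fin.castLE hδ.le j)) ⟨j, hj'⟩
  have haA : ∀ j, a j ∈ polyLE k (gx L x) 1 := by
    intro j
    by_cases hj : j = Fin.last δ
    · simp [a, hj]
    · simp only [a, hj, if_false, hy]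
      exact gy_mem _
  have hWA : W ∈ polyLE k (gx L x) 1 := by
    refine Submodule.add_mem _ (gy_mem _) (Submodule.sum_mem _ fun i _ => ?_)
    rw [← algebraMap_smul k]
    exact Submodule.smul_mem _ _ (var_mem_polyLE i)
  have hY1 : (1 : L) ∈ Y := one_mem_polyLE 1
  obtain ⟨m, hm⟩ : ∃ m, M = m + 1 := ⟨M - 1, by omega⟩
  -- modulo `Y * A_{M-1}` only the leading form contributes
  have hterm : ∀ α ∈ Ψ.support, σ (Ψ.coeff α) • (α.prod fun j e =>
      (a j + (algebraMap ℂ k (l j)) • W) ^ e) -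
      (σ (ΨM.coeff α) * (α.prod fun j e => (algebraMap ℂ k (l j)) ^ e)) • W ^ M ∈
        Y * polyLE k (gx L x) (M - 1) := by
    intro α hα
    have hdeg : α.degree ≤ M := le_totalDegree hα
    rw [hΨM, coeff_homogeneousComponent]
    split_ifs with hαM
    · rw [mul_smul, ← smul_sub]
      refine Submodule.smul_mem _ _ ?_
      rw [hm]
      refine prod_sub_lead_mem (A := polyLE k (gx L x)) (one_mem_polyLE 0) ?_ a _ W haY haA hWA m α
        (by rw [hαM, hm])
      intro m f hf g hg
      have := polyLE_mul hf hg
      rwa [show 1 + m = m + 1 from add_comm _ _] at this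
    · simp only [map_zero, zero_mul, zero_smul, sub_zero]
      refine Submodule.smul_mem _ _ ?_
      rw [← one_mul (Finsupp.prod _ _)]
      refine Submodule.mul_mem_mul hY1 (polyLE_mono (a := α.degree) (by omega) ?_)
      exact prod_mem_polyLE (fun j => Submodule.add_mem _ (haA j) (Submodule.smul_mem _ _ hWA)) α
  have hsum := Submodule.sum_mem _ hterm
  rw [Finset.sum_sub_distrib, hrel, zero_sub, ← Finset.sum_smul, ← neg_smul] at hsum
  have hc0 : ∑ α ∈ Ψ.support, σ (ΨM.coeff α) * (α.prod fun j e => (algebraMap ℂ k (l j)) ^ e) ≠ 0 := by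
    have h1 : σ (eval (fun j => algebraMap ℂ k (l j)) ΨM) = ∑ α ∈ Ψ.support, σ (ΨM.coeff α) *
        (α.prod fun j e => (algebraMap ℂ k (l j)) ^ e) := by
      rw [eval_eq, map_sum]
      have hsub : ΨM.support ⊆ Ψ.support := by
        intro α hα
        rw [mem_support_iff] at hα ⊢
        intro h0; apply hα
        rw [hΨM, coeff_homogeneousComponent, h0, ite_self]
      rw [← Finset.sum_subset hsub]
      · refine Finset.sum_congr rfl fun α _ => ?_
        rw [map_mul, map_prod]
        congr 1
        refine Finset.prod_congr rfl fun j _ => ?_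
        rw [map_pow, AlgHom.commutes]
      · intro α _ hα
        rw [notMem_support_iff.1 hα, map_zero, zero_mul]
    rw [← h1]
    exact fun h0 => hl1 ((map_eq_zero σ).1 h0)
  have := Submodule.smul_mem _ ((-∑ α ∈ Ψ.support, σ (ΨM.coeff α) *
    (α.prod fun j e => (algebraMap ℂ k (l j)) ^ e))⁻¹) hsum
  rwa [smul_smul, inv_mul_cancel₀ (neg_ne_zero.2 hc0), one_smul] at this

/-- **Noether normalization** for generic projections, in filtered form. -/
theorem noether (h : IsGen k F L x U) (δ : ℕ) (hδ : δ < 3)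
    (hdep : ¬ AlgebraicIndependent k (fun j : Fin (δ + 1) => gy L x U (Fin.castLE hδ j))) :
    ∃ e : ℕ, ∀ n, polyLE k (gx L x) n ≤
      polyLE k (fun j : Fin δ => gy L x U (Fin.castLE hδ.le j)) n * polyLE k (gx L x) e := by
  classical
  obtain ⟨M, hM1, hM⟩ := h.integral_rel δ hδ hdep
  set Q := polyLE k (fun j : Fin δ => gy L x U (Fin.castLE hδ.le j)) with hQ
  set A := polyLE k (gx L x) with hA
  let W : Option (Fin (r + 1)) → L := fun o =>
    gy L x U ⟨δ, hδ⟩ + o.elim 0 (fun i => gx L x i)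
  have hWA : ∀ o, W o ∈ A 1 := by
    rintro (_ | i)
    · exact Submodule.add_mem _ (gy_mem _) (Submodule.zero_mem _)
    · exact Submodule.add_mem _ (gy_mem _) (var_mem_polyLE i)
  have hWM : ∀ o, W o ^ M ∈ Q 1 * A (M - 1) := by
    rintro (_ | i)
    · have := hM 0
      simpa [W] using this
    · have := hM (Pi.single i 1)
      simp only [Pi.single_apply, ite_smul, one_smul, zero_smul, Finset.sum_ite_eq',
        Finset.mem_univ, if_true] at this
      exact this
  have hxW : ∀ i, gx L x i ∈ polyLE k W 1 := by
    intro i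
    have : gx L x i = W (some i) - W none := by simp [W]
    rw [this]
    exact Submodule.sub_mem _ (var_mem_polyLE _) (var_mem_polyLE _)
  refine ⟨M * Fintype.card (Option (Fin (r + 1))), fun n => ?_⟩
  induction n using Nat.strong_induction_on with
  | _ n ih =>
    refine (polyLE_le_polyLE hxW n).trans
      (polyLE_le_of_forall (σ := Fin (r + 1)) (y := gx L x) (a := 0) fun α hα => ?_)
    by_cases hall : ∀ o, α o < M
    · rw [← one_mul (Finsupp.prod _ _)]
      refine Submodule.mul_mem_mul (one_mem_polyLE _) (polyLE_mono ?_ (prod_mem_polyLE hWA α))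
      rw [Finsupp.degree_eq_sum]
      refine (Finset.sum_le_card_nsmul _ _ M fun o _ => (hall o).le).trans ?_
      rw [smul_eq_mul, mul_comm, Finset.card_univ]
    · push Not at hall
      obtain ⟨o, ho⟩ := hall
      obtain ⟨β, rfl⟩ : ∃ β, α = Finsupp.single o M + β :=
        ⟨α - Finsupp.single o M, (add_tsub_cancel_of_le (Finsupp.single_le_iff.2 ho)).symm⟩
      rw [map_add, Finsupp.degree_single] at hα
      rw [Finsupp.prod_add_index' (by simp) (fun _ _ _ => pow_add _ _ _),
        Finsupp.prod_single_index (by simp)]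
      have h1 : W o ^ M * (β.prod fun i e => W i ^ e) ∈ (Q 1 * A (M - 1)) * A β.degree :=
        Submodule.mul_mem_mul (hWM o) (prod_mem_polyLE hWA β)
      rw [mul_assoc] at h1
      have h2 : A (M - 1) * A β.degree ≤ A (n - 1) :=
        (polyLE_mul_le _ _).trans (polyLE_mono (by omega))
      have h3 := (mul_le_mul' le_rfl (h2.trans (ih (n - 1) (by omega))) :
        Q 1 * (A (M - 1) * A β.degree) ≤ _) h1
      rw [← mul_assoc] at h3
      have h4 : Q 1 * Q (n - 1) ≤ Q n := (polyLE_mul_le _ _).trans (polyLE_mono (by omega))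
      exact (mul_le_mul_left h4 _ : Q 1 * Q (n - 1) * _ ≤ Q n * _) h3

end IsGen

end

/-! ### Base fields and degrees of generic sections -/

section
open IntermediateField MvPolynomial

theorem algInd_pair {κ L : Type*} [Field κ] [Field L] [Algebra κ L] {a b : L} :
    AlgebraicIndependent κ ![a, b] ↔ Transcendental κ a ∧ Transcendental κ⟮a⟯ b := by
  have e : AlgebraicIndependent κ ![a, b] ↔
      AlgebraicIndependent κ (fun o : Option (Fin 1) => o.elim b ![a]) := by
    let eq : Option (Fin 1) ≃ Fin 2 :=
      { toFun := fun o => o.elim 1 (fun _ => 0)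
        invFun := ![some 0, none]
        left_inv := by rintro (_ | i) <;> simp; exact (Subsingleton.elim _ _)
        right_inv := by intro i; fin_cases i <;> simp }
    rw [← algebraicIndependent_equiv eq]
    have : ![a, b] ∘ eq = (fun o : Option (Fin 1) => o.elim b ![a]) := by
      funext o
      rcases o with _ | i
      · simp [eq]
      · have : i = 0 := Subsingleton.elim _ _
        subst this
        simp [eq]
    rw [this]
  rw [e, AlgebraicIndependent.option_iff, algebraicIndependent_iff_transcendental]
  have hr : Set.range ![a] = {a} := by simp
  rw [hr, ← IntermediateField.transcendental_adjoin_iff]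

/-- If `A_n ≤ κ[y]_{≤ n} · E` for a finite-dimensional `E` and `K` contains all `y_j`,
then `L = κ(w)` is finite over `K`. -/
theorem fd_of_generated {κ L K : Type*} [Field κ] [Field L] [Algebra κ L] [Field K] [Algebra K L]
    [Algebra κ K] [IsScalarTower κ K L] {σ ρ : Type*} [Finite σ] [Finite ρ] {y : σ → L} {w : ρ → L}
    (hyK : ∀ i, ∃ z : K, algebraMap K L z = y i)
    (hw : IntermediateField.adjoin κ (Set.range w) = ⊤)
    (E : Submodule κ L) [FiniteDimensional κ E]
    (hN : ∀ n, polyLE κ w n ≤ polyLE κ y n * E) : FiniteDimensional K L := by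
  have hpoly : ∀ n, ∀ z ∈ polyLE κ y n, ∃ z' : K, algebraMap K L z' = z := by
    intro n z hz
    obtain ⟨p, -, rfl⟩ := mem_polyLE.1 hz
    choose y' hy' using hyK
    refine ⟨aeval y' p, ?_⟩
    rw [← aeval_algebraMap_apply]
    have : (algebraMap K L ∘ y') = y := funext hy'
    rw [this]
  obtain ⟨-, hfd⟩ := span_finite_le (K := K) E
  set S := Submodule.span K (E : Set L)
  have hS : ∀ n, ∀ z ∈ polyLE κ w n, z ∈ S := by
    intro n z hz
    refine Submodule.mul_induction_on (hN n hz) ?_ (fun a b ha hb => S.add_mem ha hb)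
    intro a ha b hb
    obtain ⟨a', rfl⟩ := hpoly n a ha
    rw [← Algebra.smul_def]
    exact S.smul_mem _ (Submodule.subset_span hb)
  have hInt : ∀ z ∈ Set.range w, IsIntegral K z := by
    rintro _ ⟨i, rfl⟩
    have hle : Subalgebra.toSubmodule (Algebra.adjoin K {w i}) ≤ S := by
      rw [Algebra.adjoin_singleton_eq_range_aeval]
      rintro _ ⟨p, rfl⟩
      show Polynomial.aeval (w i) p ∈ S
      rw [Polynomial.aeval_eq_sum_range]
      refine Submodule.sum_mem _ fun j _ => S.smul_mem _ (hS j _ ?_)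
      simpa using pow_mem_polyLE (var_mem_polyLE (κ := κ) (y := w) i) j
    have : FiniteDimensional K (Algebra.adjoin K {w i}) := Submodule.finiteDimensional_of_le hle
    exact IsIntegral.of_mem_of_fg _ (by
      exact (Submodule.fg_top _).1 (Module.Finite.fg_top (R := K) (M := Algebra.adjoin K {w i})))
      _ (Algebra.self_mem_adjoin_singleton K _)
  have h1 := IntermediateField.finiteDimensional_adjoin (K := K) (S := Set.range w)
    (fun x hx => hInt x hx)
  have htop : IntermediateField.adjoin K (Set.range w) = ⊤ := by
    rw [← IntermediateField.restrictScalars_eq_top_iff (K := κ)]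
    rw [eq_top_iff, ← hw, IntermediateField.adjoin_le_iff]
    rintro _ ⟨i, rfl⟩
    exact IntermediateField.subset_adjoin K _ ⟨i, rfl⟩
  rw [htop] at h1
  exact Module.Finite.equiv (IntermediateField.topEquiv (F := K) (E := L)).toLinearEquiv

theorem linearIndependent_pow_of_transc {κ L : Type*} [Field κ] [Field L] [Algebra κ L] {t : L}
    (ht : Transcendental κ t) : LinearIndependent κ (fun i : ℕ => t ^ i) := by
  have h1 : LinearIndependent κ (fun i : ℕ => (Polynomial.X : Polynomial κ) ^ i) := by
    have := (Polynomial.basisMonomials κ).linearIndependent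
    simpa [Polynomial.X_pow_eq_monomial] using this
  have h2 := h1.map' (Polynomial.aeval t).toLinearMap
    (LinearMap.ker_eq_bot.2 (transcendental_iff_injective.1 ht))
  have h3 : (⇑(Polynomial.aeval (R := κ) t).toLinearMap ∘ fun i : ℕ => Polynomial.X ^ i)
      = fun i : ℕ => t ^ i := by funext i; simp
  rwa [h3] at h2

theorem simple_frac {κ L : Type*} [Field κ] [Field L] [Algebra κ L] (t : L) (z : κ⟮t⟯) :
    ∃ p q : L, (∃ m, p ∈ polyLE κ ![t] m) ∧ (∃ m, q ∈ polyLE κ ![t] m) ∧ q ≠ 0 ∧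
      algebraMap κ⟮t⟯ L z * q = p := by
  have hp : ∀ p : Polynomial κ, ∃ m, Polynomial.aeval t p ∈ polyLE κ ![t] m := by
    intro p
    refine ⟨p.natDegree, ?_⟩
    rw [Polynomial.aeval_eq_sum_range]
    refine Submodule.sum_mem _ fun j hj => Submodule.smul_mem _ _ ?_
    refine polyLE_mono (Nat.lt_succ_iff.1 (Finset.mem_range.1 hj)) ?_
    simpa using pow_mem_polyLE (var_mem_polyLE (κ := κ) (y := ![t]) 0) j
  obtain ⟨a, b, hab⟩ := (IntermediateField.mem_adjoin_simple_iff κ (z : L)).1 z.2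
  by_cases hb : Polynomial.aeval t b = 0
  · refine ⟨0, 1, ⟨0, Submodule.zero_mem _⟩, ⟨0, one_mem_polyLE 0⟩, one_ne_zero, ?_⟩
    rw [hb, div_zero] at hab
    show (z : L) * 1 = 0
    rw [hab, zero_mul]
  · refine ⟨_, _, hp a, hp b, hb, ?_⟩
    show (z : L) * _ = _
    rw [hab]; field_simp

theorem double_frac {κ L : Type*} [Field κ] [Field L] [Algebra κ L] (t v : L) (z : κ⟮t⟯⟮v⟯) :
    ∃ p q : L, (∃ m, p ∈ polyLE κ ![t, v] m) ∧ (∃ m, q ∈ polyLE κ ![t, v] m) ∧ q ≠ 0 ∧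
      algebraMap κ⟮t⟯⟮v⟯ L z * q = p := by
  have hz : (z : L) ∈ IntermediateField.adjoin κ (Set.range ![t, v]) := by
    have h1 : (IntermediateField.restrictScalars κ κ⟮t⟯⟮v⟯ : IntermediateField κ L) =
        IntermediateField.adjoin κ (Set.range ![t, v]) := by
      rw [IntermediateField.adjoin_simple_adjoin_simple]
      congr 1
      simp [Set.pair_comm]
    rw [← h1]
    exact z.2
  obtain ⟨a, b, hab⟩ := IntermediateField.mem_adjoin_range_iff κ ![t, v] (z : L) |>.1 hz
  have hp : ∀ p : MvPolynomial (Fin 2) κ, ∃ m, aeval ![t, v] p ∈ polyLE κ ![t, v] m :=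
    fun p => ⟨_, mem_polyLE.2 ⟨p, le_rfl, rfl⟩⟩
  by_cases hb : aeval ![t, v] b = 0
  · refine ⟨0, 1, ⟨0, Submodule.zero_mem _⟩, ⟨0, one_mem_polyLE 0⟩, one_ne_zero, ?_⟩
    rw [hb, div_zero] at hab
    show (z : L) * 1 = 0
    rw [hab, zero_mul]
  · refine ⟨_, _, hp a, hp b, hb, ?_⟩
    show (z : L) * _ = _
    rw [hab]; field_simp

namespace IsGen

variable {k F L : Type} [Field k] [Field F] [Field L] [Algebra ℂ k] [Algebra ℂ F]
    [Algebra ℂ L] [Algebra k L] [Algebra F L] [IsScalarTower ℂ k L] [IsScalarTower ℂ F L]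
    {r : ℕ} {x : Fin (r + 1) → F} {U : Fin 3 × Fin (r + 1) → k}

theorem fam (j : Fin 3) : Fam (gy L x U j) (polyLE k (gx L x)) where
  mono n := polyLE_mono (Nat.le_succ n)
  mul n f hf := by
    rw [mul_comm]
    exact polyLE_mul hf (gy_mem j)

/-- If the Hilbert function is unbounded, `y₀` is transcendental. -/
theorem transc_zero (h : IsGen k F L x U)
    (hunb : ∀ B : ℕ, ∃ n, B < Module.finrank k (polyLE k (gx L x) n)) :
    Transcendental k (gy L x U 0) := by
  by_contra hcon
  have hdep : ¬ AlgebraicIndependent k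
      (fun j : Fin (0 + 1) => gy L x U (Fin.castLE (by decide : 0 < 3) j)) := by
    intro hh
    exact hcon (hh.transcendental 0)
  obtain ⟨e, he⟩ := h.noether 0 (by decide) hdep
  obtain ⟨n, hn⟩ := hunb (Module.finrank k (polyLE k (gx L x) e))
  have hle : polyLE k (gx L x) n ≤ polyLE k (gx L x) e := by
    refine (he n).trans ?_
    rw [Submodule.mul_le]
    intro a ha b hb
    obtain ⟨p, -, rfl⟩ := mem_polyLE.1 ha
    obtain ⟨c, rfl⟩ := MvPolynomial.C_surjective (Fin 0) p
    rw [aeval_C, ← Algebra.smul_def]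
    exact Submodule.smul_mem _ _ hb
  exact absurd (Submodule.finrank_mono hle) (not_le.2 hn)

/-- If the Hilbert function is eventually linear of slope `d`, then `y₀, y₁` are
algebraically dependent. -/
theorem dep_one (h : IsGen k F L x U) {d c : ℤ} {N : ℕ}
    (hN : ∀ n ≥ N, (Module.finrank k (polyLE k (gx L x) n) : ℤ) = d * n + c) :
    ¬ AlgebraicIndependent k ![gy L x U 0, gy L x U 1] := by
  intro hind
  obtain ⟨h0, h1⟩ := algInd_pair.1 hind
  obtain ⟨n, hnN, hnd⟩ : ∃ n : ℕ, N ≤ n ∧ d < n :=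
    ⟨max N (d.toNat + 1), le_max_left _ _, by
      have := le_max_right N (d.toNat + 1); have := Int.self_le_toNat d; omega⟩
  have hle := finrank_span_add_le (gy L x U 0) h0 (polyLE k (gx L x) n) (polyLE k (gx L x) (n + 1))
    ((fam (U := U) 0).mono n) ((fam 0).mul n)
  set S := Submodule.span k⟮gy L x U 0⟯ (polyLE k (gx L x) (n + 1) : Set L)
  have hfd : FiniteDimensional k⟮gy L x U 0⟯ S := (span_finite_le _).2
  have hli : LinearIndependent k⟮gy L x U 0⟯ (fun i : Fin (n + 2) => gy L x U 1 ^ (i : ℕ)) := by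
    have := linearIndependent_pow_of_transc h1
    exact this.comp _ Fin.val_injective
  have hmem : ∀ i : Fin (n + 2), gy L x U 1 ^ (i : ℕ) ∈ S := by
    intro i
    refine Submodule.subset_span (polyLE_mono (Nat.lt_succ_iff.1 i.2) ?_)
    simpa using pow_mem_polyLE (gy_mem (L := L) (x := x) (U := U) 1) i
  have hli' : LinearIndependent k⟮gy L x U 0⟯
      (fun i : Fin (n + 2) => (⟨_, hmem i⟩ : S)) := by
    refine LinearIndependent.of_comp S.subtype ?_
    exact hli
  have hcard := hli'.fintype_card_le_finrank
  rw [Fintype.card_fin] at hcard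
  have e1 := hN n hnN
  have e2 := hN (n + 1) (by omega)
  push_cast at e2
  have e3 : d * ((n : ℤ) + 1) = d * n + d := by ring
  omega

theorem cast_two (h : 1 + 1 ≤ 3) : (fun j : Fin (1 + 1) => gy L x U (Fin.castLE h j)) =
    ![gy L x U 0, gy L x U 1] := by
  funext j; fin_cases j <;> rfl

theorem cast_one (h : 1 ≤ 3) : (fun j : Fin 1 => gy L x U (Fin.castLE h j)) =
    ![gy L x U 0] := by
  funext j; fin_cases j; rfl

/-- The curve case: `L` is finite over `k(y₀)`, of degree at least the degree of the curve. -/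
theorem curve_base (h : IsGen k F L x U) {d c : ℤ} (hd : 0 < d) {N : ℕ}
    (hN : ∀ n ≥ N, (Module.finrank k (polyLE k (gx L x) n) : ℤ) = d * n + c) :
    Transcendental k (gy L x U 0) ∧ FiniteDimensional k⟮gy L x U 0⟯ L ∧
      d ≤ Module.finrank k⟮gy L x U 0⟯ L := by
  have h0 : Transcendental k (gy L x U 0) := by
    refine h.transc_zero fun B => ?_
    refine ⟨max N (B + 1 + (-c).toNat), ?_⟩
    have e := hN _ (le_max_left N (B + 1 + (-c).toNat))
    have e2 : ((B + 1 + (-c).toNat : ℕ) : ℤ) ≤ (max N (B + 1 + (-c).toNat) : ℕ) := by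
      exact_mod_cast le_max_right _ _
    have e3 : ((max N (B + 1 + (-c).toNat) : ℕ) : ℤ) ≤ d * (max N (B + 1 + (-c).toNat) : ℕ) := by
      nlinarith
    have := Int.self_le_toNat (-c)
    push_cast at e e2 e3
    omega
  have hdep := h.dep_one hN
  rw [← cast_two (by decide)] at hdep
  obtain ⟨e, he⟩ := h.noether 1 (by decide) hdep
  rw [cast_one] at he
  have hyK : ∀ i, ∃ z : k⟮gy L x U 0⟯, algebraMap k⟮gy L x U 0⟯ L z = ![gy L x U 0] i := by
    intro i
    refine ⟨AdjoinSimple.gen k _, ?_⟩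
    fin_cases i; simp
  have hfd : FiniteDimensional k⟮gy L x U 0⟯ L := fd_of_generated hyK h.adjoin_gx _ he
  refine ⟨h0, hfd, ?_⟩
  have hB := bdd_of_generated (simple_frac (κ := k) (gy L x U 0)) hyK _ he
  obtain ⟨-, b, hb⟩ := hB.finite (fun n => inferInstance)
  set D := Module.finrank k⟮gy L x U 0⟯ L
  by_contra hcon
  push Not at hcon
  have hb' : ∀ n ≥ N, d * n + c ≤ D * (n + b + 1) := by
    intro n hn
    rw [← hN n hn]
    have := (hb n).trans (Nat.mul_le_mul_left D (finrank_polyLE_one (κ := k) (gy L x U 0) (n + b)))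
    exact_mod_cast this
  have h1 := hb' (N + (D * (b + 1) + 1 + (-c).toNat)) (by omega)
  have := Int.self_le_toNat (-c)
  have hM : (D * (b + 1) + 1 + (-c).toNat : ℤ) ≤
      ((N + (D * (b + 1) + 1 + (-c).toNat) : ℕ) : ℤ) := by push_cast; omega
  generalize ((N + (D * (b + 1) + 1 + (-c).toNat) : ℕ) : ℤ) = M at h1 hM
  have hpos : (0 : ℤ) ≤ D * (b + 1) := by positivity
  nlinarith [mul_le_mul_of_nonneg_right (show (1 : ℤ) ≤ d - D by omega) (show (0 : ℤ) ≤ M by omega),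
   Int.natCast_nonneg N, Int.natCast_nonneg D, Int.natCast_nonneg b, Int.natCast_nonneg (-c).toNat]

/-- `dim_K K A_n` is at most the first difference of the Hilbert function. -/
theorem span_le_diff (h0 : Transcendental k (gy L x U 0)) (n : ℕ) :
    Module.finrank k⟮gy L x U 0⟯ (Submodule.span k⟮gy L x U 0⟯ (polyLE k (gx L x) (n + 1) : Set L))
      + Module.finrank k (polyLE k (gx L x) n) ≤ Module.finrank k (polyLE k (gx L x) (n + 1)) :=
  finrank_span_add_le (gy L x U 0) h0 _ _ ((fam (U := U) 0).mono n) ((fam 0).mul n)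

end IsGen

end

/-! ### Hilbert functions and dehomogenisation -/

section
open IntermediateField MvPolynomial

theorem map_homogeneous_eq_polyLE {F : Type} [Field F] [Algebra ℂ F] {r : ℕ}
    (x : Fin (r + 1) → F) (x0 : x 0 = 1) (n : ℕ) :
    (homogeneousSubmodule (Fin (r + 1)) ℂ n).map (aeval x).toLinearMap = polyLE ℂ x n := by
  apply le_antisymm
  · rintro _ ⟨f, hf, rfl⟩
    exact mem_polyLE.2 ⟨f, (mem_homogeneousSubmodule _ _).1 hf |>.totalDegree_le, rfl⟩
  · refine polyLE_le_of_forall (y := x) (a := 0) fun α hα => ?_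
    refine ⟨X 0 ^ (n - α.degree) * monomial α 1, ?_, ?_⟩
    · have h1 : (X 0 ^ (n - α.degree) : MvPolynomial (Fin (r + 1)) ℂ).IsHomogeneous (n - α.degree) :=
        isHomogeneous_X_pow 0 _
      have h2 : (monomial α (1 : ℂ)).IsHomogeneous α.degree := isHomogeneous_monomial 1 rfl
      have := h1.mul h2
      rw [Nat.sub_add_cancel hα] at this
      exact this
    · simp [x0, aeval_monomial]

theorem finrank_degQ_eq {F : Type} [Field F] [Algebra ℂ F] {r : ℕ}
    (x : Fin (r + 1) → F) (x0 : x 0 = 1) (I : Ideal (MPoly (r + 1)))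
    (hI : ∀ n, ∀ f ∈ homogeneousSubmodule (Fin (r + 1)) ℂ n, f ∈ I ↔ aeval x f = 0) (n : ℕ) :
    Module.finrank ℂ (polyLE ℂ x n) = Module.finrank ℂ (degQ I n) := by
  rw [← map_homogeneous_eq_polyLE x x0 n]
  set W := homogeneousSubmodule (Fin (r + 1)) ℂ n
  have hW : FiniteDimensional ℂ W := by
    have : W ≤ restrictTotalDegree (Fin (r + 1)) ℂ n := fun f hf =>
      (mem_restrictTotalDegree _ _ _).2 ((mem_homogeneousSubmodule _ _).1 hf).totalDegree_le
    exact Submodule.finiteDimensional_of_le this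
  have key : ∀ {V : Type} [AddCommGroup V] [Module ℂ V] (φ : MPoly (r + 1) →ₗ[ℂ] V),
      Module.finrank ℂ (W.map φ) + Module.finrank ℂ (LinearMap.ker (φ.domRestrict W))
        = Module.finrank ℂ W := by
    intro V _ _ φ
    rw [← LinearMap.finrank_range_add_finrank_ker (φ.domRestrict W), LinearMap.range_domRestrict]
  have k1 := key (aeval x : MPoly (r + 1) →ₐ[ℂ] F).toLinearMap
  have k2 := key (Ideal.Quotient.mkₐ ℂ I).toLinearMap
  have hker : LinearMap.ker ((aeval x : MPoly (r + 1) →ₐ[ℂ] F).toLinearMap.domRestrict W)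
      = LinearMap.ker ((Ideal.Quotient.mkₐ ℂ I).toLinearMap.domRestrict W) := by
    ext ⟨f, hf⟩
    have := hI n f hf
    simp [← this, Ideal.Quotient.eq_zero_iff_mem]
  rw [hker] at k1
  have : degQ I n = W.map (Ideal.Quotient.mkₐ ℂ I).toLinearMap := rfl
  rw [this]
  omega

/-- The Hilbert function of a homogeneous ideal is the dimension of the space of polynomials of
bounded degree in the affine coordinates. -/
theorem hilbZ_eq {F : Type} [Field F] [Algebra ℂ F] {r : ℕ}
    (x : Fin (r + 1) → F) (x0 : x 0 = 1) (I : Ideal (MPoly (r + 1)))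
    (hI : ∀ n, ∀ f ∈ homogeneousSubmodule (Fin (r + 1)) ℂ n, f ∈ I ↔ aeval x f = 0) (n : ℕ) :
    hilbZ I n = Module.finrank ℂ (polyLE ℂ x n) := by
  rw [finrank_degQ_eq x x0 I hI]
  have : degQZ I (n : ℤ) = degQ I n := by simp [degQZ]
  rw [hilbZ, hilbNat, this]

/-- The function field of the projective variety of a homogeneous prime ideal not containing
`X_0`, with its affine coordinates `X_i / X_0`. -/
theorem exists_functionField {r : ℕ} (I : Ideal (MPoly (r + 1))) (hI : I.IsPrime)
    (hX : (X 0 : MPoly (r + 1)) ∉ I) :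
    ∃ (F : Type) (_ : Field F) (_ : Algebra ℂ F) (x : Fin (r + 1) → F), x 0 = 1 ∧
      IntermediateField.adjoin ℂ (Set.range x) = ⊤ ∧
      ∀ n, ∀ f ∈ homogeneousSubmodule (Fin (r + 1)) ℂ n, f ∈ I ↔ aeval x f = 0 := by
  let Q := FractionRing (MPoly (r + 1) ⧸ I)
  let z : Fin (r + 1) → Q := fun i => algebraMap (MPoly (r + 1) ⧸ I) Q (Ideal.Quotient.mk I (X i))
  have hz : ∀ f : MPoly (r + 1), aeval z f = 0 ↔ f ∈ I := by
    intro f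
    have : aeval z f = algebraMap (MPoly (r + 1) ⧸ I) Q (Ideal.Quotient.mk I f) := by
      have h1 : (aeval z : MPoly (r + 1) →ₐ[ℂ] Q) =
        (IsScalarTower.toAlgHom ℂ (MPoly (r + 1) ⧸ I) Q).comp (Ideal.Quotient.mkₐ ℂ I) := by
        refine MvPolynomial.algHom_ext fun i => ?_
        simp [z]
      rw [h1]; rfl
    rw [this, map_eq_zero_iff _ (IsFractionRing.injective _ _), Ideal.Quotient.eq_zero_iff_mem]
  have hz0 : z 0 ≠ 0 := by
    intro h0
    exact hX ((hz _).1 (by simpa using h0))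
  let w : Fin (r + 1) → Q := fun i => z i / z 0
  let Fd : IntermediateField ℂ Q := IntermediateField.adjoin ℂ (Set.range w)
  let x : Fin (r + 1) → Fd := fun i => ⟨w i, IntermediateField.subset_adjoin ℂ _ ⟨i, rfl⟩⟩
  refine ⟨Fd, inferInstance, inferInstance, x, ?_, ?_, ?_⟩
  · apply Subtype.ext
    show z 0 / z 0 = 1
    exact div_self hz0
  · have h1 : (IntermediateField.adjoin ℂ (Set.range x)).map Fd.val = Fd := by
      rw [IntermediateField.adjoin_map, ← Set.range_comp]
      rfl
    have h2 : (⊤ : IntermediateField ℂ Fd).map Fd.val = Fd := by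
      rw [← AlgHom.fieldRange_eq_map, IntermediateField.fieldRange_val]
    exact IntermediateField.map_injective Fd.val (h1.trans h2.symm)
  · intro n f hf
    rw [← hz f]
    have h1 : z = fun i => z 0 * w i := by
      funext i
      exact (mul_div_cancel₀ _ hz0).symm
    have h2 : aeval z f = z 0 ^ n * aeval w f := by
      have hh : f.IsHomogeneous n := hf
      rw [aeval_def, aeval_def, eval₂_eq', eval₂_eq', Finset.mul_sum]
      refine Finset.sum_congr rfl fun α hα => ?_
      have hdeg : ∑ i, α i = n := by
        have := hh (mem_support_iff.1 hα)
        rw [← Finsupp.degree_eq_sum, Finsupp.degree_eq_weight_one]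
        exact this
      conv_lhs => rw [h1]
      simp only [mul_pow]
      rw [Finset.prod_mul_distrib, Finset.prod_pow_eq_pow_sum, hdeg]
      ring
    rw [h2, mul_eq_zero, or_iff_right (pow_ne_zero _ hz0)]
    have h3 : aeval w f = Fd.val (aeval x f) := by
      rw [← AlgHom.comp_apply, comp_aeval]; rfl
    rw [h3, map_eq_zero]

/-- The field of rational functions in the coefficients of three generic linear forms. -/
abbrev GK (r : ℕ) : Type := FractionRing (MvPolynomial (Fin 3 × Fin (r + 1)) ℂ)

/-- The generic coefficients. -/
noncomputable def GU (r : ℕ) (p : Fin 3 × Fin (r + 1)) : GK r :=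
  algebraMap (MvPolynomial (Fin 3 × Fin (r + 1)) ℂ) (GK r) (X p)

theorem GU_adjoin (r : ℕ) : IntermediateField.adjoin ℂ (Set.range (GU r)) = ⊤ := by
  have haev : ∀ a : MvPolynomial (Fin 3 × Fin (r + 1)) ℂ,
      algebraMap (MvPolynomial (Fin 3 × Fin (r + 1)) ℂ) (GK r) a = aeval (GU r) a := by
    intro a
    have : (IsScalarTower.toAlgHom ℂ (MvPolynomial (Fin 3 × Fin (r + 1)) ℂ) (GK r))
        = aeval (GU r) := by
      refine MvPolynomial.algHom_ext fun i => ?_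
      simp [GU]
    exact DFunLike.congr_fun this a
  rw [eq_top_iff]
  intro z _
  obtain ⟨a, b, hb, rfl⟩ := IsFractionRing.div_surjective (MvPolynomial (Fin 3 × Fin (r + 1)) ℂ) z
  rw [IntermediateField.mem_adjoin_range_iff]
  exact ⟨a, b, by rw [haev, haev]⟩

/-- Every variety has three generic linear forms, with coefficient field `GK r`. -/
theorem exists_isGen {F : Type} [Field F] [Algebra ℂ F] {r : ℕ} (x : Fin (r + 1) → F)
    (x0 : x 0 = 1) (adjF : IntermediateField.adjoin ℂ (Set.range x) = ⊤) :
    ∃ (L : Type) (_ : Field L) (_ : Algebra ℂ L) (_ : Algebra (GK r) L) (_ : Algebra F L)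
      (_ : IsScalarTower ℂ (GK r) L) (_ : IsScalarTower ℂ F L), IsGen (GK r) F L x (GU r) := by
  let PF := MvPolynomial (Fin 3 × Fin (r + 1)) F
  let PC := MvPolynomial (Fin 3 × Fin (r + 1)) ℂ
  let L := FractionRing PF
  let g : PC →ₐ[ℂ] L := (IsScalarTower.toAlgHom ℂ PF L).comp
    (MvPolynomial.mapAlgHom (Algebra.ofId ℂ F))
  have hg : Function.Injective g :=
    (IsFractionRing.injective PF L).comp
      (MvPolynomial.map_injective _ (algebraMap ℂ F).injective)
  let φ : GK r →ₐ[ℂ] L := IsFractionRing.liftAlgHom (K := GK r) hg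
  letI : Algebra (GK r) L := φ.toRingHom.toAlgebra
  have t1 : IsScalarTower ℂ (GK r) L := IsScalarTower.of_algebraMap_eq fun c => (φ.commutes c).symm
  refine ⟨L, inferInstance, inferInstance, inferInstance, inferInstance, t1, inferInstance, ?_⟩
  have hU : ∀ p, algebraMap (GK r) L (GU r p) = algebraMap PF L (X p) := by
    intro p
    show φ (algebraMap _ _ _) = _
    rw [IsFractionRing.liftAlgHom_apply, IsFractionRing.lift_algebraMap]
    show algebraMap PF L (MvPolynomial.map _ (X p)) = _
    rw [map_X]
  have haev : ∀ a : PF, algebraMap PF L a = aeval (fun p => algebraMap (GK r) L (GU r p)) a := by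
    intro a
    have : (IsScalarTower.toAlgHom F PF L) = aeval (fun p => algebraMap (GK r) L (GU r p)) := by
      refine MvPolynomial.algHom_ext fun i => ?_
      rw [aeval_X, hU]
      rfl
    exact DFunLike.congr_fun this a
  refine ⟨x0, adjF, GU_adjoin r, ?_, ?_⟩
  · rw [algebraicIndependent_iff_injective_aeval]
    have : ⇑(aeval (R := F) fun p => algebraMap (GK r) L (GU r p)) = ⇑(algebraMap PF L) := by
      funext a; exact (haev a).symm
    rw [this]
    exact IsFractionRing.injective PF L
  · rw [eq_top_iff]
    intro z _
    obtain ⟨a, b, hb, rfl⟩ := IsFractionRing.div_surjective PF z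
    rw [IntermediateField.mem_adjoin_range_iff]
    exact ⟨a, b, by rw [haev, haev]⟩

end

/-! ### Pairs of generic points -/

section
open MvPolynomial

section Pair

theorem exists_finset_cover {α κ : Type*} (s : Finset α) (f : α → Finset κ) :
    ∃ t : Finset κ, ∀ m ∈ s, f m ⊆ t := by
  classical
  exact ⟨s.biUnion f, fun m hm => Finset.subset_biUnion_of_mem f hm⟩

variable {n : ℕ}

/-- The ideal of the product of an affine variety with itself. -/
noncomputable def pairIdeal (I : Ideal (MvPolynomial (Fin n) ℂ)) :
    Ideal (MvPolynomial (Fin n ⊕ Fin n) ℂ) :=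
  vanishingIdeal ℂ {c | ∃ a ∈ zeroLocus ℂ I, ∃ b ∈ zeroLocus ℂ I, c = Sum.elim a b}

theorem mem_pairIdeal {I : Ideal (MvPolynomial (Fin n) ℂ)} {P : MvPolynomial (Fin n ⊕ Fin n) ℂ} :
    P ∈ pairIdeal I ↔ ∀ a ∈ zeroLocus ℂ I, ∀ b ∈ zeroLocus ℂ I, aeval (Sum.elim a b) P = 0 := by
  simp only [pairIdeal, mem_vanishingIdeal_iff, Set.mem_setOf_eq]
  constructor
  · intro h a ha b hb
    exact h _ ⟨a, ha, b, hb, rfl⟩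
  · rintro h _ ⟨a, ha, b, hb, rfl⟩
    exact h a ha b hb

/-- Specialise the first point. -/
noncomputable def spFst (a : Fin n → ℂ) : MvPolynomial (Fin n ⊕ Fin n) ℂ →ₐ[ℂ] MvPolynomial (Fin n) ℂ :=
  aeval (Sum.elim (fun i => C (a i)) X)

/-- Specialise the second point. -/
noncomputable def spSnd (b : Fin n → ℂ) : MvPolynomial (Fin n ⊕ Fin n) ℂ →ₐ[ℂ] MvPolynomial (Fin n) ℂ :=
  aeval (Sum.elim X (fun i => C (b i)))

theorem aeval_spFst {S : Type*} [CommRing S] [Algebra ℂ S] (a : Fin n → ℂ) (b : Fin n → S)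
    (P : MvPolynomial (Fin n ⊕ Fin n) ℂ) :
    aeval b (spFst a P) = aeval (Sum.elim (fun i => algebraMap ℂ S (a i)) b) P := by
  rw [spFst, ← AlgHom.comp_apply]
  congr 1
  refine MvPolynomial.algHom_ext fun i => ?_
  rcases i with i | i <;> simp

theorem aeval_spSnd {S : Type*} [CommRing S] [Algebra ℂ S] (a : Fin n → S) (b : Fin n → ℂ)
    (P : MvPolynomial (Fin n ⊕ Fin n) ℂ) :
    aeval a (spSnd b P) = aeval (Sum.elim a (fun i => algebraMap ℂ S (b i))) P := by
  rw [spSnd, ← AlgHom.comp_apply]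
  congr 1
  refine MvPolynomial.algHom_ext fun i => ?_
  rcases i with i | i <;> simp

theorem exists_point (I : Ideal (MvPolynomial (Fin n) ℂ)) [hI : I.IsPrime]
    {f : MvPolynomial (Fin n) ℂ} (hf : f ∉ I) : ∃ a ∈ zeroLocus ℂ I, aeval a f ≠ 0 := by
  by_contra hcon
  push Not at hcon
  refine hf ?_
  have := IsPrime.vanishingIdeal_zeroLocus (K := ℂ) I
  rw [← this]
  exact mem_vanishingIdeal_iff.2 hcon

instance pairIdeal_isPrime (I : Ideal (MvPolynomial (Fin n) ℂ)) [hI : I.IsPrime] :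
    (pairIdeal I).IsPrime := by
  have hev : ∀ (a b : Fin n → ℂ) P, aeval b (spFst a P) = aeval (Sum.elim a b) P := fun a b P => by
    simpa using aeval_spFst a b P
  have hev' : ∀ (a b : Fin n → ℂ) P, aeval a (spSnd b P) = aeval (Sum.elim a b) P := fun a b P => by
    simpa using aeval_spSnd a b P
  have hmem : ∀ (a : Fin n → ℂ) (f : MvPolynomial (Fin n) ℂ), a ∈ zeroLocus ℂ I → aeval a f ≠ 0 → f ∉ I :=
    fun a f ha hf hI => hf (mem_zeroLocus_iff.1 ha f hI)
  refine Ideal.isPrime_iff.2 ⟨?_, ?_⟩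
  · intro h1
    obtain ⟨a, ha, -⟩ := exists_point I (f := 1) (fun h => hI.ne_top ((Ideal.eq_top_iff_one _).2 h))
    have : (1 : MvPolynomial (Fin n ⊕ Fin n) ℂ) ∈ pairIdeal I := h1 ▸ Submodule.mem_top
    simpa using mem_pairIdeal.1 this a ha a ha
  · intro P Q hPQ
    by_contra hcon
    rw [not_or, mem_pairIdeal, mem_pairIdeal] at hcon
    push Not at hcon
    obtain ⟨⟨a, ha, b, hb, hP⟩, a', ha', b', hb', hQ⟩ := hcon
    have h1 : spSnd b P ∉ I := hmem a _ ha (by rwa [hev'])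
    have h2 : spSnd b' Q ∉ I := hmem a' _ ha' (by rwa [hev'])
    obtain ⟨c, hc, hcc⟩ := exists_point I (f := spSnd b P * spSnd b' Q)
      (fun h => (hI.mem_or_mem h).elim h1 h2)
    rw [map_mul, hev', hev'] at hcc
    have h3 : spFst c P ∉ I := hmem b _ hb (by rw [hev]; exact left_ne_zero_of_mul hcc)
    have h4 : spFst c Q ∉ I := hmem b' _ hb' (by rw [hev]; exact right_ne_zero_of_mul hcc)
    obtain ⟨e, he, hee⟩ := exists_point I (f := spFst c P * spFst c Q)
      (fun h => (hI.mem_or_mem h).elim h3 h4)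
    rw [← map_mul, hev] at hee
    exact hee (mem_pairIdeal.1 hPQ c hc e he)

/-- A polynomial vanishing on the product vanishes at every pair of points with coordinates in
an extension field. -/
theorem aeval_eq_zero_of_mem_pairIdeal (I : Ideal (MvPolynomial (Fin n) ℂ)) [hI : I.IsPrime]
    {E : Type*} [Field E] [Algebra ℂ E] (x x' : Fin n → E) (hx : ∀ p ∈ I, aeval x p = 0)
    (hx' : ∀ p ∈ I, aeval x' p = 0)
    {P : MvPolynomial (Fin n ⊕ Fin n) ℂ} (hP : P ∈ pairIdeal I) :
    aeval (Sum.elim x x') P = 0 := by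
  -- the second point is specialised in `ℂ`, first point stays generic
  have h1 : ∀ b ∈ zeroLocus ℂ I, aeval (Sum.elim x (fun i => algebraMap ℂ E (b i))) P = 0 := by
    intro b hb
    rw [← aeval_spSnd]
    refine hx _ ?_
    by_contra hcon
    obtain ⟨a, ha, haa⟩ := exists_point I hcon
    refine haa ?_
    rw [aeval_spSnd]
    exact mem_pairIdeal.1 hP a ha b hb
  obtain ⟨κ, ⟨β⟩⟩ : ∃ κ : Type _, Nonempty (Module.Basis κ ℂ E) := ⟨_, ⟨Module.Basis.ofVectorSpace ℂ E⟩⟩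
  -- the coefficient of `P(x, ·)` along a basis vector of `E`
  obtain ⟨co, hcodef⟩ : ∃ co : κ → MvPolynomial (Fin n) ℂ, ∀ l, co l =
    ∑ m ∈ P.support, monomial (m.comapDomain Sum.inr Sum.inr_injective.injOn)
      (P.coeff m * β.repr (∏ i, x i ^ m (Sum.inl i)) l) := ⟨_, fun _ => rfl⟩
  have hco : ∀ (y : Fin n → E) (s : Finset κ),
      (∀ m ∈ P.support, (β.repr (∏ i, x i ^ m (Sum.inl i))).support ⊆ s) →
      aeval (Sum.elim x y) P = ∑ l ∈ s, β l * aeval y (co l) := by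
    intro y s hs
    have e1 : aeval (Sum.elim x y) P =
        ∑ m ∈ P.support, algebraMap ℂ E (P.coeff m) * ((∏ i, x i ^ m (Sum.inl i)) * ∏ i, y i ^ m (Sum.inr i)) := by
      rw [aeval_def, eval₂_eq']
      refine Finset.sum_congr rfl fun m _ => ?_
      rw [Fintype.prod_sum_type]
      simp
    rw [e1]
    simp only [hcodef, map_sum, Finset.mul_sum]
    rw [Finset.sum_comm]
    refine Finset.sum_congr rfl fun m hm => ?_
    have e2 : (∏ i, x i ^ m (Sum.inl i)) =
        ∑ l ∈ s, β.repr (∏ i, x i ^ m (Sum.inl i)) l • β l := by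
      conv_lhs => rw [← β.linearCombination_repr (∏ i, x i ^ m (Sum.inl i))]
      rw [Finsupp.linearCombination_apply, Finsupp.sum_of_support_subset _ (hs m hm) _ (by simp)]
    refine (congrArg (fun z => algebraMap ℂ E (P.coeff m) * (z * ∏ i, y i ^ m (Sum.inr i))) e2).trans ?_
    rw [Finset.sum_mul, Finset.mul_sum]
    refine Finset.sum_congr rfl fun l _ => ?_
    rw [aeval_monomial, Algebra.smul_def, map_mul]
    rw [Finsupp.prod_fintype _ _ (by simp)]
    simp only [Finsupp.comapDomain_apply]
    ring
  obtain ⟨s, hs⟩ : ∃ s : Finset κ, ∀ m ∈ P.support,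
      (β.repr (∏ i, x i ^ m (Sum.inl i))).support ⊆ s :=
    exists_finset_cover P.support _
  have hcoI : ∀ l ∈ s, co l ∈ I := by
    intro l hl
    by_contra hcon
    obtain ⟨b, hb, hbb⟩ := exists_point I hcon
    have := h1 b hb
    rw [hco _ s hs] at this
    have h2 : ∀ l, aeval (fun i => algebraMap ℂ E (b i)) (co l) = algebraMap ℂ E (aeval b (co l)) := by
      intro l
      exact aeval_algebraMap_apply E b (co l)
    have h3 : ∑ l ∈ s, (aeval b (co l) : ℂ) • β l = 0 := by
      rw [← this]
      exact Finset.sum_congr rfl fun l _ => by rw [h2, Algebra.smul_def, mul_comm]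
    exact hbb (linearIndependent_iff'.1 β.linearIndependent s _ h3 l hl)
  rw [hco _ s hs]
  exact Finset.sum_eq_zero fun l hl => by rw [hx' _ (hcoI l hl), mul_zero]

end Pair

/-- A homomorphism from a domain is injective as soon as it is injective on a polynomial
subalgebra over which the domain is algebraic. -/
theorem injective_of_algInd {D E : Type*} [CommRing D] [IsDomain D] [CommRing E]
    [Algebra ℂ D] [Algebra ℂ E] (φ : D →ₐ[ℂ] E) {τ : Type*} (t : τ → D)
    (ht : AlgebraicIndependent ℂ (φ ∘ t))
    (halg : ∀ b : D, IsAlgebraic (Algebra.adjoin ℂ (Set.range t)) b) : Function.Injective φ := by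
  rw [injective_iff_map_eq_zero]
  intro b hb
  by_contra hb0
  obtain ⟨⟨c, hc⟩, hc0, q, hq⟩ := (halg b).exists_nonzero_dvd (mem_nonZeroDivisors_of_ne_zero hb0)
  have hcq : c = b * q := hq
  rw [Algebra.adjoin_range_eq_range_aeval] at hc
  obtain ⟨p, rfl⟩ := hc
  have h0 : aeval (φ ∘ t) p = 0 := by
    have e : aeval (φ ∘ t) p = φ (aeval t p) := (MvPolynomial.comp_aeval_apply t φ p).symm
    rw [e]
    have : (aeval t p : D) = b * q := hcq
    rw [this, map_mul, hb, zero_mul]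
  have := ht.eq_zero_of_aeval_eq_zero p h0
  refine hc0 (Subtype.ext ?_)
  show aeval t p = 0
  rw [this, map_zero]

end

/-! ### Primitivity of generic projections -/

section
open IntermediateField MvPolynomial

theorem isAlgebraic_adjoin_map_iff {A E τ : Type*} [CommRing A] [CommRing E] [Algebra ℂ A]
    [Algebra ℂ E] (φ : A →ₐ[ℂ] E) (hφ : Function.Injective φ) (a : τ → A) (b : A) :
    IsAlgebraic (Algebra.adjoin ℂ (Set.range (φ ∘ a))) (φ b) ↔
      IsAlgebraic (Algebra.adjoin ℂ (Set.range a)) b := by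
  have e : (Algebra.adjoin ℂ (Set.range a)).map φ = Algebra.adjoin ℂ (Set.range (φ ∘ a)) := by
    rw [AlgHom.map_adjoin, Set.range_comp]
  rw [← e]
  exact isAlgebraic_ringHom_iff_of_comp_eq
    ((Algebra.adjoin ℂ (Set.range a)).equivMapOfInjective φ hφ) φ hφ rfl

theorem isAlgebraic_adjoin_mono {A : Type*} [CommRing A] [IsDomain A] [Algebra ℂ A] {s t : Set A}
    (hst : s ⊆ t) {b : A} (hb : IsAlgebraic (Algebra.adjoin ℂ s) b) :
    IsAlgebraic (Algebra.adjoin ℂ t) b := by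
  obtain ⟨p, hp, hpb⟩ := hb
  have hle := Algebra.adjoin_mono (R := ℂ) hst
  refine ⟨p.map (Subalgebra.inclusion hle).toRingHom, ?_, ?_⟩
  · exact (Polynomial.map_ne_zero_iff (Subalgebra.inclusion_injective hle)).2 hp
  · rw [Polynomial.aeval_def, Polynomial.eval₂_map]
    exact hpb

theorem mvPoly_algebraic {B V τ ι : Type*} [CommRing B] [IsDomain B] [Algebra ℂ B] (b : τ → B)
    (g : ι → B) (hg : Algebra.adjoin ℂ (Set.range g) = ⊤)
    (hb : ∀ i, IsAlgebraic (Algebra.adjoin ℂ (Set.range b)) (g i)) (z : MvPolynomial V B) :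
    IsAlgebraic (Algebra.adjoin ℂ (Set.range (Sum.elim (fun a => C (b a)) X : τ ⊕ V → MvPolynomial V B))) z := by
  set t : τ ⊕ V → MvPolynomial V B := Sum.elim (fun a => C (b a)) X with ht
  let Cc : B →ₐ[ℂ] MvPolynomial V B := IsScalarTower.toAlgHom ℂ B _
  have hCc : Function.Injective Cc := C_injective _ _
  let W := Subalgebra.algebraicClosure (Algebra.adjoin ℂ (Set.range t)) (MvPolynomial V B)
  have hC : ∀ a : B, C a ∈ W := by
    intro a
    have ha : a ∈ Algebra.adjoin ℂ (Set.range g) := hg ▸ Algebra.mem_top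
    have key : Algebra.adjoin ℂ (Set.range g) ≤ (W.restrictScalars ℂ).comap Cc := by
      refine Algebra.adjoin_le ?_
      rintro _ ⟨i, rfl⟩
      have h1 := (isAlgebraic_adjoin_map_iff Cc hCc b (g i)).2 (hb i)
      refine isAlgebraic_adjoin_mono ?_ h1
      rintro _ ⟨a, rfl⟩
      exact ⟨Sum.inl a, rfl⟩
    exact key ha
  have hX : ∀ v, X v ∈ W := fun v =>
    isAlgebraic_algebraMap (⟨X v, Algebra.subset_adjoin ⟨Sum.inr v, rfl⟩⟩ :
      Algebra.adjoin ℂ (Set.range t))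
  show z ∈ W
  induction z using MvPolynomial.induction_on with
  | C a => exact hC a
  | add p q hp hq => exact add_mem hp hq
  | mul_X p v hp => exact mul_mem hp (hX v)

section Pair

variable {n : ℕ}

/-- The generic linear coefficients, with the column `i₁` of the first `δ` rows left out. -/
abbrev HatU (n δ : ℕ) (i₁ : Fin n) : Type :=
  {p : Fin 3 × Fin n // ¬ ((p.1 : ℕ) < δ ∧ p.2 = i₁)}

theorem card_hatU (n δ : ℕ) (hδ : δ ≤ 3) (i₁ : Fin n) :
    Fintype.card (HatU n δ i₁) + δ ≤ 3 * n := by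
  classical
  rw [Fintype.card_subtype_compl]
  have h1 : δ ≤ Fintype.card {p : Fin 3 × Fin n // ((p.1 : ℕ) < δ ∧ p.2 = i₁)} := by
    have := Fintype.card_le_of_injective
      (fun j : Fin δ => (⟨(Fin.castLE hδ j, i₁), by simp, rfl⟩ :
        {p : Fin 3 × Fin n // ((p.1 : ℕ) < δ ∧ p.2 = i₁)}))
      (fun a b hab => by simpa using hab)
    simpa using this
  have h2 := Fintype.card_subtype_le (fun p : Fin 3 × Fin n => ((p.1 : ℕ) < δ ∧ p.2 = i₁))
  simp only [Fintype.card_prod, Fintype.card_fin] at h2 ⊢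
  omega

/-- The coordinate ring of the product of a variety with itself. -/
def PairRing (I : Ideal (MvPolynomial (Fin n) ℂ)) : Type :=
  MvPolynomial (Fin n ⊕ Fin n) ℂ ⧸ pairIdeal I

noncomputable instance (I : Ideal (MvPolynomial (Fin n) ℂ)) : CommRing (PairRing I) :=
  Ideal.Quotient.commRing (pairIdeal I)

noncomputable instance (I : Ideal (MvPolynomial (Fin n) ℂ)) : Algebra ℂ (PairRing I) :=
  Ideal.Quotient.algebra ℂ

instance (I : Ideal (MvPolynomial (Fin n) ℂ)) [I.IsPrime] : IsDomain (PairRing I) :=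
  Ideal.Quotient.isDomain (pairIdeal I)

/-- The class of a polynomial in the coordinate ring of the product. -/
noncomputable def pairMk (I : Ideal (MvPolynomial (Fin n) ℂ)) :
    MvPolynomial (Fin n ⊕ Fin n) ℂ →ₐ[ℂ] PairRing I := Ideal.Quotient.mkₐ ℂ (pairIdeal I)

/-- Evaluation at a pair of generic points. -/
noncomputable def pairEval (I : Ideal (MvPolynomial (Fin n) ℂ)) [I.IsPrime]
    {E : Type} [Field E] [Algebra ℂ E] (x x' : Fin n → E) (hx : ∀ p, p ∈ I ↔ aeval x p = 0)
    (hx' : ∀ p, p ∈ I ↔ aeval x' p = 0) : PairRing I →ₐ[ℂ] E :=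
  Ideal.Quotient.liftₐ _ (aeval (Sum.elim x x')) fun _ hP =>
    aeval_eq_zero_of_mem_pairIdeal I x x' (fun p hp => (hx p).1 hp) (fun p hp => (hx' p).1 hp) hP

/-- The two factors of the coordinate ring of the product. -/
noncomputable def pairIncl (I : Ideal (MvPolynomial (Fin n) ℂ)) (c : Fin n → Fin n ⊕ Fin n)
    (hc : ∀ p ∈ I, rename c p ∈ pairIdeal I) :
    (MvPolynomial (Fin n) ℂ ⧸ I) →ₐ[ℂ] PairRing I :=
  Ideal.Quotient.liftₐ _ ((pairMk I).comp (rename c)) fun p hp =>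
    Ideal.Quotient.eq_zero_iff_mem.2 (hc p hp)

theorem rename_inl_mem (I : Ideal (MvPolynomial (Fin n) ℂ)) [I.IsPrime] (p) :
    rename Sum.inl p ∈ pairIdeal I ↔ p ∈ I := by
  rw [mem_pairIdeal]
  simp only [aeval_rename, Sum.elim_comp_inl]
  constructor
  · intro h
    by_contra hcon
    obtain ⟨a, ha, haa⟩ := exists_point I hcon
    exact haa (h a ha a ha)
  · intro h a ha b _
    exact mem_zeroLocus_iff.1 ha p h

theorem rename_inr_mem (I : Ideal (MvPolynomial (Fin n) ℂ)) [I.IsPrime] (p) :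
    rename Sum.inr p ∈ pairIdeal I ↔ p ∈ I := by
  rw [mem_pairIdeal]
  simp only [aeval_rename, Sum.elim_comp_inr]
  constructor
  · intro h
    by_contra hcon
    obtain ⟨a, ha, haa⟩ := exists_point I hcon
    exact haa (h a ha a ha)
  · intro h a _ b hb
    exact mem_zeroLocus_iff.1 hb p h

theorem pairIncl_injective (I : Ideal (MvPolynomial (Fin n) ℂ)) (c : Fin n → Fin n ⊕ Fin n)
    (hc : ∀ p, rename c p ∈ pairIdeal I ↔ p ∈ I) :
    Function.Injective (pairIncl I c fun p hp => (hc p).2 hp) := by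
  rw [injective_iff_map_eq_zero]
  intro a ha
  obtain ⟨p, rfl⟩ := Ideal.Quotient.mk_surjective a
  exact Ideal.Quotient.eq_zero_iff_mem.2 ((hc p).1 (Ideal.Quotient.eq_zero_iff_mem.1 ha))

theorem quot_algebraic_iff (I : Ideal (MvPolynomial (Fin n) ℂ)) [hI : I.IsPrime]
    {E : Type} [Field E] [Algebra ℂ E] (x : Fin n → E) (hx : ∀ p, p ∈ I ↔ aeval x p = 0)
    {τ : Type} (c : τ → Fin n) (i : Fin n) :
    IsAlgebraic (Algebra.adjoin ℂ (Set.range fun t => x (c t))) (x i) ↔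
    IsAlgebraic (Algebra.adjoin ℂ (Set.range fun t => (Ideal.Quotient.mk I (X (c t)))))
      (Ideal.Quotient.mk I (X i)) := by
  let ψ : (MvPolynomial (Fin n) ℂ ⧸ I) →ₐ[ℂ] E :=
    Ideal.Quotient.liftₐ _ (aeval x) fun p hp => (hx p).1 hp
  have hψ : Function.Injective ψ := by
    rw [injective_iff_map_eq_zero]
    intro a ha
    obtain ⟨p, rfl⟩ := Ideal.Quotient.mk_surjective a
    exact Ideal.Quotient.eq_zero_iff_mem.2 ((hx p).2 ha)
  have hX : ∀ i, ψ (Ideal.Quotient.mk I (X i)) = x i := fun i => aeval_X x i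
  have e : ψ ∘ (fun t => Ideal.Quotient.mk I (X (c t))) = fun t => x (c t) :=
    _root_.funext fun t => hX _
  rw [← isAlgebraic_adjoin_map_iff ψ hψ, hX, e]

/-- The coordinate functions of the product are algebraic over those in a transcendence basis of
each factor. -/
theorem pairRing_algebraic (I : Ideal (MvPolynomial (Fin n) ℂ)) [hI : I.IsPrime]
    {E : Type} [Field E] [Algebra ℂ E] (x : Fin n → E) (hx : ∀ p, p ∈ I ↔ aeval x p = 0)
    {τ : Type} (c : τ → Fin n)
    (hc : ∀ i, IsAlgebraic (Algebra.adjoin ℂ (Set.range fun t => x (c t))) (x i))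
    (e : Fin n → Fin n ⊕ Fin n) (he : ∀ p, rename e p ∈ pairIdeal I ↔ p ∈ I) (i : Fin n) :
    IsAlgebraic (Algebra.adjoin ℂ (Set.range fun t =>
      (pairMk I (X (e (c t)))))) (pairMk I (X (e i))) := by
  have h1 := (quot_algebraic_iff I x hx c i).1 (hc i)
  have h2 := (isAlgebraic_adjoin_map_iff _ (pairIncl_injective I e he) _ _).2 h1
  have hX' : ∀ i, pairIncl I e (fun p hp => (he p).2 hp) (Ideal.Quotient.mk I (X i)) =
      pairMk I (X (e i)) := fun i => by
    show pairMk I (rename e (X i)) = _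
    rw [rename_X]
  have e' : pairIncl I e (fun p hp => (he p).2 hp) ∘ (fun t => Ideal.Quotient.mk I (X (c t))) =
      fun t => pairMk I (X (e (c t))) := _root_.funext fun t => hX' _
  rw [hX', e'] at h2
  exact h2

section

variable (I : Ideal (MvPolynomial (Fin n) ℂ)) [hI : I.IsPrime] {E : Type} [Field E] [Algebra ℂ E]
  (x x' : Fin n → E) (u : Fin 3 × Fin n → E) (hx : ∀ p, p ∈ I ↔ aeval x p = 0)
  (hx' : ∀ p, p ∈ I ↔ aeval x' p = 0) (δ : ℕ) (i₁ : Fin n)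

/-- Evaluation at a pair of generic points and at generic linear coefficients. -/
noncomputable def hatEval : MvPolynomial (HatU n δ i₁) (PairRing I) →ₐ[ℂ] E :=
  let φ := pairEval I x x' hx hx'
  { eval₂Hom φ.toRingHom (fun p : HatU n δ i₁ => u p.1) with
    commutes' := fun c => by
      show eval₂Hom φ.toRingHom (fun p : HatU n δ i₁ => u p.1) (algebraMap ℂ _ c) = _
      rw [IsScalarTower.algebraMap_apply ℂ (PairRing I), MvPolynomial.algebraMap_eq, eval₂Hom_C]
      exact φ.commutes c }

theorem hatEval_C (b : PairRing I) :
    hatEval I x x' u hx hx' δ i₁ (C b) = pairEval I x x' hx hx' b :=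
  eval₂Hom_C _ _ _

theorem hatEval_X (p : HatU n δ i₁) : hatEval I x x' u hx hx' δ i₁ (X p) = u p.1 :=
  eval₂Hom_X' _ _ _

theorem pairEval_inl (i : Fin n) :
    pairEval I x x' hx hx' (pairMk I (X (Sum.inl i))) = x i :=
  aeval_X (Sum.elim x x') (Sum.inl i)

theorem pairEval_inr (i : Fin n) :
    pairEval I x x' hx hx' (pairMk I (X (Sum.inr i))) = x' i :=
  aeval_X (Sum.elim x x') (Sum.inr i)

/-- Two distinct points with equal generic projection are independent generic points: by counting
transcendence degrees, no algebraic relation beyond the forced linear ones survives. -/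
theorem hatEval_injective (hδ : δ ≤ 3)
    (hlin : ∀ j : Fin 3, (j : ℕ) < δ → ∑ i, u (j, i) * (x' i - x i) = 0)
    (hne : x' i₁ ≠ x i₁)
    (halg : Algebra.IsAlgebraic (Algebra.adjoin ℂ (Set.range (Sum.elim x u))) E)
    (htr : ((3 * n + δ : ℕ) : Cardinal) ≤ Algebra.trdeg ℂ E)
    {τ : Type} [Fintype τ] (c : τ → Fin n) (hcard : Fintype.card τ ≤ δ)
    (hc : ∀ i, IsAlgebraic (Algebra.adjoin ℂ (Set.range fun t => x (c t))) (x i)) :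
    Function.Injective (hatEval I x x' u hx hx' δ i₁) := by
  let φ := hatEval I x x' u hx hx' δ i₁
  let q : MvPolynomial (Fin n ⊕ Fin n) ℂ →ₐ[ℂ] PairRing I := pairMk I
  have hl := pairRing_algebraic I x hx c hc Sum.inl (rename_inl_mem I)
  have hr := pairRing_algebraic I x hx c hc Sum.inr (rename_inr_mem I)
  have hD := mvPoly_algebraic (V := HatU n δ i₁)
    (Sum.elim (fun a => q (X (Sum.inl (c a)))) (fun a => q (X (Sum.inr (c a)))))
    (fun i => q (X i)) (by
      have e : Set.range (fun i => q (X i)) =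
          (pairMk I) '' Set.range X := (Set.range_comp _ _)
      rw [e, ← AlgHom.map_adjoin, adjoin_range_X, Algebra.map_top, AlgHom.range_eq_top]
      exact Ideal.Quotient.mk_surjective) (by
      rintro (i | i)
      · refine isAlgebraic_adjoin_mono ?_ (hl i)
        rintro _ ⟨a, rfl⟩
        exact ⟨Sum.inl a, rfl⟩
      · refine isAlgebraic_adjoin_mono ?_ (hr i)
        rintro _ ⟨a, rfl⟩
        exact ⟨Sum.inr a, rfl⟩)
  refine injective_of_algInd φ _ ?_ hD
  let fam : (τ ⊕ τ) ⊕ HatU n δ i₁ → E :=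
    Sum.elim (Sum.elim (fun a => x (c a)) (fun a => x' (c a))) (fun p => u p.1)
  have hfam : φ ∘ Sum.elim (fun a => C (Sum.elim (fun a => q (X (Sum.inl (c a))))
      (fun a => q (X (Sum.inr (c a)))) a)) X = fam := by
    ext a
    rcases a with (a | a) | a
    · exact (hatEval_C I x x' u hx hx' δ i₁ _).trans (pairEval_inl I x x' hx hx' _)
    · exact (hatEval_C I x x' u hx hx' δ i₁ _).trans (pairEval_inr I x x' hx hx' _)
    · exact hatEval_X I x x' u hx hx' δ i₁ a
  rw [hfam]
  let K₀ : IntermediateField ℂ E := IntermediateField.adjoin ℂ (Set.range fam)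
  let Mc : IntermediateField ℂ E := (algebraicClosure K₀ E).restrictScalars ℂ
  have hK₀ : ∀ a : K₀, (a : E) ∈ Mc := fun a => (algebraicClosure K₀ E).algebraMap_mem a
  have hMc : ∀ z : E, IsAlgebraic (Algebra.adjoin ℂ (Set.range fam)) z → z ∈ Mc := fun z hz =>
    mem_algebraicClosure_iff.2 (isAlgebraic_adjoin_iff.2 hz)
  have hxM : ∀ i, x i ∈ Mc := fun i => hMc _ (isAlgebraic_adjoin_mono (by
    rintro _ ⟨a, rfl⟩
    exact ⟨Sum.inl (Sum.inl a), rfl⟩) (hc i))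
  have hxM' : ∀ i, x' i ∈ Mc := fun i => hMc _ (isAlgebraic_adjoin_mono (by
    rintro _ ⟨a, rfl⟩
    exact ⟨Sum.inl (Sum.inr a), rfl⟩)
      ((quot_algebraic_iff I x' hx' c i).2 ((quot_algebraic_iff I x hx c i).1 (hc i))))
  have huM : ∀ p : HatU n δ i₁, u p.1 ∈ Mc := fun p =>
    hK₀ ⟨_, IntermediateField.subset_adjoin _ _ ⟨Sum.inr p, rfl⟩⟩
  have huM' : ∀ p, u p ∈ Mc := by
    rintro ⟨j, i⟩
    by_cases hp : (j : ℕ) < δ ∧ i = i₁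
    · obtain ⟨hj, rfl⟩ := hp
      have h1 := hlin j hj
      rw [← Finset.add_sum_erase _ _ (Finset.mem_univ i)] at h1
      have h2 : u (j, i) = - (∑ l ∈ Finset.univ.erase i, u (j, l) * (x' l - x l)) / (x' i - x i) := by
        rw [eq_div_iff (sub_ne_zero.2 hne)]
        linear_combination h1
      rw [h2]
      refine div_mem (neg_mem (sum_mem fun l hl => ?_)) (sub_mem (hxM' _) (hxM _))
      exact mul_mem (huM ⟨(j, l), fun h => (Finset.ne_of_mem_erase hl) h.2⟩)
        (sub_mem (hxM' _) (hxM _))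
    · exact huM ⟨(j, i), hp⟩
  have hall : ∀ z : E, IsAlgebraic (Algebra.adjoin ℂ (Set.range fam)) z := by
    intro z
    have h1 : Algebra.adjoin ℂ (Set.range (Sum.elim x u)) ≤ Mc.toSubalgebra := by
      refine Algebra.adjoin_le ?_
      rintro _ ⟨i | p, rfl⟩
      · exact hxM i
      · exact huM' p
    have h2 : IsAlgebraic Mc.toSubalgebra z := by
      obtain ⟨p, hp, hpz⟩ := halg.isAlgebraic z
      refine ⟨p.map (Subalgebra.inclusion h1).toRingHom, ?_, ?_⟩
      · exact (Polynomial.map_ne_zero_iff (Subalgebra.inclusion_injective h1)).2 hp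
      · rw [Polynomial.aeval_def, Polynomial.eval₂_map]
        exact hpz
    exact isAlgebraic_adjoin_iff.1 (IsAlgebraic.restrictScalars K₀ (show IsAlgebraic (algebraicClosure K₀ E) z from h2))
  have : Algebra.IsAlgebraic (Algebra.adjoin ℂ (Set.range fam)) E := ⟨hall⟩
  have hcd : Cardinal.mk ((τ ⊕ τ) ⊕ HatU n δ i₁) ≤ Algebra.trdeg ℂ E := by
    refine le_trans ?_ htr
    rw [Cardinal.mk_fintype]
    have := card_hatU n δ hδ i₁
    rw [Nat.cast_le, Fintype.card_sum, Fintype.card_sum]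
    omega
  exact (Algebra.IsAlgebraic.isTranscendenceBasis_of_le_trdeg_of_finite ℂ fam hcd).1

end

end Pair

end

section
open IntermediateField MvPolynomial

theorem exists_lift_frac {D E : Type*} (Q : Type*) [CommRing D] [Field E] [Field Q]
    [Algebra D Q] [IsFractionRing D Q] (g : D →+* E) (hg : Function.Injective g) :
    ∃ Φ : Q →+* E, ∀ z, Φ (algebraMap D Q z) = g z :=
  ⟨IsFractionRing.lift hg, IsFractionRing.lift_algebraMap hg⟩

section Pair

variable {n : ℕ} (I : Ideal (MvPolynomial (Fin n) ℂ)) [hI : I.IsPrime]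
  (Q : Type) [Field Q] [Algebra ℂ Q] (δ : ℕ) (i₁ : Fin n)
  [Algebra (MvPolynomial (HatU n δ i₁) (PairRing I)) Q]

/-- The universal pair of points with generic coefficients satisfying the linear relations that
equate the first `δ` projections; the omitted coefficients are solved for. -/
noncomputable def hatPt : (Fin n ⊕ Fin n) ⊕ (Fin 3 × Fin n) → Q :=
  let ι := algebraMap (MvPolynomial (HatU n δ i₁) (PairRing I)) Q
  let ξ : Fin n ⊕ Fin n → Q := fun i => ι (C (pairMk I (X i)))
  let w : Fin 3 × Fin n → Q := fun p => open Classical in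
    if h : ¬ ((p.1 : ℕ) < δ ∧ p.2 = i₁) then ι (X ⟨p, h⟩) else 0
  Sum.elim ξ fun p => open Classical in
    if ((p.1 : ℕ) < δ ∧ p.2 = i₁) then
      - (∑ l ∈ Finset.univ.erase i₁, w (p.1, l) * (ξ (Sum.inr l) - ξ (Sum.inl l))) /
        (ξ (Sum.inr i₁) - ξ (Sum.inl i₁))
    else w p

variable {E : Type} [Field E] [Algebra ℂ E]
  (x x' : Fin n → E) (u : Fin 3 × Fin n → E) (hx : ∀ p, p ∈ I ↔ aeval x p = 0)
  (hx' : ∀ p, p ∈ I ↔ aeval x' p = 0)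
  [IsFractionRing (MvPolynomial (HatU n δ i₁) (PairRing I)) Q]
  [IsScalarTower ℂ (MvPolynomial (HatU n δ i₁) (PairRing I)) Q]

/-- The pair `(x, x')` with coefficients `u` satisfies the same polynomial relations as the
universal pair `hatPt`. -/
theorem hat_lift (hinj : Function.Injective (hatEval I x x' u hx hx' δ i₁))
    (hlin : ∀ j : Fin 3, (j : ℕ) < δ → ∑ i, u (j, i) * (x' i - x i) = 0)
    (hne : x' i₁ ≠ x i₁) (N : MvPolynomial ((Fin n ⊕ Fin n) ⊕ (Fin 3 × Fin n)) ℂ) :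
    aeval (hatPt I Q δ i₁) N = 0 ↔ aeval (Sum.elim (Sum.elim x x') u) N = 0 := by
  let g : MvPolynomial (HatU n δ i₁) (PairRing I) →+* E := (hatEval I x x' u hx hx' δ i₁ : _ →+* E)
  have hg : Function.Injective g := hinj
  obtain ⟨Φ₀, hΦ₀⟩ := exists_lift_frac Q g hg
  let Φ : Q →ₐ[ℂ] E :=
    { Φ₀ with
      commutes' := fun c => by
        rw [IsScalarTower.algebraMap_apply ℂ (MvPolynomial (HatU n δ i₁) (PairRing I)) Q]
        exact (hΦ₀ _).trans (AlgHom.commutes (hatEval I x x' u hx hx' δ i₁) c) }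
  have hΦ : ∀ z, Φ (algebraMap (MvPolynomial (HatU n δ i₁) (PairRing I)) Q z) =
      hatEval I x x' u hx hx' δ i₁ z := hΦ₀
  have hpt : Φ ∘ hatPt I Q δ i₁ = Sum.elim (Sum.elim x x') u := by
    have hl : ∀ i, Φ (algebraMap (MvPolynomial (HatU n δ i₁) (PairRing I)) Q
        (C (pairMk I (X (Sum.inl i))))) = x i := fun i => by
      rw [hΦ, hatEval_C, pairEval_inl]
    have hr : ∀ i, Φ (algebraMap (MvPolynomial (HatU n δ i₁) (PairRing I)) Q
        (C (pairMk I (X (Sum.inr i))))) = x' i := fun i => by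
      rw [hΦ, hatEval_C, pairEval_inr]
    funext a
    rcases a with (i | i) | ⟨j, i⟩
    · exact hl i
    · exact hr i
    · show Φ (ite _ _ _) = u (j, i)
      by_cases h : (j : ℕ) < δ ∧ i = i₁
      · rw [if_pos h]
        obtain ⟨hj, rfl⟩ := h
        rw [map_div₀, map_neg, map_sum, map_sub, hl, hr, div_eq_iff (sub_ne_zero.2 hne)]
        have h1 := hlin j hj
        rw [← Finset.add_sum_erase _ _ (Finset.mem_univ i)] at h1
        have h2 : ∀ l ∈ Finset.univ.erase i, Φ (((if h : ¬ (((j, l).1 : ℕ) < δ ∧ (j, l).2 = i) then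
            algebraMap (MvPolynomial (HatU n δ i) (PairRing I)) Q (X ⟨(j, l), h⟩) else 0)) *
            (algebraMap (MvPolynomial (HatU n δ i) (PairRing I)) Q
              (C (pairMk I (X (Sum.inr l)))) -
            algebraMap (MvPolynomial (HatU n δ i) (PairRing I)) Q
              (C (pairMk I (X (Sum.inl l)))))) =
            u (j, l) * (x' l - x l) := by
          intro l hl'
          rw [map_mul, map_sub, hl, hr, dif_pos (fun h => (Finset.ne_of_mem_erase hl') h.2), hΦ,
            hatEval_X]
        rw [Finset.sum_congr rfl h2]
        linear_combination -h1
      · rw [if_neg h, dif_pos h, hΦ, hatEval_X]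
  rw [← hpt]
  have e : aeval (Φ ∘ hatPt I Q δ i₁) N = Φ (aeval (hatPt I Q δ i₁) N) :=
    (MvPolynomial.comp_aeval_apply _ Φ N).symm
  rw [e, map_eq_zero Φ]

end Pair

/-- Any relation between a generic point `x`, a second point `x'` with the same projection and the
generic coefficients also holds for any other second point `x''` with the same projection: the
pairs of points are conjugate. -/
theorem pair_transfer {n : ℕ} (I : Ideal (MvPolynomial (Fin n) ℂ)) [hI : I.IsPrime]
    {E : Type} [Field E] [Algebra ℂ E] (x x' x'' : Fin n → E) (u : Fin 3 × Fin n → E)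
    (hx : ∀ p, p ∈ I ↔ aeval x p = 0) (hx' : ∀ p, p ∈ I ↔ aeval x' p = 0)
    (hx'' : ∀ p, p ∈ I ↔ aeval x'' p = 0) (δ : ℕ) (hδ : δ ≤ 3)
    (hlin : ∀ j : Fin 3, (j : ℕ) < δ → ∑ i, u (j, i) * (x' i - x i) = 0)
    (hlin' : ∀ j : Fin 3, (j : ℕ) < δ → ∑ i, u (j, i) * (x'' i - x i) = 0)
    (hne : x' ≠ x) (hne' : x'' ≠ x)
    (halg : Algebra.IsAlgebraic (Algebra.adjoin ℂ (Set.range (Sum.elim x u))) E)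
    (htr : ((3 * n + δ : ℕ) : Cardinal) ≤ Algebra.trdeg ℂ E)
    {τ : Type} [Fintype τ] (c : τ → Fin n) (hcard : Fintype.card τ ≤ δ)
    (hc : ∀ i, IsAlgebraic (Algebra.adjoin ℂ (Set.range fun t => x (c t))) (x i))
    (N : MvPolynomial ((Fin n ⊕ Fin n) ⊕ (Fin 3 × Fin n)) ℂ)
    (hN : aeval (Sum.elim (Sum.elim x x') u) N = 0) :
    aeval (Sum.elim (Sum.elim x x'') u) N = 0 := by
  obtain ⟨i₁, h1⟩ := Function.ne_iff.1 hne
  obtain ⟨i₂, h2⟩ := Function.ne_iff.1 hne'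
  have inj1 := hatEval_injective I x x' u hx hx' δ i₁ hδ hlin h1 halg htr c hcard hc
  have inj2 := hatEval_injective I x x'' u hx hx'' δ i₂ hδ hlin' h2 halg htr c hcard hc
  -- the difference of the `i₁`-th coordinates is nonzero on the product
  have h3 : x'' i₁ ≠ x i₁ := by
    intro h
    let b : PairRing I := pairMk I (X (Sum.inr i₁)) -
      pairMk I (X (Sum.inl i₁))
    have hb : hatEval I x x'' u hx hx'' δ i₂ (C b) = 0 := by
      rw [hatEval_C, map_sub, pairEval_inl, pairEval_inr, h, sub_self]
    have hb0 : b = 0 := C_injective _ _ (inj2 (hb.trans (by rw [map_zero, map_zero])))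
    have : hatEval I x x' u hx hx' δ i₁ (C b) = x' i₁ - x i₁ := by
      rw [hatEval_C, map_sub, pairEval_inl, pairEval_inr]
    rw [hb0, map_zero, map_zero] at this
    exact h1 (sub_eq_zero.1 this.symm)
  have inj3 := hatEval_injective I x x'' u hx hx'' δ i₁ hδ hlin' h3 halg htr c hcard hc
  let Q := FractionRing (MvPolynomial (HatU n δ i₁) (PairRing I))
  exact (hat_lift I Q δ i₁ x x'' u hx hx'' inj3 hlin' h3 N).1
    ((hat_lift I Q δ i₁ x x' u hx hx' inj1 hlin h1 N).2 hN)

end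

section
open IntermediateField MvPolynomial

/-- An element outside the base field of an algebraic extension in characteristic zero is moved
by some conjugation. -/
theorem exists_conj (M L : Type) [Field M] [Field L] [Algebra M L] [CharZero L]
    [Algebra.IsAlgebraic M L] {b : L} (hb : b ∉ Set.range (algebraMap M L)) :
    ∃ σ : L →+* AlgebraicClosure L,
      (∀ m : M, σ (algebraMap M L m) = algebraMap L (AlgebraicClosure L) (algebraMap M L m)) ∧
      σ b ≠ algebraMap L (AlgebraicClosure L) b := by
  have : CharZero M := (algebraMap M L).charZero
  have : IsAlgClosure M (AlgebraicClosure L) := IsAlgClosure.ofAlgebraic M L (AlgebraicClosure L)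
  have hb' : algebraMap L (AlgebraicClosure L) b ∉ Set.range (algebraMap M (AlgebraicClosure L)) := by
    rintro ⟨m, hm⟩
    refine hb ⟨m, (algebraMap L (AlgebraicClosure L)).injective ?_⟩
    rw [← hm, ← IsScalarTower.algebraMap_apply]
  rw [InfiniteGalois.mem_range_algebraMap_iff_fixed] at hb'
  push Not at hb'
  obtain ⟨f, hf⟩ := hb'
  refine ⟨(f : AlgebraicClosure L →+* AlgebraicClosure L).comp (algebraMap L _), fun m => ?_, hf⟩
  rw [← IsScalarTower.algebraMap_apply]
  show f (algebraMap L _ (algebraMap M L m)) = _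
  rw [← IsScalarTower.algebraMap_apply]
  exact f.commutes m

namespace IsGen
variable {k F L : Type} [Field k] [Field F] [Field L] [Algebra ℂ k] [Algebra ℂ F]
    [Algebra ℂ L] [Algebra k L] [Algebra F L] [IsScalarTower ℂ k L] [IsScalarTower ℂ F L]
    {r : ℕ} {x : Fin (r + 1) → F} {U : Fin 3 × Fin (r + 1) → k}

theorem adjoin_all (h : IsGen k F L x U) :
    IntermediateField.adjoin ℂ (Set.range (Sum.elim (gx L x) fun p => algebraMap k L (U p))) = ⊤ := by
  obtain ⟨A, hA⟩ : ∃ A, A = IntermediateField.adjoin ℂ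
    (Set.range (Sum.elim (gx L x) fun p => algebraMap k L (U p))) := ⟨_, rfl⟩
  rw [← hA]
  have hAs : ∀ i, Sum.elim (gx L x) (fun p => algebraMap k L (U p)) i ∈ A := fun i =>
    hA ▸ subset_adjoin _ _ ⟨i, rfl⟩
  have hF : ∀ a : F, algebraMap F L a ∈ A := by
    intro a
    have h1 : (⊤ : IntermediateField ℂ F) ≤ A.comap (IsScalarTower.toAlgHom ℂ F L) := by
      rw [← h.adjF, adjoin_le_iff]
      rintro _ ⟨i, rfl⟩
      exact hAs (Sum.inl i)
    exact h1 (mem_top (x := a))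
  rw [eq_top_iff]
  intro z _
  have hz : z ∈ IntermediateField.adjoin F (Set.range fun p => algebraMap k L (U p)) :=
    h.adjL ▸ mem_top
  let A' : IntermediateField F L := A.toSubfield.toIntermediateField hF
  have h2 : IntermediateField.adjoin F (Set.range fun p => algebraMap k L (U p)) ≤ A' := by
    rw [adjoin_le_iff]
    rintro _ ⟨p, rfl⟩
    exact hAs (Sum.inr p)
  exact h2 hz

/-- The coordinates contain a transcendence basis of the function field. -/
theorem exists_basis (h : IsGen k F L x U) (δ : ℕ)
    (htr : Algebra.trdeg ℂ L = ((3 * (r + 1) + δ : ℕ) : Cardinal)) :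
    ∃ (τ : Type) (_ : Fintype τ) (c : τ → Fin (r + 1)), Fintype.card τ ≤ δ ∧
      ∀ i, IsAlgebraic (Algebra.adjoin ℂ (Set.range fun t => x (c t))) (x i) := by
  have halg : Algebra.IsAlgebraic (Algebra.adjoin ℂ (Set.range x)) F := by
    rw [← isAlgebraic_adjoin_iff_top, h.adjF, Algebra.isAlgebraic_iff_isIntegral]
    exact Algebra.isIntegral_of_surjective topEquiv.surjective
  obtain ⟨t, hts, ht⟩ := exists_isTranscendenceBasis_subset (R := ℂ) (Set.range x)
  have hfin : t.Finite := (Set.finite_range x).subset hts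
  have : Fintype t := hfin.fintype
  have hcc : ∀ a : t, ∃ i, x i = a := fun a => hts a.2
  choose c hc using hcc
  refine ⟨t, inferInstance, c, ?_, ?_⟩
  · have hb : IsTranscendenceBasis F (fun p => algebraMap k L (U p)) := by
      refine h.indep.isTranscendenceBasis_iff_isAlgebraic.2 ?_
      rw [← isAlgebraic_adjoin_iff_top, h.adjL, Algebra.isAlgebraic_iff_isIntegral]
      exact Algebra.isIntegral_of_surjective topEquiv.surjective
    have h1 := trdeg_add_eq ℂ F (A := L)
    rw [htr, ← ht.cardinalMk_eq_trdeg, ← hb.cardinalMk_eq_trdeg, Cardinal.mk_fintype,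
      Cardinal.mk_fintype, ← Nat.cast_add, Nat.cast_inj] at h1
    simp only [Fintype.card_prod, Fintype.card_fin] at h1
    have h2 : Fintype.card t + 3 * (r + 1) = 3 * (r + 1) + δ := h1
    omega
  · intro i
    have h1 := ht.isAlgebraic.isAlgebraic (x i)
    have e : (fun t => x (c t)) = ((↑) : t → F) := _root_.funext hc
    rw [e]
    exact h1

/-- **Primitivity**: there is no proper intermediate field between the field of a generic
projection and the function field. -/
theorem primitive (h : IsGen k F L x U) {K : Type} [Field K] [Algebra K L]
    [Algebra.IsAlgebraic K L] (hK : ∀ a : k, ∃ z : K, algebraMap K L z = algebraMap k L a)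
    (δ : ℕ) (hδ : δ ≤ 3)
    (hKy : ∀ j : Fin 3, (j : ℕ) < δ → ∃ z : K, algebraMap K L z = gy L x U j)
    (htr : Algebra.trdeg ℂ L = ((3 * (r + 1) + δ : ℕ) : Cardinal))
    (M : IntermediateField K L) : M = ⊥ ∨ M = ⊤ := by
  by_contra hcon
  rw [not_or] at hcon
  obtain ⟨hbot, htop⟩ := hcon
  have : CharZero L := charZero_of_injective_algebraMap (algebraMap ℂ L).injective
  let E := AlgebraicClosure L
  let ι : L →+* E := algebraMap L E
  obtain ⟨θ, hθM, hθ⟩ : ∃ θ ∈ M, θ ∉ Set.range (algebraMap K L) := by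
    by_contra hc
    push Not at hc
    exact hbot (eq_bot_iff.2 fun z hz => hc z hz)
  obtain ⟨b, hb⟩ : ∃ b, b ∉ M := by
    by_contra hc
    push Not at hc
    exact htop (eq_top_iff.2 fun z _ => hc z)
  obtain ⟨σ₁, hσ₁, hσb⟩ := exists_conj M L (b := b) (by rintro ⟨m, rfl⟩; exact hb m.2)
  obtain ⟨σ₂, hσ₂, hσθ⟩ := exists_conj K L hθ
  have hσ₁K : ∀ z : K, σ₁ (algebraMap K L z) = ι (algebraMap K L z) := fun z =>
    hσ₁ (algebraMap K M z)
  have hσ₁θ : σ₁ θ = ι θ := hσ₁ ⟨θ, hθM⟩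
  -- properties common to both conjugations
  have common : ∀ σ : L →+* E, (∀ z : K, σ (algebraMap K L z) = ι (algebraMap K L z)) →
      ∃ σ' : L →ₐ[ℂ] E, (∀ z, σ' z = σ z) ∧ (∀ a : k, σ (algebraMap k L a) = ι (algebraMap k L a)) ∧
        (∀ j : Fin 3, (j : ℕ) < δ → σ (gy L x U j) = ι (gy L x U j)) := by
    intro σ hσ
    have hk : ∀ a : k, σ (algebraMap k L a) = ι (algebraMap k L a) := fun a => by
      obtain ⟨z, hz⟩ := hK a
      rw [← hz, hσ]
    refine ⟨{ σ with commutes' := fun c => ?_ }, fun _ => rfl, hk, fun j hj => ?_⟩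
    · show σ (algebraMap ℂ L c) = _
      rw [IsScalarTower.algebraMap_apply ℂ k L, hk, IsScalarTower.algebraMap_apply ℂ L E,
        IsScalarTower.algebraMap_apply ℂ k L]
    · obtain ⟨z, hz⟩ := hKy j hj
      rw [← hz, hσ]
  let X₀ : Fin (r + 1) → E := fun i => ι (gx L x i)
  let u₀ : Fin 3 × Fin (r + 1) → E := fun p => ι (algebraMap k L (U p))
  let I : Ideal (MvPolynomial (Fin (r + 1)) ℂ) := RingHom.ker (aeval (gx L x) : _ →ₐ[ℂ] L)
  have hIp : I.IsPrime := RingHom.ker_isPrime _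
  have hker : ∀ σ : L →ₐ[ℂ] E, ∀ p, p ∈ I ↔ aeval (fun i => σ (gx L x i)) p = 0 := fun σ p => by
    have e : aeval (fun i => σ (gx L x i)) p = σ (aeval (gx L x) p) :=
      (MvPolynomial.comp_aeval_apply (gx L x) σ p).symm
    rw [e, map_eq_zero σ]
    exact RingHom.mem_ker
  have hlin : ∀ σ : L →+* E, (∀ a : k, σ (algebraMap k L a) = ι (algebraMap k L a)) →
      (∀ j : Fin 3, (j : ℕ) < δ → σ (gy L x U j) = ι (gy L x U j)) →
      ∀ j : Fin 3, (j : ℕ) < δ → ∑ i, u₀ (j, i) * (σ (gx L x i) - X₀ i) = 0 := by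
    intro σ hk hy j hj
    have h1 := hy j hj
    have e : gy L x U j = ∑ i, algebraMap k L (U (j, i)) * gx L x i := rfl
    rw [e, map_sum, map_sum] at h1
    simp only [map_mul, hk] at h1
    simp only [mul_sub, Finset.sum_sub_distrib]
    exact sub_eq_zero.2 h1
  have hne : ∀ σ : L →+* E, (∀ a : k, σ (algebraMap k L a) = ι (algebraMap k L a)) →
      ∀ b : L, σ b ≠ ι b → (fun i => σ (gx L x i)) ≠ X₀ := by
    intro σ hk b hb heq
    apply hb
    let W : IntermediateField k L := (RingHom.eqLocusField σ ι).toIntermediateField hk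
    have h1 : (⊤ : IntermediateField k L) ≤ W := by
      rw [← h.adjoin_gx, adjoin_le_iff]
      rintro _ ⟨i, rfl⟩
      exact congrFun heq i
    exact h1 (mem_top (x := b))
  obtain ⟨s₁, hs₁, hk₁, hy₁⟩ := common σ₁ hσ₁K
  obtain ⟨s₂, hs₂, hk₂, hy₂⟩ := common σ₂ hσ₂
  obtain ⟨τ, _, c, hτ, hc⟩ := h.exists_basis δ htr
  have hadj : IntermediateField.adjoin ℂ (Set.range (Sum.elim (gx L x) fun p => algebraMap k L (U p))) = ⊤ :=
    h.adjoin_all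
  -- write `θ` as a rational function of the coordinates
  obtain ⟨f, g, hfg⟩ := (mem_adjoin_range_iff ℂ _ θ).1 (hadj ▸ mem_top (x := θ))
  let v : Fin (r + 1) ⊕ (Fin 3 × Fin (r + 1)) → L := Sum.elim (gx L x) fun p => algebraMap k L (U p)
  have hg : aeval v g ≠ 0 := by
    intro h0
    rw [h0, div_zero] at hfg
    exact hθ ⟨0, by rw [map_zero, hfg]⟩
  have hfg' : θ * aeval v g = aeval v f := by rw [hfg, div_mul_cancel₀ _ hg]
  have hev : ∀ s : L →ₐ[ℂ] E, (∀ a : k, s (algebraMap k L a) = ι (algebraMap k L a)) →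
      ∀ f : MvPolynomial (Fin (r + 1) ⊕ (Fin 3 × Fin (r + 1))) ℂ, aeval (Sum.elim (fun i => s (gx L x i)) u₀) f = s (aeval v f) := by
    intro s hs f
    have e : s (aeval v f) = aeval (fun i => s (v i)) f := MvPolynomial.comp_aeval_apply v s f
    rw [e]
    congr 2
    refine _root_.funext fun a => ?_
    rcases a with i | p
    · rfl
    · exact (hs _).symm
  let ι' : L →ₐ[ℂ] E := IsScalarTower.toAlgHom ℂ L E
  have hX₀ : X₀ = fun i => ι' (gx L x i) := rfl
  let lf : Fin (r + 1) ⊕ (Fin 3 × Fin (r + 1)) → _ ⊕ _ :=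
    Sum.elim (fun i => Sum.inl (Sum.inl i : Fin (r + 1) ⊕ Fin (r + 1))) Sum.inr
  let rf : Fin (r + 1) ⊕ (Fin 3 × Fin (r + 1)) → _ ⊕ _ :=
    Sum.elim (fun i => Sum.inl (Sum.inr i : Fin (r + 1) ⊕ Fin (r + 1))) Sum.inr
  let N : MvPolynomial ((Fin (r + 1) ⊕ Fin (r + 1)) ⊕ (Fin 3 × Fin (r + 1))) ℂ :=
    rename rf f * rename lf g - rename lf f * rename rf g
  have hN : ∀ s : L →ₐ[ℂ] E, (∀ a : k, s (algebraMap k L a) = ι (algebraMap k L a)) →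
      aeval (Sum.elim (Sum.elim X₀ fun i => s (gx L x i)) u₀) N =
        s (aeval v f) * ι' (aeval v g) - ι' (aeval v f) * s (aeval v g) := by
    intro s hs
    have hl : ∀ f : MvPolynomial (Fin (r + 1) ⊕ (Fin 3 × Fin (r + 1))) ℂ, aeval (Sum.elim (Sum.elim X₀ fun i => s (gx L x i)) u₀) (rename lf f) =
        ι' (aeval v f) := fun f => by
      rw [← hev ι' (fun _ => rfl), aeval_rename]
      congr 2
      refine _root_.funext fun a => ?_
      rcases a with i | p <;> rfl
    have hr : ∀ f : MvPolynomial (Fin (r + 1) ⊕ (Fin 3 × Fin (r + 1))) ℂ, aeval (Sum.elim (Sum.elim X₀ fun i => s (gx L x i)) u₀) (rename rf f) =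
        s (aeval v f) := fun f => by
      rw [← hev s hs, aeval_rename]
      congr 2
      refine _root_.funext fun a => ?_
      rcases a with i | p <;> rfl
    rw [map_sub, map_mul, map_mul, hl, hl, hr, hr]
  have hk₁' : ∀ a : k, s₁ (algebraMap k L a) = ι (algebraMap k L a) := fun a => by rw [hs₁, hk₁]
  have hk₂' : ∀ a : k, s₂ (algebraMap k L a) = ι (algebraMap k L a) := fun a => by rw [hs₂, hk₂]
  have hN₁ : aeval (Sum.elim (Sum.elim X₀ fun i => s₁ (gx L x i)) u₀) N = 0 := by
    rw [hN s₁ hk₁', ← hfg', map_mul, map_mul, hs₁ θ, hσ₁θ]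
    show ι θ * _ * _ - ι θ * _ * _ = 0
    ring
  have halgE : Algebra.IsAlgebraic (Algebra.adjoin ℂ (Set.range (Sum.elim X₀ u₀))) E := by
    have hι : ∀ z : L, ι z ∈ IntermediateField.adjoin ℂ (Set.range (Sum.elim X₀ u₀)) := by
      intro z
      have h1 : (⊤ : IntermediateField ℂ L) ≤
          (IntermediateField.adjoin ℂ (Set.range (Sum.elim X₀ u₀))).comap ι' := by
        rw [← hadj, adjoin_le_iff]
        rintro _ ⟨i, rfl⟩
        refine subset_adjoin _ _ ⟨i, ?_⟩
        rcases i with i | p <;> rfl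
      exact h1 (mem_top (x := z))
    rw [← isAlgebraic_adjoin_iff_top]
    refine ⟨fun e => ?_⟩
    obtain ⟨q, hq, hqe⟩ := (Algebra.IsAlgebraic.isAlgebraic (R := L) e)
    obtain ⟨ρ, hρ⟩ : ∃ ρ : L →+* IntermediateField.adjoin ℂ (Set.range (Sum.elim X₀ u₀)),
        (algebraMap _ E).comp ρ = ι := ⟨ι.codRestrict _ hι, rfl⟩
    refine ⟨q.map ρ, (Polynomial.map_ne_zero_iff ρ.injective).2 hq, ?_⟩
    rw [Polynomial.aeval_def, Polynomial.eval₂_map, hρ]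
    exact hqe
  have htrE : ((3 * (r + 1) + δ : ℕ) : Cardinal) ≤ Algebra.trdeg ℂ E := by
    rw [← htr]
    exact trdeg_le_of_injective ι' ι'.injective
  have hcE : ∀ i, IsAlgebraic (Algebra.adjoin ℂ (Set.range fun t => X₀ (c t))) (X₀ i) := by
    let j' : F →ₐ[ℂ] E := ι'.comp (IsScalarTower.toAlgHom ℂ F L)
    intro i
    exact (isAlgebraic_adjoin_map_iff j' j'.injective (fun t => x (c t)) (x i)).2 (hc i)
  have hN₂ := pair_transfer I X₀ (fun i => s₁ (gx L x i)) (fun i => s₂ (gx L x i)) u₀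
    (hker ι') (hker s₁) (hker s₂) δ hδ
    (by simp only [hs₁]; exact hlin σ₁ hk₁ hy₁) (by simp only [hs₂]; exact hlin σ₂ hk₂ hy₂)
    (by simp only [hs₁]; exact hne σ₁ hk₁ b hσb) (by simp only [hs₂]; exact hne σ₂ hk₂ θ hσθ)
    halgE htrE c hτ hcE N hN₁
  rw [hN s₂ hk₂', ← hfg', map_mul, map_mul, hs₂ θ] at hN₂
  have h1 : ι' (aeval v g) ≠ 0 := (map_ne_zero ι').2 hg
  have h2 : s₂ (aeval v g) ≠ 0 := (map_ne_zero s₂).2 hg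
  have h3 : (σ₂ θ - ι' θ) * (s₂ (aeval v g) * ι' (aeval v g)) = 0 := by
    linear_combination hN₂
  exact hσθ (sub_eq_zero.1 ((mul_eq_zero.1 h3).resolve_right (mul_ne_zero h2 h1)))

end IsGen

end

section
open IntermediateField MvPolynomial

theorem isAlgebraic_of_range_subset {K A L : Type*} [Field K] [Field A] [Field L] [Algebra K L]
    [Algebra A L] [Algebra.IsAlgebraic K L]
    (h : ∀ z : K, ∃ a : A, algebraMap A L a = algebraMap K L z) : Algebra.IsAlgebraic A L := by
  refine ⟨fun e => ?_⟩
  obtain ⟨q, hq, hqe⟩ := Algebra.IsAlgebraic.isAlgebraic (R := K) e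
  choose f hf using h
  have hinj := (algebraMap A L).injective
  let ρ : K →+* A :=
    { toFun := f
      map_one' := hinj (by rw [hf, map_one, map_one])
      map_zero' := hinj (by rw [hf, map_zero, map_zero])
      map_mul' := fun a b => hinj (by rw [hf, map_mul, map_mul, hf, hf])
      map_add' := fun a b => hinj (by rw [hf, map_add, map_add, hf, hf]) }
  have hρ : (algebraMap A L).comp ρ = algebraMap K L := RingHom.ext hf
  refine ⟨q.map ρ, (Polynomial.map_ne_zero_iff ρ.injective).2 hq, ?_⟩
  rw [Polynomial.aeval_def, Polynomial.eval₂_map, hρ]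
  exact hqe

namespace IsGen
variable {k F L : Type} [Field k] [Field F] [Field L] [Algebra ℂ k] [Algebra ℂ F]
    [Algebra ℂ L] [Algebra k L] [Algebra F L] [IsScalarTower ℂ k L] [IsScalarTower ℂ F L]
    {r : ℕ} {x : Fin (r + 1) → F} {U : Fin 3 × Fin (r + 1) → k}

theorem trdeg_eq (h : IsGen k F L x U) {δ : ℕ} {y : Fin δ → L} (hy : AlgebraicIndependent k y)
    {K : Type} [Field K] [Algebra K L] [Algebra.IsAlgebraic K L]
    (hK : ∀ z : K, algebraMap K L z ∈ IntermediateField.adjoin k (Set.range y)) :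
    Algebra.trdeg ℂ L = ((3 * (r + 1) + δ : ℕ) : Cardinal) := by
  have hb : IsTranscendenceBasis k y := by
    refine hy.isTranscendenceBasis_iff_isAlgebraic.2 ?_
    rw [← isAlgebraic_adjoin_iff_top]
    exact isAlgebraic_of_range_subset (K := K) fun z => ⟨⟨_, hK z⟩, rfl⟩
  have hi : AlgebraicIndependent ℂ U := by
    rw [algebraicIndependent_iff_injective_aeval]; exact h.indepU
  have hU : IsTranscendenceBasis ℂ U := by
    refine hi.isTranscendenceBasis_iff_isAlgebraic.2 ?_
    rw [← isAlgebraic_adjoin_iff_top, h.adjk, Algebra.isAlgebraic_iff_isIntegral]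
    exact Algebra.isIntegral_of_surjective topEquiv.surjective
  have h1 := trdeg_add_eq ℂ k (A := L)
  rw [← hb.cardinalMk_eq_trdeg, ← hU.cardinalMk_eq_trdeg, Cardinal.mk_fintype,
    Cardinal.mk_fintype, ← Nat.cast_add] at h1
  rw [← h1]
  simp only [Fintype.card_prod, Fintype.card_fin]

/-- A further generic coordinate generates the function field over the field of a generic
projection. -/
theorem adjoin_gy_eq_top (h : IsGen k F L x U) {K : Type} [Field K] [Algebra K L]
    (δ : ℕ)
    (hKr : ∀ z : L, z ∈ Set.range (algebraMap K L) ↔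
      z ∈ IntermediateField.adjoin k {z | ∃ j : Fin 3, (j : ℕ) < δ ∧ gy L x U j = z})
    (hprim : ∀ M : IntermediateField K L, M = ⊥ ∨ M = ⊤) (j : Fin 3) (hj : δ ≤ (j : ℕ)) :
    K⟮gy L x U j⟯ = ⊤ := by
  rcases hprim K⟮gy L x U j⟯ with hbot | htop
  swap
  · exact htop
  have hyj : gy L x U j ∈ Set.range (algebraMap K L) := by
    have : gy L x U j ∈ K⟮gy L x U j⟯ := mem_adjoin_simple_self K _
    rw [hbot] at this
    exact this
  have hx : ∀ i, gx L x i ∈ Set.range (algebraMap K L) := by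
    intro i
    obtain ⟨σ, τ, hστ, hτ⟩ := h.endo_shift j (fun l => if l = j then 1 else 0) (by simp)
      (fun l => if l = i then 1 else 0)
    have h1 : τ (gy L x U j) = gy L x U j + gx L x i := by
      rw [hτ j]; simp
    have h2 : ∀ l : Fin 3, (l : ℕ) < δ → τ (gy L x U l) = gy L x U l := by
      intro l hl
      have : l ≠ j := by rintro rfl; omega
      rw [hτ l]; simp [this]
    have h3 : ∀ z ∈ IntermediateField.adjoin k {z | ∃ j : Fin 3, (j : ℕ) < δ ∧ gy L x U j = z},
        τ z ∈ IntermediateField.adjoin k {z | ∃ j : Fin 3, (j : ℕ) < δ ∧ gy L x U j = z} := by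
      obtain ⟨A, hA⟩ : ∃ A, A =
        IntermediateField.adjoin k {z | ∃ j : Fin 3, (j : ℕ) < δ ∧ gy L x U j = z} := ⟨_, rfl⟩
      let W : IntermediateField k L := (A.toSubfield.comap (τ : L →+* L)).toIntermediateField
        (fun a => by
          show τ (algebraMap k L a) ∈ A
          rw [hστ]
          exact A.algebraMap_mem _)
      have hW : IntermediateField.adjoin k {z | ∃ j : Fin 3, (j : ℕ) < δ ∧ gy L x U j = z} ≤ W := by
        rw [adjoin_le_iff]
        rintro _ ⟨l, hl, rfl⟩
        show τ (gy L x U l) ∈ A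
        rw [h2 l hl, hA]
        exact subset_adjoin _ _ ⟨l, hl, rfl⟩
      intro z hz
      rw [← hA]
      exact hW hz
    have h4 := h3 _ ((hKr _).1 hyj)
    rw [h1] at h4
    have h5 := sub_mem h4 ((hKr _).1 hyj)
    rw [add_sub_cancel_left] at h5
    exact (hKr _).2 h5
  rw [hbot, eq_comm, eq_bot_iff]
  have h6 : (⊤ : IntermediateField k L) ≤
      IntermediateField.adjoin k {z | ∃ j : Fin 3, (j : ℕ) < δ ∧ gy L x U j = z} := by
    rw [← h.adjoin_gx, adjoin_le_iff]
    rintro _ ⟨i, rfl⟩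
    exact (hKr _).1 (hx i)
  intro z _
  exact (hKr z).2 (h6 (mem_top (x := z)))

/-- Primitivity for generic projections of a curve to the line. -/
theorem primitive_one (h : IsGen k F L x U) (h0 : Transcendental k (gy L x U 0))
    [FiniteDimensional k⟮gy L x U 0⟯ L] (M : IntermediateField k⟮gy L x U 0⟯ L) :
    M = ⊥ ∨ M = ⊤ := by
  have hy : AlgebraicIndependent k ![gy L x U 0] := by
    rw [algebraicIndependent_iff_transcendental]
    exact h0
  refine h.primitive (K := k⟮gy L x U 0⟯) (fun a => ⟨algebraMap _ _ a, rfl⟩) 1 (by norm_num) ?_ ?_ M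
  · intro j hj
    have : j = 0 := Fin.ext (by simpa using hj)
    subst this
    exact ⟨AdjoinSimple.gen k _, rfl⟩
  · refine h.trdeg_eq hy (K := k⟮gy L x U 0⟯) fun z => ?_
    have : Set.range ![gy L x U 0] = {gy L x U 0} := by simp
    rw [this]
    exact z.2

theorem adjoin_one (h : IsGen k F L x U) (h0 : Transcendental k (gy L x U 0))
    [FiniteDimensional k⟮gy L x U 0⟯ L] (j : Fin 3) (hj : 1 ≤ (j : ℕ)) :
    (k⟮gy L x U 0⟯)⟮gy L x U j⟯ = ⊤ := by
  refine h.adjoin_gy_eq_top 1 (fun z => ?_) (h.primitive_one h0) j hj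
  have : {z | ∃ j : Fin 3, (j : ℕ) < 1 ∧ gy L x U j = z} = {gy L x U 0} := by
    ext z
    constructor
    · rintro ⟨j, hj, rfl⟩
      have : j = 0 := Fin.ext (by simpa using hj)
      rw [this]; rfl
    · rintro rfl
      exact ⟨0, by simp, rfl⟩
  rw [this]
  exact ⟨fun ⟨a, ha⟩ => ha ▸ a.2, fun hz => ⟨⟨z, hz⟩, rfl⟩⟩

theorem mem_double (t v : L) (z : L) : z ∈ Set.range (algebraMap k⟮t⟯⟮v⟯ L) ↔
    z ∈ IntermediateField.adjoin k {t, v} := by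
  constructor
  · rintro ⟨a, rfl⟩
    have h1 : k⟮t⟯ ≤ IntermediateField.adjoin k {t, v} := by
      rw [adjoin_simple_le_iff]
      exact subset_adjoin _ _ (by simp)
    let A' : IntermediateField k⟮t⟯ L :=
      (IntermediateField.adjoin k {t, v}).toSubfield.toIntermediateField fun b => h1 b.2
    have h2 : k⟮t⟯⟮v⟯ ≤ A' := by
      rw [adjoin_simple_le_iff]
      exact subset_adjoin k {t, v} (by simp)
    exact h2 a.2
  · intro hz
    have h1 : IntermediateField.adjoin k {t, v} ≤ k⟮t⟯⟮v⟯.restrictScalars k := by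
      rw [adjoin_le_iff]
      rintro w (rfl | rfl)
      · exact (k⟮w⟯⟮v⟯).algebraMap_mem (AdjoinSimple.gen k w)
      · exact mem_adjoin_simple_self k⟮t⟯ w
    exact ⟨⟨z, h1 hz⟩, rfl⟩

/-- Primitivity for generic projections of a surface to the plane. -/
theorem primitive_two (h : IsGen k F L x U) (h0 : Transcendental k (gy L x U 0))
    (h1 : Transcendental k⟮gy L x U 0⟯ (gy L x U 1))
    [FiniteDimensional k⟮gy L x U 0⟯⟮gy L x U 1⟯ L]
    (M : IntermediateField k⟮gy L x U 0⟯⟮gy L x U 1⟯ L) : M = ⊥ ∨ M = ⊤ := by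
  refine h.primitive (K := k⟮gy L x U 0⟯⟮gy L x U 1⟯)
    (fun a => ⟨algebraMap k⟮gy L x U 0⟯ _ (algebraMap k _ a), rfl⟩) 2 (by norm_num) ?_ ?_ M
  · intro j hj
    have : j = 0 ∨ j = 1 := by omega
    refine (mem_double _ _ _).2 (subset_adjoin _ _ ?_)
    rcases this with rfl | rfl <;> simp
  · refine h.trdeg_eq (algInd_pair.2 ⟨h0, h1⟩) (K := k⟮gy L x U 0⟯⟮gy L x U 1⟯) fun z => ?_
    have : Set.range ![gy L x U 0, gy L x U 1] = {gy L x U 0, gy L x U 1} := by simp [Set.pair_comm]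
    rw [this]
    exact (mem_double _ _ _).1 ⟨z, rfl⟩

theorem adjoin_two (h : IsGen k F L x U) (h0 : Transcendental k (gy L x U 0))
    (h1 : Transcendental k⟮gy L x U 0⟯ (gy L x U 1))
    [FiniteDimensional k⟮gy L x U 0⟯⟮gy L x U 1⟯ L] :
    (k⟮gy L x U 0⟯⟮gy L x U 1⟯)⟮gy L x U 2⟯ = ⊤ := by
  refine h.adjoin_gy_eq_top 2 (fun z => ?_) (h.primitive_two h0 h1) 2 le_rfl
  have : {z | ∃ j : Fin 3, (j : ℕ) < 2 ∧ gy L x U j = z} = {gy L x U 0, gy L x U 1} := by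
    ext z
    constructor
    · rintro ⟨j, hj, rfl⟩
      have : j = 0 ∨ j = 1 := by omega
      rcases this with rfl | rfl <;> simp
    · rintro (rfl | rfl)
      exacts [⟨0, by simp, rfl⟩, ⟨1, by simp, rfl⟩]
  rw [this]
  exact mem_double _ _ _

end IsGen

end

/-! ### Plane curves -/

section
open IntermediateField MvPolynomial

section Plane

theorem card_bounded_pairs (n : ℕ) :
    2 * Nat.card {s : Fin 2 →₀ ℕ | (s.sum fun _ e => e) ≤ n} = (n + 1) * (n + 2) := by
  have hsum : ∀ s : Fin 2 →₀ ℕ, (s.sum fun _ e => e) = s 0 + s 1 := fun s => by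
    rw [Finsupp.sum_fintype _ _ (fun _ => rfl), Fin.sum_univ_two]
  let f : (Σ i : Fin (n + 1), Fin (n + 1 - i)) → {s : Fin 2 →₀ ℕ | (s.sum fun _ e => e) ≤ n} :=
    fun p => ⟨Finsupp.equivFunOnFinite.symm ![(p.1 : ℕ), (p.2 : ℕ)], by
      have := p.2.2
      rw [Set.mem_setOf_eq, hsum]
      simp
      omega⟩
  have hf : Function.Bijective f := by
    constructor
    · rintro ⟨⟨a, ha⟩, ⟨b, hb⟩⟩ ⟨⟨a', ha'⟩, ⟨b', hb'⟩⟩ h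
      have h0 := DFunLike.congr_fun (Subtype.ext_iff.1 h) 0
      have h1 := DFunLike.congr_fun (Subtype.ext_iff.1 h) 1
      simp [f] at h0 h1
      subst h0 h1
      rfl
    · rintro ⟨s, hs⟩
      rw [Set.mem_setOf_eq, hsum] at hs
      refine ⟨⟨⟨s 0, by omega⟩, ⟨s 1, by simp; omega⟩⟩, Subtype.ext (Finsupp.ext fun i => ?_)⟩
      fin_cases i <;> simp [f]
  rw [← Nat.card_eq_of_bijective f hf, Nat.card_eq_fintype_card, Fintype.card_sigma]
  simp only [Fintype.card_fin]
  rw [Fin.sum_univ_eq_sum_range (fun i => n + 1 - i) (n + 1)]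
  have h := Finset.sum_range_reflect (fun i => i + 1) (n + 1)
  have h2 : ∑ i ∈ Finset.range (n + 1), (n + 1 - i) = ∑ i ∈ Finset.range (n + 1), (i + 1) := by
    rw [← h]
    refine Finset.sum_congr rfl fun i hi => ?_
    have := Finset.mem_range.1 hi
    omega
  rw [h2]
  clear h h2 hf f hsum
  induction n with
  | zero => rfl
  | succ n ih => rw [Finset.sum_range_succ, mul_add, ih]; ring

variable {K L : Type} [Field K] [Field L] [Algebra K L]

theorem finrank_restrict (n : ℕ) :
    2 * Module.finrank K (restrictTotalDegree (Fin 2) K n) = (n + 1) * (n + 2) := by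
  rw [← card_bounded_pairs n]
  congr 1
  exact Module.finrank_eq_nat_card_basis (basisRestrictSupport K _)

/-- The powers of a generator of `L` over `K` already span `L`. -/
theorem finrank_le_polyLE [FiniteDimensional K L] {y : Fin 2 → L} {j : Fin 2} (hgen : K⟮y j⟯ = ⊤)
    {n : ℕ} (hn : Module.finrank K L ≤ n + 1) :
    Module.finrank K L ≤ Module.finrank K (polyLE K y n) := by
  have h1 : (minpoly K (y j)).natDegree = Module.finrank K L := by
    rw [← adjoin.finrank (IsIntegral.of_finite K (y j)), hgen, finrank_top']
  have h2 := linearIndependent_pow (K := K) (y j)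
  have h3 : Submodule.span K (Set.range fun i : Fin (minpoly K (y j)).natDegree => y j ^ (i : ℕ)) ≤
      polyLE K y n := by
    rw [Submodule.span_le]
    rintro _ ⟨i, rfl⟩
    have h4 := pow_mem_polyLE (κ := K) (var_mem_polyLE (κ := K) (y := y) j) i
    exact polyLE_mono (by have := i.2; omega) h4
  have h4 := Submodule.finrank_mono h3
  rwa [finrank_span_eq_card h2, Fintype.card_fin, h1] at h4

/-- Bezout's inequality for a plane curve and a generically injective parametrisation. -/
theorem plane_bezout [FiniteDimensional K L] {y : Fin 2 → L} {j : Fin 2} (hgen : K⟮y j⟯ = ⊤)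
    {Φ N : MvPolynomial (Fin 2) K} (hΦ : Prime Φ) (hN : ¬ Φ ∣ N) (hΦ0 : aeval y Φ = 0)
    (hN0 : aeval y N = 0) : Module.finrank K L ≤ Φ.totalDegree * N.totalDegree := by
  obtain ⟨e, he⟩ : ∃ e, e = Φ.totalDegree := ⟨_, rfl⟩
  obtain ⟨f, hf⟩ : ∃ f, f = N.totalDegree := ⟨_, rfl⟩
  obtain ⟨M, hM⟩ : ∃ M, M = Module.finrank K L := ⟨_, rfl⟩
  rw [← he, ← hf]
  have hNne : N ≠ 0 := by rintro rfl; exact hN (dvd_zero _)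
  let D := restrictTotalDegree (Fin 2) K
  let g : (D (f + M) × D (e + M)) →ₗ[K] MvPolynomial (Fin 2) K :=
    LinearMap.coprod ((LinearMap.mulLeft K Φ).comp (D (f + M)).subtype)
      ((LinearMap.mulLeft K N).comp (D (e + M)).subtype)
  have hmem : ∀ n p, p ∈ D n ↔ p.totalDegree ≤ n := fun n p => mem_restrictTotalDegree _ _ _
  have hc1 : ∀ C : D M, - (N * (C : MvPolynomial (Fin 2) K)) ∈ D (f + M) := fun C => by
    rw [hmem, totalDegree_neg]
    have := (hmem _ _).1 C.2
    exact (totalDegree_mul _ _).trans (by omega)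
  have hc2 : ∀ C : D M, Φ * (C : MvPolynomial (Fin 2) K) ∈ D (e + M) := fun C => by
    rw [hmem]
    have := (hmem _ _).1 C.2
    exact (totalDegree_mul _ _).trans (by omega)
  let q : D M →ₗ[K] D (f + M) × D (e + M) :=
    LinearMap.prod
      (LinearMap.codRestrict _ (-(LinearMap.mulLeft K N).comp (D M).subtype) hc1)
      (LinearMap.codRestrict _ ((LinearMap.mulLeft K Φ).comp (D M).subtype) hc2)
  have hker : LinearMap.ker g ≤ LinearMap.range q := by
    rintro ⟨⟨A, hA⟩, ⟨B, hB⟩⟩ h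
    have h1 : Φ * A + N * B = 0 := h
    have h2 : Φ ∣ B := by
      have : Φ ∣ N * B := ⟨-A, by linear_combination h1⟩
      exact (hΦ.dvd_or_dvd this).resolve_left hN
    obtain ⟨C, hC⟩ := h2
    have h3 : A = -(N * C) := by
      apply mul_left_cancel₀ hΦ.ne_zero
      rw [hC] at h1
      linear_combination h1
    have hCM : C ∈ D M := by
      rw [hmem]
      by_cases hC0 : C = 0
      · rw [hC0]; simp
      have h4 := (hmem _ _).1 hB
      rw [hC, totalDegree_mul_of_isDomain hΦ.ne_zero hC0] at h4
      omega
    refine ⟨⟨C, hCM⟩, ?_⟩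
    refine Prod.ext (Subtype.ext ?_) (Subtype.ext ?_)
    · exact h3.symm
    · exact hC.symm
  have hk1 : Module.finrank K (LinearMap.ker g) ≤ Module.finrank K (D M) :=
    (Submodule.finrank_mono hker).trans (LinearMap.finrank_range_le q)
  have hk2 := LinearMap.finrank_range_add_finrank_ker g
  rw [Module.finrank_prod] at hk2
  obtain ⟨n, hn⟩ : ∃ n, n = e + f + M := ⟨_, rfl⟩
  have hg1 : LinearMap.range g ≤ D n := by
    rintro _ ⟨⟨A, B⟩, rfl⟩
    have h1 := (hmem _ _).1 A.2
    have h2 := (hmem _ _).1 B.2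
    show Φ * (A : MvPolynomial (Fin 2) K) + N * (B : MvPolynomial (Fin 2) K) ∈ D n
    refine add_mem ?_ ?_
    · rw [hmem]; exact (totalDegree_mul _ _).trans (by omega)
    · rw [hmem]; exact (totalDegree_mul _ _).trans (by omega)
  have hg2 : ∀ z ∈ LinearMap.range g, aeval y z = 0 := by
    rintro _ ⟨⟨A, B⟩, rfl⟩
    show aeval y (Φ * (A : MvPolynomial (Fin 2) K) + N * (B : MvPolynomial (Fin 2) K)) = 0
    rw [map_add, map_mul, map_mul, hΦ0, hN0]; ring
  let ev : D n →ₗ[K] L := (aeval y : MvPolynomial (Fin 2) K →ₐ[K] L).toLinearMap.comp (D n).subtype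
  have hev := LinearMap.finrank_range_add_finrank_ker ev
  have hr1 : LinearMap.range ev = polyLE K y n := by
    rw [LinearMap.range_comp, Submodule.range_subtype]; rfl
  have hr2 : Module.finrank K (LinearMap.range g) ≤ Module.finrank K (LinearMap.ker ev) := by
    have h1 : LinearMap.range g ≤ (LinearMap.ker ev).map (D n).subtype := by
      intro z hz
      exact ⟨⟨z, hg1 hz⟩, hg2 z hz, rfl⟩
    refine (Submodule.finrank_mono h1).trans ?_
    exact (Submodule.finrank_map_le _ _)
  rw [hr1] at hev
  have hfin := finrank_le_polyLE (K := K) (y := y) hgen (n := n) (by omega)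
  have d1 : 2 * Module.finrank K (D (f + M)) = _ := finrank_restrict (K := K) (f + M)
  have d2 : 2 * Module.finrank K (D (e + M)) = _ := finrank_restrict (K := K) (e + M)
  have d3 : 2 * Module.finrank K (D (M)) = _ := finrank_restrict (K := K) (M)
  have d4 : 2 * Module.finrank K (D (n)) = _ := finrank_restrict (K := K) (n)
  rw [← hM] at hfin ⊢
  have hz : (2 : ℤ) * M ≤ 2 * (e * f) := by
    zify at *
    rw [hn] at d4
    nlinarith
  have : 2 * M ≤ 2 * (e * f) := by exact_mod_cast hz
  omega

/-- A plane equation of least degree of a pair of elements. -/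
structure MinEq (y : Fin 2 → L) (Φ : MvPolynomial (Fin 2) K) : Prop where
  ne : Φ ≠ 0
  root : aeval y Φ = 0
  min : ∀ N : MvPolynomial (Fin 2) K, N ≠ 0 → aeval y N = 0 → Φ.totalDegree ≤ N.totalDegree

theorem exists_minEq [FiniteDimensional K L] (y : Fin 2 → L) :
    ∃ Φ : MvPolynomial (Fin 2) K, MinEq y Φ := by
  have h : ∃ n, ∃ Φ : MvPolynomial (Fin 2) K, Φ ≠ 0 ∧ aeval y Φ = 0 ∧ Φ.totalDegree = n := by
    have halg : IsAlgebraic K (y 0) := Algebra.IsAlgebraic.isAlgebraic _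
    obtain ⟨p, hp, hp0⟩ := halg
    refine ⟨_, Polynomial.aeval (X 0 : MvPolynomial (Fin 2) K) p, ?_, ?_, rfl⟩
    · intro h0
      have ht : Transcendental K (X 0 : MvPolynomial (Fin 2) K) := transcendental_X K 0
      exact ht ⟨p, hp, h0⟩
    · rw [← Polynomial.aeval_algHom_apply, aeval_X, hp0]
  classical
  obtain ⟨Φ, h1, h2, h3⟩ := Nat.find_spec h
  exact ⟨Φ, h1, h2, fun N hN hN0 => h3 ▸ Nat.find_min' h ⟨N, hN, hN0, rfl⟩⟩

theorem MinEq.prime {y : Fin 2 → L} {Φ : MvPolynomial (Fin 2) K} (h : MinEq y Φ) : Prime Φ := by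
  rw [← UniqueFactorizationMonoid.irreducible_iff_prime]
  have hunit : ∀ P : MvPolynomial (Fin 2) K, P ≠ 0 → P.totalDegree = 0 → IsUnit P := by
    intro P hP hd
    rw [totalDegree_eq_zero_iff_eq_C] at hd
    rw [hd]
    refine IsUnit.map C (Ne.isUnit fun h0 => hP ?_)
    rw [hd, h0, map_zero]
  refine ⟨fun hu => ?_, fun A B hAB => ?_⟩
  · have h1 := hu.map (aeval y : MvPolynomial (Fin 2) K →ₐ[K] L)
    rw [h.root] at h1
    exact not_isUnit_zero h1
  · have hA : A ≠ 0 := by rintro rfl; exact h.ne (by rw [hAB, zero_mul])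
    have hB : B ≠ 0 := by rintro rfl; exact h.ne (by rw [hAB, mul_zero])
    have hd := totalDegree_mul_of_isDomain hA hB
    rw [← hAB] at hd
    have h0 : aeval y A * aeval y B = 0 := by rw [← map_mul, ← hAB, h.root]
    rcases mul_eq_zero.1 h0 with h1 | h1
    · have := h.min A hA h1
      exact Or.inr (hunit B hB (by omega))
    · have := h.min B hB h1
      exact Or.inl (hunit A hA (by omega))

theorem MinEq.dvd [FiniteDimensional K L] {y : Fin 2 → L} {Φ : MvPolynomial (Fin 2) K}
    (h : MinEq y Φ) {j : Fin 2} (hgen : K⟮y j⟯ = ⊤) {N : MvPolynomial (Fin 2) K}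
    (hN0 : aeval y N = 0) (hdeg : Φ.totalDegree * N.totalDegree < Module.finrank K L) : Φ ∣ N := by
  by_contra hN
  exact absurd (plane_bezout hgen h.prime hN h.root hN0) (by omega)

theorem MinEq.pos {y : Fin 2 → L} {Φ : MvPolynomial (Fin 2) K} (h : MinEq y Φ) :
    0 < Φ.totalDegree := by
  rw [Nat.pos_iff_ne_zero]
  intro h0
  rw [totalDegree_eq_zero_iff_eq_C] at h0
  have h1 := h.root
  rw [h0, aeval_C] at h1
  rw [map_eq_zero] at h1
  exact h.ne (by rw [h0, h1, map_zero])

/-- Below the degree of the plane curve there are no relations. -/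
theorem MinEq.finrank_lt {y : Fin 2 → L} {Φ : MvPolynomial (Fin 2) K}
    (h : MinEq y Φ) {i : ℕ} (hi : i < Φ.totalDegree) :
    2 * Module.finrank K (polyLE K y i) = (i + 1) * (i + 2) := by
  rw [← finrank_restrict (K := K) i]
  congr 1
  unfold polyLE
  refine (LinearEquiv.finrank_eq ?_).symm
  refine LinearEquiv.ofBijective
    (((aeval y : MvPolynomial (Fin 2) K →ₐ[K] L).toLinearMap.restrict
      (fun z hz => Submodule.mem_map_of_mem hz))) ⟨?_, ?_⟩
  · rw [← LinearMap.ker_eq_bot, Submodule.eq_bot_iff]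
    rintro ⟨z, hz⟩ h0
    have h1 : aeval y z = 0 := congrArg Subtype.val h0
    have h2 := (mem_restrictTotalDegree _ _ _).1 hz
    by_contra hne
    have h3 := h.min z (fun h4 => hne (Subtype.ext h4)) h1
    omega
  · rintro ⟨_, z, hz, rfl⟩
    exact ⟨⟨z, hz⟩, rfl⟩

/-- In degrees where Bezout applies, the only relations are multiples of `Φ`, so the dimension is
at least the value of the Hilbert polynomial of a plane curve of degree `Φ.totalDegree`. -/
theorem MinEq.finrank_ge [FiniteDimensional K L] {y : Fin 2 → L} {Φ : MvPolynomial (Fin 2) K}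
    (h : MinEq y Φ) {j : Fin 2} (hgen : K⟮y j⟯ = ⊤) {i : ℕ}
    (hi : i < Φ.totalDegree ∨ Φ.totalDegree * i < Module.finrank K L) :
    (2 * (Φ.totalDegree : ℤ) * i + 2 - (Φ.totalDegree - 1) * (Φ.totalDegree - 2) ≤
      2 * Module.finrank K (polyLE K y i)) := by
  obtain ⟨e, he⟩ : ∃ e, e = Φ.totalDegree := ⟨_, rfl⟩
  have hsmall : i < Φ.totalDegree → (2 * (Φ.totalDegree : ℤ) * i + 2 -
      (Φ.totalDegree - 1) * (Φ.totalDegree - 2) ≤ 2 * Module.finrank K (polyLE K y i)) := by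
    intro hi
    have h1 : (2 * Module.finrank K (polyLE K y i) : ℤ) = (i + 1) * (i + 2) := by
      exact_mod_cast h.finrank_lt hi
    rw [h1]
    rw [← he] at hi ⊢
    obtain ⟨c, rfl⟩ : ∃ c, e = i + 1 + c := ⟨e - (i + 1), by omega⟩
    push_cast
    rcases Nat.eq_zero_or_pos c with rfl | hc
    · push_cast; nlinarith
    · have : (1 : ℤ) ≤ c := by exact_mod_cast hc
      nlinarith
  by_cases hie : i < Φ.totalDegree
  · exact hsmall hie
  have hi' := hi.resolve_left hie
  rw [← he] at hie hi' ⊢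
  obtain ⟨c, rfl⟩ : ∃ c, i = e + c := ⟨i - e, by omega⟩
  let D := restrictTotalDegree (Fin 2) K
  have hmem : ∀ n p, p ∈ D n ↔ p.totalDegree ≤ n := fun n p => mem_restrictTotalDegree _ _ _
  let ev : D (e + c) →ₗ[K] L :=
    (aeval y : MvPolynomial (Fin 2) K →ₐ[K] L).toLinearMap.comp (D (e + c)).subtype
  have hev := LinearMap.finrank_range_add_finrank_ker ev
  have hr1 : LinearMap.range ev = polyLE K y (e + c) := by
    rw [LinearMap.range_comp, Submodule.range_subtype]; rfl
  rw [hr1] at hev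
  have hk : Module.finrank K (LinearMap.ker ev) ≤ Module.finrank K (D c) := by
    have h1 : (LinearMap.ker ev).map (D (e + c)).subtype ≤ (D c).map (LinearMap.mulLeft K Φ) := by
      rintro _ ⟨⟨z, hz⟩, h0, rfl⟩
      have h1 : aeval y z = 0 := h0
      have h2 := (hmem _ _).1 hz
      obtain ⟨C, rfl⟩ := h.dvd hgen h1 (lt_of_le_of_lt (Nat.mul_le_mul le_rfl h2) (by rwa [← he]))
      refine ⟨C, ?_, rfl⟩
      rw [SetLike.mem_coe, hmem]
      by_cases hC0 : C = 0
      · rw [hC0]; simp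
      rw [totalDegree_mul_of_isDomain h.ne hC0] at h2
      omega
    have h2 := (Submodule.finrank_mono h1).trans (Submodule.finrank_map_le _ _)
    rwa [Submodule.finrank_map_subtype_eq] at h2
  have d1 : 2 * Module.finrank K (D (e + c)) = _ := finrank_restrict (K := K) (e + c)
  have d2 : 2 * Module.finrank K (D (c)) = _ := finrank_restrict (K := K) (c)
  push_cast
  zify at *
  nlinarith

end Plane

end

/-! ### Curves with a generic plane projection of large degree -/

section
open IntermediateField MvPolynomial

namespace IsGen
variable {k F L : Type} [Field k] [Field F] [Field L] [Algebra ℂ k] [Algebra ℂ F]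
    [Algebra ℂ L] [Algebra k L] [Algebra F L] [IsScalarTower ℂ k L] [IsScalarTower ℂ F L]
    {r : ℕ} {x : Fin (r + 1) → F} {U : Fin 3 × Fin (r + 1) → k}

theorem polyLE_le_span (n : ℕ) {K : Type} [Field K] [Algebra K L] :
    polyLE K ![gy L x U 1, gy L x U 2] n ≤
      Submodule.span K (polyLE k (gx L x) n : Set L) := by
  refine polyLE_le_of_forall (y := gx L x) (a := 0) fun α hα => Submodule.subset_span ?_
  refine polyLE_mono (κ := k) hα (prod_mem_polyLE ?_ α)
  intro i
  fin_cases i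
  · exact gy_mem 1
  · exact gy_mem 2

/-- The degree of a curve is the degree of its function field over the field of a generic
projection to the line. -/
theorem curve_finrank (h : IsGen k F L x U) {d : ℕ} {c : ℤ} (hd : 0 < d) {N : ℕ}
    (hN : ∀ n ≥ N, (Module.finrank k (polyLE k (gx L x) n) : ℤ) = d * n + c) :
    Module.finrank k⟮gy L x U 0⟯ L = d := by
  obtain ⟨h0, hfd, hle⟩ := h.curve_base (d := (d : ℤ)) (by exact_mod_cast hd) hN
  refine le_antisymm ?_ (by exact_mod_cast hle)
  have hgen := h.adjoin_one h0 1 (by norm_num)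
  obtain ⟨n, hn1, hn2⟩ : ∃ n, Module.finrank k⟮gy L x U 0⟯ L ≤ n + 1 ∧ N ≤ n :=
    ⟨Module.finrank k⟮gy L x U 0⟯ L + N, by omega, by omega⟩
  have h1 := finrank_le_polyLE (K := k⟮gy L x U 0⟯) (y := ![gy L x U 1, gy L x U 2]) (j := 0) hgen
    (n := n + 1) (by omega)
  have h2 := Submodule.finrank_mono (polyLE_le_span (K := k⟮gy L x U 0⟯) (x := x) (U := U) (L := L) (n + 1))
  have h3 := span_le_diff h0 n
  have h4 := hN n hn2
  have h5 := hN (n + 1) (by omega)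
  push_cast at h5
  have : (Module.finrank k⟮gy L x U 0⟯ L : ℤ) ≤ d := by
    zify at h1 h2 h3
    linarith
  exact_mod_cast this

/-- The genus bound for a curve whose generic plane projection has degree at least `s + 1`. -/
theorem genus_le_of_large (h : IsGen k F L x U) {d : ℕ} {g : ℤ} {N s : ℕ}
    (hN : ∀ n ≥ N, (Module.finrank k (polyLE k (gx L x) n) : ℤ) = d * n + (1 - g))
    (hs : 2 ≤ s) (hx1 : s ^ 3 + 1 ≤ d) (hx2 : 8 * s * (s + 1) + 1 ≤ d)
    {Φ : MvPolynomial (Fin 2) k⟮gy L x U 0⟯} (hΦ : MinEq ![gy L x U 1, gy L x U 2] Φ)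
    (he : s + 1 ≤ Φ.totalDegree) :
    2 * g ≤ 2 * ((d - 1) / s : ℕ) * ((d : ℤ) - 1) - s * ((d - 1) / s : ℕ) * (((d - 1) / s : ℕ) + 1) := by
  have hd : 0 < d := by omega
  obtain ⟨h0, hfd, -⟩ := h.curve_base (d := (d : ℤ)) (by exact_mod_cast hd) hN
  have hfin := h.curve_finrank hd hN
  have hgen := h.adjoin_one h0 1 (by norm_num)
  let K := k⟮gy L x U 0⟯
  let y : Fin 2 → L := ![gy L x U 1, gy L x U 2]
  obtain ⟨n, hn, hsum⟩ := genus_sum_le (τ := fun i => (Module.finrank K (polyLE K y i) : ℤ)) hs hx1 hx2 he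
    (fun i hi => by exact_mod_cast hΦ.finrank_lt hi)
    (fun i hi => hΦ.finrank_ge (j := 0) hgen (Or.inr (by rw [hfin]; exact hi)))
    (fun i j => by
      have h1 := cauchy_davenport (K := K) (L := L) (h.primitive_one h0) (polyLE K y i) (polyLE K y j)
        (Submodule.ne_bot_iff _ |>.2 ⟨1, one_mem_polyLE i, one_ne_zero⟩)
        (Submodule.ne_bot_iff _ |>.2 ⟨1, one_mem_polyLE j, one_ne_zero⟩)
      have h2 := Submodule.finrank_mono (polyLE_mul_le (κ := K) (y := y) i j)
      have h3 := h1.trans h2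
      rw [hfin] at h3
      omega)
    (fun i => by
      have : 0 < Module.finrank K (polyLE K y i) := by
        rw [Module.finrank_pos_iff, Submodule.nontrivial_iff_ne_bot]
        exact Submodule.ne_bot_iff _ |>.2 ⟨1, one_mem_polyLE i, one_ne_zero⟩
      omega) N
  have htel : ∀ n, 1 + ∑ i ∈ Finset.range n, (Module.finrank K (polyLE K y (i + 1)) : ℤ) ≤
      (Module.finrank k (polyLE k (gx L x) n) : ℤ) := by
    intro n
    induction n with
    | zero =>
      have : 0 < Module.finrank k (polyLE k (gx L x) 0) := by
        rw [Module.finrank_pos_iff, Submodule.nontrivial_iff_ne_bot]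
        exact Submodule.ne_bot_iff _ |>.2 ⟨1, one_mem_polyLE 0, one_ne_zero⟩
      rw [Finset.sum_range_zero, add_zero]
      exact_mod_cast this
    | succ n ih =>
      rw [Finset.sum_range_succ]
      have h2 := Submodule.finrank_mono (polyLE_le_span (K := K) (x := x) (U := U) (L := L) (n + 1))
      have h3 := span_le_diff h0 n
      zify at h2 h3
      linarith
  have h1 := htel n
  rw [hN n hn] at h1
  rw [Finset.sum_sub_distrib, Finset.sum_const, Finset.card_range, nsmul_eq_mul] at hsum
  linarith

end IsGen

end

/-! ### From a plane curve of small degree to a surface -/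

section
open IntermediateField MvPolynomial

theorem exists_common_denom {κ K ι τ : Type*} [Field κ] [Field K] [Algebra κ K] {w : ι → K}
    (hw : IntermediateField.adjoin κ (Set.range w) = ⊤) (s : Finset τ) (c : τ → K) :
    ∃ (D : MvPolynomial ι κ) (P : τ → MvPolynomial ι κ),
      aeval w D ≠ 0 ∧ ∀ i ∈ s, aeval w D * c i = aeval w (P i) := by
  classical
  have hc : ∀ i, ∃ p q : MvPolynomial ι κ, aeval w q ≠ 0 ∧ aeval w q * c i = aeval w p := by
    intro i
    have hi : c i ∈ IntermediateField.adjoin κ (Set.range w) := by rw [hw]; trivial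
    obtain ⟨p, q, hpq⟩ := (IntermediateField.mem_adjoin_range_iff κ w (c i)).1 hi
    by_cases hq : aeval w q = 0
    · refine ⟨0, 1, by simp, ?_⟩
      rw [hpq, hq]; simp
    · exact ⟨p, q, hq, by rw [hpq]; field_simp⟩
  choose p q hq hpq using hc
  refine ⟨∏ i ∈ s, q i, fun i => p i * ∏ j ∈ s.erase i, q j, ?_, ?_⟩
  · rw [map_prod]; exact Finset.prod_ne_zero_iff.2 fun i _ => hq i
  · intro i hi
    rw [← Finset.mul_prod_erase s q hi, map_mul, map_mul, ← hpq]
    ring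

theorem exists_frac {κ K ι : Type*} [Field κ] [Field K] [Algebra κ K] {w : ι → K}
    (hw : IntermediateField.adjoin κ (Set.range w) = ⊤) (z : K) :
    ∃ p q : MvPolynomial ι κ, aeval w q ≠ 0 ∧ z * aeval w q = aeval w p := by
  obtain ⟨D, P, hD, hP⟩ := exists_common_denom hw {()} (fun _ => z)
  exact ⟨P (), D, hD, by rw [mul_comm]; exact hP () (by simp)⟩

/-- A derivation that preserves the kernel of a homomorphism to a field generated by the image
descends to that field. -/
theorem exists_derivation_lift {P W : Type*} [CommRing P] [Algebra ℂ P] [Field W] [Algebra ℂ W]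
    (q : P →ₐ[ℂ] W) (hq : ∀ z : W, ∃ a b : P, q b ≠ 0 ∧ z * q b = q a) (Δ : Derivation ℂ P P)
    (hΔ : ∀ f, q f = 0 → q (Δ f) = 0) :
    ∃ D : Derivation ℂ W W, ∀ f, D (q f) = q (Δ f) := by
  choose num den hden hfrac using hq
  have key : ∀ z a b, q b ≠ 0 → z * q b = q a →
      (q (Δ (num z)) - z * q (Δ (den z))) / q (den z) = (q (Δ a) - z * q (Δ b)) / q b := by
    intro z a b hb hz
    rw [div_eq_div_iff (hden z) hb]
    have h1 := hΔ (num z * b - a * den z) (by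
      rw [map_sub, map_mul, map_mul, ← hz, ← hfrac z]; ring)
    simp only [map_sub, Derivation.leibniz, smul_eq_mul, map_add, map_mul] at h1
    rw [← hz, ← hfrac z] at h1
    linear_combination h1
  refine ⟨Derivation.mk' ⟨⟨fun z => (q (Δ (num z)) - z * q (Δ (den z))) / q (den z), ?_⟩, ?_⟩ ?_,
    ?_⟩
  · intro z z'
    rw [key (z + z') (num z * den z' + num z' * den z) (den z * den z')
      (by rw [map_mul]; exact mul_ne_zero (hden z) (hden z'))
      (by rw [map_add, map_mul, map_mul, map_mul, ← hfrac z, ← hfrac z']; ring)]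
    simp only [map_sub, Derivation.leibniz, smul_eq_mul, map_add, map_mul]
    rw [← hfrac z, ← hfrac z']
    have := hden z
    have := hden z'
    field_simp
    ring
  · intro c z
    simp only [RingHom.id_apply]
    rw [key (c • z) (c • num z) (den z) (hden z) (by rw [map_smul, smul_mul_assoc, hfrac z])]
    simp only [map_smul, Derivation.map_smul, smul_mul_assoc, ← smul_sub]
    rw [smul_div_assoc]
  · intro z z'
    simp only [LinearMap.coe_mk, AddHom.coe_mk, smul_eq_mul]
    rw [key (z * z') (num z * num z') (den z * den z')
      (by rw [map_mul]; exact mul_ne_zero (hden z) (hden z'))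
      (by rw [map_mul, map_mul, ← hfrac z, ← hfrac z']; ring)]
    simp only [Derivation.leibniz, smul_eq_mul, map_add, map_mul]
    rw [← hfrac z, ← hfrac z']
    have := hden z
    have := hden z'
    field_simp
    ring
  · intro f
    change (q (Δ (num (q f))) - q f * q (Δ (den (q f)))) / q (den (q f)) = _
    rw [key (q f) f 1 (by simp) (by simp)]
    simp

/-- A derivation killing generators of a field kills the field. -/
theorem derivation_eq_zero_of_adjoin {W ι : Type*} [Field W] [Algebra ℂ W]
    (D : Derivation ℂ W W) {ξ : ι → W} (hξ : ∀ i, D (ξ i) = 0) {z : W}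
    (hz : z ∈ IntermediateField.adjoin ℂ (Set.range ξ)) : D z = 0 := by
  induction hz using IntermediateField.adjoin_induction with
  | mem x hx => obtain ⟨i, rfl⟩ := hx; exact hξ i
  | algebraMap c => exact D.map_algebraMap c
  | add x y _ _ hx hy => rw [map_add, hx, hy, add_zero]
  | inv x _ hx => rw [Derivation.leibniz_inv, hx, smul_zero]
  | mul x y _ _ hx hy => rw [Derivation.leibniz, hx, hy, smul_zero, smul_zero, add_zero]

theorem totalDegree_pderiv_lt {K σ : Type*} [Field K] (i : σ) {f : MvPolynomial σ K}
    (h : pderiv i f ≠ 0) : (pderiv i f).totalDegree < f.totalDegree := by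
  obtain ⟨m, hm, hd⟩ : ∃ m ∈ (pderiv i f).support,
      (pderiv i f).totalDegree = m.sum fun _ e => e := by
    obtain ⟨m, hm, h1⟩ := Finset.exists_mem_eq_sup _ (support_nonempty.2 h)
      (fun m : σ →₀ ℕ => m.sum fun _ e => e)
    exact ⟨m, hm, h1⟩
  rw [hd]
  rw [mem_support_iff, coeff_pderiv] at hm
  have h2 : m + Finsupp.single i 1 ∈ f.support := by
    rw [mem_support_iff]; intro h0; rw [h0] at hm; simp at hm
  have h3 := le_totalDegree h2
  rw [Finsupp.sum_add_index' (fun _ => rfl) (fun _ _ _ => rfl), Finsupp.sum_single_index rfl] at h3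
  omega

/-- Criterion for algebraic independence over a field of constants of a family of derivations
acting on `u` as multiples of the partial derivatives. -/
theorem algInd_of_derivations {E W ι : Type*} [Field E] [Algebra ℂ E] [Field W] [Algebra ℂ W]
    [Algebra E W] (u : ι → W) (b : W) (hb : b ≠ 0) (D : ι → Derivation ℂ W W)
    (hE : ∀ i z, D i (algebraMap E W z) = 0) (hii : ∀ i, D i (u i) = b)
    (hij : ∀ i j, i ≠ j → D i (u j) = 0) : AlgebraicIndependent E u := by
  classical
  have chain : ∀ i (P : MvPolynomial ι E), D i (aeval u P) = b * aeval u (pderiv i P) := by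
    intro i P
    induction P using MvPolynomial.induction_on with
    | C a => simp [hE]
    | add p q hp hq => simp only [map_add, hp, hq, mul_add]
    | mul_X p j hp =>
      rw [map_mul, Derivation.leibniz, hp, pderiv_mul, aeval_X, map_add, map_mul, map_mul, aeval_X]
      simp only [smul_eq_mul]
      by_cases hj : i = j
      · subst hj
        rw [hii, pderiv_X_self, map_one]; ring
      · rw [hij i j hj, pderiv_X_of_ne (Ne.symm hj), map_zero]; ring
  have main : ∀ n, ∀ P : MvPolynomial ι E, P.totalDegree ≤ n → aeval u P = 0 → P = 0 := by
    intro n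
    induction n with
    | zero =>
      intro P hP h0
      have hC := totalDegree_eq_zero_iff_eq_C.1 (Nat.le_zero.1 hP)
      rw [hC] at h0 ⊢
      rw [aeval_C, map_eq_zero] at h0
      rw [h0, C_0]
    | succ n ih =>
      intro P hP h0
      have hpd : ∀ i, pderiv i P = 0 := by
        intro i
        by_contra hne
        have h1 := chain i P
        rw [h0, map_zero] at h1
        exact hne (ih _ (by have := totalDegree_pderiv_lt i hne; omega)
          ((mul_eq_zero.1 h1.symm).resolve_left hb))
      refine ih P ?_ h0
      have hz : P.totalDegree = 0 := by
        rw [totalDegree_eq_zero_iff]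
        intro m hm i
        by_contra hmi
        have h2 := congrArg (coeff (m - Finsupp.single i 1)) (hpd i)
        rw [coeff_pderiv, coeff_zero] at h2
        have h3 : m - Finsupp.single i 1 + Finsupp.single i 1 = m :=
          tsub_add_cancel_of_le (Finsupp.single_le_iff.2 (Nat.one_le_iff_ne_zero.2 hmi))
        rw [h3] at h2
        have h4 : CharZero E := charZero_of_injective_algebraMap (algebraMap ℂ E).injective
        rcases mul_eq_zero.1 h2 with h5 | h5
        · exact (mem_support_iff.1 hm) h5
        · norm_cast at h5
      omega
  rw [algebraicIndependent_iff]
  exact fun P hP => main _ P le_rfl hP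

end

section
open IntermediateField MvPolynomial

/-- Polynomials of degree at most `n` in the last two variables. -/
noncomputable def yLE (ι : Type) (n : ℕ) : Submodule ℂ (MvPolynomial (ι ⊕ Fin 2) ℂ) :=
  restrictSupport ℂ {m | m (Sum.inr 0) + m (Sum.inr 1) ≤ n}

theorem mem_yLE {ι : Type} {n : ℕ} {f : MvPolynomial (ι ⊕ Fin 2) ℂ} :
    f ∈ yLE ι n ↔ ∀ m ∈ f.support, m (Sum.inr 0) + m (Sum.inr 1) ≤ n := by
  rw [yLE, mem_restrictSupport_iff]; rfl

theorem yLE_mono {ι : Type} {m n : ℕ} (h : m ≤ n) : yLE ι m ≤ yLE ι n := by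
  intro f hf
  rw [mem_yLE] at hf ⊢
  exact fun s hs => (hf s hs).trans h

theorem yLE_mul {ι : Type} {m n : ℕ} {f g : MvPolynomial (ι ⊕ Fin 2) ℂ} (hf : f ∈ yLE ι m)
    (hg : g ∈ yLE ι n) : f * g ∈ yLE ι (m + n) := by
  classical
  rw [mem_yLE] at *
  intro s hs
  obtain ⟨a, ha, b, hb, rfl⟩ := Finset.mem_add.1 (support_mul f g hs)
  have := hf a ha
  have := hg b hb
  simp only [Finsupp.add_apply]
  omega

theorem yLE_pderiv {ι : Type} {n : ℕ} {f : MvPolynomial (ι ⊕ Fin 2) ℂ} (hf : f ∈ yLE ι n)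
    (i : ι ⊕ Fin 2) : pderiv i f ∈ yLE ι n := by
  classical
  rw [mem_yLE] at *
  intro s hs
  rw [mem_support_iff, coeff_pderiv] at hs
  have h2 : s + Finsupp.single i 1 ∈ f.support := by
    rw [mem_support_iff]; intro h0; rw [h0] at hs; simp at hs
  have := hf _ h2
  simp only [Finsupp.add_apply] at this
  omega

theorem rename_mem_yLE {ι : Type} (p : MvPolynomial ι ℂ) : rename Sum.inl p ∈ yLE ι 0 := by
  classical
  rw [mem_yLE]
  intro m hm
  rw [support_rename_of_injective Sum.inl_injective] at hm
  obtain ⟨s, -, rfl⟩ := Finset.mem_image.1 hm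
  rw [Finsupp.mapDomain_notin_range, Finsupp.mapDomain_notin_range] <;> simp

theorem X_inr_mem_yLE {ι : Type} (j : Fin 2) : (X (Sum.inr j) : MvPolynomial (ι ⊕ Fin 2) ℂ) ∈
    yLE ι 1 := by
  classical
  rw [mem_yLE]
  intro m hm
  rw [support_X, Finset.mem_singleton] at hm
  subst hm
  fin_cases j <;> simp [Finsupp.single_apply]

theorem X_inl_mem_yLE {ι : Type} (i : ι) : (X (Sum.inl i) : MvPolynomial (ι ⊕ Fin 2) ℂ) ∈
    yLE ι 0 := by
  simpa using rename_mem_yLE (X i : MvPolynomial ι ℂ)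

variable {ι K : Type} [Field K] [Algebra ℂ K]

/-- The polynomial ring in the coefficient variables and two more variables, mapped to plane
polynomials over the field generated by the values `a` of the coefficient variables. -/
noncomputable def imK (a : ι → K) :
    MvPolynomial (ι ⊕ Fin 2) ℂ →ₐ[ℂ] MvPolynomial (Fin 2) K :=
  aeval (Sum.elim (fun i => C (a i)) X)

theorem imK_rename (a : ι → K) (p : MvPolynomial ι ℂ) :
    imK a (rename Sum.inl p) = C (aeval a p) := by
  rw [imK, aeval_rename]
  exact (MvPolynomial.comp_aeval_apply a ((IsScalarTower.toAlgHom ℂ K (MvPolynomial (Fin 2) K))) p).symm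

theorem imK_totalDegree (a : ι → K) {n : ℕ} {f : MvPolynomial (ι ⊕ Fin 2) ℂ} (hf : f ∈ yLE ι n) :
    (imK a f).totalDegree ≤ n := by
  rw [mem_yLE] at hf
  rw [imK, aeval_def, eval₂_eq]
  refine (totalDegree_finset_sum _ _).trans (Finset.sup_le fun m hm => ?_)
  refine (totalDegree_mul _ _).trans ?_
  rw [IsScalarTower.algebraMap_apply ℂ K (MvPolynomial (Fin 2) K), algebraMap_eq, totalDegree_C,
    zero_add]
  have h1 : (∏ i ∈ m.support, (Sum.elim (fun i => C (a i)) X : ι ⊕ Fin 2 → MvPolynomial (Fin 2) K) i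
      ^ m i).totalDegree ≤ ∑ i ∈ m.support, Sum.elim (fun _ => 0) (fun j => m (Sum.inr j)) i := by
    refine (totalDegree_finset_prod _ _).trans (Finset.sum_le_sum fun i _ => ?_)
    rcases i with i | j
    · simp only [Sum.elim_inl]
      rw [← C_pow, totalDegree_C]
    · simp only [Sum.elim_inr]
      exact (totalDegree_pow _ _).trans (by rw [totalDegree_X, mul_one])
  refine h1.trans ((le_of_eq ?_).trans (hf m hm))
  classical
  have h2 : ∑ i ∈ m.support, Sum.elim (fun _ => 0) (fun j => m (Sum.inr j)) i =
      ∑ i ∈ (Finset.univ : Finset (Fin 2)).map ⟨Sum.inr, Sum.inr_injective⟩, m i := by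
    refine Finset.sum_congr_of_eq_on_inter ?_ ?_ ?_
    · intro i hi hn
      rcases i with i | j
      · rfl
      · exact absurd (by simp) hn
    · intro i hi hn
      rw [Finsupp.mem_support_iff, not_not] at hn
      exact hn
    · intro i hi hn
      rcases i with i | j
      · simp at hn
      · rfl
  rw [h2, Finset.sum_map]
  simp

theorem imK_injective {a : ι → K} (ha : AlgebraicIndependent ℂ a) :
    Function.Injective (imK a) := by
  have h1 : AlgebraicIndependent K (X : Fin 2 → MvPolynomial (Fin 2) K) :=
    MvPolynomial.algebraicIndependent_X _ _
  have h2 := ha.sumElim_comp h1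
  have h3 := h2.comp Sum.swap (Function.LeftInverse.injective Sum.swap_swap)
  have h4 : (Sum.elim (X : Fin 2 → MvPolynomial (Fin 2) K) (algebraMap K _ ∘ a)) ∘ Sum.swap =
      Sum.elim (fun i => C (a i)) X := by
    ext1 i; rcases i with i | i <;> rfl
  rw [h4] at h3
  exact h3

theorem exists_clear {a : ι → K} (hg : IntermediateField.adjoin ℂ (Set.range a) = ⊤)
    (G : MvPolynomial (Fin 2) K) :
    ∃ (c : MvPolynomial ι ℂ) (f : MvPolynomial (ι ⊕ Fin 2) ℂ), aeval a c ≠ 0 ∧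
      f ∈ yLE ι G.totalDegree ∧ imK a f = C (aeval a c) * G := by
  obtain ⟨D, P, hD, hP⟩ := exists_common_denom hg G.support (fun m => coeff m G)
  refine ⟨D, ∑ m ∈ G.support, rename Sum.inl (P m) *
    (X (Sum.inr 0) ^ m 0 * X (Sum.inr 1) ^ m 1), hD, ?_, ?_⟩
  · refine Submodule.sum_mem _ fun m hm => ?_
    have hpow : ∀ (j : Fin 2) (n : ℕ),
        (X (Sum.inr j) : MvPolynomial (ι ⊕ Fin 2) ℂ) ^ n ∈ yLE ι n := by
      intro j n
      induction n with
      | zero => simpa using rename_mem_yLE (1 : MvPolynomial ι ℂ)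
      | succ n ih => rw [pow_succ]; exact yLE_mul ih (X_inr_mem_yLE j)
    refine yLE_mono ?_ (yLE_mul (rename_mem_yLE (P m)) (yLE_mul (hpow 0 (m 0)) (hpow 1 (m 1))))
    have := le_totalDegree hm
    rw [Finsupp.sum_fintype _ _ (fun _ => rfl), Fin.sum_univ_two] at this
    omega
  · rw [map_sum]
    conv_rhs => rw [G.as_sum, Finset.mul_sum]
    refine Finset.sum_congr rfl fun m hm => ?_
    rw [map_mul, imK_rename, ← hP m hm, monomial_eq, Finsupp.prod_fintype _ _ (fun _ => pow_zero _),
      Fin.prod_univ_two, C_mul, mul_assoc]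
    simp [imK]

/-- Stability of the kernel of `evW` under a derivation follows from the case of the numerator of
the equation generating it. -/
theorem stable_of_generator {W : Type} [Field W] [Algebra K W] {a : ι → K}
    (ha : AlgebraicIndependent ℂ a)
    (hg : IntermediateField.adjoin ℂ (Set.range a) = ⊤) {η : Fin 2 → W}
    {Φ : MvPolynomial (Fin 2) K} (hΦ : ∀ N, aeval η N = 0 ↔ Φ ∣ N)
    {c : MvPolynomial ι ℂ} {f : MvPolynomial (ι ⊕ Fin 2) ℂ} (hc : aeval a c ≠ 0)
    (hf : imK a f = C (aeval a c) * Φ)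
    (Δ : Derivation ℂ (MvPolynomial (ι ⊕ Fin 2) ℂ) (MvPolynomial (ι ⊕ Fin 2) ℂ))
    (hΔ : aeval η (imK a (Δ f)) = 0) (N : MvPolynomial (ι ⊕ Fin 2) ℂ)
    (hN : aeval η (imK a N) = 0) : aeval η (imK a (Δ N)) = 0 := by
  obtain ⟨G, hG⟩ := (hΦ _).1 hN
  obtain ⟨c', g, hc', -, hg'⟩ := exists_clear hg G
  have h1 : rename Sum.inl c * rename Sum.inl c' * N = f * g := by
    apply imK_injective ha
    rw [map_mul, map_mul, map_mul, imK_rename, imK_rename, hf, hg', hG]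
    ring
  have h2 := congrArg (fun z => aeval η (imK a (Δ z))) h1
  have hf0 : aeval η (imK a f) = 0 := by rw [hf]; exact (hΦ _).2 (Dvd.intro_left _ rfl)
  simp only [Derivation.leibniz, smul_eq_mul, map_add, map_mul, hN, hΔ, hf0, imK_rename,
    aeval_C] at h2
  have h3 : algebraMap K W (aeval a c) ≠ 0 := by rwa [Ne, map_eq_zero]
  have h4 : algebraMap K W (aeval a c') ≠ 0 := by rwa [Ne, map_eq_zero]
  have h5 : algebraMap K W (aeval a c) * algebraMap K W (aeval a c') *
      aeval η (imK a (Δ N)) = 0 := by linear_combination h2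
  exact (mul_eq_zero.1 h5).resolve_left (mul_ne_zero h3 h4)

/-- The function field of the plane curve `Φ = 0`. -/
theorem exists_planeField {Φ : MvPolynomial (Fin 2) K} (hΦ : Prime Φ) :
    ∃ (W : Type) (_ : Field W) (_ : Algebra K W) (η : Fin 2 → W),
      (∀ N, aeval η N = 0 ↔ Φ ∣ N) ∧ IntermediateField.adjoin K (Set.range η) = ⊤ := by
  have hP : (Ideal.span {Φ}).IsPrime := (Ideal.span_singleton_prime hΦ.ne_zero).2 hΦ
  obtain ⟨q, hq⟩ : ∃ q : MvPolynomial (Fin 2) K →ₐ[K]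
      FractionRing (MvPolynomial (Fin 2) K ⧸ Ideal.span {Φ}),
      q = (IsScalarTower.toAlgHom K (MvPolynomial (Fin 2) K ⧸ Ideal.span {Φ}) _).comp
        (Ideal.Quotient.mkₐ K (Ideal.span {Φ})) := ⟨_, rfl⟩
  have hq' : ∀ N, q N = algebraMap (MvPolynomial (Fin 2) K ⧸ Ideal.span {Φ})
      (FractionRing (MvPolynomial (Fin 2) K ⧸ Ideal.span {Φ}))
      (Ideal.Quotient.mk (Ideal.span {Φ}) N) := fun N => by rw [hq]; rfl
  have hqa : aeval (fun j => q (X j)) = q := by ext; simp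
  refine ⟨_, inferInstance, inferInstance, fun j => q (X j), ?_, ?_⟩
  · intro N
    rw [hqa, hq', ← Ideal.mem_span_singleton, ← Ideal.Quotient.eq_zero_iff_mem]
    exact IsFractionRing.to_map_eq_zero_iff
  · rw [eq_top_iff]
    rintro z -
    have hmem : ∀ N, q N ∈ IntermediateField.adjoin K (Set.range fun j => q (X j)) := by
      intro N
      refine IntermediateField.algebra_adjoin_le_adjoin K _ ?_
      rw [Algebra.adjoin_range_eq_range_aeval, hqa]
      exact ⟨N, rfl⟩
    obtain ⟨u, v, hv, rfl⟩ := IsFractionRing.div_surjective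
      (A := MvPolynomial (Fin 2) K ⧸ Ideal.span {Φ}) z
    obtain ⟨u, rfl⟩ := Ideal.Quotient.mk_surjective u
    obtain ⟨v, rfl⟩ := Ideal.Quotient.mk_surjective v
    have h1 := hmem u
    have h2 := hmem v
    rw [hq'] at h1 h2
    exact div_mem h1 h2

end

section
open IntermediateField MvPolynomial

theorem adjoin_range_subtype {κ W τ : Type*} [Field κ] [Field W] [Algebra κ W] (w : τ → W) :
    IntermediateField.adjoin κ (Set.range fun i =>
      (⟨w i, IntermediateField.subset_adjoin κ _ ⟨i, rfl⟩⟩ :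
        IntermediateField.adjoin κ (Set.range w))) = ⊤ := by
  have h1 : (IntermediateField.adjoin κ (Set.range fun i =>
      (⟨w i, IntermediateField.subset_adjoin κ _ ⟨i, rfl⟩⟩ :
        IntermediateField.adjoin κ (Set.range w)))).map
        (IntermediateField.adjoin κ (Set.range w)).val =
      IntermediateField.adjoin κ (Set.range w) := by
    rw [IntermediateField.adjoin_map, ← Set.range_comp]
    rfl
  rw [eq_top_iff]
  rintro ⟨z, hz⟩ -
  rw [← h1] at hz
  obtain ⟨z', hz', h2⟩ := hz
  have : z' = ⟨z, by rw [← h2]; exact z'.2⟩ := Subtype.ext h2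
  rwa [this] at hz'

theorem adjoin_gen_top {κ W : Type*} [Field κ] [Field W] [Algebra κ W] (t : W) :
    IntermediateField.adjoin κ {AdjoinSimple.gen κ t} = ⊤ := by
  have h1 : (IntermediateField.adjoin κ {AdjoinSimple.gen κ t}).map κ⟮t⟯.val = κ⟮t⟯ := by
    rw [IntermediateField.adjoin_map, Set.image_singleton]
    rfl
  rw [eq_top_iff]
  rintro ⟨z, hz⟩ -
  have hz2 := hz
  rw [← h1] at hz2
  obtain ⟨z', hz', h2⟩ := hz2
  have : z' = ⟨z, hz⟩ := Subtype.ext h2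
  rwa [this] at hz'

theorem adjoin_tower_top {κ K W τ : Type*} [Field κ] [Field K] [Field W] [Algebra κ K]
    [Algebra K W] [Algebra κ W] [IsScalarTower κ K W] {u : τ → K} {S : Set W}
    (hu : IntermediateField.adjoin κ (Set.range u) = ⊤)
    (hS : IntermediateField.adjoin K S = ⊤) (M : IntermediateField κ W)
    (h1 : ∀ i, algebraMap K W (u i) ∈ M) (h2 : S ⊆ M) : M = ⊤ := by
  have hK : ∀ z : K, algebraMap K W z ∈ M := by
    intro z
    have hz : z ∈ IntermediateField.adjoin κ (Set.range u) := by rw [hu]; trivial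
    have : IntermediateField.adjoin κ (Set.range u) ≤
        M.comap (IsScalarTower.toAlgHom κ K W) := by
      rw [IntermediateField.adjoin_le_iff]
      rintro _ ⟨i, rfl⟩
      exact h1 i
    exact this hz
  let M' : IntermediateField K W := { M.toSubfield with algebraMap_mem' := hK }
  have h3 : IntermediateField.adjoin K S ≤ M' := by
    rw [IntermediateField.adjoin_le_iff]; exact h2
  rw [eq_top_iff]
  rintro z -
  have : z ∈ IntermediateField.adjoin K S := by rw [hS]; trivial
  exact h3 this

theorem pderiv_eq_zero_imp {K σ : Type*} [Field K] [CharZero K] {i : σ} {P : MvPolynomial σ K}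
    (h : pderiv i P = 0) : ∀ m ∈ P.support, m i = 0 := by
  classical
  intro m hm
  by_contra hmi
  have h2 := congrArg (coeff (m - Finsupp.single i 1)) h
  rw [coeff_pderiv, coeff_zero] at h2
  have h3 : m - Finsupp.single i 1 + Finsupp.single i 1 = m :=
    tsub_add_cancel_of_le (Finsupp.single_le_iff.2 (Nat.one_le_iff_ne_zero.2 hmi))
  rw [h3] at h2
  rcases mul_eq_zero.1 h2 with h5 | h5
  · exact (mem_support_iff.1 hm) h5
  · norm_cast at h5

/-- A plane equation of small degree satisfied by `y` involves both variables. -/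
theorem not_univariate {K L : Type*} [Field K] [Field L] [Algebra K L] [FiniteDimensional K L]
    {y : Fin 2 → L} {Φ : MvPolynomial (Fin 2) K} (hΦ : Φ ≠ 0) (h0 : aeval y Φ = 0)
    (hd : Φ.totalDegree < Module.finrank K L) {i j : Fin 2} (hij : i ≠ j) (hgen : K⟮y j⟯ = ⊤)
    (hm : ∀ m ∈ Φ.support, m i = 0) : False := by
  obtain ⟨P, hP⟩ : ∃ P : Polynomial K, P = ∑ m ∈ Φ.support,
    Polynomial.C (coeff m Φ) * Polynomial.X ^ (m j) := ⟨_, rfl⟩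
  have h1 : Polynomial.aeval (X j : MvPolynomial (Fin 2) K) P = Φ := by
    rw [hP, map_sum]
    conv_rhs => rw [Φ.as_sum]
    refine Finset.sum_congr rfl fun m hm' => ?_
    rw [map_mul, Polynomial.aeval_C, map_pow, Polynomial.aeval_X, monomial_eq,
      Finsupp.prod_fintype _ _ (fun _ => pow_zero _), Fin.prod_univ_two, algebraMap_eq]
    have := hm m hm'
    fin_cases i <;> fin_cases j <;> simp_all
  have hP0 : P ≠ 0 := by rintro rfl; rw [map_zero] at h1; exact hΦ h1.symm
  have hPd : P.natDegree ≤ Φ.totalDegree := by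
    rw [hP]
    refine Polynomial.natDegree_sum_le_of_forall_le _ _ fun m hm' => ?_
    refine (Polynomial.natDegree_C_mul_X_pow_le _ _).trans ?_
    have := le_totalDegree hm'
    rw [Finsupp.sum_fintype _ _ (fun _ => rfl), Fin.sum_univ_two] at this
    fin_cases j <;> simp <;> omega
  have h2 : Polynomial.aeval (y j) P = 0 := by
    rw [← h0, ← h1, ← Polynomial.aeval_algHom_apply, aeval_X]
  have h3 : Module.finrank K L = (minpoly K (y j)).natDegree := by
    rw [← IntermediateField.adjoin.finrank (Algebra.IsIntegral.isIntegral (y j)), hgen,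
      IntermediateField.finrank_top']
  have h4 := Polynomial.natDegree_le_of_dvd (minpoly.dvd K (y j) h2) hP0
  omega

/-- On a plane curve that is not a union of lines parallel to the second axis, the first
coordinate is transcendental. -/
theorem transcendental_of_plane {K W : Type*} [Field K] [Field W] [Algebra K W] {η : Fin 2 → W}
    {Φ : MvPolynomial (Fin 2) K} (hη : ∀ N, aeval η N = 0 → Φ ∣ N)
    (hΦ : ¬ ∀ m ∈ Φ.support, m 1 = 0) : Transcendental K (η 0) := by
  rintro ⟨P, hP, h0⟩
  apply hΦ
  obtain ⟨G, hG⟩ := hη (Polynomial.aeval (X 0) P) (by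
    rw [← Polynomial.aeval_algHom_apply, aeval_X, h0])
  have hne : Polynomial.aeval (X 0 : MvPolynomial (Fin 2) K) P ≠ 0 := by
    intro h1
    have : aeval (fun _ => Polynomial.X : Fin 2 → Polynomial K)
        (Polynomial.aeval (X 0 : MvPolynomial (Fin 2) K) P) = P := by
      rw [← Polynomial.aeval_algHom_apply, aeval_X, Polynomial.aeval_X_left_apply]
    rw [h1, map_zero] at this
    exact hP this.symm
  have hdeg : degreeOf 1 (Polynomial.aeval (X 0 : MvPolynomial (Fin 2) K) P) = 0 := by
    rw [Polynomial.aeval_eq_sum_range, ← Nat.le_zero]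
    refine (degreeOf_sum_le _ _ _).trans (Finset.sup_le fun i _ => ?_)
    rw [smul_eq_C_mul]
    refine (degreeOf_C_mul_le _ _ _).trans ((degreeOf_pow_le _ _ _).trans ?_)
    rw [degreeOf_X_of_ne (by decide)]
    simp
  have hΦ0 : Φ ≠ 0 := by rintro rfl; rw [zero_mul] at hG; exact hne hG
  have hG0 : G ≠ 0 := by rintro rfl; rw [mul_zero] at hG; exact hne hG
  rw [hG, degreeOf_mul_eq hΦ0 hG0] at hdeg
  have h5 : degreeOf 1 Φ = 0 := by omega
  intro m hm
  exact Nat.le_zero.1 (h5 ▸ monomial_le_degreeOf 1 hm)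

theorem exists_eqn_one {K W E : Type*} [Field K] [Field W] [Algebra K W] [Field E] [Algebra E W]
    {η : Fin 2 → W} {Φ : MvPolynomial (Fin 2) K} (hΦ : Φ ≠ 0) (h0 : aeval η Φ = 0)
    (ht : Transcendental K (η 0)) (hK : ∀ z : K, ∃ e : E, algebraMap E W e = algebraMap K W z)
    (hη : ∃ e : E, algebraMap E W e = η 0) :
    ∃ Ψ : Polynomial E, Ψ ≠ 0 ∧ Ψ.natDegree ≤ Φ.totalDegree ∧ Polynomial.aeval (η 1) Ψ = 0 := by
  obtain ⟨P, hP⟩ : ∃ P, P = (Polynomial.Bivariate.equivMvPolynomial K).symm Φ := ⟨_, rfl⟩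
  have hP0 : P ≠ 0 := by
    intro h1; rw [h1] at hP
    exact hΦ ((map_eq_zero_iff _ (AlgEquiv.injective _)).1 hP.symm)
  have hPs : P = ∑ m ∈ Φ.support, Polynomial.C (Polynomial.C (coeff m Φ) * Polynomial.X ^ (m 0)) *
      Polynomial.X ^ (m 1) := by
    rw [hP]
    conv_lhs => rw [Φ.as_sum, map_sum]
    refine Finset.sum_congr rfl fun m _ => ?_
    rw [monomial_eq, Finsupp.prod_fintype _ _ (fun _ => pow_zero _), Fin.prod_univ_two]
    simp [mul_assoc]
  have hinj : Function.Injective (Polynomial.aeval (R := K) (η 0)) :=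
    transcendental_iff_injective.1 ht
  obtain ⟨Q, hQ⟩ : ∃ Q, Q = P.map (Polynomial.aeval (R := K) (η 0)).toRingHom := ⟨_, rfl⟩
  have hlift : Q ∈ Polynomial.lifts (algebraMap E W) := by
    rw [Polynomial.lifts_iff_coeff_lifts]
    intro n
    rw [hQ, Polynomial.coeff_map]
    obtain ⟨e0, he0⟩ := hη
    have : ∀ p : Polynomial K, (Polynomial.aeval (R := K) (η 0)) p ∈ (algebraMap E W).range := by
      intro p
      rw [Polynomial.aeval_eq_sum_range]
      refine sum_mem fun i _ => ?_
      rw [Algebra.smul_def]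
      have hp : η 0 ∈ (algebraMap E W).range := ⟨e0, he0⟩
      refine mul_mem ?_ (pow_mem hp _)
      obtain ⟨e, he⟩ := hK (p.coeff i)
      exact ⟨e, he⟩
    exact this _
  obtain ⟨Ψ, hΨ⟩ := (Polynomial.mem_lifts _).1 hlift
  have hd1 : Q.natDegree = P.natDegree := by
    rw [hQ]; exact Polynomial.natDegree_map_eq_of_injective hinj P
  have hd2 : Q.natDegree = Ψ.natDegree := by rw [← hΨ]; exact Polynomial.natDegree_map _
  refine ⟨Ψ, ?_, ?_, ?_⟩
  · rintro rfl
    rw [Polynomial.map_zero] at hΨ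
    rw [← hΨ] at hQ
    exact hP0 ((Polynomial.map_eq_zero_iff hinj).1 hQ.symm)
  · rw [← hd2, hd1, hPs]
    refine Polynomial.natDegree_sum_le_of_forall_le _ _ fun m hm' => ?_
    refine (Polynomial.natDegree_C_mul_X_pow_le _ _).trans ?_
    have := le_totalDegree hm'
    rw [Finsupp.sum_fintype _ _ (fun _ => rfl), Fin.sum_univ_two] at this
    omega
  · rw [← Polynomial.eval_map_algebraMap, hΨ, hQ, hPs, Polynomial.map_sum, Polynomial.eval_finset_sum,
      ← h0]
    conv_rhs => rw [Φ.as_sum, map_sum]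
    refine Finset.sum_congr rfl fun m _ => ?_
    rw [aeval_monomial, Finsupp.prod_fintype _ _ (fun _ => pow_zero _), Fin.prod_univ_two]
    simp [mul_assoc]

theorem exists_planeField' {k K : Type} [Field k] [Field K] [Algebra ℂ k] [Algebra k K]
    [Algebra ℂ K] [IsScalarTower ℂ k K] {Φ : MvPolynomial (Fin 2) K} (hΦ : Prime Φ) :
    ∃ (W : Type) (_ : Field W) (_ : Algebra ℂ W) (_ : Algebra k W) (_ : Algebra K W)
      (_ : IsScalarTower ℂ k W) (_ : IsScalarTower k K W) (_ : IsScalarTower ℂ K W)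
      (η : Fin 2 → W),
      (∀ N, aeval η N = 0 ↔ Φ ∣ N) ∧ IntermediateField.adjoin K (Set.range η) = ⊤ := by
  obtain ⟨W, i1, i2, η, h1, h2⟩ := exists_planeField hΦ
  letI : Algebra k W := ((algebraMap K W).comp (algebraMap k K)).toAlgebra
  letI : Algebra ℂ W := ((algebraMap K W).comp (algebraMap ℂ K)).toAlgebra
  refine ⟨W, i1, inferInstance, inferInstance, i2, ?_, ?_, ?_, η, h1, h2⟩
  · refine IsScalarTower.of_algebraMap_eq fun z => ?_
    change algebraMap K W (algebraMap ℂ K z) = algebraMap K W (algebraMap k K (algebraMap ℂ k z))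
    rw [IsScalarTower.algebraMap_apply ℂ k K]
  · exact IsScalarTower.of_algebraMap_eq fun z => rfl
  · exact IsScalarTower.of_algebraMap_eq fun z => rfl

end

section
open IntermediateField MvPolynomial

namespace IsGen
variable {k F L : Type} [Field k] [Field F] [Field L] [Algebra ℂ k] [Algebra ℂ F]
    [Algebra ℂ L] [Algebra k L] [Algebra F L] [IsScalarTower ℂ k L] [IsScalarTower ℂ F L]
    {r : ℕ} {x : Fin (r + 1) → F} {U : Fin 3 × Fin (r + 1) → k}

/-- The partial derivative with respect to a generic coefficient, as a derivation of `L`. -/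
theorem exists_pderiv (h : IsGen k F L x U) (p : Fin 3 × Fin (r + 1)) :
    ∃ D : Derivation ℂ L L, (∀ z, D (algebraMap F L z) = 0) ∧ D (algebraMap k L (U p)) = 1 ∧
      ∀ p', p' ≠ p → D (algebraMap k L (U p')) = 0 := by
  obtain ⟨D, hD⟩ := exists_derivation_lift
    ((aeval fun p => algebraMap k L (U p) : MvPolynomial (Fin 3 × Fin (r + 1)) F →ₐ[F]
      L).restrictScalars ℂ)
    (fun z => by
      obtain ⟨a, b, hb, hab⟩ := exists_frac h.adjL z
      exact ⟨a, b, hb, hab⟩)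
    ((pderiv p : Derivation F _ _).restrictScalars ℂ)
    (fun f hf => by
      have : f = 0 := h.indep.eq_zero_of_aeval_eq_zero _ hf
      rw [this]; simp)
  refine ⟨D, ?_, ?_, ?_⟩
  · intro z
    have := hD (C z)
    simpa using this
  · have := hD (X p)
    simpa using this
  · intro p' hp'
    have := hD (X p')
    simpa [pderiv_X_of_ne hp'] using this

/-- Index type of the coefficient variables: one for `y 0` and one for each generic
coefficient. -/
abbrev LI (r : ℕ) : Type := Option (Fin 3 × Fin (r + 1))

/-- The position of the variable standing for `y j`. -/
def yi (r : ℕ) : Fin 3 → LI r ⊕ Fin 2 := ![Sum.inl none, Sum.inr 0, Sum.inr 1]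

/-- Chain rule for the partial derivative `D` with respect to a generic coefficient `u_p`: it acts
on a polynomial in `u` and `y` directly and through `y_{p.1}`, whose derivative is `x_{p.2}`. -/
theorem chain (h : IsGen k F L x U) {D : Derivation ℂ L L} {p : Fin 3 × Fin (r + 1)}
    (hF : ∀ z, D (algebraMap F L z) = 0) (hp : D (algebraMap k L (U p)) = 1)
    (hp' : ∀ p', p' ≠ p → D (algebraMap k L (U p')) = 0) {v : LI r ⊕ Fin 2 → L}
    (hv : ∀ p, v (Sum.inl (some p)) = algebraMap k L (U p))
    (hy : ∀ j, v (yi r j) = gy L x U j)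
    (N : MvPolynomial (LI r ⊕ Fin 2) ℂ) :
    D (aeval v N) = aeval v (pderiv (Sum.inl (some p)) N) +
      gx L x p.2 * aeval v (pderiv (yi r p.1) N) := by
  classical
  have hDy : ∀ j, D (gy L x U j) = if p.1 = j then gx L x p.2 else 0 := by
    intro j
    have : gy L x U j = ∑ i, algebraMap k L (U (j, i)) * algebraMap F L (x i) := rfl
    rw [this, map_sum]
    by_cases hj : p.1 = j
    · rw [if_pos hj, Finset.sum_eq_single p.2]
      · have h1 : ((j, p.2) : Fin 3 × Fin (r + 1)) = p := by rw [← hj]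
        rw [Derivation.leibniz, hF, h1, hp]
        simp [gx]
      · intro i _ hi
        rw [Derivation.leibniz, hF, hp' _ (fun h2 => hi (by rw [← h2]))]
        simp
      · intro h2; exact absurd (Finset.mem_univ _) h2
    · rw [if_neg hj]
      refine Finset.sum_eq_zero fun i _ => ?_
      rw [Derivation.leibniz, hF, hp' _ (fun h2 => hj (by rw [← h2]))]
      simp
  have hne : ∀ j, (yi r j) ≠ Sum.inl (some p) := by
    intro j; fin_cases j <;> simp [yi]
  have hinj : ∀ i j, yi r i = yi r j → i = j := by
    intro i j; fin_cases i <;> fin_cases j <;> simp [yi]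
  have hX : ∀ i : LI r ⊕ Fin 2, (∃ q, i = Sum.inl (some q)) ∨ ∃ j, i = yi r j := by
    rintro ((_ | q) | j)
    · exact Or.inr ⟨0, rfl⟩
    · exact Or.inl ⟨q, rfl⟩
    · fin_cases j
      · exact Or.inr ⟨1, rfl⟩
      · exact Or.inr ⟨2, rfl⟩
  have hDX : ∀ i, D (v i) = aeval v (pderiv (Sum.inl (some p)) (X i : MvPolynomial (LI r ⊕ Fin 2) ℂ))
      + gx L x p.2 * aeval v (pderiv (yi r p.1) (X i : MvPolynomial (LI r ⊕ Fin 2) ℂ)) := by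
    intro i
    rcases hX i with ⟨q, rfl⟩ | ⟨j, rfl⟩
    · rw [hv]
      by_cases hq : q = p
      · subst hq
        rw [hp, pderiv_X_self, pderiv_X_of_ne (hne q.1).symm]; simp
      · rw [hp' q hq, pderiv_X_of_ne (by simpa using hq), pderiv_X_of_ne]
        · simp
        · intro h2
          rcases p with ⟨j, i⟩
          fin_cases j <;> simp [yi] at h2
    · rw [hy, hDy, pderiv_X_of_ne (hne j)]
      by_cases hj : p.1 = j
      · rw [if_pos hj, ← hj, pderiv_X_self]; simp
      · rw [if_neg hj, pderiv_X_of_ne (fun h2 => hj (hinj _ _ h2).symm)]; simp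
  induction N using MvPolynomial.induction_on with
  | C a => simp
  | add p q hp hq => simp only [map_add, hp, hq]; ring
  | mul_X q i hq =>
    rw [map_mul, Derivation.leibniz, hq, aeval_X, hDX i, pderiv_mul, pderiv_mul]
    simp only [smul_eq_mul, map_add, map_mul, aeval_X]
    ring

end IsGen

end

section
open IntermediateField MvPolynomial

namespace IsGen

set_option maxHeartbeats 1000000 in
/-- The formal core of the lifting argument: the coordinates on the surface are
`ξ i = - f_{u_{1i}} / f_{y_1}`, and every identity needed for them is a polynomial identity of small
degree, transported from the curve (`qL`) to the surface (`qW`) by `hBz`. -/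
theorem lift_core {L W : Type} [Field L] [Field W] [Algebra ℂ L] [Algebra ℂ W] {r e : ℕ}
    (he : 1 ≤ e) (qL : MvPolynomial (LI r ⊕ Fin 2) ℂ →ₐ[ℂ] L)
    (qW : MvPolynomial (LI r ⊕ Fin 2) ℂ →ₐ[ℂ] W) {f : MvPolynomial (LI r ⊕ Fin 2) ℂ}
    (hsp : ∀ N, qW N = 0 → qL N = 0)
    (hBz : ∀ N, N ∈ yLE (LI r) (3 * e) → qL N = 0 → qW N = 0)
    (hfe : f ∈ yLE (LI r) e) (hf0 : qL f = 0) (hB0 : qL (pderiv (Sum.inr 0) f) ≠ 0)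
    (hst : ∀ Δ : Derivation ℂ (MvPolynomial (LI r ⊕ Fin 2) ℂ) (MvPolynomial (LI r ⊕ Fin 2) ℂ),
      qW (Δ f) = 0 → ∀ N, qW N = 0 → qW (Δ N) = 0)
    (hfrac : ∀ z : W, ∃ a b, qW b ≠ 0 ∧ z * qW b = qW a)
    {gx : Fin (r + 1) → L} (hx0 : gx 0 = 1)
    (hch : ∀ p : Fin 3 × Fin (r + 1), ∃ D : Derivation ℂ L L, (∀ i, D (gx i) = 0) ∧
      ∀ N, D (qL N) = qL (pderiv (Sum.inl (some p)) N) + gx p.2 * qL (pderiv (yi r p.1) N))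
    (hy : ∀ j, qL (X (yi r j)) = ∑ i, qL (X (Sum.inl (some (j, i)))) * gx i) :
    ∃ ξ : Fin (r + 1) → W, ξ 0 = 1 ∧
      (∀ j, qW (X (yi r j)) = ∑ i, qW (X (Sum.inl (some (j, i)))) * ξ i) ∧
      (∃ (b : W) (D : Fin 3 × Fin (r + 1) → Derivation ℂ W W), b ≠ 0 ∧
        (∀ p i, D p (ξ i) = 0) ∧ (∀ p, D p (qW (X (Sum.inl (some p)))) = b) ∧
        ∀ p p', p ≠ p' → D p (qW (X (Sum.inl (some p')))) = 0) ∧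
      ∀ g : MvPolynomial (Fin (r + 1)) ℂ, aeval ξ g = 0 → aeval gx g = 0 := by
  obtain ⟨B, hB⟩ : ∃ B, B = pderiv (Sum.inr 0) f := ⟨_, rfl⟩
  obtain ⟨A, hA⟩ : ∃ A : Fin (r + 1) → MvPolynomial (LI r ⊕ Fin 2) ℂ,
    ∀ i, A i = pderiv (Sum.inl (some (1, i))) f := ⟨_, fun _ => rfl⟩
  have hBe : B ∈ yLE (LI r) e := hB ▸ yLE_pderiv hfe _
  have hAe : ∀ i, A i ∈ yLE (LI r) e := fun i => hA i ▸ yLE_pderiv hfe _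
  rw [← hB] at hB0
  have hyi1 : yi r 1 = Sum.inr 0 := rfl
  have qA : ∀ i, qL (A i) = - (gx i * qL B) := by
    intro i
    obtain ⟨D, -, hD⟩ := hch (1, i)
    have := hD f
    rw [hf0, map_zero, ← hA, hyi1, ← hB] at this
    exact eq_neg_of_add_eq_zero_left this.symm
  have hWB : qW B ≠ 0 := fun h => hB0 (hsp _ h)
  obtain ⟨Δ, hΔ⟩ : ∃ Δ : Fin 3 × Fin (r + 1) →
      Derivation ℂ (MvPolynomial (LI r ⊕ Fin 2) ℂ) (MvPolynomial (LI r ⊕ Fin 2) ℂ),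
      ∀ p N, Δ p N = B * pderiv (Sum.inl (some p)) N - A p.2 * pderiv (yi r p.1) N :=
    ⟨fun p => B • pderiv (Sum.inl (some p)) - A p.2 • pderiv (yi r p.1), fun p N => by
      rw [Derivation.sub_apply, Derivation.smul_apply, Derivation.smul_apply, smul_eq_mul, smul_eq_mul]⟩
  have hΔe : ∀ p n N, N ∈ yLE (LI r) n → Δ p N ∈ yLE (LI r) (e + n) := fun p n N hN => by
    rw [hΔ]
    exact Submodule.sub_mem _ (yLE_mul hBe (yLE_pderiv hN _)) (yLE_mul (hAe _) (yLE_pderiv hN _))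
  choose D hDx hD using hch
  have hΔL : ∀ p N, qL (Δ p N) = qL B * D p (qL N) := fun p N => by
    rw [hΔ, hD, map_sub, map_mul, map_mul, qA]; ring
  have hst' : ∀ p N, qW N = 0 → qW (Δ p N) = 0 := fun p => hst (Δ p) <| by
    refine hBz _ (yLE_mono (by omega) (hΔe p e f hfe)) ?_
    rw [hΔL, hf0, map_zero, mul_zero]
  have hDW := fun p => exists_derivation_lift qW hfrac (Δ p) (hst' p)
  choose DW hDW using hDW
  obtain ⟨ξ, hξ⟩ : ∃ ξ : Fin (r + 1) → W, ∀ i, ξ i = - qW (A i) / qW B := ⟨_, fun _ => rfl⟩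
  have hξB : ∀ i, qW B * ξ i = - qW (A i) := fun i => by rw [hξ]; field_simp
  refine ⟨ξ, ?_, ?_, ⟨qW B, DW, hWB, ?_, ?_, ?_⟩, ?_⟩
  · have : qW (A 0 + B) = 0 := by
      refine hBz _ (yLE_mono (by omega) (Submodule.add_mem _ (hAe 0) hBe)) ?_
      rw [map_add, qA, hx0]; ring
    rw [map_add] at this
    rw [hξ, div_eq_one_iff_eq hWB]
    linear_combination -this
  · intro j
    have key : qW (X (yi r j) * B + ∑ i, X (Sum.inl (some (j, i))) * A i) = 0 := by
      refine hBz _ ?_ ?_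
      · refine Submodule.add_mem _ (yLE_mono (m := 1 + e) (by omega) (yLE_mul ?_ hBe))
          (Submodule.sum_mem _ fun i _ => yLE_mono (m := 0 + e) (by omega)
            (yLE_mul (X_inl_mem_yLE _) (hAe i)))
        fin_cases j
        · exact yLE_mono zero_le_one (X_inl_mem_yLE _)
        · exact X_inr_mem_yLE _
        · exact X_inr_mem_yLE _
      · simp only [map_add, map_mul, map_sum, qA, hy, Finset.sum_mul, ← Finset.sum_add_distrib]
        exact Finset.sum_eq_zero fun i _ => by ring
    refine mul_right_cancel₀ hWB ?_
    simp only [map_add, map_mul, map_sum] at key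
    rw [eq_neg_of_add_eq_zero_left key, Finset.sum_mul, ← Finset.sum_neg_distrib]
    refine Finset.sum_congr rfl fun i _ => ?_
    linear_combination -(qW (X (Sum.inl (some (j, i))))) * hξB i
  · intro p i
    have key : qW (Δ p (A i) * B - A i * Δ p B) = 0 := by
      refine hBz _ (Submodule.sub_mem _ (yLE_mono ?_ (yLE_mul (hΔe p e _ (hAe i)) hBe))
        (yLE_mono ?_ (yLE_mul (hAe i) (hΔe p e _ hBe)))) ?_
      · omega
      · omega
      · rw [map_sub, map_mul, map_mul, hΔL, hΔL, qA, map_neg, Derivation.leibniz, hDx]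
        simp only [smul_eq_mul]; ring
    have e1 := congrArg (DW p) (hξB i)
    rw [Derivation.leibniz, map_neg, hDW, hDW] at e1
    simp only [smul_eq_mul] at e1
    simp only [map_sub, map_mul] at key
    have : qW B ^ 2 * DW p (ξ i) = 0 := by
      linear_combination qW B * e1 - key - qW (Δ p B) * hξB i
    exact (mul_eq_zero.1 this).resolve_left (pow_ne_zero 2 hWB)
  · intro p
    rw [hDW, hΔ, pderiv_X_self, mul_one, pderiv_X_of_ne, mul_zero, sub_zero]
    obtain ⟨j, i⟩ := p
    fin_cases j <;> simp [yi]
  · intro p p' hpp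
    rw [hDW, hΔ, pderiv_X_of_ne, pderiv_X_of_ne, mul_zero, mul_zero, sub_zero, map_zero]
    · obtain ⟨j, i⟩ := p
      fin_cases j <;> simp [yi]
    · simpa using fun h => hpp h.symm
  · intro g hg
    have key : ∃ n N, qW B ^ n * aeval ξ g = qW N ∧ qL B ^ n * aeval gx g = qL N := by
      clear hg
      induction g using MvPolynomial.induction_on with
      | C c => exact ⟨0, C c, by simp [← algebraMap_eq, AlgHom.commutes],
          by simp [← algebraMap_eq, AlgHom.commutes]⟩
      | add p q hp hq =>
        obtain ⟨n, N, h1, h2⟩ := hp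
        obtain ⟨m, M, h3, h4⟩ := hq
        refine ⟨n + m, B ^ m * N + B ^ n * M, ?_, ?_⟩
        · simp only [map_add, map_mul, map_pow, ← h1, ← h3]; ring
        · simp only [map_add, map_mul, map_pow, ← h2, ← h4]; ring
      | mul_X p i hp =>
        obtain ⟨n, N, h1, h2⟩ := hp
        refine ⟨n + 1, - (N * A i), ?_, ?_⟩
        · simp only [map_mul, map_neg, ← h1, aeval_X]
          linear_combination qW B ^ n * aeval ξ p * hξB i
        · simp only [map_mul, map_neg, ← h2, aeval_X, qA]
          ring
    obtain ⟨n, N, h1, h2⟩ := key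
    rw [hg, mul_zero] at h1
    rw [hsp N h1.symm] at h2
    exact (mul_eq_zero.1 h2).resolve_left (pow_ne_zero n hB0)

end IsGen

end

section
open IntermediateField MvPolynomial

theorem isAlgebraic_elem_of_range_subset {K A L : Type*} [Field K] [Field A] [Field L]
    [Algebra K L] [Algebra A L] {e : L} (he : IsAlgebraic K e)
    (h : ∀ z : K, ∃ a : A, algebraMap K L z = algebraMap A L a) : IsAlgebraic A e := by
  obtain ⟨q, hq, hqe⟩ := he
  choose f hf using h
  have hinj := (algebraMap A L).injective
  let ρ : K →+* A :=
    { toFun := f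
      map_one' := hinj (by rw [← hf, map_one, map_one])
      map_zero' := hinj (by rw [← hf, map_zero, map_zero])
      map_mul' := fun a b => hinj (by rw [← hf, map_mul, map_mul, hf, hf])
      map_add' := fun a b => hinj (by rw [← hf, map_add, map_add, hf, hf]) }
  have hρ : (algebraMap A L).comp ρ = algebraMap K L := RingHom.ext fun z => (hf z).symm
  refine ⟨q.map ρ, (Polynomial.map_ne_zero_iff ρ.injective).2 hq, ?_⟩
  rw [Polynomial.aeval_def, Polynomial.eval₂_map, hρ]
  exact hqe

namespace IsGen

variable {k F L : Type} [Field k] [Field F] [Field L] [Algebra ℂ k] [Algebra ℂ F]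
    [Algebra ℂ L] [Algebra k L] [Algebra F L] [IsScalarTower ℂ k L] [IsScalarTower ℂ F L]
    {r : ℕ} {x : Fin (r + 1) → F} {U : Fin 3 × Fin (r + 1) → k}

/-- The coordinates `(y_0, u)` on the field `k(y_0)`. -/
noncomputable def la (t : L) (U : Fin 3 × Fin (r + 1) → k) : LI r → k⟮t⟯ :=
  fun o => o.elim (AdjoinSimple.gen k t) fun p => algebraMap k k⟮t⟯ (U p)

theorem la_adjoin (h : IsGen k F L x U) (t : L) :
    IntermediateField.adjoin ℂ (Set.range (la t U)) = ⊤ := by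
  refine adjoin_tower_top h.adjk (adjoin_gen_top t) _ (fun p => ?_) ?_
  · exact IntermediateField.subset_adjoin ℂ _ ⟨some p, rfl⟩
  · rintro _ rfl
    exact IntermediateField.subset_adjoin ℂ _ ⟨none, rfl⟩

theorem la_indep (h : IsGen k F L x U) {t : L} (ht : Transcendental k t) :
    AlgebraicIndependent ℂ (la t U) := by
  have h1 : AlgebraicIndependent ℂ U := h.indepU
  have h2 : AlgebraicIndependent k (fun _ : Unit => AdjoinSimple.gen k t) := by
    refine algebraicIndependent_unique_type_iff.2 ?_
    intro hh
    refine ht ?_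
    have := hh.algebraMap (A := L)
    rwa [AdjoinSimple.algebraMap_gen] at this
  have h3 := h1.sumElim_comp h2
  have h4 := h3.comp (fun o : LI r => o.elim (Sum.inl ()) Sum.inr) (by
    rintro (_ | a) (_ | b) hab <;> simp_all)
  convert h4 using 1
  refine _root_.funext fun o => ?_
  cases o <;> rfl

/-- Evaluation of a polynomial in `(y_0, u, y_1, y_2)` at a point over `k(y_0)`. -/
noncomputable def lq {K W : Type} [Field K] [Field W] [Algebra ℂ K] [Algebra ℂ W] [Algebra K W]
    [IsScalarTower ℂ K W] (a : LI r → K) (η : Fin 2 → W) :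
    MvPolynomial (LI r ⊕ Fin 2) ℂ →ₐ[ℂ] W :=
  ((aeval η : MvPolynomial (Fin 2) K →ₐ[K] W).restrictScalars ℂ).comp (imK a)

section
variable {K W : Type} [Field K] [Field W] [Algebra ℂ K] [Algebra ℂ W] [Algebra K W]
    [IsScalarTower ℂ K W] (a : LI r → K) (η : Fin 2 → W)

theorem lq_apply (N : MvPolynomial (LI r ⊕ Fin 2) ℂ) : lq a η N = aeval η (imK a N) := rfl

theorem lq_inl (i : LI r) : lq a η (X (Sum.inl i)) = algebraMap K W (a i) := by
  rw [lq_apply, imK, aeval_X, Sum.elim_inl, ← algebraMap_eq, AlgHom.commutes]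

theorem lq_inr (i : Fin 2) : lq a η (X (Sum.inr i)) = η i := by
  rw [lq_apply, imK, aeval_X, Sum.elim_inr, aeval_X]

theorem lq_frac (hg : IntermediateField.adjoin ℂ (Set.range a) = ⊤)
    (hη : IntermediateField.adjoin K (Set.range η) = ⊤) (z : W) :
    ∃ p q, lq a η q ≠ 0 ∧ z * lq a η q = lq a η p := by
  have hv : lq a η = aeval (lq a η ∘ X) := aeval_unique _
  rw [hv]
  refine exists_frac ?_ z
  refine adjoin_tower_top hg hη _ (fun i => ?_) ?_
  · exact IntermediateField.subset_adjoin ℂ _ ⟨Sum.inl i, lq_inl a η i⟩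
  · rintro _ ⟨j, rfl⟩
    exact IntermediateField.subset_adjoin ℂ _ ⟨Sum.inr j, lq_inr a η j⟩
end

theorem imK_pderiv_zero {K : Type} [Field K] [Algebra ℂ K] (a : LI r → K) (j : Fin 2)
    (N : MvPolynomial (LI r ⊕ Fin 2) ℂ) :
    imK a (pderiv (Sum.inr j) N) = pderiv j (imK a N) := by
  induction N using MvPolynomial.induction_on with
  | C c => simp [imK]
  | add p q hp hq => simp only [map_add, hp, hq]
  | mul_X p i hp =>
    rw [Derivation.leibniz, map_mul, Derivation.leibniz, map_add]
    simp only [smul_eq_mul, map_mul, hp]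
    congr 2
    rcases i with i | i
    · rw [pderiv_X_of_ne (by simp), imK, aeval_X, Sum.elim_inl, pderiv_C, map_zero]
    · rw [imK, aeval_X, Sum.elim_inr]
      by_cases hij : i = j
      · subst hij; rw [pderiv_X_self, pderiv_X_self, map_one]
      · rw [pderiv_X_of_ne (by simpa using hij), pderiv_X_of_ne hij, map_zero]

set_option maxHeartbeats 1000000 in
/-- A curve whose generic plane projection has, over `k(y_0)`, small degree `e` compared with the
degree of the curve lies on a surface, presented here by its function field and its coordinates
`x'`; the form `y_2` has degree at most `e` over `k(y_0, y_1)` on that surface. -/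
theorem lift (h : IsGen k F L x U) (h0 : Transcendental k (gy L x U 0))
    [FiniteDimensional k⟮gy L x U 0⟯ L] {Φ : MvPolynomial (Fin 2) k⟮gy L x U 0⟯}
    (hΦ : MinEq ![gy L x U 1, gy L x U 2] Φ)
    (hd : Φ.totalDegree * (3 * Φ.totalDegree) < Module.finrank k⟮gy L x U 0⟯ L) :
    ∃ (F' L' : Type) (_ : Field F') (_ : Field L') (_ : Algebra ℂ F') (_ : Algebra ℂ L')
      (_ : Algebra k L') (_ : Algebra F' L') (_ : IsScalarTower ℂ k L')
      (_ : IsScalarTower ℂ F' L') (x' : Fin (r + 1) → F'),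
      IsGen k F' L' x' U ∧ Transcendental k (gy L' x' U 0) ∧
      Transcendental k⟮gy L' x' U 0⟯ (gy L' x' U 1) ∧
      (∃ Ψ : Polynomial k⟮gy L' x' U 0⟯⟮gy L' x' U 1⟯, Ψ ≠ 0 ∧ Ψ.natDegree ≤ Φ.totalDegree ∧
        Polynomial.aeval (gy L' x' U 2) Ψ = 0) ∧
      ∀ f : MvPolynomial (Fin (r + 1)) ℂ, aeval x' f = 0 → aeval x f = 0 := by
  haveI : IsScalarTower ℂ k⟮gy L x U 0⟯ L := IsScalarTower.of_algebraMap_eq fun c => by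
    rw [IsScalarTower.algebraMap_apply ℂ k L, IsScalarTower.algebraMap_apply ℂ k k⟮gy L x U 0⟯,
      ← IsScalarTower.algebraMap_apply k k⟮gy L x U 0⟯ L]
  haveI : CharZero k⟮gy L x U 0⟯ := charZero_of_injective_algebraMap (algebraMap ℂ _).injective
  have he := hΦ.pos
  have hprime := hΦ.prime
  have hgen : ∀ j : Fin 2, (k⟮gy L x U 0⟯)⟮(![gy L x U 1, gy L x U 2] : Fin 2 → L) j⟯ = ⊤ := by
    intro j
    fin_cases j
    · exact h.adjoin_one h0 1 (by simp)
    · exact h.adjoin_one h0 2 (by simp)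
  have hvars : ∀ i : Fin 2, ¬ ∀ m ∈ Φ.support, m i = 0 := by
    intro i hm
    have hlt : Φ.totalDegree < Module.finrank k⟮gy L x U 0⟯ L := by nlinarith
    rcases (by fin_cases i <;> decide : ∃ j, i ≠ j) with ⟨j, hj⟩
    exact not_univariate hΦ.ne hΦ.root hlt hj (hgen j) hm
  obtain ⟨a, ha⟩ : ∃ a, a = la (gy L x U 0) U := ⟨_, rfl⟩
  have hai : AlgebraicIndependent ℂ a := ha ▸ h.la_indep h0
  have hag : IntermediateField.adjoin ℂ (Set.range a) = ⊤ := ha ▸ h.la_adjoin _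
  obtain ⟨W, _, _, _, _, _, _, _, η, hη, hηtop⟩ := exists_planeField' (k := k) hprime
  obtain ⟨c, f, hc, hfe, hf⟩ := exists_clear hag Φ
  obtain ⟨y, hy⟩ : ∃ y : Fin 2 → L, y = ![gy L x U 1, gy L x U 2] := ⟨_, rfl⟩
  rw [← hy] at hΦ hgen
  have hqLf : lq a y f = 0 := by rw [lq_apply, hf, map_mul, hΦ.root, mul_zero]
  have hyi : ∀ j, lq a y (X (yi r j)) = gy L x U j := by
    intro j
    fin_cases j
    · change lq a y (X (Sum.inl none)) = _
      rw [lq_inl, ha]; exact AdjoinSimple.algebraMap_gen _ _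
    · change lq a y (X (Sum.inr 0)) = _
      rw [lq_inr, hy]; rfl
    · change lq a y (X (Sum.inr 1)) = _
      rw [lq_inr, hy]; rfl
  have hau : ∀ p, a (some p) = algebraMap k _ (U p) := fun p => by rw [ha]; rfl
  have hU : ∀ p, lq a y (X (Sum.inl (some p))) = algebraMap k L (U p) := by
    intro p
    rw [lq_inl, hau, ← IsScalarTower.algebraMap_apply]
  have hUW : ∀ p, lq a η (X (Sum.inl (some p))) = algebraMap k W (U p) := by
    intro p
    rw [lq_inl, hau, ← IsScalarTower.algebraMap_apply]
  obtain ⟨ξ, hξ0, hξy, ⟨b, D, hb, hDξ, hDU, hDU'⟩, hξ⟩ := lift_core (f := f) he (lq a y) (lq a η)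
    (fun N hN => by
      obtain ⟨M, hM⟩ : Φ ∣ imK a N := (hη _).1 hN
      rw [lq_apply, hM, map_mul, hΦ.root, zero_mul])
    (fun N hN h1 => by
      refine (hη _).2 (hΦ.dvd (hgen 0) h1 (lt_of_le_of_lt ?_ hd))
      exact Nat.mul_le_mul_left _ (imK_totalDegree a hN))
    hfe hqLf (by
      intro h1
      rw [lq_apply, imK_pderiv_zero, hf, Derivation.leibniz, pderiv_C, smul_zero, add_zero,
        smul_eq_mul, map_mul, aeval_C, mul_eq_zero] at h1
      have hcc : algebraMap k⟮gy L x U 0⟯ L (aeval a c) ≠ 0 :=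
        (map_ne_zero _).2 hc
      have h2 := h1.resolve_left hcc
      have h3 : pderiv 0 Φ ≠ 0 := fun h3 => hvars 0 (pderiv_eq_zero_imp h3)
      exact absurd (hΦ.min _ h3 h2) (not_le.2 (totalDegree_pderiv_lt 0 h3)))
    (fun Δ hΔ N hN => stable_of_generator hai hag hη hc hf Δ hΔ N hN)
    (lq_frac a η hag hηtop) (gx := gx L x) (by rw [gx, h.x0, map_one])
    (fun p => by
      obtain ⟨D, hF, hp, hp'⟩ := h.exists_pderiv p
      refine ⟨D, fun i => hF _, fun N => ?_⟩
      have hv : lq a y = aeval (lq a y ∘ X) := aeval_unique _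
      rw [hv]
      exact h.chain hF hp hp' hU hyi N)
    (fun j => (hyi j).trans (Finset.sum_congr rfl fun i _ => by rw [hU]; rfl))
  let F' := IntermediateField.adjoin ℂ (Set.range ξ)
  let x' : Fin (r + 1) → F' := fun i => ⟨ξ i, IntermediateField.subset_adjoin ℂ _ ⟨i, rfl⟩⟩
  have hgy : ∀ j, gy W x' U j = lq a η (X (yi r j)) := by
    intro j
    rw [hξy, gy]
    simp only [hUW]
    rfl
  have hgy0 : gy W x' U 0 = algebraMap k⟮gy L x U 0⟯ W (a none) := by
    rw [hgy]; exact lq_inl _ _ _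
  have hgy1 : gy W x' U 1 = η 0 := by rw [hgy]; exact lq_inr _ _ _
  have hgy2 : gy W x' U 2 = η 1 := by rw [hgy]; exact lq_inr _ _ _
  have ht0 : Transcendental k (gy W x' U 0) := by
    rw [hgy0, ha]
    intro hh
    have h1 := (isAlgebraic_algebraMap_iff
      (algebraMap k⟮gy L x U 0⟯ W).injective).1 hh
    have h2 := h1.algebraMap (A := L)
    refine h0 ?_
    have h3 : algebraMap k⟮gy L x U 0⟯ L (la (gy L x U 0) U none) = gy L x U 0 :=
      AdjoinSimple.algebraMap_gen _ _
    rwa [h3] at h2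
  have htη : Transcendental k⟮gy L x U 0⟯ (η 0) :=
    transcendental_of_plane (fun N hN => (hη N).1 hN) (hvars 1)
  -- the two copies of `k(y_0)`, inside the curve field and inside the surface field, agree
  have hfr : k⟮gy W x' U 0⟯ = (IsScalarTower.toAlgHom k k⟮gy L x U 0⟯ W).fieldRange := by
    rw [hgy0, ha, AlgHom.fieldRange_eq_map, ← adjoin_gen_top, IntermediateField.adjoin_map,
      Set.image_singleton]
    rfl
  have hK1 : ∀ z : k⟮gy L x U 0⟯, ∃ e : k⟮gy W x' U 0⟯,
      algebraMap _ W e = algebraMap _ W z := by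
    intro z
    have hz : algebraMap _ W z ∈ k⟮gy W x' U 0⟯ := by rw [hfr]; exact ⟨z, rfl⟩
    exact ⟨⟨_, hz⟩, rfl⟩
  have hK2 : ∀ e : k⟮gy W x' U 0⟯, ∃ z : k⟮gy L x U 0⟯,
      algebraMap _ W e = algebraMap _ W z := by
    rintro ⟨e, he⟩
    rw [hfr] at he
    obtain ⟨z, hz⟩ := he
    exact ⟨z, hz.symm⟩
  refine ⟨F', W, inferInstance, inferInstance, inferInstance, inferInstance, inferInstance,
    inferInstance, inferInstance, inferInstance, x', ⟨?_, ?_, h.adjk, ?_, ?_⟩, ht0, ?_, ?_, ?_⟩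
  · exact Subtype.ext hξ0
  · exact adjoin_range_subtype ξ
  · refine algInd_of_derivations _ b hb D (fun p z => ?_) (fun p => ?_) (fun p p' hpp => ?_)
    · exact derivation_eq_zero_of_adjoin (D p) (hDξ p) z.2
    · rw [← hUW]; exact hDU p
    · rw [← hUW]; exact hDU' p p' hpp
  · have hUm : ∀ p, algebraMap k W (U p) ∈
        IntermediateField.adjoin F' (Set.range fun p => algebraMap k W (U p)) := fun p =>
      IntermediateField.subset_adjoin F' _ ⟨p, rfl⟩
    have hgm : ∀ j, gy W x' U j ∈
        IntermediateField.adjoin F' (Set.range fun p => algebraMap k W (U p)) := fun j =>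
      sum_mem fun i _ => mul_mem (hUm _) (IntermediateField.algebraMap_mem _ _)
    have := adjoin_tower_top hag hηtop ((IntermediateField.adjoin F'
      (Set.range fun p => algebraMap k W (U p))).restrictScalars ℂ) (fun i => ?_) ?_
    · exact (IntermediateField.restrictScalars_eq_top_iff (K := ℂ)).1 this
    · rcases i with _ | p
      · rw [← hgy0]; exact hgm 0
      · rw [hau, ← IsScalarTower.algebraMap_apply]; exact hUm p
    · rintro _ ⟨j, rfl⟩
      fin_cases j
      · exact hgy1 ▸ hgm 1
      · exact hgy2 ▸ hgm 2
  · rw [hgy1]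
    exact fun hh => htη (isAlgebraic_elem_of_range_subset hh hK2)
  · rw [hgy2]
    refine exists_eqn_one hΦ.ne ((hη _).2 dvd_rfl) htη (fun z => ?_) ?_
    · obtain ⟨e, he⟩ := hK1 z
      refine ⟨algebraMap _ _ e, ?_⟩
      rw [← he]; rfl
    · exact ⟨AdjoinSimple.gen _ _, by rw [AdjoinSimple.algebraMap_gen, hgy1]⟩
  · intro g hg
    have h1 : aeval ξ g = 0 := by
      have : ξ = algebraMap F' W ∘ x' := rfl
      rw [this, aeval_algebraMap_apply, hg, map_zero]
    have h2 := hξ g h1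
    have h3 : gx L x = algebraMap F L ∘ x := rfl
    rw [h3, aeval_algebraMap_apply] at h2
    exact (map_eq_zero (algebraMap F L)).1 h2

end IsGen

end

/-! ### Families over two independent elements -/

section
open IntermediateField

section TwoStep
variable {κ L : Type*} [Field κ] [Field L] [Algebra κ L]

/-- The two-step saturation of a family over `κ` with respect to `y₀` and `y₁`: saturate with
respect to `y₀`, extend scalars to `κ(y₀)` and saturate with respect to `y₁`. -/
def dfam (y₀ y₁ : L) (N : ℕ → Submodule κ L) (n : ℕ) : Submodule κ⟮y₀⟯ L :=
  sat y₁ (spanFam y₀ (sat y₀ N)) n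

theorem sat_mul_mem {t : L} {N M P : ℕ → Submodule κ L} (hN : Fam t N) (hM : Fam t M)
    (hP : Fam t P) (h : ∀ a b, ∀ f ∈ N a, ∀ g ∈ M b, f * g ∈ P (a + b)) (a b : ℕ) :
    ∀ f ∈ sat t N a, ∀ g ∈ sat t M b, f * g ∈ sat t P (a + b) := by
  intro f hf g hg
  obtain ⟨α, f1, f2⟩ := (mem_sat hN).1 hf
  obtain ⟨β, g1, g2⟩ := (mem_sat hM).1 hg
  refine (mem_sat hP).2 ⟨α + β, ?_, ?_⟩
  · have := h _ _ _ f1 _ g1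
    rwa [show a + α + (b + β) = a + b + (α + β) by ring] at this
  · have := h _ _ _ f2 _ g2
    rw [show a + α + (b + β) = a + b + (α + β) by ring] at this
    rwa [show t ^ (α + β) * (f * g) = t ^ α * f * (t ^ β * g) by ring]

theorem spanFam_mul_mem {t : L} {N M P : ℕ → Submodule κ L}
    (h : ∀ a b, ∀ f ∈ N a, ∀ g ∈ M b, f * g ∈ P (a + b)) (a b : ℕ) :
    ∀ f ∈ spanFam t N a, ∀ g ∈ spanFam t M b, f * g ∈ spanFam t P (a + b) := by
  intro f hf g hg
  have h1 : spanFam t N a * spanFam t M b ≤ spanFam t P (a + b) := by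
    unfold spanFam
    rw [Submodule.span_mul_span]
    refine Submodule.span_mono ?_
    rintro _ ⟨f, hf, g, hg, rfl⟩
    exact h _ _ _ hf _ hg
  exact h1 (Submodule.mul_mem_mul hf hg)

variable {y₀ y₁ : L} {N : ℕ → Submodule κ L}

theorem dfam_fam (h : Fam y₀ N) (h' : Fam y₁ N) : Fam y₁ (dfam y₀ y₁ N) :=
  (spanFam_fam (sat_mul h h')).sat

theorem dfam_saturated (h : Fam y₀ N) (h' : Fam y₁ N) : Saturated y₁ (dfam y₀ y₁ N) :=
  sat_saturated (spanFam_fam (sat_mul h h'))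

theorem dfam_mul_mem {M P : ℕ → Submodule κ L} (hN : Fam y₀ N) (hM : Fam y₀ M)
    (hP : Fam y₀ P) (hN' : Fam y₁ N) (hM' : Fam y₁ M) (hP' : Fam y₁ P)
    (h : ∀ a b, ∀ f ∈ N a, ∀ g ∈ M b, f * g ∈ P (a + b)) (a b : ℕ) :
    ∀ f ∈ dfam y₀ y₁ N a, ∀ g ∈ dfam y₀ y₁ M b, f * g ∈ dfam y₀ y₁ P (a + b) :=
  sat_mul_mem (spanFam_fam (sat_mul hN hN')) (spanFam_fam (sat_mul hM hM'))
    (spanFam_fam (sat_mul hP hP')) (spanFam_mul_mem (sat_mul_mem hN hM hP h)) a b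

theorem le_dfam (h : Fam y₀ N) (h' : Fam y₁ N) (n : ℕ) :
    spanFam y₀ (sat y₀ N) n ≤ dfam y₀ y₁ N n :=
  le_sat (spanFam_fam (sat_mul h h')) n

theorem mem_dfam (h : Fam y₀ N) (h' : Fam y₁ N) {n : ℕ} {f : L} (hf : f ∈ N n) :
    f ∈ dfam y₀ y₁ N n :=
  le_dfam h h' n (Submodule.subset_span (le_sat h n hf))

theorem dfam_finite (ht : Transcendental κ y₀) (ht₁ : Transcendental κ⟮y₀⟯ y₁)
    (h : Fam y₀ N) (h' : Fam y₁ N)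
    (hB : Bdd κ⟮y₀⟯⟮y₁⟯ (polyLE κ ![y₀, y₁]) N) :
    (∀ n, FiniteDimensional κ (sat y₀ N n)) ∧
      ∀ n, FiniteDimensional κ⟮y₀⟯ (dfam y₀ y₁ N n) := by
  have hind : AlgebraicIndependent κ ![y₀, y₁] := algInd_pair.2 ⟨ht, ht₁⟩
  have hB1 : Bdd κ⟮y₀⟯⟮y₁⟯ (polyLE κ ![y₀, y₁]) (sat y₀ N) :=
    hB.sat (algebraMap κ⟮y₀⟯ _ (AdjoinSimple.gen κ y₀)) rfl h (polyLE_saturated hind 0)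
  haveI : IsScalarTower κ κ⟮y₀⟯⟮y₁⟯ L := IsScalarTower.of_algebraMap_eq fun _ => rfl
  have hind1 : AlgebraicIndependent κ⟮y₀⟯ ![y₁] := by
    rw [algebraicIndependent_unique_type_iff]
    exact ht₁
  have hB2 := (Bdd.spanFam hB1).sat (AdjoinSimple.gen κ⟮y₀⟯ y₁) rfl
    (spanFam_fam (sat_mul h h')) (polyLE_saturated hind1 0)
  exact ⟨(hB1.finite fun n => inferInstance).1, (hB2.finite fun n => inferInstance).1⟩

/-- The basic numerical facts about a bounded family and its two-step saturation. -/
theorem dfam_main (ht : Transcendental κ y₀) (ht₁ : Transcendental κ⟮y₀⟯ y₁)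
    (h : Fam y₀ N) (h' : Fam y₁ N)
    (hB : Bdd κ⟮y₀⟯⟮y₁⟯ (polyLE κ ![y₀, y₁]) N) [FiniteDimensional κ⟮y₀⟯⟮y₁⟯ L] :
    (∃ n₀, ∀ n ≥ n₀, Module.finrank κ (N (n + 1)) = Module.finrank κ (N n) +
      Module.finrank κ⟮y₀⟯ (dfam y₀ y₁ N (n + 1))) ∧
    (dfam y₀ y₁ N 0 = ⊥ → ∀ n, Module.finrank κ (N n) ≤
      ∑ i ∈ Finset.range n, Module.finrank κ⟮y₀⟯ (dfam y₀ y₁ N (i + 1))) ∧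
    (∀ n, Module.finrank κ⟮y₀⟯ (dfam y₀ y₁ N (n + 1)) =
      Module.finrank κ⟮y₀⟯⟮y₁⟯ (Submodule.span κ⟮y₀⟯⟮y₁⟯ (dfam y₀ y₁ N (n + 1) : Set L)) +
      Module.finrank κ⟮y₀⟯ (dfam y₀ y₁ N n)) := by
  obtain ⟨hf1, hf2⟩ := dfam_finite ht ht₁ h h' hB
  have hstep : ∀ n, Module.finrank κ (sat y₀ N (n + 1)) =
      Module.finrank κ⟮y₀⟯ (spanFam y₀ (sat y₀ N) (n + 1)) + Module.finrank κ (sat y₀ N n) :=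
    fun n => finrank_succ_eq ht h.sat (sat_saturated h) hf1 n
  refine ⟨?_, ?_, fun n => finrank_succ_eq ht₁ (dfam_fam h h') (dfam_saturated h h') hf2 n⟩
  · obtain ⟨n₁, hn₁⟩ := exists_sat_eq ht₁ (spanFam_fam (sat_mul h h')) hf2
    obtain ⟨n₂, C, hn₂⟩ := exists_sat_sub_const ht ht₁ h h' hf1 hf2
    refine ⟨max n₁ n₂, fun n hn => ?_⟩
    have a1 := hn₂ n (le_trans (le_max_right _ _) hn)
    have a2 := hn₂ (n + 1) (le_trans (le_trans (le_max_right _ _) hn) n.le_succ)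
    have a3 := hn₁ (n + 1) (le_trans (le_trans (le_max_left _ _) hn) n.le_succ)
    have a4 := hstep n
    unfold dfam
    rw [a3]
    omega
  · intro h0 n
    have key : ∀ n, Module.finrank κ (sat y₀ N n) ≤
        ∑ i ∈ Finset.range n, Module.finrank κ⟮y₀⟯ (dfam y₀ y₁ N (i + 1)) := by
      intro n
      induction n with
      | zero =>
        have : sat y₀ N 0 = ⊥ := by
          rw [eq_bot_iff]
          intro f hf
          have := le_dfam h h' 0 (Submodule.subset_span hf)
          rw [h0] at this
          exact this
        rw [this]; simp
      | succ n ih =>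
        rw [Finset.sum_range_succ, hstep]
        have := hf2 (n + 1)
        have := Submodule.finrank_mono (le_dfam h h' (n + 1))
        omega
    have := hf1 n
    exact (Submodule.finrank_mono (le_sat h n)).trans (key n)

end TwoStep

end

/-! ### The surface attached to an algebraic third coordinate -/

section
open IntermediateField MvPolynomial

namespace IsGen
variable {k F L : Type} [Field k] [Field F] [Field L] [Algebra ℂ k] [Algebra ℂ F]
    [Algebra ℂ L] [Algebra k L] [Algebra F L] [IsScalarTower ℂ k L] [IsScalarTower ℂ F L]
    {r : ℕ} {x : Fin (r + 1) → F} {U : Fin 3 × Fin (r + 1) → k}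

theorem cast_two' (h : 2 ≤ 3) : (fun j : Fin 2 => gy L x U (Fin.castLE h j)) =
    ![gy L x U 0, gy L x U 1] := by
  refine _root_.funext fun j => ?_
  fin_cases j <;> rfl

/-- If `y 2` has degree at most `e` over `k(y 0, y 1)`, the function field is finite over that field
of degree at most `e`, and the coordinate ring is a bounded family. -/
theorem surf_base (h : IsGen k F L x U) (h0 : Transcendental k (gy L x U 0))
    (h1 : Transcendental k⟮gy L x U 0⟯ (gy L x U 1)) {e : ℕ}
    (hΨ : ∃ Ψ : Polynomial k⟮gy L x U 0⟯⟮gy L x U 1⟯, Ψ ≠ 0 ∧ Ψ.natDegree ≤ e ∧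
      Polynomial.aeval (gy L x U 2) Ψ = 0) :
    ∃ _ : FiniteDimensional k⟮gy L x U 0⟯⟮gy L x U 1⟯ L,
      Module.finrank k⟮gy L x U 0⟯⟮gy L x U 1⟯ L ≤ e ∧
      Bdd k⟮gy L x U 0⟯⟮gy L x U 1⟯ (polyLE k ![gy L x U 0, gy L x U 1]) (polyLE k (gx L x)) := by
  obtain ⟨Ψ, hΨ0, hΨe, hΨz⟩ := hΨ
  have halg : IsAlgebraic k⟮gy L x U 0⟯⟮gy L x U 1⟯ (gy L x U 2) := ⟨Ψ, hΨ0, hΨz⟩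
  have hdep : ¬ AlgebraicIndependent k
      (fun j : Fin (2 + 1) => gy L x U (Fin.castLE (by decide) j)) := by
    intro hind
    have h2 := hind.transcendental_adjoin (s := {0, 1}) (i := 2) (by decide)
    rw [← IntermediateField.transcendental_adjoin_iff] at h2
    refine h2 (isAlgebraic_elem_of_range_subset halg (fun z => ?_))
    have := (mem_double (gy L x U 0) (gy L x U 1) _).1 ⟨z, rfl⟩
    have e : (fun j : Fin (2 + 1) => gy L x U (Fin.castLE (by decide) j)) '' {0, 1} =
        {gy L x U 0, gy L x U 1} := by
      rw [Set.image_pair]; rfl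
    rw [e]
    exact ⟨⟨_, this⟩, rfl⟩
  obtain ⟨c, hc⟩ := h.noether 2 (by decide) hdep
  rw [cast_two'] at hc
  haveI : IsScalarTower k k⟮gy L x U 0⟯⟮gy L x U 1⟯ L :=
    IsScalarTower.of_algebraMap_eq fun _ => rfl
  have hyK : ∀ i, ∃ z : k⟮gy L x U 0⟯⟮gy L x U 1⟯,
      algebraMap k⟮gy L x U 0⟯⟮gy L x U 1⟯ L z = ![gy L x U 0, gy L x U 1] i := by
    intro i
    fin_cases i
    · exact ⟨algebraMap k⟮gy L x U 0⟯ _ (AdjoinSimple.gen k _), rfl⟩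
    · exact ⟨AdjoinSimple.gen k⟮gy L x U 0⟯ _, rfl⟩
  have hfd : FiniteDimensional k⟮gy L x U 0⟯⟮gy L x U 1⟯ L :=
    fd_of_generated hyK h.adjoin_gx _ hc
  refine ⟨hfd, ?_, bdd_of_generated (double_frac (κ := k) _ _) hyK _ hc⟩
  have htop := h.adjoin_two h0 h1
  have hInt := halg.isIntegral
  have e1 := IntermediateField.adjoin.finrank hInt
  rw [htop, IntermediateField.finrank_top'] at e1
  rw [e1]
  refine le_trans ?_ hΨe
  exact Polynomial.natDegree_le_of_dvd (minpoly.dvd _ _ hΨz) hΨ0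

end IsGen

end

/-! ### Hilbert polynomial and ideal of the surface -/

section
open IntermediateField MvPolynomial

theorem eventually_linear {f : ℕ → ℤ} {s : ℤ} {N : ℕ} (h : ∀ n ≥ N, f (n + 1) = f n + s) :
    ∀ n ≥ N, f n = s * n + (f N - s * N) := by
  intro n hn
  induction n, hn using Nat.le_induction with
  | base => ring
  | succ n hn ih => rw [h n hn, ih]; push_cast; ring

theorem tri_succ (n : ℤ) : (n + 1) * (n + 1 + 1) / 2 = n * (n + 1) / 2 + (n + 1) := by
  rw [show (n + 1) * (n + 1 + 1) = n * (n + 1) + (n + 1) * 2 by ring]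
  exact Int.add_mul_ediv_right _ _ (by norm_num)

theorem eventually_quadratic {F : ℕ → ℤ} {s c : ℤ} {N : ℕ}
    (h : ∀ n ≥ N, F (n + 1) = F n + (s * (n + 1 : ℕ) + c)) :
    ∀ n ≥ N, F n = s * ((n : ℤ) * (n + 1) / 2) + c * n +
      (F N - s * ((N : ℤ) * (N + 1) / 2) - c * N) := by
  intro n hn
  induction n, hn using Nat.le_induction with
  | base => ring
  | succ n hn ih => rw [h n hn, ih]; push_cast; rw [tri_succ]; ring

namespace IsGen
variable {k F L : Type} [Field k] [Field F] [Field L] [Algebra ℂ k] [Algebra ℂ F]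
    [Algebra ℂ L] [Algebra k L] [Algebra F L] [IsScalarTower ℂ k L] [IsScalarTower ℂ F L]
    {r : ℕ} {x : Fin (r + 1) → F} {U : Fin 3 × Fin (r + 1) → k}

/-- The Hilbert polynomial of a surface and of its generic hyperplane section, with leading
coefficients given by `[L : k(y 0, y 1)]`; the linear coefficient of the former is the constant term
of the latter. -/
theorem surf_hilb (h : IsGen k F L x U) (h0 : Transcendental k (gy L x U 0))
    (h1 : Transcendental k⟮gy L x U 0⟯ (gy L x U 1))
    [FiniteDimensional k⟮gy L x U 0⟯⟮gy L x U 1⟯ L]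
    (hB : Bdd k⟮gy L x U 0⟯⟮gy L x U 1⟯ (polyLE k ![gy L x U 0, gy L x U 1])
      (polyLE k (gx L x))) :
    ∃ (c₁ c₀ : ℤ) (N : ℕ),
      (∀ n ≥ N, (Module.finrank k⟮gy L x U 0⟯
        (dfam (gy L x U 0) (gy L x U 1) (polyLE k (gx L x)) n) : ℤ) =
        Module.finrank k⟮gy L x U 0⟯⟮gy L x U 1⟯ L * n + c₁) ∧
      (∀ n ≥ N, (Module.finrank k (polyLE k (gx L x) n) : ℤ) =
        Module.finrank k⟮gy L x U 0⟯⟮gy L x U 1⟯ L * ((n : ℤ) * (n + 1) / 2) + c₁ * n + c₀) := by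
  obtain ⟨⟨n₁, hn₁⟩, -, hd⟩ := dfam_main h0 h1 (fam 0) (fam 1) hB
  have htop := h.adjoin_two h0 h1
  obtain ⟨N, hN1, hN2⟩ : ∃ N, n₁ ≤ N ∧ Module.finrank k⟮gy L x U 0⟯⟮gy L x U 1⟯ L ≤ N :=
    ⟨max n₁ _, le_max_left _ _, le_max_right _ _⟩
  have hstep : ∀ n ≥ N, (Module.finrank k⟮gy L x U 0⟯
        (dfam (gy L x U 0) (gy L x U 1) (polyLE k (gx L x)) (n + 1)) : ℤ) =
        Module.finrank k⟮gy L x U 0⟯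
        (dfam (gy L x U 0) (gy L x U 1) (polyLE k (gx L x)) n) +
        Module.finrank k⟮gy L x U 0⟯⟮gy L x U 1⟯ L := by
    intro n hn
    have a1 := finrank_le_polyLE (K := k⟮gy L x U 0⟯⟮gy L x U 1⟯)
      (y := ![gy L x U 1, gy L x U 2]) (j := 1) htop (n := n + 1) (by omega)
    have a2 := Submodule.finrank_mono (polyLE_le_span (K := k⟮gy L x U 0⟯⟮gy L x U 1⟯)
      (x := x) (U := U) (L := L) (k := k) (n + 1))
    have a3 : Submodule.span k⟮gy L x U 0⟯⟮gy L x U 1⟯ (polyLE k (gx L x) (n + 1) : Set L) ≤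
        Submodule.span k⟮gy L x U 0⟯⟮gy L x U 1⟯
          (dfam (gy L x U 0) (gy L x U 1) (polyLE k (gx L x)) (n + 1) : Set L) :=
      Submodule.span_mono fun f hf => mem_dfam (fam 0) (fam 1) hf
    have a4 := Submodule.finrank_mono a3
    have a5 := Submodule.finrank_le (Submodule.span k⟮gy L x U 0⟯⟮gy L x U 1⟯
          (dfam (gy L x U 0) (gy L x U 1) (polyLE k (gx L x)) (n + 1) : Set L))
    have a6 := hd n
    zify at a1 a2 a4 a5 a6
    linarith
  have hlin := eventually_linear (f := fun n => (Module.finrank k⟮gy L x U 0⟯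
        (dfam (gy L x U 0) (gy L x U 1) (polyLE k (gx L x)) n) : ℤ)) hstep
  refine ⟨_, _, N, hlin, eventually_quadratic
    (F := fun n => (Module.finrank k (polyLE k (gx L x) n) : ℤ)) fun n hn => ?_⟩
  have e1 := hn₁ n (hN1.trans hn)
  rw [← hlin (n + 1) (by omega)]
  exact_mod_cast e1

end IsGen

end

section
open IntermediateField MvPolynomial

namespace IsGen
variable {k F L : Type} [Field k] [Field F] [Field L] [Algebra ℂ k] [Algebra ℂ F]
    [Algebra ℂ L] [Algebra k L] [Algebra F L] [IsScalarTower ℂ k L] [IsScalarTower ℂ F L]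
    {r : ℕ} {x : Fin (r + 1) → F} {U : Fin 3 × Fin (r + 1) → k}

theorem trdeg_two (h : IsGen k F L x U) (h0 : Transcendental k (gy L x U 0))
    (h1 : Transcendental k⟮gy L x U 0⟯ (gy L x U 1))
    [FiniteDimensional k⟮gy L x U 0⟯⟮gy L x U 1⟯ L] :
    Algebra.trdeg ℂ F = ((2 : ℕ) : Cardinal) := by
  have e1 : Algebra.trdeg ℂ L = ((3 * (r + 1) + 2 : ℕ) : Cardinal) := by
    refine h.trdeg_eq (algInd_pair.2 ⟨h0, h1⟩) (K := k⟮gy L x U 0⟯⟮gy L x U 1⟯) fun z => ?_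
    have := (mem_double (k := k) (gy L x U 0) (gy L x U 1) _).1 ⟨z, rfl⟩
    simpa [Set.pair_comm] using this
  have hU : IsTranscendenceBasis F (fun p => algebraMap k L (U p)) := by
    refine h.indep.isTranscendenceBasis_iff_isAlgebraic.2 ?_
    rw [← isAlgebraic_adjoin_iff_top, h.adjL, Algebra.isAlgebraic_iff_isIntegral]
    exact Algebra.isIntegral_of_surjective topEquiv.surjective
  have e2 := trdeg_add_eq ℂ F (A := L)
  rw [e1, ← hU.cardinalMk_eq_trdeg, Cardinal.mk_fintype] at e2
  simp only [Fintype.card_prod, Fintype.card_fin] at e2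
  rw [add_comm (3 * (r + 1)) 2, Nat.cast_add] at e2
  exact Cardinal.add_nat_inj _ |>.1 e2

/-- The ideal of the variety is that of a surface when `y 0, y 1` are independent and `L` is finite
over `k(y 0, y 1)`. -/
theorem isSurface (h : IsGen k F L x U) (h0 : Transcendental k (gy L x U 0))
    (h1 : Transcendental k⟮gy L x U 0⟯ (gy L x U 1))
    [FiniteDimensional k⟮gy L x U 0⟯⟮gy L x U 1⟯ L] : IsSurface (vanIdeal x) := by
  refine ⟨fun f hf m => vanIdeal_homog x hf m, inferInstance, ?_⟩
  exact ringKrullDim_of_trdeg _ (vanIdeal_trdeg x h.x0 h.adjF (h.trdeg_two h0 h1))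

/-- Degree, sectional genus and arithmetic genus, read off from the Hilbert polynomial. -/
theorem surfInv (h : IsGen k F L x U) {s c₁ c₀ : ℤ} {N : ℕ}
    (hN : ∀ n ≥ N, (Module.finrank k (polyLE k (gx L x) n) : ℤ) =
        s * ((n : ℤ) * (n + 1) / 2) + c₁ * n + c₀) :
    SurfInv (vanIdeal x) s (1 - c₁) (c₀ - 1) := by
  refine ⟨N, fun t ht => ?_⟩
  lift t to ℕ using le_trans (Int.natCast_nonneg N) ht
  rw [hilbZ_eq x h.x0 (vanIdeal x) (fun n f hf => mem_vanIdeal_homog x hf), ← h.finrank_polyLE,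
    hN t (by exact_mod_cast ht)]
  ring

end IsGen

end

/-! ### Curves on a surface of degree s: numerical estimates -/

section
/-- Numerical consequence of the Cauchy–Davenport growth of the ranks `w i` of the ideal of a curve
of degree `d = (m + 1) s - k` on a surface of degree `s` with Hilbert polynomial
`s n (n + 1) / 2 + c₁ n + c₀`; `v` bounds the growth from below. -/
theorem num_curve_on_surface {a w j : ℕ → ℤ} {s c₁ c₀ d g k v : ℤ} {m n₀ : ℕ}
    (hd : d = (m + 1) * s - k) (hk : 0 ≤ k) (hks : k < s) (hc : 2 * (1 - c₁) ≤ s - 2)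
    (hv : s + c₁ - 1 ≤ v ∨ (v = s ∧ c₁ = s))
    (han : ∀ n ≥ n₀, a n = s * n + c₁ - d) (haw : ∀ n, a (n + 1) = w (n + 1) + a n)
    (ha0 : ∀ i ≤ m, a i = 0) (hws : ∀ i, w i ≤ s) (hw0 : ∀ i, 0 ≤ w i)
    (hcd : ∀ i, 0 < w i → min s (w i + v - 1) ≤ w (i + 1))
    (hj : ∀ n, j n ≤ ∑ i ∈ Finset.range n, a (i + 1))
    (hjn : ∀ n ≥ n₀, j n = s * ((n : ℤ) * (n + 1) / 2) + c₁ * n + c₀ - (d * n + 1 - g)) :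
    ∃ w' : ℤ, (w' ≤ k + c₁ ∨ 2 * w' ≤ k + 2) ∧
      g ≤ w' + 1 - c₀ - s * (((m : ℤ) + 1) * (m + 2) / 2) + (d - c₁) * (m + 1) := by
  have hv2 : s + 2 ≤ 2 * v := by rcases hv with h | ⟨h, h'⟩ <;> linarith
  have hlow : ∀ i n : ℕ, a (i + n) ≤ a i + s * n := by
    intro i n
    induction n with
    | zero => simp
    | succ n ih =>
      rw [← add_assoc, haw]; push_cast
      linarith [hws (i + n + 1)]
  have hlow' : ∀ i : ℕ, s * i + c₁ - d ≤ a i := by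
    intro i
    have h1 := hlow i n₀
    rw [han (i + n₀) (by omega)] at h1
    push_cast at h1
    linarith
  have hm0 := ha0 m le_rfl
  have e1 := haw m
  have e2 := haw (m + 1)
  have l1 := hlow' (m + 1 + 1)
  push_cast at l1
  have l2 : s + k + c₁ ≤ a (m + 1 + 1) := by rw [hd] at l1; linarith
  have full : w (m + 3) = s := by
    have hle := hws (m + 3)
    rcases (hw0 (m + 1)).eq_or_lt with h | h
    · have h2 := hcd (m + 2) (by linarith)
      rcases min_le_iff.1 h2 with h3 | h3 <;> linarith
    · have h2 := hcd (m + 1) h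
      have hw1 : 0 < w (m + 1 + 1) := by
        rcases min_le_iff.1 h2 with h3 | h3 <;> linarith
      have h4 := hcd (m + 1 + 1) hw1
      have hle1 := hws (m + 2)
      rcases min_le_iff.1 h2 with h3 | h3 <;> rcases min_le_iff.1 h4 with h5 | h5 <;> linarith
  have full' : ∀ n : ℕ, w (m + 3 + n) = s := by
    intro n
    induction n with
    | zero => exact full
    | succ n ih =>
      have h2 := hcd (m + 3 + n) (by linarith)
      rw [ih] at h2
      have hle := hws (m + 3 + n + 1)
      rw [← add_assoc]
      rcases min_le_iff.1 h2 with h3 | h3 <;> linarith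
  have ha2 : ∀ n : ℕ, a (m + 2 + n) = a (m + 2) + s * n := by
    intro n
    induction n with
    | zero => simp
    | succ n ih =>
      rw [← add_assoc, haw, ih]
      have := full' n
      rw [show m + 2 + n + 1 = m + 3 + n by ring, this]; push_cast; ring
  have ha2' : a (m + 2) = s * (m + 2) + c₁ - d := by
    have h1 := ha2 n₀
    rw [han (m + 2 + n₀) (by omega)] at h1
    push_cast at h1
    linarith
  have ha3 : ∀ n ≥ m + 2, a n = s * n + c₁ - d := by
    intro n hn
    obtain ⟨q, rfl⟩ := Nat.exists_eq_add_of_le hn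
    rw [ha2, ha2']; push_cast; ring
  have hsum : w (m + 1) + w (m + 2) = s + k + c₁ := by
    have h1 : a (m + 2) = w (m + 2) + a (m + 1) := e2
    rw [ha2', hd] at h1
    linarith
  refine ⟨w (m + 1), ?_, ?_⟩
  · rcases (hw0 (m + 1)).eq_or_lt with h | h
    · right; linarith
    · have h2 : min s (w (m + 1) + v - 1) ≤ w (m + 2) := hcd (m + 1) h
      rcases min_le_iff.1 h2 with h3 | h3
      · left; linarith
      · rcases hv with h4 | ⟨h4, h5⟩
        · right; linarith
        · left; linarith [hws (m + 2), hws (m + 1)]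
  · have hs0 : ∑ i ∈ Finset.range (m + 1), a (i + 1) = w (m + 1) := by
      rw [Finset.sum_range_succ, Finset.sum_eq_zero]
      · rw [e1, hm0]; ring
      · intro i hi
        exact ha0 _ (by have := Finset.mem_range.1 hi; omega)
    have hq := eventually_quadratic (F := fun n => ∑ i ∈ Finset.range n, a (i + 1)) (s := s)
      (c := c₁ - d) (N := m + 1) (fun n hn => by
        simp only [Finset.sum_range_succ]
        rw [ha3 (n + 1) (by omega)]; push_cast; ring)
    have h1 := hq (m + 1 + n₀) (by omega)
    have h2 := hj (m + 1 + n₀)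
    rw [hjn _ (by omega)] at h2
    simp only [hs0] at h1
    rw [h1] at h2
    push_cast at h2
    rw [show (m : ℤ) + 1 + 1 = m + 2 by ring] at h2
    linarith

end

/-! ### Curves on a surface of degree s: ideals in the coordinate ring -/

section
open IntermediateField

section
variable {κ L : Type*} [Field κ] [Field L] [Algebra κ L] {t : L} {G : ℕ → Submodule κ L}

/-- The degree `0` part of a saturated family, when it is a ring, is linearly disjoint from
`κ(t)`. -/
theorem finrank_zero_eq (ht : Transcendental κ t) (h : Fam t G) (hs : Saturated t G)
    (hfd : ∀ n, FiniteDimensional κ (G n)) (h1 : (1 : L) ∈ G 0)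
    (hm : ∀ f ∈ G 0, ∀ g ∈ G 0, f * g ∈ G 0) :
    Module.finrank κ (G 0) = Module.finrank κ⟮t⟯ (Submodule.span κ⟮t⟯ (G 0 : Set L)) := by
  let S : Subalgebra κ L := (G 0).toSubalgebra h1 (fun f g hf hg => hm f hf g hg)
  have hInt : ∀ f ∈ G 0, IsIntegral κ f := by
    intro f hf
    refine IsIntegral.of_mem_of_fg S ?_ f hf
    have : Subalgebra.toSubmodule S = G 0 := rfl
    rw [this]
    exact (Submodule.fg_top _).1 (hfd 0).fg_top
  have key : ∀ f, f ∈ G 0 → t * f ∈ G 0 → f = 0 := by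
    intro f hf htf
    by_contra hne
    apply ht
    have h3 : IsIntegral κ (t * f * f⁻¹) := (hInt _ htf).mul (hInt _ hf).inv
    rw [mul_inv_cancel_right₀ hne] at h3
    exact h3.isAlgebraic
  obtain ⟨M, hM0, hMs⟩ : ∃ M : ℕ → Submodule κ L, M 0 = ⊥ ∧ ∀ n, M (n + 1) = G n :=
    ⟨fun n => Nat.casesOn n ⊥ G, rfl, fun n => rfl⟩
  have hF : Fam t M := by
    constructor
    · intro n
      cases n with
      | zero => rw [hM0]; exact bot_le
      | succ n => rw [hMs, hMs]; exact h.mono n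
    · intro n f hf
      cases n with
      | zero =>
        rw [hM0, Submodule.mem_bot] at hf
        rw [hf, mul_zero]; exact zero_mem _
      | succ n => rw [hMs] at hf ⊢; exact h.mul n f hf
  have hS : Saturated t M := by
    intro n a f h1 h2
    cases n with
    | zero =>
      cases a with
      | zero => exact h1
      | succ b =>
        rw [zero_add, hMs] at h1 h2
        rw [hM0, Submodule.mem_bot]
        have hf0 : f ∈ G 0 := hs 0 (b + 1) f (by rw [zero_add]; exact h.mono b h1)
          (by rw [zero_add]; exact h.mono b h2)
        refine key f hf0 ?_
        cases b with
        | zero => simpa using h2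
        | succ c =>
          refine hs 0 (c + 1) (t * f) ?_ ?_
          · exact h.mono' (by omega) (h.mul 0 f hf0)
          · rw [zero_add, ← mul_assoc, ← pow_succ]; exact h2
    | succ n =>
      have e : n + 1 + a = n + a + 1 := by ring
      rw [e, hMs] at h1 h2
      rw [hMs]; exact hs n a f h1 h2
  have hfd' : ∀ n, FiniteDimensional κ (M n) := by
    intro n
    cases n with
    | zero => rw [hM0]; infer_instance
    | succ n => rw [hMs]; exact hfd n
  have := finrank_succ_eq ht hF hS hfd' 0
  rw [hMs, hM0, finrank_bot, add_zero] at this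
  exact this

end

end

section
open IntermediateField

section
variable {κ L : Type*} [Field κ] [Field L] [Algebra κ L] {y₀ y₁ : L} {N J : ℕ → Submodule κ L}

theorem span_mul_span_le {K : Type*} [Field K] [Algebra K L] {A B C : Set L}
    (h : ∀ f ∈ A, ∀ g ∈ B, f * g ∈ C) :
    Submodule.span K A * Submodule.span K B ≤ Submodule.span K C := by
  rw [Submodule.span_mul_span]
  refine Submodule.span_mono ?_
  rintro _ ⟨f, hf, g, hg, rfl⟩
  exact h f hf g hg

/-- The genus bound for a curve on a surface, in terms of the filtered coordinate ring `N` of the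
surface and the filtered ideal `J` of the curve. -/
theorem curve_on_surface (ht : Transcendental κ y₀) (ht₁ : Transcendental κ⟮y₀⟯ y₁)
    (hN : Fam y₀ N) (hN' : Fam y₁ N) (hJ : Fam y₀ J) (hJ' : Fam y₁ J)
    (hBN : Bdd κ⟮y₀⟯⟮y₁⟯ (polyLE κ ![y₀, y₁]) N) (hBJ : Bdd κ⟮y₀⟯⟮y₁⟯ (polyLE κ ![y₀, y₁]) J)
    [FiniteDimensional κ⟮y₀⟯⟮y₁⟯ L]
    (hprim : ∀ M : IntermediateField κ⟮y₀⟯⟮y₁⟯ L, M = ⊥ ∨ M = ⊤)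
    (hone : (1 : L) ∈ N 0)
    (hNN : ∀ a b, ∀ f ∈ N a, ∀ g ∈ N b, f * g ∈ N (a + b))
    (hNJ : ∀ a b, ∀ f ∈ N a, ∀ g ∈ J b, f * g ∈ J (a + b))
    {s c₁ c₀ d g k : ℤ} {m n₀ : ℕ} (hs : (Module.finrank κ⟮y₀⟯⟮y₁⟯ L : ℤ) = s)
    (hG : ∀ n ≥ n₀, (Module.finrank κ⟮y₀⟯ (dfam y₀ y₁ N n) : ℤ) = s * n + c₁)
    (hjn : ∀ n ≥ n₀, (Module.finrank κ (J n) : ℤ) =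
      s * ((n : ℤ) * (n + 1) / 2) + c₁ * n + c₀ - (d * n + 1 - g))
    (hd : d = (m + 1) * s - k) (hk : 0 ≤ k) (hks : k < s) (hc : 2 * (1 - c₁) ≤ s - 2) :
    ∃ w' : ℤ, (w' ≤ k + c₁ ∨ 2 * w' ≤ k + 2) ∧
      g ≤ w' + 1 - c₀ - s * (((m : ℤ) + 1) * (m + 2) / 2) + (d - c₁) * (m + 1) := by
  obtain ⟨-, hfG⟩ := dfam_finite ht ht₁ hN hN' hBN
  obtain ⟨-, hfH⟩ := dfam_finite ht ht₁ hJ hJ' hBJ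
  obtain ⟨-, -, hGv⟩ := dfam_main ht ht₁ hN hN' hBN
  obtain ⟨⟨n₁, hJ1⟩, hJ2, hHw⟩ := dfam_main ht ht₁ hJ hJ' hBJ
  have hGG := dfam_mul_mem hN hN hN hN' hN' hN' hNN
  have hGH := dfam_mul_mem hN hJ hJ hN' hJ' hJ' hNJ
  have hone' : (1 : L) ∈ dfam y₀ y₁ N 0 := mem_dfam hN hN' hone
  have hz : Module.finrank κ⟮y₀⟯ (dfam y₀ y₁ N 0) = Module.finrank κ⟮y₀⟯⟮y₁⟯
      (Submodule.span κ⟮y₀⟯⟮y₁⟯ (dfam y₀ y₁ N 0 : Set L)) :=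
    finrank_zero_eq ht₁ (dfam_fam hN hN') (dfam_saturated hN hN') hfG hone'
      (fun f hf g hg => hGG 0 0 f hf g hg)
  have hGm := dfam_fam hN hN'
  obtain ⟨G, hGdef⟩ : ∃ G, G = dfam y₀ y₁ N := ⟨_, rfl⟩
  obtain ⟨H, hHdef⟩ : ∃ H, H = dfam y₀ y₁ J := ⟨_, rfl⟩
  rw [← hGdef] at hfG hGv hGG hGH hone' hz hG hGm
  rw [← hHdef] at hfH hJ1 hJ2 hHw hGH
  obtain ⟨v, hvdef⟩ : ∃ v : ℕ → ℤ, ∀ n, v n = (Module.finrank κ⟮y₀⟯⟮y₁⟯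
      (Submodule.span κ⟮y₀⟯⟮y₁⟯ (G n : Set L)) : ℤ) := ⟨_, fun _ => rfl⟩
  have hs_le : ∀ V : Submodule κ⟮y₀⟯⟮y₁⟯ L, (Module.finrank κ⟮y₀⟯⟮y₁⟯ V : ℤ) ≤ s := by
    intro V; rw [← hs]; exact_mod_cast Submodule.finrank_le V
  have hvs : ∀ i, v i ≤ s := by intro i; rw [hvdef]; exact hs_le _
  -- eventual dimension of the ideal
  have hHn : ∀ n ≥ n₀ + n₁ + 1, (Module.finrank κ⟮y₀⟯ (H n) : ℤ) = s * n + c₁ - d := by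
    intro n hn
    obtain ⟨q, rfl⟩ : ∃ q, n = q + 1 := ⟨n - 1, by omega⟩
    have e1 : ((Module.finrank κ (J (q + 1)) : ℕ) : ℤ) = Module.finrank κ (J q) +
      Module.finrank κ⟮y₀⟯ (H (q + 1)) := by exact_mod_cast hJ1 q (by omega)
    rw [hjn _ (by omega), hjn _ (by omega)] at e1
    have e2 := tri_succ (q : ℤ)
    push_cast at e1 ⊢
    rw [e2] at e1
    linarith
  -- multiplication by a nonzero element of `H i` embeds `G n` into `H (n + i)`
  have hH0 : ∀ i ≤ m, H i = ⊥ := by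
    intro i hi
    by_contra hne
    obtain ⟨f, hf, hf0⟩ := Submodule.exists_mem_ne_zero_of_ne_bot hne
    have hle : Module.finrank κ⟮y₀⟯ (G (n₀ + n₁ + 1)) ≤
        Module.finrank κ⟮y₀⟯ (H (n₀ + n₁ + 1 + i)) := by
      haveI := hfH (n₀ + n₁ + 1 + i)
      rw [← finrank_map_mulLeft f hf0]
      refine Submodule.finrank_mono ?_
      rintro _ ⟨z, hz', rfl⟩
      rw [LinearMap.mulLeft_apply, mul_comm]
      exact hGH _ _ z hz' f hf
    have hle' : ((Module.finrank κ⟮y₀⟯ (G (n₀ + n₁ + 1)) : ℕ) : ℤ) ≤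
        Module.finrank κ⟮y₀⟯ (H (n₀ + n₁ + 1 + i)) := by exact_mod_cast hle
    rw [hG _ (by omega), hHn _ (by omega)] at hle'
    push_cast at hle'
    have him : s * (i : ℤ) ≤ s * m := by
      have : (i : ℤ) ≤ m := by exact_mod_cast hi
      exact mul_le_mul_of_nonneg_left this (by linarith)
    nlinarith
  -- growth of the ranks
  have ne_bot : ∀ n, Submodule.span κ⟮y₀⟯⟮y₁⟯ (G n : Set L) ≠ ⊥ := by
    intro n hb
    have : (1 : L) ∈ Submodule.span κ⟮y₀⟯⟮y₁⟯ (G n : Set L) :=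
      Submodule.subset_span (hGm.mono' (Nat.zero_le n) hone')
    rw [hb, Submodule.mem_bot] at this
    exact one_ne_zero this
  have hv0 : 1 ≤ v 0 := by
    rw [hvdef]
    have : 0 < Module.finrank κ⟮y₀⟯⟮y₁⟯ (Submodule.span κ⟮y₀⟯⟮y₁⟯ (G 0 : Set L)) :=
      Nat.pos_of_ne_zero fun h0 => ne_bot 0 (Submodule.finrank_eq_zero.1 h0)
    exact_mod_cast this
  have hv00 : min s (v 0 + v 0 - 1) ≤ v 0 := by
    have h1 := cauchy_davenport hprim _ _ (ne_bot 0) (ne_bot 0)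
    have h2 := h1.trans (Submodule.finrank_mono (span_mul_span_le (K := κ⟮y₀⟯⟮y₁⟯)
      (C := (G 0 : Set L)) (fun f hf g hg => hGG 0 0 f hf g hg)))
    rw [hvdef] at hv0 ⊢
    rw [← hs]
    omega
  have hv01 : v 0 ≤ v 1 := by
    rw [hvdef, hvdef]
    exact_mod_cast Submodule.finrank_mono (Submodule.span_mono (hGm.mono 0))
  have hGv' : ∀ n, (Module.finrank κ⟮y₀⟯ (G (n + 1)) : ℤ) =
      v (n + 1) + Module.finrank κ⟮y₀⟯ (G n) := by
    intro n; rw [hvdef]; exact_mod_cast hGv n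
  have hup : ∀ n : ℕ, (Module.finrank κ⟮y₀⟯ (G (1 + n)) : ℤ) ≤ v 1 + v 0 + s * n := by
    intro n
    induction n with
    | zero =>
      have := hGv' 0
      rw [hz] at this
      rw [hvdef, hvdef]
      rw [hvdef] at this
      simp only [zero_add, add_zero, Nat.cast_zero, mul_zero] at this ⊢
      exact this.le
    | succ n ih =>
      rw [← add_assoc, hGv']; push_cast
      linarith [hvs (1 + n + 1)]
  have hv : s + c₁ - 1 ≤ v 1 ∨ (v 1 = s ∧ c₁ = s) := by
    rcases min_le_iff.1 hv00 with h | h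
    · right
      have hv1 : v 1 = s := le_antisymm (hvs 1) (h.trans hv01)
      refine ⟨hv1, ?_⟩
      have hv0s : v 0 = s := le_antisymm (hvs 0) h
      have hall : ∀ n : ℕ, (Module.finrank κ⟮y₀⟯ (G n) : ℤ) = s * n + s := by
        intro n
        induction n with
        | zero => rw [hz]; rw [hvdef] at hv0s; simpa using hv0s
        | succ n ih =>
          have : v (n + 1) = s := by
            refine le_antisymm (hvs _) ?_
            rw [← hv0s, hvdef, hvdef]
            exact_mod_cast Submodule.finrank_mono
              (Submodule.span_mono (hGm.mono' (Nat.zero_le (n + 1))))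
          rw [hGv', ih, this]; push_cast; ring
      have h1 := hall n₀
      rw [hG _ le_rfl] at h1
      linarith
    · left
      have h1 := hup n₀
      rw [hG _ (by omega)] at h1
      push_cast at h1
      linarith
  refine num_curve_on_surface (a := fun n => (Module.finrank κ⟮y₀⟯ (H n) : ℤ))
    (w := fun n => (Module.finrank κ⟮y₀⟯⟮y₁⟯ (Submodule.span κ⟮y₀⟯⟮y₁⟯ (H n : Set L)) : ℤ))
    (j := fun n => (Module.finrank κ (J n) : ℤ)) (n₀ := n₀ + n₁ + 1) (v := v 1)
    hd hk hks hc hv hHn (fun n => by exact_mod_cast hHw n) (fun i hi => ?_) (fun i => hs_le _)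
    (fun i => Int.natCast_nonneg _) (fun i hi => ?_) (fun n => ?_)
    (fun n hn => hjn n (by omega))
  · show (Module.finrank κ⟮y₀⟯ (H i) : ℤ) = 0
    rw [hH0 i hi, finrank_bot]; rfl
  · have hne : Submodule.span κ⟮y₀⟯⟮y₁⟯ (H i : Set L) ≠ ⊥ := by
      intro hb
      rw [hb, finrank_bot] at hi
      exact lt_irrefl _ hi
    have h1 := cauchy_davenport hprim _ _ (ne_bot 1) hne
    have h2 := h1.trans (Submodule.finrank_mono (span_mul_span_le (K := κ⟮y₀⟯⟮y₁⟯)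
      (C := (H (i + 1) : Set L)) (fun f hf g hg => by
        have := hGH 1 i f hf g hg
        rwa [add_comm] at this)))
    rw [hvdef, ← hs]
    omega
  · exact_mod_cast hJ2 (hH0 0 (Nat.zero_le m)) n

end

end

section
open IntermediateField MvPolynomial

namespace IsGen
variable {k F L F' L' : Type} [Field k] [Field F] [Field L] [Algebra ℂ k] [Algebra ℂ F]
    [Algebra ℂ L] [Algebra k L] [Algebra F L] [IsScalarTower ℂ k L] [IsScalarTower ℂ F L]
    [Field F'] [Field L'] [Algebra ℂ F']
    [Algebra ℂ L'] [Algebra k L'] [Algebra F' L'] [IsScalarTower ℂ k L'] [IsScalarTower ℂ F' L']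
    {r : ℕ} {x : Fin (r + 1) → F} {x' : Fin (r + 1) → F'} {U : Fin 3 × Fin (r + 1) → k}

/-- Specialization from the surface to the curve, as a `k`-linear map defined on all of `L'`. -/
theorem exists_specialize (h : IsGen k F' L' x' U)
    (hker : ∀ f : MvPolynomial (Fin (r + 1)) ℂ, aeval x' f = 0 → aeval x f = 0) :
    ∃ ρ : L' →ₗ[k] L, ∀ P : MvPolynomial (Fin (r + 1)) k,
      ρ (aeval (gx L' x') P) = aeval (gx L x) P := by
  obtain ⟨ρ₀, hρ₀⟩ : ∃ ρ₀ : F' →ₗ[ℂ] F, ∀ f : MvPolynomial (Fin (r + 1)) ℂ,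
      ρ₀ (aeval x' f) = aeval x f := by
    obtain ⟨T, hT⟩ : ∃ T : MvPolynomial (Fin (r + 1)) ℂ →ₗ[ℂ] F', ∀ f, T f = aeval x' f :=
      ⟨(aeval x').toLinearMap, fun _ => rfl⟩
    obtain ⟨T₂, hT₂⟩ : ∃ T : MvPolynomial (Fin (r + 1)) ℂ →ₗ[ℂ] F, ∀ f, T f = aeval x f :=
      ⟨(aeval x).toLinearMap, fun _ => rfl⟩
    have hle : LinearMap.ker T ≤ LinearMap.ker T₂ := fun f hf => by
      rw [LinearMap.mem_ker, hT₂]; rw [LinearMap.mem_ker, hT] at hf; exact hker f hf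
    obtain ⟨ρ₀, hρ₀⟩ := LinearMap.exists_extend
      (((LinearMap.ker T).liftQ T₂ hle).comp T.quotKerEquivRange.symm.toLinearMap)
    refine ⟨ρ₀, fun f => ?_⟩
    have h1 := DFunLike.congr_fun hρ₀ ⟨T f, f, rfl⟩
    rw [← hT, ← hT₂]
    refine h1.trans ?_
    have h2 : T.quotKerEquivRange.symm ⟨T f, f, rfl⟩ = (LinearMap.ker T).mkQ f := by
      rw [LinearEquiv.symm_apply_eq]; rfl
    rw [LinearMap.comp_apply, LinearEquiv.coe_coe, h2]
    rfl
  obtain ⟨ι, ⟨b⟩⟩ : ∃ ι : Type, Nonempty (Module.Basis ι ℂ F') :=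
    ⟨_, ⟨Module.Basis.ofVectorSpace ℂ F'⟩⟩
  have hli := h.linInd b b.linearIndependent
  obtain ⟨ρ, hρ⟩ : ∃ ρ : L' →ₗ[k] L, ∀ i, ρ (algebraMap F' L' (b i)) = algebraMap F L (ρ₀ (b i)) := by
    refine ⟨(Module.Basis.sumExtend hli).constr k
      (Sum.elim (fun i => algebraMap F L (ρ₀ (b i))) 0), fun i => ?_⟩
    have : algebraMap F' L' (b i) = Module.Basis.sumExtend hli (Sum.inl i) := by
      simp [Module.Basis.sumExtend]
      rfl
    rw [this, Module.Basis.constr_basis]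
    rfl
  have hρ' : ∀ z : F', ρ (algebraMap F' L' z) = algebraMap F L (ρ₀ z) := by
    intro z
    refine LinearMap.congr_fun (f := (ρ.restrictScalars ℂ).comp (IsScalarTower.toAlgHom ℂ F' L').toLinearMap)
      (g := (IsScalarTower.toAlgHom ℂ F L).toLinearMap.comp ρ₀) (b.ext fun i => hρ i) z
  have key : ∀ f : MvPolynomial (Fin (r + 1)) ℂ,
      ρ (aeval (gx L' x') (map (algebraMap ℂ k) f)) = aeval (gx L x) (map (algebraMap ℂ k) f) := by
    intro f
    have e : ∀ {E M : Type} [Field E] [Field M] [Algebra ℂ E] [Algebra ℂ M] [Algebra k M]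
        [Algebra E M] [IsScalarTower ℂ k M] [IsScalarTower ℂ E M] (z : Fin (r + 1) → E),
        aeval (gx M z) (map (algebraMap ℂ k) f) = algebraMap E M (aeval z f) := by
      intro E M _ _ _ _ _ _ _ _ z
      rw [aeval_map_algebraMap, ← aeval_algebraMap_apply]
      rfl
    rw [e, e, hρ', hρ₀]
  refine ⟨ρ, fun P => ?_⟩
  refine LinearMap.congr_fun (f := ρ.comp (aeval (gx L' x')).toLinearMap)
    (g := (aeval (gx L x)).toLinearMap) ?_ P
  refine (basisMonomials _ _).ext fun m => ?_
  have := key (monomial m 1)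
  rw [map_monomial, map_one] at this
  simpa using this

/-- The genus bound for a curve with coordinates `x` lying on a surface with coordinates `x'`, both
equipped with the same generic coefficients: `curve_on_surface` applied to the kernel of the
specialization map. -/
theorem genus_le_on_surface (h : IsGen k F' L' x' U)
    (h0 : Transcendental k (gy L' x' U 0)) (h1 : Transcendental k⟮gy L' x' U 0⟯ (gy L' x' U 1))
    [FiniteDimensional k⟮gy L' x' U 0⟯⟮gy L' x' U 1⟯ L']
    (hB : Bdd k⟮gy L' x' U 0⟯⟮gy L' x' U 1⟯ (polyLE k ![gy L' x' U 0, gy L' x' U 1])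
      (polyLE k (gx L' x')))
    (hker : ∀ f : MvPolynomial (Fin (r + 1)) ℂ, aeval x' f = 0 → aeval x f = 0)
    {s c₁ c₀ d g κ : ℤ} {m N N' : ℕ}
    (hs : (Module.finrank k⟮gy L' x' U 0⟯⟮gy L' x' U 1⟯ L' : ℤ) = s)
    (hG : ∀ n ≥ N', (Module.finrank k⟮gy L' x' U 0⟯
        (dfam (gy L' x' U 0) (gy L' x' U 1) (polyLE k (gx L' x')) n) : ℤ) = s * n + c₁)
    (hH : ∀ n ≥ N', (Module.finrank k (polyLE k (gx L' x') n) : ℤ) =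
        s * ((n : ℤ) * (n + 1) / 2) + c₁ * n + c₀)
    (hN : ∀ n ≥ N, (Module.finrank k (polyLE k (gx L x) n) : ℤ) = d * n + (1 - g))
    (hd : d = (m + 1) * s - κ) (hκ : 0 ≤ κ) (hκs : κ < s) (hc : 2 * (1 - c₁) ≤ s - 2) :
    ∃ w' : ℤ, (w' ≤ κ + c₁ ∨ 2 * w' ≤ κ + 2) ∧
      g ≤ w' + 1 - c₀ - s * (((m : ℤ) + 1) * (m + 2) / 2) + (d - c₁) * (m + 1) := by
  obtain ⟨ρ, hρ⟩ := h.exists_specialize (L := L) hker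
  obtain ⟨J, hJdef⟩ : ∃ J : ℕ → Submodule k L', ∀ n, J n = polyLE k (gx L' x') n ⊓ LinearMap.ker ρ :=
    ⟨_, fun _ => rfl⟩
  have hmul : ∀ a b, ∀ f ∈ polyLE k (gx L' x') a, ∀ z ∈ J b, f * z ∈ J (a + b) := by
    intro a b f hf z hz
    rw [hJdef] at hz ⊢
    refine ⟨polyLE_mul hf hz.1, ?_⟩
    obtain ⟨P, -, rfl⟩ := mem_polyLE.1 hf
    obtain ⟨Q, hQ, rfl⟩ := mem_polyLE.1 hz.1
    have hz2 := LinearMap.mem_ker.1 hz.2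
    rw [hρ] at hz2
    rw [SetLike.mem_coe, LinearMap.mem_ker, ← map_mul, hρ, map_mul, hz2, mul_zero]
  have hfam : ∀ j, Fam (gy L' x' U j) J := by
    intro j
    refine ⟨fun n => ?_, fun n f hf => ?_⟩
    · rw [hJdef, hJdef]
      exact inf_le_inf_right _ (polyLE_mono (Nat.le_succ n))
    · rw [add_comm]; exact hmul 1 n _ (gy_mem j) f hf
  have hBJ : Bdd k⟮gy L' x' U 0⟯⟮gy L' x' U 1⟯ (polyLE k ![gy L' x' U 0, gy L' x' U 1]) J := by
    obtain ⟨c, Θ, hΘ, hΘ'⟩ := hB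
    refine ⟨c, Θ, hΘ, fun n f hf => hΘ' n f ?_⟩
    rw [hJdef] at hf
    exact hf.1
  -- rank–nullity for the specialization map on polynomials of degree at most `n`
  have hrank : ∀ n, Module.finrank k (polyLE k (gx L x) n) + Module.finrank k (J n) =
      Module.finrank k (polyLE k (gx L' x') n) := by
    intro n
    have hfd : FiniteDimensional k (polyLE k (gx L' x') n) := by
      unfold polyLE; infer_instance
    have e := LinearMap.finrank_range_add_finrank_ker (ρ.domRestrict (polyLE k (gx L' x') n))
    rw [← e, LinearMap.range_domRestrict]
    congr 1
    · suffices hE : polyLE k (gx L x) n = Submodule.map ρ (polyLE k (gx L' x') n) by rw [hE]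
      ext z
      rw [Submodule.mem_map, mem_polyLE]
      constructor
      · rintro ⟨P, hP, rfl⟩
        exact ⟨aeval (gx L' x') P, mem_polyLE.2 ⟨P, hP, rfl⟩, hρ P⟩
      · rintro ⟨_, hy, rfl⟩
        obtain ⟨P, hP, rfl⟩ := mem_polyLE.1 hy
        exact ⟨P, hP, (hρ P).symm⟩
    · rw [hJdef, LinearMap.ker_domRestrict, ← Submodule.finrank_map_subtype_eq,
        Submodule.map_comap_subtype]
  refine curve_on_surface h0 h1 (fam 0) (fam 1) (hfam 0) (hfam 1) hB hBJ
    (h.primitive_two h0 h1) (one_mem_polyLE 0)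
    (fun a b f hf z hz => polyLE_mul hf hz) hmul (n₀ := N + N') hs
    (fun n hn => hG n (by omega)) (fun n hn => ?_) hd hκ hκs hc
  have e1 : ((Module.finrank k (polyLE k (gx L x) n) : ℕ) : ℤ) + Module.finrank k (J n) =
    Module.finrank k (polyLE k (gx L' x') n) := by exact_mod_cast hrank n
  rw [hN n (by omega), hH n (by omega)] at e1
  linarith

end IsGen

end

/-! ### Comparison with the bound -/

section
theorem two_binom2 (z : ℤ) : 2 * binom2 z = z * (z - 1) := by
  unfold binom2
  refine Int.mul_ediv_cancel' ?_
  have := Int.even_mul_pred_self z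
  exact this.two_dvd

/-- The two consequences of `d > d₀(r)` that are used, for the largest admissible value
`s = 2r - 4`. -/
theorem d0_bounds (r : ℕ) (hr : 4 ≤ r) : (2 * (r : ℤ) - 4) ^ 3 ≤ d0 r ∧
    8 * (2 * (r : ℤ) - 4) * (2 * (r : ℤ) - 4 + 1) ≤ d0 r := by
  unfold d0
  have hr' : (4 : ℤ) ≤ r := by exact_mod_cast hr
  split_ifs with h1 h2
  · have : r ≤ 6 := by exact_mod_cast h1
    interval_cases r <;> norm_num
  · have : r ≤ 11 := by exact_mod_cast h2
    have : 6 < r := by push Not at h1; exact_mod_cast h1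
    interval_cases r <;> norm_num
  · have h12 : 12 ≤ r := by push Not at h2; have : 11 < r := by exact_mod_cast h2
                            omega
    have key : (2 * (r : ℤ) - 4) ^ 3 ≤ 2 ^ (r + 1) := by
      induction r, h12 using Nat.le_induction with
      | base => norm_num
      | succ n hn ih =>
        have hn' : (12 : ℤ) ≤ n := by exact_mod_cast hn
        have ih' := ih (by omega) (by linarith) (by linarith) (by linarith)
        rw [pow_succ (2 : ℤ) (n + 1)]
        push_cast
        obtain ⟨z, hz⟩ : ∃ z : ℤ, (n : ℤ) = z + 12 := ⟨n - 12, by ring⟩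
        have hz0 : 0 ≤ z := by linarith
        rw [hz] at ih' ⊢
        nlinarith [pow_nonneg hz0 2, pow_nonneg hz0 3]
    rw [Int.toNat_natCast]
    refine ⟨key, le_trans ?_ key⟩
    have hn' : (12 : ℤ) ≤ r := by exact_mod_cast h12
    obtain ⟨z, hz⟩ : ∃ z : ℤ, (r : ℤ) = z + 12 := ⟨r - 12, by ring⟩
    have hz0 : 0 ≤ z := by linarith
    rw [hz]
    nlinarith [pow_nonneg hz0 2, pow_nonneg hz0 3]

/-- The bound for large plane degree is below `G*` since `π ≥ 0` and `p ≤ 0`. -/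
theorem le_Gstar_of_large {r d s π p g m : ℤ} (hs : 0 < s) (hd : 1 ≤ d) (hπ : 0 ≤ π) (hp : p ≤ 0)
    (hm : m = (d - 1) / s) (hg : 2 * g ≤ 2 * m * (d - 1) - s * m * (m + 1)) :
    g ≤ Gstar r d s π p := by
  unfold Gstar
  have hm0 : 0 ≤ m := by rw [hm]; exact Int.ediv_nonneg (by linarith) hs.le
  have e1 := Int.mul_ediv_add_emod (d - 1) s
  rw [← hm] at e1 ⊢
  obtain ⟨ε, hε⟩ : ∃ ε, ε = (d - 1) % s := ⟨_, rfl⟩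
  rw [← hε] at e1 ⊢
  have e2 := two_binom2 m
  have e3 := le_max_left (0 : ℤ) ((2 * π - (s - 1 - ε)) / 2)
  have e4 : 0 ≤ m * π := mul_nonneg hm0 hπ
  have e5 : 2 * (binom2 m * s) = m * (m - 1) * s := by rw [← e2]; ring
  rw [← e1] at hg
  linarith

/-- The bound for a curve on a surface of degree `s`, sectional genus `1 - c₁ ≤ π` and arithmetic
genus `c₀ - 1 ≥ p` is below `G*`. -/
theorem le_Gstar_of_surface {r d s π p g m k c₁ c₀ w : ℤ} (hs : 0 < s) (hd : 1 ≤ d)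
    (hm : m = (d - 1) / s) (hk : k = s - 1 - (d - 1) % s) (hπ : 1 - c₁ ≤ π) (hp : p ≤ c₀ - 1)
    (hw : w ≤ k + c₁ ∨ 2 * w ≤ k + 2)
    (hg : g ≤ w + 1 - c₀ - s * ((m + 1) * (m + 2) / 2) + (d - c₁) * (m + 1)) :
    g ≤ Gstar r d s π p := by
  unfold Gstar
  have hm0 : 0 ≤ m := by rw [hm]; exact Int.ediv_nonneg (by linarith) hs.le
  have e1 := Int.mul_ediv_add_emod (d - 1) s
  rw [← hm] at e1 ⊢
  obtain ⟨ε, hε⟩ : ∃ ε, ε = (d - 1) % s := ⟨_, rfl⟩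
  rw [← hε] at e1 hk ⊢
  rw [show 2 * π - (s - 1 - ε) = 2 * π - k by rw [hk]]
  have e2 : (m + 1) * (m + 2) / 2 = binom2 m + 2 * m + 1 := by
    have h1 := two_binom2 m
    refine Int.ediv_eq_of_eq_mul_left (by norm_num) ?_
    linarith
  have e4 : 0 ≤ m * (π - (1 - c₁)) := mul_nonneg hm0 (by linarith)
  have e5 := two_binom2 m
  have hd' : d = s * m + s - k := by rw [hk]; linarith
  have hε' : ε = s - 1 - k := by rw [hk]; ring
  have base : g ≤ binom2 m * s + m * (ε + (1 - c₁)) - (c₀ - 1) + (w - (k + c₁)) := by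
    rw [e2, hd'] at hg
    rw [hε']
    have e6 : 2 * (binom2 m * s) = m * (m - 1) * s := by rw [← e5]; ring
    linarith
  have hmax : w - (k + c₁) ≤ max 0 ((2 * π - k) / 2) := by
    rcases hw with h | h
    · exact le_max_of_le_left (by linarith)
    · refine le_max_of_le_right ((Int.le_ediv_iff_mul_le (by norm_num)).2 ?_)
      linarith
  linarith

end

open IntermediateField MvPolynomial

/-- Proposition 1.2(a).  If moreover `-binom(π₀-π+1,2) ≤ p ≤ 0` and `C` lies
on no surface of degree `< s`, on no surface of degree `s` with sectional genus `> π`, and on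
no surface of degree `s` with arithmetic genus `< p`, then `p_a(C) ≤ G*(r,d,s,π,p)`. -/
theorem statement_3 (r : ℕ) (d s π p g : ℤ) (hr : 4 ≤ r)
    (hs1 : (r : ℤ) - 1 ≤ s) (hs2 : s ≤ 2 * (r : ℤ) - 4)
    (hπ1 : 0 ≤ π) (hπ2 : π ≤ s - (r : ℤ) + 1)
    (hp1 : -(binom2 (s - (r : ℤ) + 1 - π + 1)) ≤ p) (hp2 : p ≤ 0)
    (hd : d0 (r : ℤ) < d)
    (IC : Ideal (MPoly (r + 1)))
    (hcurve : IsCurve IC) (hnd : Nondeg IC) (hinv : CurveInv IC d g)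
    (h1 : NotInSurfDegLT IC s) (h2 : NotInSurfSecGT IC s π)
    (h3 : NotInSurfGenLT IC s p) :
    g ≤ Gstar (r : ℤ) d s π p := by
  obtain ⟨hhom, hprime, -⟩ := hcurve
  have hr4 : (4 : ℤ) ≤ r := by exact_mod_cast hr
  have hs3 : 3 ≤ s := by linarith
  obtain ⟨b1, b2⟩ := d0_bounds r hr
  have hx1 : s ^ 3 + 1 ≤ d := by
    have : s ^ 3 ≤ (2 * (r : ℤ) - 4) ^ 3 := pow_le_pow_left₀ (by linarith) hs2 3
    linarith
  have hx2 : 8 * s * (s + 1) + 1 ≤ d := by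
    have : 8 * s * (s + 1) ≤ 8 * (2 * (r : ℤ) - 4) * (2 * (r : ℤ) - 4 + 1) := by
      gcongr; linarith
    linarith
  have hd1 : 1 ≤ d := by nlinarith
  lift d to ℕ using (by linarith)
  lift s to ℕ using (by linarith)
  have hX : (X 0 : MPoly (r + 1)) ∉ IC := fun hmem =>
    X_ne_zero (0 : Fin (r + 1)) (hnd _ ((mem_homogeneousSubmodule _ _).2 (isHomogeneous_X ℂ 0)) hmem)
  obtain ⟨F, _, _, x, x0, adjF, hI⟩ := exists_functionField IC hprime hX
  obtain ⟨L, _, _, _, _, _, _, h⟩ := exists_isGen x x0 adjF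
  obtain ⟨N, hN⟩ := hinv
  have hN' : ∀ n ≥ N.toNat, (Module.finrank (GK r) (polyLE (GK r) (gx L x) n) : ℤ) =
      d * n + (1 - g) := by
    intro n hn
    rw [h.finrank_polyLE, ← hilbZ_eq x x0 IC hI n, hN n (by omega)]
    ring
  have hdpos : 0 < d := by exact_mod_cast hd1
  have hfin := h.curve_finrank hdpos hN'
  haveI : FiniteDimensional (GK r)⟮gy L x (GU r) 0⟯ L :=
    Module.finite_of_finrank_pos (by rw [hfin]; exact hdpos)
  obtain ⟨Φ, hΦ⟩ := exists_minEq (K := (GK r)⟮gy L x (GU r) 0⟯) ![gy L x (GU r) 1, gy L x (GU r) 2]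
  have hdiv : (((d - 1) / s : ℕ) : ℤ) = ((d : ℤ) - 1) / s := by
    rw [Int.natCast_div, Nat.cast_sub hdpos]; rfl
  by_cases he : s + 1 ≤ Φ.totalDegree
  · refine le_Gstar_of_large (by linarith) hd1 hπ1 hp2 hdiv ?_
    exact h.genus_le_of_large hN' (by omega) (by exact_mod_cast hx1) (by exact_mod_cast hx2) hΦ he
  · have he' : Φ.totalDegree ≤ s := by omega
    have h0 : Transcendental (GK r) (gy L x (GU r) 0) :=
      (h.curve_base (by linarith) hN').1
    obtain ⟨F', L', _, _, _, _, _, _, _, _, x', h', h0', h1', hΨ, hker⟩ := h.lift h0 hΦ (by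
      rw [hfin]
      have : Φ.totalDegree * (3 * Φ.totalDegree) ≤ s * (3 * s) := by gcongr
      have hx2' : 8 * s * (s + 1) + 1 ≤ d := by exact_mod_cast hx2
      nlinarith)
    obtain ⟨_, hle, hB⟩ := h'.surf_base h0' h1' hΨ
    obtain ⟨c₁, c₀, N₁, hG, hH⟩ := h'.surf_hilb h0' h1' hB
    have hsurf := h'.isSurface h0' h1'
    have hSI := h'.surfInv hH
    have hTle : vanIdeal x' ≤ IC := by
      intro f hf
      rw [← sum_homogeneousComponent f]
      refine Ideal.sum_mem _ fun i _ => ?_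
      rw [hI i _ (homogeneousComponent_mem i f)]
      exact hker _ ((mem_vanIdeal x').1 hf i)
    have hsdeg : (Module.finrank (GK r)⟮gy L' x' (GU r) 0⟯⟮gy L' x' (GU r) 1⟯ L' : ℤ) = s := by
      refine le_antisymm (by exact_mod_cast hle.trans he') (not_lt.1 fun hlt => ?_)
      exact h1 _ _ _ _ hsurf hSI hlt hTle
    rw [hsdeg] at hG hH hSI
    have hπ' : 1 - c₁ ≤ π := not_lt.1 fun hlt => h2 _ _ _ hsurf hSI hlt hTle
    have hp' : p ≤ c₀ - 1 := not_lt.1 fun hlt => h3 _ _ _ hsurf hSI hlt hTle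
    have hmod0 := Int.emod_nonneg ((d : ℤ) - 1) (b := s) (by linarith)
    have hmod1 := Int.emod_lt_of_pos ((d : ℤ) - 1) (b := s) (by linarith)
    have hdm := Int.mul_ediv_add_emod ((d : ℤ) - 1) s
    obtain ⟨w, hw, hg⟩ := h'.genus_le_on_surface (L := L) h0' h1' hB hker hsdeg hG hH hN'
      (m := (d - 1) / s) (κ := s - 1 - ((d : ℤ) - 1) % s)
      (by rw [hdiv]; linarith) (by linarith) (by linarith) (by linarith)
    exact le_Gstar_of_surface (by linarith) hd1 hdiv rfl hπ' hp' hw hg
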